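/- Let Ω be a bounded C² domain, F satisfy (F1)–(F4), and b, c be continuous on Ω̄. Suppose λ < λ̄, and g is continuous on Ω̄ with g ≤ 0 and g ≢ 0. Then there exists a positive viscosity solution u of G(x,u,Du,D²u) + λ|u|^α u = g(x) in Ω with ⟨Du, n⟩ = 0 on ∂Ω. Moreover, if g < 0 on Ω̄, the positive viscosity solution is unique. -/

import Mathlib

/-!
The proof is the method of Ishii and Lions adapted to the Neumann problem, followed by Perron's
method; no linear theory is available, since the operator is fully nonlinear and degenerate or
singular at zero gradient.

**Formulation.** Solutions are handled through superjets (`SubV`): the zero order term is moved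
into the right-hand side, the equation is tested only at nonzero gradients, at boundary points only
for jets whose gradient points strictly outwards, and a separate clause treats points near which
the function is constant. The dual operator `dualF`, `F(x,p,X) ↦ -F(x,p,-X)`, satisfies the same
structure conditions and turns supersolutions `v` into subsolutions `-v`, so every estimate is
proved for pairs of subsolutions.

**Doubling of variables.** The theorem on sums `thm_sums` is obtained from the Lasry–Lions
regularisation, whose gradient map is Lipschitz, and Rademacher's theorem. With a
function `σ = exp(L ρ)` built from a defining function `ρ` of `Ω` (`DomData`), the penalisation
`(1 + σ x + σ y) ψ(|x - y|)` has gradients pointing strictly outwards on `∂Ω` in each variable.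
Hence the boundary condition never interferes at a doubled maximum, and (F2)–(F4) with
`θ, ν > 1/2` yield the two-point estimate `OpHyp.kl`. The concave profile
`ψ(r) = L (r - r^{3/2} / 3)` then gives the Lipschitz estimate `OpHyp.lip`. The profile `r ^ q`, with
`(q - 1) (1 + α) = 2 + α`, gives comparison: a maximum on the diagonal is a contact point
which is flat to order `q`, where `OpHyp.flat` supplies the sign that the equation itself does not
provide at zero gradient. The outcome is `Prob.strict_comparison`.

**Uniqueness.** Let `u` be a subsolution and `v` a positive supersolution with datum `g < 0`, and let
`γ ≥ 1` be smallest with `u ≤ γ v`. By homogeneity `γ v` is a supersolution with datum `γ^{1+α} g`, and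
`γ^{1+α} g < g` if `γ > 1`; this contradicts strict comparison at a contact point. Thus `u ≤ v`
(`Prob.comparison`).

**Existence.** For `λ < λ̄` some supersolution belongs to a parameter larger than `λ`, so it is a strict
supersolution for `λ`, and a multiple of it is a supersolution for any prescribed continuous datum
(`exists_super`). If `g < 0`, Perron's method between a small constant and this function gives a
positive solution (`Prob.perron`), continuous by comparison. For `g ≤ 0` the solutions with datum
`g - 1 / (n + 1)` decrease in `n` and are uniformly Lipschitz, so their limit is a nonnegative solution by
`Prob.stability` (`Prob.exists_nonneg`). It does not vanish on `Ω` because `g ≢ 0`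
(`exists_pos_pt`), and it is then positive on `Ω̄` by the strong minimum principle
`Prob.strong_min`, which rests on the Hopf barrier `s + K s²` with `s = R² - |x - y|²`.
-/

open Filter Set Metric
open scoped RealInnerProductSpace Topology NNReal

noncomputable section

/-- Euclidean space `ℝ^N`. -/
abbrev EN (N : ℕ) := EuclideanSpace ℝ (Fin N)

/-- The space of `N × N` real matrices. -/
abbrev Mat (N : ℕ) := Matrix (Fin N) (Fin N) ℝ

/-- Operator (spectral) norm of a matrix, viewed as a linear map on Euclidean space. -/
noncomputable def matNorm {N : ℕ} (X : Mat N) : ℝ :=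
  ‖LinearMap.toContinuousLinearMap (Matrix.toEuclideanLin X)‖

/-- The Hessian matrix of `φ : ℝ^N → ℝ` at `x`. -/
noncomputable def hess {N : ℕ} (φ : EN N → ℝ) (x : EN N) : Mat N :=
  Matrix.of fun i j =>
    iteratedFDeriv ℝ 2 φ x ![EuclideanSpace.single i 1, EuclideanSpace.single j 1]

/-- `ρ` is a `C²` defining function for the domain `Ω` with exterior unit normal `nv`. -/
def IsC2DefiningFun {N : ℕ} (Ω : Set (EN N)) (nv : EN N → EN N) (ρ : EN N → ℝ) : Prop :=
  ContDiff ℝ 2 ρ ∧ Ω = {x | ρ x < 0} ∧ frontier Ω = {x | ρ x = 0} ∧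
    ∀ x ∈ frontier Ω, gradient ρ x ≠ 0 ∧ nv x = ‖gradient ρ x‖⁻¹ • gradient ρ x

/-- `Ω` is a bounded domain of class `C²` with exterior unit normal `nv` on `∂Ω`. -/
def IsC2Domain {N : ℕ} (Ω : Set (EN N)) (nv : EN N → EN N) : Prop :=
  IsOpen Ω ∧ IsConnected Ω ∧ Bornology.IsBounded Ω ∧ ∃ ρ : EN N → ℝ, IsC2DefiningFun Ω nv ρ

/-- `Ω` is a bounded domain of class `C¹` with exterior unit normal `nv` on `∂Ω`. -/
def IsC1Domain {N : ℕ} (Ω : Set (EN N)) (nv : EN N → EN N) : Prop :=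
  IsOpen Ω ∧ IsConnected Ω ∧ Bornology.IsBounded Ω ∧
    ∃ ρ : EN N → ℝ, ContDiff ℝ 1 ρ ∧ Ω = {x | ρ x < 0} ∧ frontier Ω = {x | ρ x = 0} ∧
      ∀ x ∈ frontier Ω, gradient ρ x ≠ 0 ∧ nv x = ‖gradient ρ x‖⁻¹ • gradient ρ x

/-- Interior sphere condition (Ω1). -/
def InteriorSphereCond {N : ℕ} (Ω : Set (EN N)) : Prop :=
  ∀ x ∈ frontier Ω, ∃ R > (0 : ℝ), ∃ y ∈ Ω, ‖x - y‖ = R ∧ Metric.ball y R ⊆ Ω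

/-- (F1): homogeneity of `F`. -/
def CondF1 {N : ℕ} (Ω : Set (EN N)) (α : ℝ) (F : EN N → EN N → Mat N → ℝ) : Prop :=
  ∀ x ∈ closure Ω, ∀ t : ℝ, t ≠ 0 → ∀ μ : ℝ, 0 ≤ μ → ∀ p : EN N, p ≠ 0 → ∀ X : Mat N,
    X.IsSymm → F x (t • p) (μ • X) = |t| ^ α * μ * F x p X

/-- (F2): uniform ellipticity of `F` with ellipticity constants `0 < a ≤ A`. -/
def CondF2 {N : ℕ} (Ω : Set (EN N)) (α a A : ℝ) (F : EN N → EN N → Mat N → ℝ) : Prop :=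
  0 < a ∧ a ≤ A ∧ ∀ x ∈ closure Ω, ∀ p : EN N, p ≠ 0 → ∀ M P : Mat N, M.IsSymm →
    P.PosSemidef →
      a * ‖p‖ ^ α * P.trace ≤ F x p (M + P) - F x p M ∧
      F x p (M + P) - F x p M ≤ A * ‖p‖ ^ α * P.trace

/-- (F3): Hölder continuity of `F` in the `x` variable. -/
def CondF3 {N : ℕ} (Ω : Set (EN N)) (α C₁ θ : ℝ) (F : EN N → EN N → Mat N → ℝ) : Prop :=
  0 < C₁ ∧ θ ∈ Set.Ioc (1/2 : ℝ) 1 ∧ ∀ x ∈ closure Ω, ∀ y ∈ closure Ω, ∀ p : EN N, p ≠ 0 →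
    ∀ X : Mat N, X.IsSymm → |F x p X - F y p X| ≤ C₁ * ‖x - y‖ ^ θ * ‖p‖ ^ α * matNorm X

/-- (F4): Hölder continuity of `F` in the gradient variable. -/
def CondF4 {N : ℕ} (Ω : Set (EN N)) (α C₂ ν : ℝ) (F : EN N → EN N → Mat N → ℝ) : Prop :=
  0 < C₂ ∧ ν ∈ Set.Ioc (1/2 : ℝ) 1 ∧ ∀ x ∈ closure Ω, ∀ p : EN N, p ≠ 0 → ∀ q : EN N,
    ‖q‖ ≤ ‖p‖ / 2 → ∀ X : Mat N, X.IsSymm →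
      |F x (p + q) X - F x p X| ≤ C₂ * ‖p‖ ^ (α - ν) * ‖q‖ ^ ν * matNorm X

/-- The Neumann boundary operator `B(x,r,p) = ⟨p, n(x)⟩`. -/
def BNeu {N : ℕ} (nv : EN N → EN N) : EN N → ℝ → EN N → ℝ := fun x _ p => ⟪p, nv x⟫

/-- Viscosity subsolution of
`F(x,Du,D²u) + b(x)·Du |Du|^α + c₀(x, u) = g(x)` in `Ω`, `B(x,u,Du) = 0` on `∂Ω`. -/
def IsSubSol {N : ℕ} (Ω : Set (EN N)) (F : EN N → EN N → Mat N → ℝ) (b : EN N → EN N)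
    (α : ℝ) (c₀ : EN N → ℝ → ℝ) (g : EN N → ℝ) (B : EN N → ℝ → EN N → ℝ)
    (u : EN N → ℝ) : Prop :=
  (∀ x₀ ∈ Ω, ∀ φ : EN N → ℝ, ContDiff ℝ 2 φ →
      IsLocalMaxOn (fun x => u x - φ x) (closure Ω) x₀ → gradient φ x₀ ≠ 0 →
      g x₀ ≤ F x₀ (gradient φ x₀) (hess φ x₀)
        + ⟪b x₀, gradient φ x₀⟫ * ‖gradient φ x₀‖ ^ α + c₀ x₀ (u x₀)) ∧
  (∀ x₀ ∈ Ω, ∀ k : ℝ, (∀ᶠ x in nhdsWithin x₀ (closure Ω), u x = k) → g x₀ ≤ c₀ x₀ k) ∧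
  (∀ x₀ ∈ frontier Ω, ∀ φ : EN N → ℝ, ContDiff ℝ 2 φ →
      IsLocalMaxOn (fun x => u x - φ x) (closure Ω) x₀ → gradient φ x₀ ≠ 0 →
      min (g x₀ - (F x₀ (gradient φ x₀) (hess φ x₀)
          + ⟪b x₀, gradient φ x₀⟫ * ‖gradient φ x₀‖ ^ α + c₀ x₀ (u x₀)))
        (B x₀ (u x₀) (gradient φ x₀)) ≤ 0) ∧
  (∀ x₀ ∈ frontier Ω, ∀ k : ℝ, (∀ᶠ x in nhdsWithin x₀ (closure Ω), u x = k) →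
      min (g x₀ - c₀ x₀ k) (B x₀ k 0) ≤ 0)

/-- Viscosity supersolution of
`F(x,Dv,D²v) + b(x)·Dv |Dv|^α + c₀(x, v) = g(x)` in `Ω`, `B(x,v,Dv) = 0` on `∂Ω`. -/
def IsSuperSol {N : ℕ} (Ω : Set (EN N)) (F : EN N → EN N → Mat N → ℝ) (b : EN N → EN N)
    (α : ℝ) (c₀ : EN N → ℝ → ℝ) (g : EN N → ℝ) (B : EN N → ℝ → EN N → ℝ)
    (v : EN N → ℝ) : Prop :=
  (∀ x₀ ∈ Ω, ∀ φ : EN N → ℝ, ContDiff ℝ 2 φ →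
      IsLocalMinOn (fun x => v x - φ x) (closure Ω) x₀ → gradient φ x₀ ≠ 0 →
      F x₀ (gradient φ x₀) (hess φ x₀)
        + ⟪b x₀, gradient φ x₀⟫ * ‖gradient φ x₀‖ ^ α + c₀ x₀ (v x₀) ≤ g x₀) ∧
  (∀ x₀ ∈ Ω, ∀ k : ℝ, (∀ᶠ x in nhdsWithin x₀ (closure Ω), v x = k) → c₀ x₀ k ≤ g x₀) ∧
  (∀ x₀ ∈ frontier Ω, ∀ φ : EN N → ℝ, ContDiff ℝ 2 φ →
      IsLocalMinOn (fun x => v x - φ x) (closure Ω) x₀ → gradient φ x₀ ≠ 0 →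
      0 ≤ max (g x₀ - (F x₀ (gradient φ x₀) (hess φ x₀)
          + ⟪b x₀, gradient φ x₀⟫ * ‖gradient φ x₀‖ ^ α + c₀ x₀ (v x₀)))
        (B x₀ (v x₀) (gradient φ x₀))) ∧
  (∀ x₀ ∈ frontier Ω, ∀ k : ℝ, (∀ᶠ x in nhdsWithin x₀ (closure Ω), v x = k) →
      0 ≤ max (g x₀ - c₀ x₀ k) (B x₀ k 0))

/-- The admissible set for the principal eigenvalue `λ̄`:
all `λ` such that there is a bounded positive supersolution of
`G(x,v,Dv,D²v) + λ v^{α+1} ≤ 0` in `Ω`, `⟨Dv, n⟩ ≥ 0` on `∂Ω`. -/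
def lamBarSet {N : ℕ} (Ω : Set (EN N)) (nv : EN N → EN N) (F : EN N → EN N → Mat N → ℝ)
    (b : EN N → EN N) (c : EN N → ℝ) (α : ℝ) : Set ℝ :=
  {lam | ∃ v : EN N → ℝ, LowerSemicontinuousOn v (closure Ω) ∧
    (∀ x ∈ closure Ω, 0 < v x) ∧ (∃ M, ∀ x ∈ closure Ω, v x ≤ M) ∧
    IsSuperSol Ω F b α (fun x r => (c x + lam) * |r| ^ α * r) (fun _ => 0) (BNeu nv) v}

/-- The admissible set for the principal eigenvalue `λ̲`:
all `λ` such that there is a bounded negative subsolution of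
`G(x,u,Du,D²u) + λ |u|^α u ≥ 0` in `Ω`, `⟨Du, n⟩ ≤ 0` on `∂Ω`. -/
def lamLowSet {N : ℕ} (Ω : Set (EN N)) (nv : EN N → EN N) (F : EN N → EN N → Mat N → ℝ)
    (b : EN N → EN N) (c : EN N → ℝ) (α : ℝ) : Set ℝ :=
  {lam | ∃ u : EN N → ℝ, UpperSemicontinuousOn u (closure Ω) ∧
    (∀ x ∈ closure Ω, u x < 0) ∧ (∃ M, ∀ x ∈ closure Ω, M ≤ u x) ∧
    IsSubSol Ω F b α (fun x r => (c x + lam) * |r| ^ α * r) (fun _ => 0) (BNeu nv) u}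

section

/-! ### Quadratic forms, matrix norms and second order Taylor expansions -/

/-- The quadratic form of a matrix on Euclidean space. -/
def qf {N : ℕ} (X : Mat N) (d : EN N) : ℝ := ⟪Matrix.toEuclideanLin X d, d⟫

/-- The quadratic polynomial without constant term with gradient `p` and Hessian `X` at `0`. -/
def quad {N : ℕ} (p : EN N) (X : Mat N) (d : EN N) : ℝ := ⟪p, d⟫ + 1 / 2 * qf X d

lemma qf_add {N : ℕ} (X Y : Mat N) (d : EN N) : qf (X + Y) d = qf X d + qf Y d := by
  simp [qf, inner_add_left]

lemma qf_sub {N : ℕ} (X Y : Mat N) (d : EN N) : qf (X - Y) d = qf X d - qf Y d := by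
  simp [qf, inner_sub_left]

lemma qf_neg {N : ℕ} (X : Mat N) (d : EN N) : qf (-X) d = -qf X d := by
  simp [qf]

lemma qf_one {N : ℕ} (t : ℝ) (d : EN N) : qf (t • (1 : Mat N)) d = t * ‖d‖ ^ 2 := by
  simp [qf, inner_smul_left]

lemma qf_smul_vec {N : ℕ} (X : Mat N) (t : ℝ) (d : EN N) : qf X (t • d) = t ^ 2 * qf X d := by
  simp [qf, inner_smul_left, inner_smul_right]; ring

lemma isSymm_iff_isHermitian {N : ℕ} (X : Mat N) : X.IsSymm ↔ X.IsHermitian := by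
  simp [Matrix.IsSymm, Matrix.IsHermitian]

lemma symm_inner {N : ℕ} {X : Mat N} (hX : X.IsSymm) (a b : EN N) :
    ⟪Matrix.toEuclideanLin X a, b⟫ = ⟪a, Matrix.toEuclideanLin X b⟫ :=
  (Matrix.isSymmetric_toEuclideanLin_iff.2 ((isSymm_iff_isHermitian X).1 hX)) a b

lemma qf_add_vec {N : ℕ} {X : Mat N} (hX : X.IsSymm) (a b : EN N) :
    qf X (a + b) = qf X a + 2 * ⟪Matrix.toEuclideanLin X a, b⟫ + qf X b := by
  simp only [qf, map_add, inner_add_left, inner_add_right]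
  rw [symm_inner hX b a, real_inner_comm b]
  rw [real_inner_comm (Matrix.toEuclideanLin X a) b]
  ring

lemma psd_of_qf {N : ℕ} {X : Mat N} (hX : X.IsSymm) (h : ∀ d, 0 ≤ qf X d) : X.PosSemidef := by
  rw [← Matrix.isPositive_toEuclideanLin_iff]
  refine ⟨Matrix.isSymmetric_toEuclideanLin_iff.2 ((isSymm_iff_isHermitian X).1 hX), fun d => ?_⟩
  simpa [qf] using h d

lemma qf_nonneg {N : ℕ} {X : Mat N} (hX : X.PosSemidef) (d : EN N) : 0 ≤ qf X d := by
  rw [← Matrix.isPositive_toEuclideanLin_iff] at hX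
  simpa [qf] using hX.2 d

lemma exists_sqrt_of_psd {N : ℕ} {X : Mat N} (hX : X.PosSemidef) : ∃ B : Mat N, X = B.conjTranspose * B := by
  open scoped MatrixOrder Matrix.Norms.L2Operator in
  obtain ⟨B, hB⟩ := CStarAlgebra.nonneg_iff_eq_star_mul_self.mp hX.nonneg
  exact ⟨B, hB⟩

lemma qf_le_trace {N : ℕ} {X : Mat N} (hX : X.PosSemidef) (d : EN N) :
    qf X d ≤ X.trace * ‖d‖ ^ 2 := by
  obtain ⟨B, rfl⟩ := exists_sqrt_of_psd hX
  have h1 : qf (B.conjTranspose * B) d = ∑ i, (∑ j, B i j * d j) ^ 2 := by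
    simp only [qf, Matrix.toLpLin_apply]
    rw [← Matrix.mulVec_mulVec]
    simp only [PiLp.inner_apply, Matrix.mulVec, dotProduct, Matrix.conjTranspose_apply]
    simp only [star_trivial, RCLike.inner_apply, conj_trivial, Finset.mul_sum]
    rw [Finset.sum_comm]
    refine Finset.sum_congr rfl fun i _ => ?_
    rw [sq, Finset.sum_mul_sum, Finset.sum_comm]
    refine Finset.sum_congr rfl fun k _ => ?_
    refine Finset.sum_congr rfl fun j _ => ?_
    ring
  have h2 : (B.conjTranspose * B).trace = ∑ i, ∑ j, B i j ^ 2 := by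
    simp only [Matrix.trace, Matrix.diag, Matrix.mul_apply, Matrix.conjTranspose_apply]
    rw [Finset.sum_comm]
    simp [sq]
  have h3 : ‖d‖ ^ 2 = ∑ j, d j ^ 2 := by
    rw [EuclideanSpace.norm_sq_eq]; simp
  rw [h1, h2, h3, Finset.sum_mul]
  exact Finset.sum_le_sum fun i _ => Finset.sum_mul_sq_le_sq_mul_sq _ _ _

lemma matNorm_nonneg {N : ℕ} (X : Mat N) : 0 ≤ matNorm X := norm_nonneg _

lemma matNorm_le {N : ℕ} (X : Mat N) {T : ℝ} (hT : 0 ≤ T)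
    (h : ∀ w z : EN N, ‖w‖ = 1 → ‖z‖ = 1 → ⟪Matrix.toEuclideanLin X w, z⟫ ≤ T) : matNorm X ≤ T := by
  refine ContinuousLinearMap.opNorm_le_of_unit_norm hT fun w hw => ?_
  simp only [LinearMap.coe_toContinuousLinearMap']
  by_cases hz : Matrix.toEuclideanLin X w = 0
  · simpa [hz] using hT
  have hz' : ‖Matrix.toEuclideanLin X w‖ ≠ 0 := by simpa using hz
  have := h w (‖Matrix.toEuclideanLin X w‖⁻¹ • Matrix.toEuclideanLin X w) hw (by
    rw [norm_smul]; simp [hz'])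
  rw [inner_smul_right, real_inner_self_eq_norm_sq, sq] at this
  rwa [inv_mul_cancel_left₀ hz'] at this

lemma abs_inner_le_matNorm {N : ℕ} (X : Mat N) (w z : EN N) :
    ⟪Matrix.toEuclideanLin X w, z⟫ ≤ matNorm X * ‖w‖ * ‖z‖ := by
  refine (real_inner_le_norm _ _).trans ?_
  gcongr
  exact (LinearMap.toContinuousLinearMap (Matrix.toEuclideanLin X)).le_opNorm w

lemma abs_qf_le {N : ℕ} (X : Mat N) (d : EN N) : |qf X d| ≤ matNorm X * ‖d‖ ^ 2 := by
  have h1 := abs_inner_le_matNorm X d d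
  have h2 := abs_inner_le_matNorm X d (-d)
  rw [inner_neg_right, norm_neg] at h2
  rw [abs_le]; constructor <;> unfold qf <;> nlinarith

lemma toEuclideanLin_entry {N : ℕ} (X : Mat N) (i j : Fin N) :
    ⟪Matrix.toEuclideanLin X (EuclideanSpace.single j 1), EuclideanSpace.single i 1⟫ = X i j := by
  simp [Matrix.toLpLin_apply, EuclideanSpace.inner_single_right]

/-- Second-order Taylor expansion (Peano form) from differentiability of the gradient. -/
lemma peano_taylor {N : ℕ} {f : EN N → ℝ} {G : EN N → EN N} {S : EN N →L[ℝ] EN N} {z : EN N}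
    (hf : ∀ x, HasGradientAt f (G x) x) (hG : HasFDerivAt G S z) :
    (∀ a b, ⟪S a, b⟫ = ⟪a, S b⟫) ∧
    ∀ η > 0, ∀ᶠ x in 𝓝 z, |f x - f z - ⟪G z, x - z⟫ - 1 / 2 * ⟪S (x - z), x - z⟫|
      ≤ η * ‖x - z‖ ^ 2 := by
  have hsymm : ∀ a b, ⟪S a, b⟫ = ⟪a, S b⟫ := by
    intro a b
    have h1 : ∀ y, HasFDerivAt f ((InnerProductSpace.toDual ℝ (EN N)) (G y)) y := fun y => hf y
    have h2 : HasFDerivAt (fun y => (InnerProductSpace.toDual ℝ (EN N)) (G y))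
        ((InnerProductSpace.toDual ℝ (EN N)).toContinuousLinearEquiv.toContinuousLinearMap.comp S) z :=
      ((InnerProductSpace.toDual ℝ (EN N)).toContinuousLinearEquiv.toContinuousLinearMap.hasFDerivAt
        (x := G z)).comp z hG
    have := second_derivative_symmetric h1 h2 a b
    simp at this
    rw [this, real_inner_comm]
  refine ⟨hsymm, fun η hη => ?_⟩
  have hlo := hG.isLittleO.def hη
  obtain ⟨δ, hδ, hball⟩ := Metric.eventually_nhds_iff_ball.1 hlo
  refine Metric.eventually_nhds_iff_ball.2 ⟨δ, hδ, fun x hx => ?_⟩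
  set h : EN N → ℝ := fun y => f y - ⟪G z, y - z⟫ - 1 / 2 * ⟪S (y - z), y - z⟫ with hh
  have hd : ∀ y, HasFDerivAt h ((InnerProductSpace.toDual ℝ (EN N)) (G y - G z - S (y - z))) y := by
    intro y
    have e1 : HasFDerivAt f ((InnerProductSpace.toDual ℝ (EN N)) (G y)) y := hf y
    have e0 : HasFDerivAt (fun y : EN N => y - z) (ContinuousLinearMap.id ℝ (EN N)) y :=
      (hasFDerivAt_id y).sub_const z
    have e2 := (hasFDerivAt_const (G z) y).inner ℝ e0
    have e3 := ((S.hasFDerivAt (x := y - z)).comp y e0).inner ℝ e0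
    refine ((e1.sub e2).sub (e3.const_mul (1 / 2))).congr_fderiv ?_
    ext v
    have e4 : ⟪S v, y - z⟫ = ⟪S (y - z), v⟫ := by rw [hsymm, real_inner_comm]
    simp [inner_sub_left] at e4 ⊢
    rw [e4]
    ring
  set R := ‖x - z‖ with hR
  have hseg : ∀ y ∈ closedBall z R, ‖(InnerProductSpace.toDual ℝ (EN N)) (G y - G z - S (y - z))‖ ≤ η * R := by
    intro y hy
    rw [LinearIsometryEquiv.norm_map]
    have hy' : y ∈ ball z δ := by
      rw [mem_closedBall] at hy; rw [mem_ball] at hx ⊢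
      rw [dist_eq_norm] at hx; linarith
    refine (hball y hy').trans ?_
    rw [mem_closedBall, dist_eq_norm] at hy
    gcongr
  have := (convex_closedBall z R).norm_image_sub_le_of_norm_hasFDerivWithin_le
    (fun y _ => (hd y).hasFDerivWithinAt) hseg (mem_closedBall_self (norm_nonneg _))
    (show x ∈ closedBall z R by rw [mem_closedBall, dist_eq_norm])
  simp only [hh] at this
  rw [Real.norm_eq_abs] at this
  simp only [sub_self, map_zero, inner_zero_right, mul_zero, sub_zero] at this
  rw [sq, ← mul_assoc]
  refine le_trans (le_of_eq ?_) this
  congr 1; ring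

lemma quad_contDiff {N : ℕ} (p : EN N) (X : Mat N) (z : EN N) :
    ContDiff ℝ 2 (fun x => quad p X (x - z)) := by
  unfold quad qf
  have h : ContDiff ℝ 2 (fun x : EN N => Matrix.toEuclideanLin X (x - z)) :=
    (LinearMap.toContinuousLinearMap (Matrix.toEuclideanLin X)).contDiff.comp
      (contDiff_id.sub contDiff_const)
  exact ((contDiff_const (c := p)).inner ℝ (contDiff_id.sub contDiff_const)).add
    (contDiff_const.mul (h.inner ℝ (contDiff_id.sub contDiff_const)))

lemma quad_hasGradientAt {N : ℕ} (p : EN N) {X : Mat N} (hX : X.IsSymm) (z y : EN N) :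
    HasGradientAt (fun x => quad p X (x - z)) (p + Matrix.toEuclideanLin X (y - z)) y := by
  set S := LinearMap.toContinuousLinearMap (Matrix.toEuclideanLin X)
  have e0 : HasFDerivAt (fun y : EN N => y - z) (ContinuousLinearMap.id ℝ (EN N)) y :=
    (hasFDerivAt_id y).sub_const z
  have e2 := (hasFDerivAt_const p y).inner ℝ e0
  have e3 := ((S.hasFDerivAt (x := y - z)).comp y e0).inner ℝ e0
  refine (e2.add (e3.const_mul (1 / 2))).congr_fderiv ?_
  ext v
  have e4 : ⟪S v, y - z⟫ = ⟪S (y - z), v⟫ := by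
    simp only [S, LinearMap.coe_toContinuousLinearMap']
    rw [symm_inner hX, real_inner_comm]
  simp [S, inner_sub_left] at e4 ⊢
  rw [e4]
  ring

lemma hess_apply_of_gradient {N : ℕ} {f : EN N → ℝ} {G : EN N → EN N} {S : EN N →L[ℝ] EN N} {z : EN N}
    (hf : ∀ x, HasGradientAt f (G x) x) (hG : HasFDerivAt G S z) (i j : Fin N) :
    hess f z i j = ⟪S (EuclideanSpace.single i 1), EuclideanSpace.single j 1⟫ := by
  have h1 : fderiv ℝ f = fun y => (InnerProductSpace.toDual ℝ (EN N)) (G y) := by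
    ext1 y; exact (hf y).hasFDerivAt.fderiv
  have h2 : HasFDerivAt (fun y => (InnerProductSpace.toDual ℝ (EN N)) (G y))
        ((InnerProductSpace.toDual ℝ (EN N)).toContinuousLinearEquiv.toContinuousLinearMap.comp S) z :=
      ((InnerProductSpace.toDual ℝ (EN N)).toContinuousLinearEquiv.toContinuousLinearMap.hasFDerivAt
        (x := G z)).comp z hG
  simp only [hess, Matrix.of_apply]
  rw [iteratedFDeriv_two_apply, h1, h2.fderiv]
  simp

lemma gradient_differentiable {N : ℕ} {φ : EN N → ℝ} (hφ : ContDiff ℝ 2 φ) :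
    ContDiff ℝ 1 (gradient φ) := by
  have : gradient φ = fun x => (InnerProductSpace.toDual ℝ (EN N)).symm (fderiv ℝ φ x) := rfl
  rw [this]
  have h := hφ.fderiv_right (m := 1) (by norm_num)
  exact (InnerProductSpace.toDual ℝ (EN N)).symm.toContinuousLinearEquiv.toContinuousLinearMap.contDiff.comp h

lemma hasGradientAt_of_contDiff {N : ℕ} {φ : EN N → ℝ} (hφ : ContDiff ℝ 2 φ) (x : EN N) :
    HasGradientAt φ (gradient φ x) x :=
  ((hφ.differentiable (by norm_num)) x).hasGradientAt

lemma gradient_quad {N : ℕ} (p : EN N) {X : Mat N} (hX : X.IsSymm) (z y : EN N) :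
    gradient (fun x => quad p X (x - z)) y = p + Matrix.toEuclideanLin X (y - z) :=
  (quad_hasGradientAt p hX z y).gradient

lemma hess_quad {N : ℕ} (p : EN N) {X : Mat N} (hX : X.IsSymm) (z y : EN N) :
    hess (fun x => quad p X (x - z)) y = X := by
  ext i j
  have e0 : HasFDerivAt (fun y : EN N => y - z) (ContinuousLinearMap.id ℝ (EN N)) y :=
    (hasFDerivAt_id y).sub_const z
  have hS := (((LinearMap.toContinuousLinearMap (Matrix.toEuclideanLin X)).hasFDerivAt
    (x := y - z)).comp y e0).const_add p
  rw [hess_apply_of_gradient (fun x => quad_hasGradientAt p hX z x) hS]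
  simp only [ContinuousLinearMap.comp_id, LinearMap.coe_toContinuousLinearMap']
  rw [toEuclideanLin_entry]
  exact congrFun (congrFun hX i) j

/-- Taylor expansion of a `C²` function in terms of `gradient` and `hess`. -/
lemma contDiff_taylor {N : ℕ} {φ : EN N → ℝ} (hφ : ContDiff ℝ 2 φ) (z : EN N) :
    (hess φ z).IsSymm ∧ ∀ η > 0, ∀ᶠ x in 𝓝 z,
      |φ x - φ z - quad (gradient φ z) (hess φ z) (x - z)| ≤ η * ‖x - z‖ ^ 2 := by
  have hf := hasGradientAt_of_contDiff hφ
  have hG := ((gradient_differentiable hφ).differentiable (by norm_num) z).hasFDerivAt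
  obtain ⟨hs, hT⟩ := peano_taylor hf hG
  set S := fderiv ℝ (gradient φ) z
  have hH : ∀ i j, hess φ z i j = ⟪S (EuclideanSpace.single i 1), EuclideanSpace.single j 1⟫ :=
    hess_apply_of_gradient hf hG
  have hsym : (hess φ z).IsSymm := by
    ext i j
    rw [Matrix.transpose_apply, hH, hH, hs, real_inner_comm]
  refine ⟨hsym, fun η hη => (hT η hη).mono fun x hx => ?_⟩
  have hSe : Matrix.toEuclideanLin (hess φ z) = S.toLinearMap := by
    refine (EuclideanSpace.basisFun (Fin N) ℝ).toBasis.ext fun j => ?_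
    refine InnerProductSpace.ext_inner_right_basis (EuclideanSpace.basisFun (Fin N) ℝ).toBasis fun i => ?_
    simp only [OrthonormalBasis.coe_toBasis, EuclideanSpace.basisFun_apply]
    rw [toEuclideanLin_entry, ← hsym, Matrix.transpose_apply, hH]
    rfl
  unfold quad qf
  rw [hSe]
  convert hx using 2
  simp
  ring

/-! ### Lasry–Lions regularisation -/

lemma nsq_add {N : ℕ} (x y : EN N) : ‖x + y‖ ^ 2 = ‖x‖ ^ 2 + 2 * ⟪x, y⟫ + ‖y‖ ^ 2 :=
  norm_add_sq_real x y

lemma nsq_sub {N : ℕ} (x y : EN N) : ‖x - y‖ ^ 2 = ‖x‖ ^ 2 - 2 * ⟪x, y⟫ + ‖y‖ ^ 2 :=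
  norm_sub_sq_real x y

/-- Lasry–Lions regularisation: `û` is the sup-convolution of `u` over `K` (with maximisers `M`),
`e` the inf-convolution of `û` (with minimisers `J`), which is `C^{1,1}`. -/
lemma ll_exists {N : ℕ} {K : Set (EN N)} (hK : IsCompact K) (hne : K.Nonempty) {u : EN N → ℝ}
    (hu : UpperSemicontinuousOn u K) {m : ℝ} (hm : 0 < m) :
    ∃ (û e : EN N → ℝ) (J M : EN N → EN N),
      (∀ x, ∀ ζ ∈ K, u ζ - m / 2 * ‖x - ζ‖ ^ 2 ≤ û x) ∧
      (∀ x, M x ∈ K ∧ û x = u (M x) - m / 2 * ‖x - M x‖ ^ 2) ∧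
      Continuous û ∧ (∀ z, e z = û (J z) + m * ‖J z - z‖ ^ 2) ∧
      (∀ z x, e z + m / 2 * ‖x - J z‖ ^ 2 ≤ û x + m * ‖x - z‖ ^ 2) ∧
      LipschitzWith 2 J ∧ ∀ z, HasGradientAt e ((2 * m) • (z - J z)) z := by
  have hM : ∀ x, ∃ ζ ∈ K, ∀ ζ' ∈ K, u ζ' - m / 2 * ‖x - ζ'‖ ^ 2 ≤ u ζ - m / 2 * ‖x - ζ‖ ^ 2 := by
    intro x
    have h1 : UpperSemicontinuousOn (fun ζ => u ζ + -(m / 2 * ‖x - ζ‖ ^ 2)) K :=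
      hu.add (Continuous.continuousOn (by fun_prop)).upperSemicontinuousOn
    obtain ⟨ζ, hζ, hmax⟩ := h1.exists_isMaxOn hne hK
    exact ⟨ζ, hζ, fun ζ' hζ' => by have := hmax hζ'; simp at this; linarith⟩
  choose M hMK hMmax using hM
  set û : EN N → ℝ := fun x => u (M x) - m / 2 * ‖x - M x‖ ^ 2 with hû
  have hge : ∀ x, ∀ ζ ∈ K, u ζ - m / 2 * ‖x - ζ‖ ^ 2 ≤ û x := fun x ζ hζ => hMmax x ζ hζ
  obtain ⟨R, hR⟩ := hK.isBounded.exists_norm_le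
  have hR0 : 0 ≤ R := (norm_nonneg _).trans (hR _ hne.some_mem)
  have hcont : Continuous û := by
    have hL : LipschitzWith (Real.toNNReal (m * R)) (fun x => û x + m / 2 * ‖x‖ ^ 2) := by
      refine LipschitzWith.of_le_add_mul _ fun x y => ?_
      rw [Real.coe_toNNReal _ (by positivity), dist_eq_norm]
      have h1 := hge y (M x) (hMK x)
      have h2 : û x = u (M x) - m / 2 * ‖x - M x‖ ^ 2 := rfl
      rw [nsq_sub] at h1 h2
      have h3 : ⟪x - y, M x⟫ ≤ ‖x - y‖ * R :=
        (real_inner_le_norm _ _).trans (by gcongr; exact hR _ (hMK x))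
      rw [inner_sub_left] at h3
      have h4 := mul_le_mul_of_nonneg_left h3 hm.le
      nlinarith
    have : û = fun x => (û x + m / 2 * ‖x‖ ^ 2) - m / 2 * ‖x‖ ^ 2 := by ext x; ring
    rw [this]
    exact hL.continuous.sub (by fun_prop)
  have hJ : ∀ z, ∃ x0, ∀ x, û x0 + m * ‖x0 - z‖ ^ 2 ≤ û x + m * ‖x - z‖ ^ 2 := by
    intro z
    obtain ⟨ζ, hζ⟩ := hne
    have hc : Continuous fun x => û x + m * ‖x - z‖ ^ 2 := hcont.add (by fun_prop)
    refine hc.exists_forall_le ?_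
    have ht : Tendsto (fun x : EN N => (u ζ - 3 / 2 * m * ‖z - ζ‖ ^ 2) + m / 4 * (dist x z) ^ 2)
        (cocompact (EN N)) atTop := by
      refine tendsto_atTop_add_const_left _ _ ?_
      refine Tendsto.const_mul_atTop (by positivity) ?_
      exact (tendsto_pow_atTop (by norm_num)).comp (tendsto_dist_right_cocompact_atTop z)
    refine tendsto_atTop_mono (fun x => ?_) ht
    have h1 := hge x ζ hζ
    have h2 : ‖x - ζ‖ ≤ dist x z + ‖z - ζ‖ := by
      rw [dist_eq_norm]; exact norm_sub_le_norm_sub_add_norm_sub x z ζ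
    have h3 : ‖x - ζ‖ ^ 2 ≤ (dist x z + ‖z - ζ‖) ^ 2 := by gcongr
    rw [dist_eq_norm] at *
    nlinarith [mul_nonneg hm.le (sq_nonneg (‖x - z‖ - 2 * ‖z - ζ‖)), mul_le_mul_of_nonneg_left h3 hm.le]
  choose J hJmin using hJ
  set e : EN N → ℝ := fun z => û (J z) + m * ‖J z - z‖ ^ 2 with he
  have hconv : ∀ z x, e z + m / 2 * ‖x - J z‖ ^ 2 ≤ û x + m * ‖x - z‖ ^ 2 := by
    intro z x
    by_contra hcon
    push Not at hcon
    set A := m / 2 * ‖x - J z‖ ^ 2 with hA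
    set B := û x + m * ‖x - z‖ ^ 2 - e z with hB
    have hB0 : 0 ≤ B := by have := hJmin z x; simp only [hB, he]; linarith
    have hAB : B < A := by simp only [hB]; linarith
    have key : ∀ t, 0 < t → t ≤ 1 → (1 - t) * A ≤ B := by
      intro t ht0 ht1
      set y := J z + t • (x - J z) with hy
      have h1 := hJmin z y
      have h2 : û y = u (M y) - m / 2 * ‖y - M y‖ ^ 2 := rfl
      have h3 := hge (J z) (M y) (hMK y)
      have h4 := hge x (M y) (hMK y)
      have id1 : ∀ w : EN N, ‖y - w‖ ^ 2 = (1 - t) * ‖J z - w‖ ^ 2 + t * ‖x - w‖ ^ 2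
          - t * (1 - t) * ‖x - J z‖ ^ 2 := by
        intro w
        have e1 : y - w = (J z - w) + t • (x - J z) := by rw [hy]; abel
        have e2 : x - w = (J z - w) + (x - J z) := by abel
        rw [e1, e2, nsq_add, nsq_add, norm_smul, inner_smul_right, Real.norm_eq_abs, mul_pow, sq_abs]
        ring
      have h5 := id1 z
      have h6 := id1 (M y)
      have h7 : t * ((1 - t) * A) ≤ t * B := by
        simp only [hB, hA, he]
        rw [h5] at h1
        rw [h6] at h2
        have h3' := mul_le_mul_of_nonneg_left h3 (by linarith : (0:ℝ) ≤ 1 - t)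
        have h4' := mul_le_mul_of_nonneg_left h4 ht0.le
        nlinarith
      exact le_of_mul_le_mul_left h7 ht0
    have hA0 : 0 < A := by linarith
    have := key ((A - B) / (2 * A)) (by apply div_pos <;> linarith)
      (by rw [div_le_one (by linarith)]; linarith)
    have e3 : (1 - (A - B) / (2 * A)) * A = (A + B) / 2 := by field_simp; ring
    rw [e3] at this; linarith
  have hmono : ∀ z z', ‖J z - J z'‖ ^ 2 ≤ 2 * ⟪J z - J z', z - z'⟫ := by
    intro z z'
    have h1 := hconv z (J z')
    have h2 := hconv z' (J z)
    simp only [he] at h1 h2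
    rw [norm_sub_rev (J z') (J z)] at h1
    have h3 : m * (‖J z' - z‖ ^ 2 + ‖J z - z'‖ ^ 2 - ‖J z - z‖ ^ 2 - ‖J z' - z'‖ ^ 2)
        = m * (2 * ⟪J z - J z', z - z'⟫) := by
      congr 1
      simp only [nsq_sub, inner_sub_left, inner_sub_right]; ring
    have h4 : m * ‖J z - J z'‖ ^ 2 ≤ m * (2 * ⟪J z - J z', z - z'⟫) := by
      rw [← h3]; nlinarith
    exact le_of_mul_le_mul_left h4 hm
  have hLip : ∀ z z', ‖J z - J z'‖ ≤ 2 * ‖z - z'‖ := by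
    intro z z'
    have h1 := hmono z z'
    have h2 := real_inner_le_norm (J z - J z') (z - z')
    by_contra hcon
    push Not at hcon
    have h3 : 0 < ‖J z - J z'‖ := lt_of_le_of_lt (by positivity) hcon
    nlinarith
  refine ⟨û, e, J, M, hge, fun x => ⟨hMK x, rfl⟩, hcont, fun z => rfl, hconv,
    LipschitzWith.of_dist_le_mul fun z z' => by
      rw [dist_eq_norm, dist_eq_norm]; exact hLip z z', fun z => ?_⟩
  have hup : ∀ z z', e z' - e z ≤ 2 * m * ⟪z - J z, z' - z⟫ + m * ‖z' - z‖ ^ 2 := by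
    intro z z'
    have h1 := hJmin z' (J z)
    simp only [he]
    have h2 : ‖J z - z'‖ ^ 2 = ‖J z - z‖ ^ 2 + 2 * ⟪z - J z, z' - z⟫ + ‖z' - z‖ ^ 2 := by
      have : J z - z' = (J z - z) - (z' - z) := by abel
      rw [this, nsq_sub, ← neg_sub z (J z), inner_neg_left]; ring
    rw [h2] at h1
    nlinarith
  rw [hasGradientAt_iff_isLittleO]
  refine Asymptotics.IsBigO.trans_isLittleO (g := fun x' => ‖x' - z‖ ^ 2) ?_ ?_
  · refine Asymptotics.IsBigO.of_bound (7 * m) (Eventually.of_forall fun x => ?_)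
    rw [Real.norm_eq_abs, Real.norm_eq_abs, abs_of_nonneg (sq_nonneg ‖x - z‖), inner_smul_left]
    simp only [conj_trivial]
    have h1 := hup z x
    have h2 := hup x z
    have h3 : ⟪x - J x, z - x⟫ = -⟪z - J z, x - z⟫ - ‖x - z‖ ^ 2 + ⟪J x - J z, x - z⟫ := by
      rw [← real_inner_self_eq_norm_sq]
      simp only [inner_sub_left, inner_sub_right]; ring
    have h4 : ⟪J x - J z, x - z⟫ ≤ 2 * ‖x - z‖ ^ 2 := by
      refine (real_inner_le_norm _ _).trans ?_
      nlinarith [hLip x z, norm_nonneg (x - z)]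
    rw [h3, norm_sub_rev z x] at h2
    have h5 := mul_le_mul_of_nonneg_left h4 hm.le
    have h6 : 0 ≤ m * ‖x - z‖ ^ 2 := by positivity
    rw [abs_le]
    constructor <;> nlinarith
  · exact Asymptotics.isLittleO_pow_sub_sub z (m := 2) (by norm_num)

/-! ### The theorem on sums -/

/-- `(p, X)` is a second-order superjet of `u` at `z` relative to `K`, in non-asymptotic form. -/
def UJet {N : ℕ} (K : Set (EN N)) (u : EN N → ℝ) (z p : EN N) (X : Mat N) : Prop :=
  ∀ᶠ x in 𝓝[K] z, u x ≤ u z + quad p X (x - z)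

/-- If a Lipschitz image of `Z` contains a ball, then `Z` is not a null set; by Rademacher's theorem `Z`
then contains a point at which both Lipschitz maps are differentiable. -/
lemma exists_diff_point {N : ℕ} {J₁ J₂ : EN N → EN N} {L₁ L₂ L : ℝ≥0} (h₁ : LipschitzWith L₁ J₁)
    (h₂ : LipschitzWith L₂ J₂) {Φ : EN N × EN N → EN N × EN N} (hΦ : LipschitzWith L Φ)
    {Z : Set (EN N × EN N)} {κ : ℝ} (hκ : 0 < κ) (hcover : ball 0 κ ⊆ Φ '' Z) :
    ∃ z ∈ Z, DifferentiableAt ℝ J₁ z.1 ∧ DifferentiableAt ℝ J₂ z.2 := by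
  set d := Module.finrank ℝ (EN N × EN N)
  let μ : MeasureTheory.Measure (EN N × EN N) := MeasureTheory.Measure.hausdorffMeasure (d : ℝ)
  have hμ : μ.IsAddHaarMeasure := MeasureTheory.isAddHaarMeasure_hausdorffMeasure
  have a1 : ∀ᵐ z ∂μ, DifferentiableAt ℝ (fun w : EN N × EN N => J₁ w.1) z :=
    (h₁.comp LipschitzWith.prod_fst).ae_differentiableAt
  have a2 : ∀ᵐ z ∂μ, DifferentiableAt ℝ (fun w : EN N × EN N => J₂ w.2) z :=
    (h₂.comp LipschitzWith.prod_snd).ae_differentiableAt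
  by_contra hcon
  push Not at hcon
  have hZ : μ Z = 0 := by
    have h0 : ∀ᵐ z ∂μ, z ∉ Z := by
      filter_upwards [a1, a2] with z hz1 hz2 hzZ
      refine hcon z hzZ ?_ ?_
      · have e1 : DifferentiableAt ℝ (fun x : EN N => (x, z.2)) z.1 := by fun_prop
        exact DifferentiableAt.comp z.1 (f := fun x : EN N => (x, z.2)) hz1 e1
      · have e1 : DifferentiableAt ℝ (fun x : EN N => (z.1, x)) z.2 := by fun_prop
        exact DifferentiableAt.comp z.2 (f := fun x : EN N => (z.1, x)) hz2 e1
    rw [MeasureTheory.ae_iff] at h0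
    simpa using h0
  have h1 : μ (Φ '' Z) = 0 := by
    have := hΦ.hausdorffMeasure_image_le (d := (d : ℝ)) (by positivity) Z
    have h2 : μ (Φ '' Z) ≤ (L : ENNReal) ^ (d : ℝ) * μ Z := this
    rw [hZ, mul_zero] at h2
    exact le_antisymm h2 bot_le
  have h3 : 0 < μ (ball 0 κ) := Metric.measure_ball_pos μ 0 hκ
  exact absurd (MeasureTheory.measure_mono_null hcover h1) (ne_of_gt h3)

/-- A symmetric endomorphism of Euclidean space is given by a symmetric matrix. -/
lemma exists_mat_of_symm {N : ℕ} (S : EN N →L[ℝ] EN N) (hS : ∀ a b, ⟪S a, b⟫ = ⟪a, S b⟫) :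
    ∃ X : Mat N, X.IsSymm ∧ ∀ d, Matrix.toEuclideanLin X d = S d := by
  refine ⟨Matrix.toEuclideanLin.symm S.toLinearMap, ?_, fun d => by simp⟩
  rw [isSymm_iff_isHermitian, ← Matrix.isSymmetric_toEuclideanLin_iff]
  intro a b
  simpa using hS a b

/-- Linear functionals that are ordered up to a quadratic error coincide. -/
lemma eq_of_quad_le {N : ℕ} {v w : EN N} {C : ℝ}
    (h : ∀ d : EN N, ⟪v, d⟫ ≤ ⟪w, d⟫ + C * ‖d‖ ^ 2) : v = w := by
  by_contra hne
  have hpos : 0 < ‖v - w‖ ^ 2 := by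
    have : v - w ≠ 0 := sub_ne_zero.2 hne
    positivity
  set t : ℝ := 1 / (2 * (|C| + 1)) with ht
  have ht0 : 0 < t := by positivity
  have h1 := h (t • (v - w))
  rw [inner_smul_right, inner_smul_right, norm_smul, mul_pow, Real.norm_eq_abs, sq_abs] at h1
  have h2 : ⟪v, v - w⟫ - ⟪w, v - w⟫ = ‖v - w‖ ^ 2 := by
    rw [← inner_sub_left, real_inner_self_eq_norm_sq]
  have h3 : t * ‖v - w‖ ^ 2 ≤ t * (C * t * ‖v - w‖ ^ 2) := by nlinarith
  have h4 := le_of_mul_le_mul_left h3 ht0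
  have h5 : C * t ≤ 1 / 2 := by
    rw [ht, mul_one_div, div_le_iff₀ (by positivity)]
    have := le_abs_self C; linarith
  nlinarith

/-- Choice of the localisation radius `κ` and of the regularisation parameter `m`. -/
lemma ts_param {δ r₁ r₂ η C D : ℝ} (hδ : 0 < δ) (hr₁ : 0 < r₁) (hr₂ : 0 < r₂) (hη : 0 < η)
    (hC0 : 2 ≤ C) (hD0 : 0 < D) : ∃ κ m : ℝ, 0 < κ ∧ κ ≤ 1 ∧ κ ≤ δ / 2 ∧ κ ≤ r₁ ∧ κ ≤ r₂ ∧
      κ * (2 * C + 4) ≤ δ / 2 ∧ 8 ≤ m ∧ 4 * C ≤ m ∧ D < m * κ ^ 2 ∧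
      D < m * (η * κ ^ 2) ∧ 1 ≤ m * κ := by
  obtain ⟨κ, hκ, hκ1, hκδ, hκr₁, hκr₂, hκC⟩ : ∃ κ > 0, κ ≤ 1 ∧ κ ≤ δ / 2 ∧ κ ≤ r₁ ∧ κ ≤ r₂ ∧
      κ * (2 * C + 4) ≤ δ / 2 := by
    refine ⟨min 1 (min (δ / 2) (min r₁ (min r₂ (δ / 2 / (2 * C + 4))))), by positivity, ?_, ?_, ?_, ?_, ?_⟩
    · exact min_le_left _ _
    · exact (min_le_right _ _).trans (min_le_left _ _)
    · exact (min_le_right _ _).trans ((min_le_right _ _).trans (min_le_left _ _))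
    · exact (min_le_right _ _).trans ((min_le_right _ _).trans ((min_le_right _ _).trans (min_le_left _ _)))
    · rw [← le_div_iff₀ (by positivity)]
      exact (min_le_right _ _).trans ((min_le_right _ _).trans ((min_le_right _ _).trans (min_le_right _ _)))
  refine ⟨κ, 8 + 4 * C + D / κ ^ 2 + D / (η * κ ^ 2) + 1 / κ, hκ, hκ1, hκδ, hκr₁, hκr₂, hκC, ?_, ?_, ?_, ?_, ?_⟩
  · have : 0 ≤ 4 * C + D / κ ^ 2 + D / (η * κ ^ 2) + 1 / κ := by positivity
    linarith
  · have : 0 ≤ 8 + D / κ ^ 2 + D / (η * κ ^ 2) + 1 / κ := by positivity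
    linarith
  · have : 0 < (8 + 4 * C + D / (η * κ ^ 2) + 1 / κ) * κ ^ 2 := by positivity
    have e : D / κ ^ 2 * κ ^ 2 = D := by field_simp
    linarith
  · have : 0 < (8 + 4 * C + D / κ ^ 2 + 1 / κ) * (η * κ ^ 2) := by positivity
    have e : D / (η * κ ^ 2) * (η * κ ^ 2) = D := by field_simp
    linarith
  · have : 0 < (8 + 4 * C + D / κ ^ 2 + D / (η * κ ^ 2)) * κ := by positivity
    have e : 1 / κ * κ = 1 := by field_simp
    linarith

/-- Localisation in the theorem on sums: for a large regularisation parameter `m`, the distance `w` of a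
maximiser to the reference point and its displacement `d` are both smaller than `κ`. -/
lemma ts_arith {η κ m C D R w d : ℝ} (hη : 0 < η) (hκ : 0 < κ) (hm1 : 8 ≤ m) (hmC : 4 * C ≤ m)
    (hmD : D < m * κ ^ 2) (hmη : D < m * (η * κ ^ 2)) (hD : D = 2 * C ^ 2 + 2 * R)
    (e1 : η * w ^ 2 + m / 2 * d ^ 2 ≤ C * d + C * d ^ 2 + 2 * (1 / m) * R) : w < κ ∧ d < κ := by
  have hm : 0 < m := by linarith
  have e2 : C * d ^ 2 ≤ m / 4 * d ^ 2 := by gcongr; linarith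
  have e3 : C * d ≤ m / 8 * d ^ 2 + 2 * C ^ 2 / m := by
    have : C * d * m ≤ (m / 8 * d ^ 2 + 2 * C ^ 2 / m) * m := by
      have e : 2 * C ^ 2 / m * m = 2 * C ^ 2 := by field_simp
      nlinarith [sq_nonneg (m * d - 4 * C)]
    exact le_of_mul_le_mul_right this hm
  have e4 : η * w ^ 2 + m / 8 * d ^ 2 ≤ D / m := by
    have : D / m = 2 * C ^ 2 / m + 2 * (1 / m) * R := by rw [hD]; field_simp
    rw [this]; linarith
  have e5 : D / m < κ ^ 2 := by rw [div_lt_iff₀ hm]; linarith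
  have e6 : D / m < η * κ ^ 2 := by rw [div_lt_iff₀ hm]; linarith
  constructor
  · have : η * w ^ 2 < η * κ ^ 2 := by
      have : 0 ≤ m / 8 * d ^ 2 := by positivity
      linarith
    exact lt_of_pow_lt_pow_left₀ 2 hκ.le (lt_of_mul_lt_mul_left this hη.le)
  · have : d ^ 2 < κ ^ 2 := by
      have h1 : 0 ≤ η * w ^ 2 := by positivity
      have h2 : d ^ 2 ≤ m / 8 * d ^ 2 := by nlinarith [sq_nonneg d]
      linarith
    exact lt_of_pow_lt_pow_left₀ 2 hκ.le this

/-- Transfer of the second-order expansion of the regularised function `e` at `z` to a superjet of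
`u` at the maximiser `M (J z)`. -/
lemma ts_transfer {N : ℕ} {K : Set (EN N)} {u û e : EN N → ℝ} {J M : EN N → EN N} {m : ℝ} (hm : 0 < m)
    (ge : ∀ x, ∀ ζ ∈ K, u ζ - m / 2 * ‖x - ζ‖ ^ 2 ≤ û x)
    (Ms : ∀ x, M x ∈ K ∧ û x = u (M x) - m / 2 * ‖x - M x‖ ^ 2)
    (ed : ∀ z, e z = û (J z) + m * ‖J z - z‖ ^ 2)
    (eg : ∀ z, HasGradientAt e ((2 * m) • (z - J z)) z) {z P : EN N}
    (hP1 : P = m • (M (J z) - J z)) (hP2 : P = (2 * m) • (z - J z)) (hd : DifferentiableAt ℝ J z) :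
    ∃ X : Mat N, X.IsSymm ∧ (∀ ε : ℝ, ε > 0 → UJet K u (M (J z)) P (X + ε • 1)) ∧
      ∀ ε : ℝ, ε > 0 → ∀ᶠ d in 𝓝 (0 : EN N), e z + ⟪P, d⟫ + 1 / 2 * qf X d - ε * ‖d‖ ^ 2 ≤ e (z + d) := by
  have hG : HasFDerivAt (fun z => (2 * m) • (z - J z))
      ((2 * m) • (ContinuousLinearMap.id ℝ (EN N) - fderiv ℝ J z)) z :=
    ((hasFDerivAt_id z).sub hd.hasFDerivAt).const_smul (2 * m)
  obtain ⟨hs, hT⟩ := peano_taylor eg hG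
  obtain ⟨X, hX, hXS⟩ := exists_mat_of_symm _ hs
  have hT' : ∀ ε : ℝ, ε > 0 → ∀ᶠ d in 𝓝 (0 : EN N),
      |e (z + d) - e z - ⟪P, d⟫ - 1 / 2 * qf X d| ≤ ε * ‖d‖ ^ 2 := by
    intro ε hε
    have ht : Tendsto (fun d : EN N => z + d) (𝓝 0) (𝓝 z) := by
      have : Continuous fun d : EN N => z + d := by fun_prop
      simpa using this.tendsto 0
    refine (ht.eventually (hT ε hε)).mono fun d hd => ?_
    rw [add_sub_cancel_left, ← hP2, ← hXS] at hd
    exact hd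
  refine ⟨X, hX, fun ε hε => ?_, fun ε hε => (hT' ε hε).mono fun d hd => by
    have := (abs_le.1 hd).1; linarith⟩
  have hue : ∀ z', ∀ ζ ∈ K, u ζ ≤ e z' + m * ‖z' - ζ‖ ^ 2 := by
    intro z' ζ hζ
    have h1 := ge (J z') ζ hζ
    rw [ed z']
    have h2 : ‖J z' - ζ‖ ^ 2 ≤ 2 * ‖J z' - z'‖ ^ 2 + 2 * ‖z' - ζ‖ ^ 2 := by
      have h3 : ‖J z' - ζ‖ ≤ ‖J z' - z'‖ + ‖z' - ζ‖ := norm_sub_le_norm_sub_add_norm_sub _ _ _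
      have h4 : ‖J z' - ζ‖ ^ 2 ≤ (‖J z' - z'‖ + ‖z' - ζ‖) ^ 2 := by gcongr
      nlinarith [sq_nonneg (‖J z' - z'‖ - ‖z' - ζ‖)]
    nlinarith [mul_le_mul_of_nonneg_left h2 hm.le]
  set ζ := M (J z) with hζ
  have heq : e z + m * ‖z - ζ‖ ^ 2 = u ζ := by
    have h1 : ζ - J z = (2 : ℝ) • (z - J z) := by
      have : m • (ζ - J z) = m • ((2 : ℝ) • (z - J z)) := by
        rw [← hP1, hP2, smul_smul, mul_comm]
      exact smul_right_injective _ hm.ne' this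
    have h2 : z - ζ = -(z - J z) := by
      have : z - ζ = (z - J z) - (ζ - J z) := by abel
      rw [this, h1, two_smul]; abel
    rw [ed z, (Ms (J z)).2, h2, norm_neg, norm_sub_rev (J z) z, norm_sub_rev (J z) (M (J z)), ← hζ, h1,
      norm_smul]
    norm_num
    ring
  have ht : Tendsto (fun x : EN N => x - ζ) (𝓝[K] ζ) (𝓝 0) := by
    have : Continuous fun x : EN N => x - ζ := by fun_prop
    have h := this.tendsto ζ
    simp only [sub_self] at h
    exact h.mono_left nhdsWithin_le_nhds
  filter_upwards [ht.eventually (hT' (ε / 2) (by positivity)), self_mem_nhdsWithin] with x hx hxK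
  have h1 := hue (z + (x - ζ)) x hxK
  have h2 : z + (x - ζ) - x = z - ζ := by abel
  rw [h2] at h1
  unfold quad
  rw [qf_add, qf_one]
  have := (abs_le.1 hx).2
  linarith

set_option maxHeartbeats 4000000 in
/-- The theorem on sums for two upper semicontinuous functions on compact sets whose sum is touched
from above by a quadratic polynomial with strictness `η`. -/
theorem thm_sums {N : ℕ} {K₁ K₂ : Set (EN N)} (hK₁ : IsCompact K₁) (hK₂ : IsCompact K₂)
    {u₁ u₂ : EN N → ℝ} (hu₁ : UpperSemicontinuousOn u₁ K₁) (hu₂ : UpperSemicontinuousOn u₂ K₂)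
    {x₁ x₂ : EN N} (hx₁ : x₁ ∈ K₁) (hx₂ : x₂ ∈ K₂) (p₁ p₂ : EN N) (T₁ T₂ : EN N × EN N →L[ℝ] EN N)
    (hT : ∀ w w' : EN N × EN N, ⟪T₁ w, w'.1⟫ + ⟪T₂ w, w'.2⟫ = ⟪w.1, T₁ w'⟫ + ⟪w.2, T₂ w'⟫)
    {η : ℝ} (hη : 0 < η)
    (hmax : ∀ x ∈ K₁, ∀ y ∈ K₂, u₁ x + u₂ y ≤ u₁ x₁ + u₂ x₂ + (⟪p₁, x - x₁⟫ + ⟪p₂, y - x₂⟫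
      + 1 / 2 * (⟪T₁ (x - x₁, y - x₂), x - x₁⟫ + ⟪T₂ (x - x₁, y - x₂), y - x₂⟫))
      - η * (‖x - x₁‖ ^ 2 + ‖y - x₂‖ ^ 2)) {δ : ℝ} (hδ : 0 < δ) :
    ∃ z₁ ∈ K₁, ∃ z₂ ∈ K₂, ∃ P₁ P₂ : EN N, ∃ X₁ X₂ : Mat N, X₁.IsSymm ∧ X₂.IsSymm ∧
      ‖z₁ - x₁‖ < δ ∧ ‖z₂ - x₂‖ < δ ∧ |u₁ z₁ - u₁ x₁| < δ ∧ |u₂ z₂ - u₂ x₂| < δ ∧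
      ‖P₁ - p₁‖ < δ ∧ ‖P₂ - p₂‖ < δ ∧ UJet K₁ u₁ z₁ P₁ X₁ ∧ UJet K₂ u₂ z₂ P₂ X₂ ∧
      ∀ ξ ζ : EN N, qf X₁ ξ + qf X₂ ζ ≤ ⟪T₁ (ξ, ζ), ξ⟫ + ⟪T₂ (ξ, ζ), ζ⟫
        + δ * (‖ξ‖ ^ 2 + ‖ζ‖ ^ 2) := by
  obtain ⟨A, hA⟩ : ∃ A : EN N × EN N → ℝ, ∀ w, A w = ⟪T₁ w, w.1⟫ + ⟪T₂ w, w.2⟫ := ⟨_, fun _ => rfl⟩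
  obtain ⟨Q, hQ⟩ : ∃ Q : EN N × EN N → ℝ, ∀ w, Q w = ⟪p₁, w.1⟫ + ⟪p₂, w.2⟫ + 1 / 2 * A w := ⟨_, fun _ => rfl⟩
  set c : EN N × EN N := (x₁, x₂) with hc
  have hQadd : ∀ w d, Q (w + d) = Q w + (⟪p₁ + T₁ w, d.1⟫ + ⟪p₂ + T₂ w, d.2⟫ + 1 / 2 * A d) := by
    intro w d
    have h1 := hT d w
    simp only [hQ, hA, Prod.fst_add, Prod.snd_add, map_add, inner_add_left, inner_add_right]
    rw [real_inner_comm _ d.1, real_inner_comm _ d.2] at h1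
    linarith
  obtain ⟨τ, hτ⟩ : ∃ τ : ℝ, τ = ‖T₁‖ + ‖T₂‖ := ⟨_, rfl⟩
  have hτ0 : 0 ≤ τ := by rw [hτ]; positivity
  have hf : ∀ w : EN N × EN N, ‖w.1‖ ≤ ‖w‖ := norm_fst_le
  have hs : ∀ w : EN N × EN N, ‖w.2‖ ≤ ‖w‖ := norm_snd_le
  have hAb : ∀ w, |A w| ≤ τ * ‖w‖ ^ 2 := by
    intro w
    have h1 : |⟪T₁ w, w.1⟫| ≤ ‖T₁‖ * ‖w‖ * ‖w‖ := (abs_real_inner_le_norm _ _).trans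
      (mul_le_mul (T₁.le_opNorm w) (hf w) (norm_nonneg _) (by positivity))
    have h2 : |⟪T₂ w, w.2⟫| ≤ ‖T₂‖ * ‖w‖ * ‖w‖ := (abs_real_inner_le_norm _ _).trans
      (mul_le_mul (T₂.le_opNorm w) (hs w) (norm_nonneg _) (by positivity))
    rw [hA]
    refine (abs_add_le _ _).trans ?_
    rw [hτ]
    have h3 : (‖T₁‖ + ‖T₂‖) * ‖w‖ ^ 2 = ‖T₁‖ * ‖w‖ * ‖w‖ + ‖T₂‖ * ‖w‖ * ‖w‖ := by ring
    linarith
  -- bounds on the compact sets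
  obtain ⟨R₁, hR₁⟩ := hK₁.isBounded.exists_norm_le
  obtain ⟨R₂, hR₂⟩ := hK₂.isBounded.exists_norm_le
  obtain ⟨R, hR⟩ : ∃ R : ℝ, R = ‖c‖ + |R₁| + |R₂| := ⟨_, rfl⟩
  have hWR : ∀ x ∈ K₁, ∀ y ∈ K₂, ‖((x, y) : EN N × EN N) - c‖ ≤ R := by
    intro x hx y hy
    refine (norm_sub_le _ _).trans ?_
    have : ‖((x, y) : EN N × EN N)‖ ≤ |R₁| + |R₂| := by
      refine (norm_prod_le_iff).2 ⟨?_, ?_⟩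
      · have := hR₁ x hx; have := le_abs_self R₁; have := abs_nonneg R₂; simp; linarith
      · have := hR₂ y hy; have := le_abs_self R₂; have := abs_nonneg R₁; simp; linarith
    rw [hR]; linarith
  have hR0 : 0 ≤ R := by rw [hR]; positivity
  obtain ⟨C, hC⟩ : ∃ C : ℝ, C = ‖p₁‖ + ‖p₂‖ + τ * (R + 1) + 2 := ⟨_, rfl⟩
  have hC0 : 2 ≤ C := by
    have h1 : 0 ≤ τ * (R + 1) := by positivity
    have h2 := norm_nonneg p₁
    have h3 := norm_nonneg p₂
    rw [hC]; linarith
  obtain ⟨D, hD⟩ : ∃ D : ℝ, D = 2 * C ^ 2 + 2 * R := ⟨_, rfl⟩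
  have hD0 : 0 < D := by rw [hD]; positivity
  -- semicontinuity at the two base points
  have usc : ∀ {K : Set (EN N)} {u : EN N → ℝ} {x : EN N}, UpperSemicontinuousOn u K → x ∈ K →
      ∃ r > 0, ∀ z ∈ K, ‖z - x‖ < r → u z < u x + δ / 2 := by
    intro K u x hu hx
    have := hu x hx (u x + δ / 2) (by linarith)
    rw [eventually_iff, Metric.mem_nhdsWithin_iff] at this
    obtain ⟨r, hr, hsub⟩ := this
    exact ⟨r, hr, fun z hz hzr => hsub ⟨by rwa [mem_ball, dist_eq_norm], hz⟩⟩
  obtain ⟨r₁, hr₁, husc₁⟩ := usc hu₁ hx₁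
  obtain ⟨r₂, hr₂, husc₂⟩ := usc hu₂ hx₂
  obtain ⟨κ, m, hκ, hκ1, hκδ, hκr₁, hκr₂, hκC, hm1, hmC, hmD, hmη, hmκ⟩ := ts_param hδ hr₁ hr₂ hη hC0 hD0
  have hm : 0 < m := by linarith
  obtain ⟨û₁, e₁, J₁, M₁, ge₁, M₁s, cont₁, e₁d, e₁c, J₁L, e₁g⟩ := ll_exists hK₁ ⟨x₁, hx₁⟩ hu₁ hm
  obtain ⟨û₂, e₂, J₂, M₂, ge₂, M₂s, cont₂, e₂d, e₂c, J₂L, e₂g⟩ := ll_exists hK₂ ⟨x₂, hx₂⟩ hu₂ hm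
  obtain ⟨I, hI⟩ : ∃ I : EN N × EN N → EN N × EN N → ℝ, ∀ q w, I q w = ⟪q.1, w.1⟫ + ⟪q.2, w.2⟫ := ⟨_, fun _ _ => rfl⟩
  have hIb : ∀ q w, |I q w| ≤ 2 * ‖q‖ * ‖w‖ := by
    intro q w
    have h1 : |⟪q.1, w.1⟫| ≤ ‖q‖ * ‖w‖ := (abs_real_inner_le_norm _ _).trans
      (mul_le_mul (hf q) (hf w) (norm_nonneg _) (by positivity))
    have h2 : |⟪q.2, w.2⟫| ≤ ‖q‖ * ‖w‖ := (abs_real_inner_le_norm _ _).trans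
      (mul_le_mul (hs q) (hs w) (norm_nonneg _) (by positivity))
    rw [hI]
    refine (abs_add_le _ _).trans ?_
    linarith
  obtain ⟨Θ, hΘ⟩ : ∃ Θ : EN N × EN N → EN N × EN N → ℝ, ∀ q X, Θ q X = û₁ X.1 + û₂ X.2 - Q (X - c) - I q (X - c) := ⟨_, fun _ _ => rfl⟩
  obtain ⟨c0, hc0⟩ : ∃ c0 : ℝ, c0 = u₁ x₁ + u₂ x₂ := ⟨_, rfl⟩
  have hΘc : ∀ q, c0 ≤ Θ q c := by
    intro q
    have h1 := ge₁ x₁ x₁ hx₁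
    have h2 := ge₂ x₂ x₂ hx₂
    simp at h1 h2
    simp [hΘ, hQ, hA, hI, hc, hc0]
    linarith
  -- localisation of near-maximisers
  have hloc : ∀ q X, ‖q‖ ≤ 1 / m → c0 ≤ Θ q X →
      ‖((M₁ X.1, M₂ X.2) : EN N × EN N) - c‖ < κ ∧ ‖X - (M₁ X.1, M₂ X.2)‖ < κ := by
    intro q X hq hX
    set W : EN N × EN N := (M₁ X.1, M₂ X.2) - c with hW
    set Δ : EN N × EN N := X - (M₁ X.1, M₂ X.2) with hΔ
    have hXW : X - c = W + Δ := by rw [hW, hΔ]; abel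
    have hWn : ‖W‖ ≤ R := hWR _ (M₁s _).1 _ (M₂s _).1
    have h1 := hmax _ (M₁s X.1).1 _ (M₂s X.2).1
    have h1' : u₁ (M₁ X.1) + u₂ (M₂ X.2) ≤ c0 + Q W - η * (‖W.1‖ ^ 2 + ‖W.2‖ ^ 2) := by
      rw [hc0, hQ, hA]; exact h1
    clear h1
    have h2 : û₁ X.1 + û₂ X.2 = u₁ (M₁ X.1) + u₂ (M₂ X.2) - m / 2 * (‖Δ.1‖ ^ 2 + ‖Δ.2‖ ^ 2) := by
      rw [(M₁s X.1).2, (M₂s X.2).2]; simp [hΔ]; ring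
    have h3 : c0 + Q (W + Δ) + I q (W + Δ) ≤ û₁ X.1 + û₂ X.2 := by
      have := hX; simp only [hΘ] at this; rw [hXW] at this; linarith
    rw [h2, hQadd] at h3
    have n1 : ‖W‖ ^ 2 ≤ ‖W.1‖ ^ 2 + ‖W.2‖ ^ 2 := by
      rw [Prod.norm_def]
      rcases le_total ‖W.1‖ ‖W.2‖ with h | h
      · rw [max_eq_right h]; nlinarith [sq_nonneg ‖W.1‖]
      · rw [max_eq_left h]; nlinarith [sq_nonneg ‖W.2‖]
    have n2 : ‖Δ‖ ^ 2 ≤ ‖Δ.1‖ ^ 2 + ‖Δ.2‖ ^ 2 := by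
      rw [Prod.norm_def]
      rcases le_total ‖Δ.1‖ ‖Δ.2‖ with h | h
      · rw [max_eq_right h]; nlinarith [sq_nonneg ‖Δ.1‖]
      · rw [max_eq_left h]; nlinarith [sq_nonneg ‖Δ.2‖]
    have b1 : -((‖p₁‖ + ‖T₁‖ * R) * ‖Δ‖) ≤ ⟪p₁ + T₁ W, Δ.1⟫ := by
      refine (neg_le_neg ?_).trans (neg_le_of_abs_le (abs_real_inner_le_norm _ _))
      refine mul_le_mul ?_ (hf Δ) (norm_nonneg _) (by positivity)
      refine (norm_add_le _ _).trans ?_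
      gcongr
      exact (T₁.le_opNorm W).trans (by gcongr)
    have b2 : -((‖p₂‖ + ‖T₂‖ * R) * ‖Δ‖) ≤ ⟪p₂ + T₂ W, Δ.2⟫ := by
      refine (neg_le_neg ?_).trans (neg_le_of_abs_le (abs_real_inner_le_norm _ _))
      refine mul_le_mul ?_ (hs Δ) (norm_nonneg _) (by positivity)
      refine (norm_add_le _ _).trans ?_
      gcongr
      exact (T₂.le_opNorm W).trans (by gcongr)
    have b3 := (abs_le.1 (hAb Δ)).1
    have b4 := (abs_le.1 (hIb q (W + Δ))).1
    have b5 : 2 * ‖q‖ * ‖W + Δ‖ ≤ 2 * (1 / m) * (R + ‖Δ‖) := by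
      gcongr
      exact (norm_add_le _ _).trans (by gcongr)
    have b6 : 2 * (1 / m) * ‖Δ‖ ≤ 2 * ‖Δ‖ := by
      gcongr
      rw [mul_one_div, div_le_iff₀ hm]; linarith
    have n1' := mul_le_mul_of_nonneg_left n1 hη.le
    have n2' := mul_le_mul_of_nonneg_left n2 hm.le
    have hΔ0 := norm_nonneg Δ
    have e1 : η * ‖W‖ ^ 2 + m / 2 * ‖Δ‖ ^ 2 ≤ C * ‖Δ‖ + C * ‖Δ‖ ^ 2 + 2 * (1 / m) * R := by
      have hτR : τ * ‖Δ‖ ^ 2 ≤ C * ‖Δ‖ ^ 2 := by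
        gcongr; rw [hC]
        have h2 := norm_nonneg p₁
        have h3 := norm_nonneg p₂
        have h4 : 0 ≤ τ * R := by positivity
        linarith
      have hτΔ : 0 ≤ τ * ‖Δ‖ ^ 2 := by positivity
      have hCC : (‖p₁‖ + ‖T₁‖ * R) * ‖Δ‖ + (‖p₂‖ + ‖T₂‖ * R) * ‖Δ‖ + 2 * ‖Δ‖ ≤ C * ‖Δ‖ := by
        have : 0 ≤ τ * ‖Δ‖ := by positivity
        rw [hC]; rw [hτ] at this ⊢; linarith
      linarith
    exact ts_arith hη hκ hm1 hmC hmD hmη hD e1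
  -- existence of maximisers of the perturbed functions
  have hQc : Continuous Q := by
    rw [show Q = _ from funext hQ]; simp only [hA]; fun_prop
  have hex : ∀ q, ‖q‖ ≤ 1 / m → ∃ X, ∀ X', Θ q X' ≤ Θ q X := by
    intro q hq
    have hcont : Continuous (Θ q) := by
      rw [show Θ q = _ from funext (hΘ q)]; simp only [hI]; fun_prop
    obtain ⟨X, hXm, hX⟩ := (isCompact_closedBall c (2 * κ)).exists_isMaxOn
      ⟨c, mem_closedBall_self (by positivity)⟩ hcont.continuousOn
    refine ⟨X, fun X' => ?_⟩
    by_cases h : c0 ≤ Θ q X'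
    · obtain ⟨h1, h2⟩ := hloc q X' hq h
      refine hX ?_
      rw [mem_closedBall, dist_eq_norm]
      have : X' - c = (X' - (M₁ X'.1, M₂ X'.2)) + ((M₁ X'.1, M₂ X'.2) - c) := by abel
      rw [this]
      exact (norm_add_le _ _).trans (by linarith)
    · push Not at h
      exact h.le.trans ((hΘc q).trans (hX (mem_closedBall_self (by positivity))))
  -- first-order information at a maximiser
  have hfirst : ∀ q X, (∀ X', Θ q X' ≤ Θ q X) → ∀ d : EN N × EN N,
      û₁ (X.1 + d.1) + û₂ (X.2 + d.2) ≤ û₁ X.1 + û₂ X.2 + (⟪p₁ + T₁ (X - c) + q.1, d.1⟫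
        + ⟪p₂ + T₂ (X - c) + q.2, d.2⟫ + 1 / 2 * A d) := by
    intro q X hX d
    have h := hX (X + d)
    simp only [hΘ] at h
    have e1 : X + d - c = (X - c) + d := by abel
    rw [e1, hQadd] at h
    simp only [hI, Prod.fst_add, Prod.snd_add, inner_add_right, inner_add_left] at h ⊢
    linarith
  have hsub : ∀ {K : Set (EN N)} {u û e : EN N → ℝ} {J M : EN N → EN N},
      (∀ x, ∀ ζ ∈ K, u ζ - m / 2 * ‖x - ζ‖ ^ 2 ≤ û x) →
      (∀ x, M x ∈ K ∧ û x = u (M x) - m / 2 * ‖x - M x‖ ^ 2) →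
      (∀ z, e z = û (J z) + m * ‖J z - z‖ ^ 2) →
      (∀ z x, e z + m / 2 * ‖x - J z‖ ^ 2 ≤ û x + m * ‖x - z‖ ^ 2) →
      ∀ x P, (∀ d, û (x + d) ≤ û x + ⟪P, d⟫ + τ * ‖d‖ ^ 2) →
      P = m • (M x - x) ∧ J (x + (1 / (2 * m)) • P) = x := by
    intro K u û e J M ge Ms ed ec x P hP
    have hlow : ∀ d, û x + ⟪m • (M x - x), d⟫ - m / 2 * ‖d‖ ^ 2 ≤ û (x + d) := by
      intro d
      have h1 := ge (x + d) (M x) (Ms x).1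
      have h2 : x + d - M x = (x - M x) + d := by abel
      rw [h2, nsq_add] at h1
      rw [(Ms x).2, inner_smul_left, ← neg_sub x (M x), inner_neg_left]
      simp only [conj_trivial]
      linarith
    have hPe : P = m • (M x - x) := by
      refine (eq_of_quad_le (C := τ + m / 2) fun d => ?_).symm
      have := hlow d; have := hP d; linarith
    refine ⟨hPe, ?_⟩
    set z := x + (1 / (2 * m)) • P with hz
    have h1 := ec z x
    have h2 := hlow (J z - x)
    rw [← hPe, add_sub_cancel] at h2
    rw [ed z] at h1
    have h3 : ‖J z - z‖ ^ 2 = ‖x - z‖ ^ 2 + ‖J z - x‖ ^ 2 - (1 / m) * ⟪P, J z - x⟫ := by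
      have e1 : J z - z = (x - z) + (J z - x) := by abel
      have e2 : x - z = -((1 / (2 * m)) • P) := by rw [hz]; abel
      rw [e1, nsq_add]
      rw [e2, inner_neg_left, inner_smul_left]
      simp only [conj_trivial]
      field_simp
      ring
    rw [norm_sub_rev x (J z)] at h1
    have h4 : m * ‖J z - z‖ ^ 2 = m * ‖x - z‖ ^ 2 + m * ‖J z - x‖ ^ 2 - ⟪P, J z - x⟫ := by
      rw [h3]; field_simp
    have h5 : m * ‖J z - x‖ ^ 2 ≤ 0 := by linarith
    have h6 : ‖J z - x‖ ^ 2 ≤ 0 := by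
      by_contra hcon; push Not at hcon; nlinarith
    have h7 : ‖J z - x‖ = 0 := by nlinarith [norm_nonneg (J z - x)]
    exact sub_eq_zero.1 (norm_eq_zero.1 h7)
  have hn1 : ∀ d : EN N, ‖((d, 0) : EN N × EN N)‖ = ‖d‖ := fun d => by simp [Prod.norm_def]
  have hn2 : ∀ d : EN N, ‖((0, d) : EN N × EN N)‖ = ‖d‖ := fun d => by simp [Prod.norm_def]
  have hfirst' : ∀ q X, (∀ X', Θ q X' ≤ Θ q X) →
      (p₁ + T₁ (X - c) + q.1 = m • (M₁ X.1 - X.1) ∧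
        J₁ (X.1 + (1 / (2 * m)) • (p₁ + T₁ (X - c) + q.1)) = X.1) ∧
      (p₂ + T₂ (X - c) + q.2 = m • (M₂ X.2 - X.2) ∧
        J₂ (X.2 + (1 / (2 * m)) • (p₂ + T₂ (X - c) + q.2)) = X.2) := by
    intro q X hX
    constructor
    · refine hsub ge₁ M₁s e₁d e₁c X.1 _ fun d => ?_
      have h := hfirst q X hX (d, 0)
      have h2 := (abs_le.1 (hAb (d, 0))).2
      rw [hn1] at h2
      simp only [add_zero, inner_zero_right] at h
      have : 0 ≤ τ * ‖d‖ ^ 2 := by positivity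
      linarith
    · refine hsub ge₂ M₂s e₂d e₂c X.2 _ fun d => ?_
      have h := hfirst q X hX (0, d)
      have h2 := (abs_le.1 (hAb (0, d))).2
      rw [hn2] at h2
      simp only [add_zero, inner_zero_right] at h
      have : 0 ≤ τ * ‖d‖ ^ 2 := by positivity
      linarith
  -- the perturbation as a Lipschitz function of the contact point
  obtain ⟨JJ, hJJ⟩ : ∃ JJ : EN N × EN N → EN N × EN N, ∀ z, JJ z = (J₁ z.1, J₂ z.2) := ⟨_, fun _ => rfl⟩
  have hJJL : LipschitzWith (max 2 2) JJ := by
    rw [show JJ = fun z => (J₁ z.1, J₂ z.2) from funext hJJ]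
    exact (J₁L.comp LipschitzWith.prod_fst |>.weaken (by norm_num)).prodMk (J₂L.comp LipschitzWith.prod_snd |>.weaken (by norm_num))
  obtain ⟨Φ, hΦ⟩ : ∃ Φ : EN N × EN N → EN N × EN N, ∀ z, Φ z = (2 * m) • (z - JJ z) - (((p₁, p₂) : EN N × EN N) + (T₁.prod T₂) (JJ z - c)) := ⟨_, fun _ => rfl⟩
  obtain ⟨L, hΦL⟩ : ∃ L, LipschitzWith L Φ := by
    have l1 : LipschitzWith _ (fun z => z - JJ z) := LipschitzWith.id.sub hJJL
    have l2 : LipschitzWith _ (fun z => (2 * m) • (z - JJ z)) := (lipschitzWith_smul (2 * m)).comp l1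
    have l3 : LipschitzWith _ (fun z => JJ z - c) := hJJL.sub (LipschitzWith.const c)
    have l4 := (LipschitzWith.const ((p₁, p₂) : EN N × EN N)).add ((T₁.prod T₂).lipschitz.comp l3)
    rw [show Φ = _ from funext hΦ]
    exact ⟨_, l2.sub l4⟩
  set Z : Set (EN N × EN N) := {z | ‖Φ z‖ ≤ 1 / m ∧ ∀ X', Θ (Φ z) X' ≤ Θ (Φ z) (JJ z)} with hZ
  have hcover : ball 0 (1 / m) ⊆ Φ '' Z := by
    intro q hq
    have hq' : ‖q‖ ≤ 1 / m := by simpa using (mem_ball_zero_iff.1 hq).le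
    obtain ⟨X, hX⟩ := hex q hq'
    obtain ⟨⟨_, h1⟩, ⟨_, h2⟩⟩ := hfirst' q X hX
    set z : EN N × EN N := (X.1 + (1 / (2 * m)) • (p₁ + T₁ (X - c) + q.1),
      X.2 + (1 / (2 * m)) • (p₂ + T₂ (X - c) + q.2)) with hz
    have hJz : JJ z = X := by rw [hJJ]; exact Prod.ext h1 h2
    have hΦz : Φ z = q := by
      simp only [hΦ, hJz]
      have hmm : (2 * m) * (1 / (2 * m)) = 1 := by field_simp
      ext1
      · simp only [hz, Prod.fst_sub, Prod.smul_fst, Prod.fst_add, ContinuousLinearMap.prod_apply,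
          add_sub_cancel_left, smul_smul, hmm, one_smul]
      · simp only [hz, Prod.snd_sub, Prod.smul_snd, Prod.snd_add, ContinuousLinearMap.prod_apply,
          add_sub_cancel_left, smul_smul, hmm, one_smul]
    refine ⟨z, ⟨?_, ?_⟩, hΦz⟩
    · rw [hΦz]; exact hq'
    · rw [hΦz, hJz]; exact hX
  obtain ⟨z, hzZ, hd₁, hd₂⟩ := exists_diff_point J₁L J₂L hΦL (by positivity) hcover
  obtain ⟨hq, hXm⟩ := hzZ
  obtain ⟨q, hqd⟩ : ∃ q, q = Φ z := ⟨_, rfl⟩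
  obtain ⟨X, hXd⟩ : ∃ X, X = JJ z := ⟨_, rfl⟩
  rw [← hqd] at hq hXm
  rw [← hXd] at hXm
  have hX1 : J₁ z.1 = X.1 := by rw [hXd, hJJ]
  have hX2 : J₂ z.2 = X.2 := by rw [hXd, hJJ]
  obtain ⟨⟨hP1, _⟩, ⟨hP2, _⟩⟩ := hfirst' q X hXm
  have hcX : c0 ≤ Θ q X := (hΘc q).trans (hXm c)
  obtain ⟨hW, hΔ⟩ := hloc q X hq hcX
  have hPz1 : p₁ + T₁ (X - c) + q.1 = (2 * m) • (z.1 - J₁ z.1) := by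
    rw [hqd, hΦ]
    simp only [Prod.fst_sub, Prod.smul_fst, Prod.fst_add, ContinuousLinearMap.prod_apply, ← hXd]
    rw [← hX1]; abel
  have hPz2 : p₂ + T₂ (X - c) + q.2 = (2 * m) • (z.2 - J₂ z.2) := by
    rw [hqd, hΦ]
    simp only [Prod.snd_sub, Prod.smul_snd, Prod.snd_add, ContinuousLinearMap.prod_apply, ← hXd]
    rw [← hX2]; abel
  obtain ⟨X₁, hX₁, hj₁, hl₁⟩ := ts_transfer hm ge₁ M₁s e₁d e₁g (z := z.1) (by rw [hX1]; exact hP1) hPz1 hd₁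
  obtain ⟨X₂, hX₂, hj₂, hl₂⟩ := ts_transfer hm ge₂ M₂s e₂d e₂g (z := z.2) (by rw [hX2]; exact hP2) hPz2 hd₂
  rw [hX1] at hj₁
  rw [hX2] at hj₂
  have hXc : ‖X - c‖ ≤ 2 * κ := by
    have : X - c = (X - (M₁ X.1, M₂ X.2)) + ((M₁ X.1, M₂ X.2) - c) := by abel
    rw [this]
    exact (norm_add_le _ _).trans (by linarith)
  have hqκ : ‖q‖ ≤ κ := hq.trans (by rw [div_le_iff₀ hm]; linarith)
  have hτC : τ + 2 ≤ C := by
    rw [hC]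
    have h2 := norm_nonneg p₁
    have h3 := norm_nonneg p₂
    have h4 : 0 ≤ τ * R := by positivity
    linarith
  have hPp : ∀ (T : EN N × EN N →L[ℝ] EN N) (q' p : EN N), ‖T‖ ≤ τ → ‖q'‖ ≤ ‖q‖ →
      ‖p + T (X - c) + q' - p‖ < δ := by
    intro T q' p hT hq'
    have e1 : p + T (X - c) + q' - p = T (X - c) + q' := by abel
    rw [e1]
    have h1 : ‖T (X - c)‖ ≤ τ * (2 * κ) := (T.le_opNorm _).trans (by gcongr)
    have h2 := norm_add_le (T (X - c)) q'
    have h3 : κ * (2 * τ + 1) < κ * (2 * C + 4) := by gcongr <;> linarith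
    linarith
  have hsec : ∀ d : EN N × EN N, e₁ (z.1 + d.1) + e₂ (z.2 + d.2) ≤ e₁ z.1 + e₂ z.2 +
      (⟪p₁ + T₁ (X - c) + q.1, d.1⟫ + ⟪p₂ + T₂ (X - c) + q.2, d.2⟫ + 1 / 2 * A d) := by
    intro d
    have h1 := hfirst q X hXm d
    have h2 := e₁c (z.1 + d.1) (X.1 + d.1)
    have h3 := e₂c (z.2 + d.2) (X.2 + d.2)
    have h4 : 0 ≤ m / 2 * ‖X.1 + d.1 - J₁ (z.1 + d.1)‖ ^ 2 := by positivity
    have h5 : 0 ≤ m / 2 * ‖X.2 + d.2 - J₂ (z.2 + d.2)‖ ^ 2 := by positivity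
    rw [add_sub_add_right_eq_sub] at h2 h3
    have h6 : e₁ z.1 = û₁ X.1 + m * ‖X.1 - z.1‖ ^ 2 := by rw [← hX1]; exact e₁d z.1
    have h7 : e₂ z.2 = û₂ X.2 + m * ‖X.2 - z.2‖ ^ 2 := by rw [← hX2]; exact e₂d z.2
    linarith
  have hmat : ∀ ξ ζ : EN N, qf X₁ ξ + qf X₂ ζ ≤ A (ξ, ζ) := by
    intro ξ ζ
    refine le_of_forall_pos_le_add fun ε hε => ?_
    set B := ‖ξ‖ ^ 2 + ‖ζ‖ ^ 2 with hB
    have hB0 : 0 ≤ B := by positivity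
    set ε' := ε / (2 * (B + 1)) with hε'
    have hε'0 : 0 < ε' := by positivity
    have t1 : Tendsto (fun t : ℝ => t • ξ) (𝓝[>] 0) (𝓝 0) := by
      have : Continuous fun t : ℝ => t • ξ := by fun_prop
      have h := this.tendsto 0
      simp only [zero_smul] at h
      exact h.mono_left nhdsWithin_le_nhds
    have t2 : Tendsto (fun t : ℝ => t • ζ) (𝓝[>] 0) (𝓝 0) := by
      have : Continuous fun t : ℝ => t • ζ := by fun_prop
      have h := this.tendsto 0
      simp only [zero_smul] at h
      exact h.mono_left nhdsWithin_le_nhds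
    obtain ⟨t, h1, h2, ht⟩ := ((t1.eventually (hl₁ ε' hε'0)).and
      ((t2.eventually (hl₂ ε' hε'0)).and self_mem_nhdsWithin)).exists
    have ht0 : 0 < t := ht
    have h3 := hsec (t • ξ, t • ζ)
    simp only at h3
    have h4 : A (t • ξ, t • ζ) = t ^ 2 * A (ξ, ζ) := by
      have : ((t • ξ, t • ζ) : EN N × EN N) = t • (ξ, ζ) := rfl
      rw [this]
      simp only [hA, map_smul, Prod.smul_fst, Prod.smul_snd, inner_smul_left, inner_smul_right, conj_trivial]
      ring
    rw [h4] at h3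
    rw [qf_smul_vec, norm_smul, mul_pow, Real.norm_eq_abs, sq_abs] at h1 h2
    have h5 : t ^ 2 * (qf X₁ ξ + qf X₂ ζ) ≤ t ^ 2 * (A (ξ, ζ) + 2 * ε' * B) := by
      rw [hB]; linarith
    have h6 := le_of_mul_le_mul_left h5 (by positivity)
    have h7 : 2 * ε' * B ≤ ε := by
      rw [hε']
      have : 2 * (ε / (2 * (B + 1))) * B = ε * (B / (B + 1)) := by field_simp
      rw [this]
      have : B / (B + 1) ≤ 1 := by rw [div_le_one (by positivity)]; linarith
      nlinarith
    linarith
  have hW1 : ‖M₁ X.1 - x₁‖ < κ := lt_of_le_of_lt (hf ((M₁ X.1, M₂ X.2) - c)) hW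
  have hW2 : ‖M₂ X.2 - x₂‖ < κ := lt_of_le_of_lt (hs ((M₁ X.1, M₂ X.2) - c)) hW
  have v1 := husc₁ _ (M₁s X.1).1 (hW1.trans_le hκr₁)
  have v2 := husc₂ _ (M₂s X.2).1 (hW2.trans_le hκr₂)
  have v3 : c0 - δ / 2 ≤ u₁ (M₁ X.1) + u₂ (M₂ X.2) := by
    have h1 := (M₁s X.1).2
    have h2 := (M₂s X.2).2
    have h3 : 0 ≤ m / 2 * ‖X.1 - M₁ X.1‖ ^ 2 := by positivity
    have h4 : 0 ≤ m / 2 * ‖X.2 - M₂ X.2‖ ^ 2 := by positivity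
    have h5 : c0 ≤ û₁ X.1 + û₂ X.2 - Q (X - c) - I q (X - c) := by rw [← hΘ]; exact hcX
    have i1 : -(‖p₁‖ * (2 * κ)) ≤ ⟪p₁, (X - c).1⟫ :=
      (neg_le_neg (mul_le_mul_of_nonneg_left ((hf (X - c)).trans hXc) (norm_nonneg _))).trans
        (neg_le_of_abs_le (abs_real_inner_le_norm _ _))
    have i2 : -(‖p₂‖ * (2 * κ)) ≤ ⟪p₂, (X - c).2⟫ :=
      (neg_le_neg (mul_le_mul_of_nonneg_left ((hs (X - c)).trans hXc) (norm_nonneg _))).trans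
        (neg_le_of_abs_le (abs_real_inner_le_norm _ _))
    have i3 := (abs_le.1 (hAb (X - c))).1
    have i4 : τ * ‖X - c‖ ^ 2 ≤ τ * (4 * κ) := by
      gcongr
      calc ‖X - c‖ ^ 2 ≤ (2 * κ) ^ 2 := by gcongr
        _ ≤ 4 * κ := by nlinarith
    have i5 := (abs_le.1 (hIb q (X - c))).1
    have i6 : 2 * ‖q‖ * ‖X - c‖ ≤ 2 * 1 * (2 * κ) := by gcongr; linarith
    have i7 := hQ (X - c)
    have i8 : κ * (2 * (‖p₁‖ + ‖p₂‖ + τ)) ≤ κ * (2 * C) := by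
      gcongr; rw [hC]
      have h4 : 0 ≤ τ * R := by positivity
      linarith
    linarith
  refine ⟨M₁ X.1, (M₁s X.1).1, M₂ X.2, (M₂s X.2).1, p₁ + T₁ (X - c) + q.1, p₂ + T₂ (X - c) + q.2,
    X₁ + δ • 1, X₂ + δ • 1, ?_, ?_, by linarith, by linarith, ?_, ?_, ?_, ?_, hj₁ δ hδ, hj₂ δ hδ, ?_⟩
  · exact hX₁.add (by simp [Matrix.IsSymm])
  · exact hX₂.add (by simp [Matrix.IsSymm])
  · rw [abs_lt]; constructor <;> linarith
  · rw [abs_lt]; constructor <;> linarith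
  · exact hPp T₁ q.1 p₁ (by rw [hτ]; linarith [norm_nonneg T₂]) (hf q)
  · exact hPp T₂ q.2 p₂ (by rw [hτ]; linarith [norm_nonneg T₁]) (hs q)
  · intro ξ ζ
    rw [qf_add, qf_add, qf_one, qf_one]
    have := hmat ξ ζ
    simp only [hA] at this
    linarith

/-! ### The operator, its dual, and the jet formulation of viscosity solutions -/

/-- Standing hypotheses on the operator: `α > -1` and the conditions (F1)–(F4). -/
structure OpHyp {N : ℕ} (Ω : Set (EN N)) (α a A C₁ θ C₂ ν : ℝ)
    (F : EN N → EN N → Mat N → ℝ) : Prop where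
  hα : -1 < α
  h1 : CondF1 Ω α F
  h2 : CondF2 Ω α a A F
  h3 : CondF3 Ω α C₁ θ F
  h4 : CondF4 Ω α C₂ ν F

/-- The dual operator: `u` is a subsolution for it exactly when `-u` is a supersolution for `F`. -/
def dualF {N : ℕ} (F : EN N → EN N → Mat N → ℝ) : EN N → EN N → Mat N → ℝ :=
  fun x p X => -F x p (-X)

lemma symm_smul_one {N : ℕ} (t : ℝ) : (t • (1 : Mat N)).IsSymm := by simp [Matrix.IsSymm]

lemma qf_zero {N : ℕ} (d : EN N) : qf (0 : Mat N) d = 0 := by simp [qf]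

lemma matNorm_neg {N : ℕ} (X : Mat N) : matNorm (-X) = matNorm X := by simp [matNorm]

variable {N : ℕ} {Ω : Set (EN N)} {nv : EN N → EN N} {α a A C₁ θ C₂ ν : ℝ}
  {F : EN N → EN N → Mat N → ℝ} {b : EN N → EN N}

lemma OpHyp.dual (h : OpHyp Ω α a A C₁ θ C₂ ν F) : OpHyp Ω α a A C₁ θ C₂ ν (dualF F) where
  hα := h.hα
  h1 := by
    intro x hx t ht μ hμ p hp X hX
    have := h.h1 x hx t ht μ hμ p hp (-X) hX.neg
    simp only [dualF]
    rw [← smul_neg, this]; ring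
  h2 := by
    refine ⟨h.h2.1, h.h2.2.1, fun x hx p hp M P hM hP => ?_⟩
    have hPs : P.IsSymm := (isSymm_iff_isHermitian P).2 hP.1
    have := h.h2.2.2 x hx p hp (-(M + P)) P (hM.add hPs).neg hP
    rw [show -(M + P) + P = -M by abel] at this
    simp only [dualF]
    constructor <;> linarith
  h3 := by
    refine ⟨h.h3.1, h.h3.2.1, fun x hx y hy p hp X hX => ?_⟩
    have := h.h3.2.2 x hx y hy p hp (-X) hX.neg
    rw [matNorm_neg, ← abs_neg] at this
    simp only [dualF]
    convert this using 2; ring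
  h4 := by
    refine ⟨h.h4.1, h.h4.2.1, fun x hx p hp q hq X hX => ?_⟩
    have := h.h4.2.2 x hx p hp q hq (-X) hX.neg
    rw [matNorm_neg, ← abs_neg] at this
    simp only [dualF]
    convert this using 2; ring

lemma dualF_dualF : dualF (dualF F) = F := by
  funext x p X; simp [dualF]

lemma OpHyp.zero (h : OpHyp Ω α a A C₁ θ C₂ ν F) {x p : EN N} (hx : x ∈ closure Ω) (hp : p ≠ 0) :
    F x p 0 = 0 := by
  have := h.h1 x hx 1 one_ne_zero 0 le_rfl p hp 0 (by simp)
  simpa using this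

lemma OpHyp.neg_p (h : OpHyp Ω α a A C₁ θ C₂ ν F) {x p : EN N} (hx : x ∈ closure Ω) (hp : p ≠ 0)
    {X : Mat N} (hX : X.IsSymm) : F x (-p) X = F x p X := by
  have := h.h1 x hx (-1) (by norm_num) 1 zero_le_one p hp X hX
  simpa using this

/-- Ellipticity in the form used below: `S = Y - X + μ I` is nonnegative. -/
lemma OpHyp.ell (h : OpHyp Ω α a A C₁ θ C₂ ν F) {x p : EN N} (hx : x ∈ closure Ω) (hp : p ≠ 0)
    {X Y : Mat N} (hX : X.IsSymm) (hY : Y.IsSymm) {μ : ℝ} (hμ : 0 ≤ μ)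
    (hle : ∀ d, qf X d ≤ qf Y d + μ * ‖d‖ ^ 2) :
    (Y - X + μ • (1 : Mat N)).PosSemidef ∧
    F x p X ≤ F x p Y - a * ‖p‖ ^ α * (Y - X + μ • (1 : Mat N)).trace + A * ‖p‖ ^ α * (N * μ) := by
  have hS : (Y - X + μ • (1 : Mat N)).PosSemidef := by
    refine psd_of_qf ((hY.sub hX).add (symm_smul_one μ)) fun d => ?_
    rw [qf_add, qf_sub, qf_one]; linarith [hle d]
  have hI : (μ • (1 : Mat N)).PosSemidef :=
    psd_of_qf (symm_smul_one μ) fun d => by rw [qf_one]; positivity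
  have e1 := (h.h2.2.2 x hx p hp X _ hX hS).1
  have e2 := (h.h2.2.2 x hx p hp Y _ hY hI).2
  rw [show X + (Y - X + μ • (1 : Mat N)) = Y + μ • (1 : Mat N) by abel] at e1
  have e3 : (μ • (1 : Mat N)).trace = N * μ := by simp [Matrix.trace_smul, mul_comm]
  rw [e3] at e2
  exact ⟨hS, by linarith⟩

lemma OpHyp.mono (h : OpHyp Ω α a A C₁ θ C₂ ν F) {x p : EN N} (hx : x ∈ closure Ω) (hp : p ≠ 0)
    {X Y : Mat N} (hX : X.IsSymm) (hY : Y.IsSymm) {μ : ℝ} (hμ : 0 ≤ μ)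
    (hle : ∀ d, qf X d ≤ qf Y d + μ * ‖d‖ ^ 2) :
    F x p X ≤ F x p Y + A * ‖p‖ ^ α * (N * μ) := by
  obtain ⟨h1, h2⟩ := h.ell hx hp hX hY hμ hle
  have h3 : 0 ≤ a * ‖p‖ ^ α * (Y - X + μ • (1 : Mat N)).trace := by
    have := h1.trace_nonneg
    have := h.h2.1
    positivity
  linarith

lemma OpHyp.le_of_le_smul (h : OpHyp Ω α a A C₁ θ C₂ ν F) {x p : EN N} (hx : x ∈ closure Ω)
    (hp : p ≠ 0) {X : Mat N} (hX : X.IsSymm) {t : ℝ} (ht : 0 ≤ t)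
    (hle : ∀ d, qf X d ≤ t * ‖d‖ ^ 2) : F x p X ≤ A * ‖p‖ ^ α * (N * t) := by
  have := h.mono hx hp hX (Y := 0) (by simp) ht (fun d => by rw [qf_zero]; linarith [hle d])
  rw [h.zero hx hp] at this
  linarith

/-- Viscosity subsolutions of `F(x,Du,D²u) + b·Du|Du|^α = f` with the Neumann condition, expressed
by superjets; the zero-order term is absorbed into `f`. -/
def SubV (Ω : Set (EN N)) (nv : EN N → EN N) (α : ℝ) (b : EN N → EN N)
    (F : EN N → EN N → Mat N → ℝ) (f u : EN N → ℝ) : Prop :=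
  (∀ z ∈ closure Ω, ∀ p : EN N, p ≠ 0 → ∀ X : Mat N, X.IsSymm →
    (z ∈ frontier Ω → 0 < ⟪p, nv z⟫) → UJet (closure Ω) u z p X →
    f z ≤ F z p X + ⟪b z, p⟫ * ‖p‖ ^ α) ∧
  (∀ z ∈ Ω, (∀ᶠ x in 𝓝[closure Ω] z, u x = u z) → f z ≤ 0)

lemma mem_or_frontier (z : EN N) (hz : z ∈ closure Ω) : z ∈ Ω ∨ z ∈ frontier Ω := by
  rw [closure_eq_self_union_frontier] at hz; exact hz

lemma frontier_not_mem (hΩ : IsOpen Ω) {z : EN N} (hz : z ∈ frontier Ω) : z ∉ Ω := by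
  rw [hΩ.frontier_eq] at hz; exact hz.2

lemma quad_self (p : EN N) (X : Mat N) (z : EN N) : quad p X (z - z) = 0 := by
  simp [quad, qf]

lemma quad_neg (p : EN N) (X : Mat N) (d : EN N) : quad (-p) (-X) d = -quad p X d := by
  simp only [quad, qf_neg, inner_neg_left]; ring

lemma quad_add_smul (p : EN N) (X : Mat N) (t : ℝ) (d : EN N) :
    quad p (X + t • (1 : Mat N)) d = quad p X d + t / 2 * ‖d‖ ^ 2 := by
  simp only [quad, qf_add, qf_one]; ring

lemma UJet.of_max {φ u : EN N → ℝ} (hφ : ContDiff ℝ 2 φ) {z : EN N}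
    (hm : IsLocalMaxOn (fun x => u x - φ x) (closure Ω) z) {η : ℝ} (hη : 0 < η) :
    UJet (closure Ω) u z (gradient φ z) (hess φ z + η • 1) := by
  have h1 := (contDiff_taylor hφ z).2 (η / 2) (by linarith)
  filter_upwards [hm, nhdsWithin_le_nhds h1] with x hx h2
  rw [quad_add_smul]
  have := (abs_le.1 h2).2
  linarith

lemma le_of_forall_eta {x y C : ℝ} (h : ∀ η : ℝ, 0 < η → x ≤ y + C * η) : x ≤ y := by
  refine le_of_forall_pos_le_add fun ε hε => ?_
  have h1 := h (ε / (|C| + 1)) (by positivity)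
  have : C * (ε / (|C| + 1)) ≤ ε := by
    have hC := le_abs_self C
    rw [← mul_div_assoc, div_le_iff₀ (by positivity)]
    nlinarith
  linarith

/-- Quadratic polynomials are admissible test functions. -/
lemma subV_of_isSubSol {c₀ : EN N → ℝ → ℝ} {g u : EN N → ℝ}
    (h : IsSubSol Ω F b α c₀ g (BNeu nv) u) :
    SubV Ω nv α b F (fun z => g z - c₀ z (u z)) u := by
  obtain ⟨h1, h2, h3, h4⟩ := h
  refine ⟨fun z hz p hp X hX hn hj => ?_, fun z hz hc => ?_⟩
  · have hg : gradient (fun x => quad p X (x - z)) z = p := by rw [gradient_quad p hX]; simp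
    have hh := hess_quad p hX z z
    have hm : IsLocalMaxOn (fun x => u x - quad p X (x - z)) (closure Ω) z := by
      filter_upwards [hj] with x hx
      rw [quad_self]; linarith
    rcases mem_or_frontier z hz with hzi | hzf
    · have := h1 z hzi _ (quad_contDiff p X z) hm (by rwa [hg])
      rw [hg, hh] at this
      linarith
    · have := h3 z hzf _ (quad_contDiff p X z) hm (by rwa [hg])
      rw [hg, hh] at this
      rcases min_le_iff.1 this with h | h
      · linarith
      · exact absurd (hn hzf) (not_lt.2 h)
  · have := h2 z hz (u z) hc
    linarith

/-- By Taylor's formula, a `C²` test function `φ` provides the jets `(Dφ, D²φ + η I)`, `η > 0`; the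
inequality for `D²φ` follows as `η → 0`. -/
lemma isSubSol_of_subV (hF : OpHyp Ω α a A C₁ θ C₂ ν F) (hΩ : IsOpen Ω) {c₀ : EN N → ℝ → ℝ}
    {g u : EN N → ℝ} (h : SubV Ω nv α b F (fun z => g z - c₀ z (u z)) u) :
    IsSubSol Ω F b α c₀ g (BNeu nv) u := by
  have key : ∀ z ∈ closure Ω, ∀ φ : EN N → ℝ, ContDiff ℝ 2 φ →
      IsLocalMaxOn (fun x => u x - φ x) (closure Ω) z → gradient φ z ≠ 0 →
      (z ∈ frontier Ω → 0 < ⟪gradient φ z, nv z⟫) →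
      g z ≤ F z (gradient φ z) (hess φ z)
        + ⟪b z, gradient φ z⟫ * ‖gradient φ z‖ ^ α + c₀ z (u z) := by
    intro z hz φ hφ hm hp hn
    have hs := (contDiff_taylor hφ z).1
    refine le_of_forall_eta (C := A * ‖gradient φ z‖ ^ α * N) fun η hη => ?_
    have e1 := h.1 z hz _ hp _ (hs.add (symm_smul_one η)) hn (UJet.of_max hφ hm hη)
    have e2 := hF.mono hz hp (hs.add (symm_smul_one η)) hs hη.le (fun d => by
      rw [qf_add, qf_one])
    simp only at e1
    linarith
  have hsub : Ω ⊆ closure Ω := subset_closure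
  refine ⟨fun z hz φ hφ hm hp => ?_, fun z hz k hk => ?_, fun z hz φ hφ hm hp => ?_,
    fun z hz k hk => ?_⟩
  · exact key z (hsub hz) φ hφ hm hp fun hf => absurd hz (frontier_not_mem hΩ hf)
  · have hzk : u z = k := hk.self_of_nhdsWithin (hsub hz)
    have := h.2 z hz (by rwa [hzk])
    simp only [hzk] at this
    linarith
  · by_cases hn : 0 < ⟪gradient φ z, nv z⟫
    · refine min_le_iff.2 (Or.inl ?_)
      have := key z (frontier_subset_closure hz) φ hφ hm hp fun _ => hn
      linarith
    · exact min_le_iff.2 (Or.inr (not_lt.1 hn))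
  · exact min_le_iff.2 (Or.inr (by simp [BNeu]))

lemma gradient_neg' {φ : EN N → ℝ} (hφ : ContDiff ℝ 2 φ) (z : EN N) :
    gradient (fun x => -φ x) z = -gradient φ z :=
  (show HasGradientAt (fun x => -φ x) (-gradient φ z) z by
    have := (hasGradientAt_of_contDiff hφ z).hasFDerivAt.neg
    rw [hasGradientAt_iff_hasFDerivAt, map_neg]
    exact this).gradient

lemma hess_neg' {φ : EN N → ℝ} (hφ : ContDiff ℝ 2 φ) (z : EN N) :
    hess (fun x => -φ x) z = -hess φ z := by
  ext i j
  have hG : HasFDerivAt (gradient φ) (fderiv ℝ (gradient φ) z) z :=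
    ((gradient_differentiable hφ).differentiable (by norm_num) z).hasFDerivAt
  have h1 := hess_apply_of_gradient (hasGradientAt_of_contDiff hφ) hG i j
  have h2 := hess_apply_of_gradient (f := fun x => -φ x) (G := fun x => -gradient φ x)
    (fun x => by
      rw [← gradient_neg' hφ]; exact hasGradientAt_of_contDiff (hφ.neg) x) hG.neg i j
  rw [h2, Matrix.neg_apply, h1]; simp

/-- Supersolutions of `F` are, up to sign, subsolutions of the dual operator. -/
lemma isSuperSol_iff_dual (hF : OpHyp Ω α a A C₁ θ C₂ ν F) {c₀ : EN N → ℝ → ℝ} {g v : EN N → ℝ} :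
    IsSuperSol Ω F b α c₀ g (BNeu nv) v ↔
      IsSubSol Ω (dualF F) b α (fun x r => -c₀ x (-r)) (fun x => -g x) (BNeu nv) (fun x => -v x) := by
  have hsub : Ω ⊆ closure Ω := subset_closure
  have hfr : frontier Ω ⊆ closure Ω := frontier_subset_closure
  have G : ∀ z ∈ closure Ω, ∀ φ : EN N → ℝ, ContDiff ℝ 2 φ → gradient φ z ≠ 0 →
      dualF F z (-gradient φ z) (-hess φ z) = -F z (gradient φ z) (hess φ z) := by
    intro z hz φ hφ hp
    simp only [dualF, neg_neg]
    rw [hF.neg_p hz hp (contDiff_taylor hφ z).1]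
  have M1 : ∀ z, ∀ φ : EN N → ℝ, IsLocalMinOn (fun x => v x - φ x) (closure Ω) z →
      IsLocalMaxOn (fun x => -v x - -φ x) (closure Ω) z := by
    intro z φ h
    filter_upwards [h] with x hx
    linarith
  have M2 : ∀ z, ∀ φ : EN N → ℝ, IsLocalMaxOn (fun x => -v x - φ x) (closure Ω) z →
      IsLocalMinOn (fun x => v x - -φ x) (closure Ω) z := by
    intro z φ h
    filter_upwards [h] with x hx
    linarith
  constructor
  · rintro ⟨h1, h2, h3, h4⟩
    refine ⟨fun z hz φ hφ hm hp => ?_, fun z hz k hk => ?_, fun z hz φ hφ hm hp => ?_,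
      fun z hz k hk => ?_⟩
    · have hp' : gradient (fun x => -φ x) z ≠ 0 := by rwa [gradient_neg' hφ, neg_ne_zero]
      have e1 := h1 z hz _ hφ.neg (M2 z φ hm) hp'
      have e2 := G z (hsub hz) _ hφ.neg hp'
      rw [gradient_neg' hφ, hess_neg' hφ, neg_neg, neg_neg] at e2
      rw [gradient_neg' hφ, hess_neg' hφ, norm_neg, inner_neg_right] at e1
      simp only [neg_neg]
      linarith
    · have := h2 z hz (-k) (by filter_upwards [hk] with x hx; linarith)
      linarith
    · have hp' : gradient (fun x => -φ x) z ≠ 0 := by rwa [gradient_neg' hφ, neg_ne_zero]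
      have e1 := h3 z hz _ hφ.neg (M2 z φ hm) hp'
      have e2 := G z (hfr hz) _ hφ.neg hp'
      rw [gradient_neg' hφ, hess_neg' hφ, neg_neg, neg_neg] at e2
      rw [gradient_neg' hφ, hess_neg' hφ, norm_neg, inner_neg_right] at e1
      simp only [neg_neg, BNeu, inner_neg_left] at e1 ⊢
      rcases le_max_iff.1 e1 with h | h
      · exact min_le_iff.2 (Or.inl (by linarith))
      · exact min_le_iff.2 (Or.inr (by linarith))
    · exact min_le_iff.2 (Or.inr (by simp [BNeu]))
  · rintro ⟨h1, h2, h3, h4⟩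
    refine ⟨fun z hz φ hφ hm hp => ?_, fun z hz k hk => ?_, fun z hz φ hφ hm hp => ?_,
      fun z hz k hk => ?_⟩
    · have e1 := h1 z hz _ hφ.neg (M1 z φ hm) (by rwa [gradient_neg' hφ, neg_ne_zero])
      rw [gradient_neg' hφ, hess_neg' hφ, G z (hsub hz) φ hφ hp, norm_neg, inner_neg_right] at e1
      simp only [neg_neg] at e1
      linarith
    · have := h2 z hz (-k) (by filter_upwards [hk] with x hx; linarith)
      simp only [neg_neg] at this
      linarith
    · have e1 := h3 z hz _ hφ.neg (M1 z φ hm) (by rwa [gradient_neg' hφ, neg_ne_zero])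
      rw [gradient_neg' hφ, hess_neg' hφ, G z (hfr hz) φ hφ hp, norm_neg, inner_neg_right] at e1
      simp only [neg_neg, BNeu, inner_neg_left] at e1 ⊢
      rcases min_le_iff.1 e1 with h | h
      · exact le_max_iff.2 (Or.inl (by linarith))
      · exact le_max_iff.2 (Or.inr (by linarith))
    · exact le_max_iff.2 (Or.inr (by simp [BNeu]))

lemma subV_of_isSuperSol (hF : OpHyp Ω α a A C₁ θ C₂ ν F) {c₀ : EN N → ℝ → ℝ} {g v : EN N → ℝ}
    (h : IsSuperSol Ω F b α c₀ g (BNeu nv) v) :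
    SubV Ω nv α b (dualF F) (fun z => -g z + c₀ z (v z)) (fun x => -v x) := by
  have := subV_of_isSubSol ((isSuperSol_iff_dual hF).1 h)
  simpa using this

lemma isSuperSol_of_subV (hF : OpHyp Ω α a A C₁ θ C₂ ν F) (hΩ : IsOpen Ω) {c₀ : EN N → ℝ → ℝ}
    {g v : EN N → ℝ}
    (h : SubV Ω nv α b (dualF F) (fun z => -g z + c₀ z (v z)) (fun x => -v x)) :
    IsSuperSol Ω F b α c₀ g (BNeu nv) v := by
  refine (isSuperSol_iff_dual hF).2 (isSubSol_of_subV hF.dual hΩ ?_)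
  simpa using h

/-- The Ishii–Lions estimate: ellipticity absorbs the error made by freezing `x` and `p`. -/
lemma OpHyp.ishii_lions (h : OpHyp Ω α a A C₁ θ C₂ ν F) {x y P Q : EN N} (hx : x ∈ closure Ω)
    (hP : P ≠ 0) {X Y : Mat N} (hX : X.IsSymm) (hY : Y.IsSymm) {k c₁ c₂ ε : ℝ} (hk : 0 ≤ k)
    (hc₁ : 0 ≤ c₁) (hc₂ : 0 ≤ c₂) (hε : 0 < ε) (hεa : 8 * ε ≤ a)
    (hle : ∀ ξ ζ : EN N, qf X ξ - qf Y ζ ≤ k * ‖ξ - ζ‖ ^ 2 + c₁ * ‖ξ - ζ‖ * (‖ξ‖ + ‖ζ‖)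
      + c₂ * (‖ξ‖ ^ 2 + ‖ζ‖ ^ 2))
    (hfr : F x P Y - F y Q Y ≤ ε * ‖P‖ ^ α * matNorm Y) :
    ∃ s : ℝ, 0 ≤ s ∧ (∀ e : EN N, ‖e‖ = 1 → qf Y e - qf X e + 2 * c₂ ≤ s) ∧
      F x P X - F y Q Y ≤ ‖P‖ ^ α * (-(a / 2) * s + (2 * A * N + a) * c₂ + 8 / a * ε ^ 2 * k
        + 2 * ε * c₁) := by
  have ha := h.h2.1
  obtain ⟨hS, he⟩ := h.ell hx hP hX hY (μ := 2 * c₂) (by linarith) (fun d => by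
    have := hle d d; simp at this; linarith)
  obtain ⟨S, hSd⟩ : ∃ S : Mat N, S = Y - X + (2 * c₂) • (1 : Mat N) := ⟨_, rfl⟩
  rw [← hSd] at hS he
  have hqS : ∀ d, qf S d = qf Y d - qf X d + 2 * c₂ * ‖d‖ ^ 2 := fun d => by
    rw [hSd, qf_add, qf_sub, qf_one]
  have hs0 := hS.trace_nonneg
  have hPα : 0 ≤ ‖P‖ ^ α := by positivity
  refine ⟨S.trace, hs0, fun e he1 => ?_, ?_⟩
  · have h1 := qf_le_trace hS e
    rw [hqS, he1] at h1
    linarith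
  obtain ⟨t, ht⟩ : ∃ t : ℝ, t = 8 * ε / a := ⟨_, rfl⟩
  have ht0 : 0 < t := by rw [ht]; positivity
  have ht1 : t ≤ 1 := by rw [ht, div_le_one ha]; exact hεa
  have hY' : matNorm Y ≤ 2 * S.trace / t + k * t + 2 * c₁ + 3 * c₂ / t := by
    refine matNorm_le Y (by positivity) fun w z hw hz => ?_
    have hth : ‖(t / 2) • z‖ = t / 2 := by rw [norm_smul, hz, Real.norm_of_nonneg (by linarith)]; ring
    have n1 : ‖w + (t / 2) • z‖ ≤ 3 / 2 := (norm_add_le _ _).trans (by rw [hw, hth]; linarith)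
    have n2 : ‖w - (t / 2) • z‖ ≤ 3 / 2 := (norm_sub_le _ _).trans (by rw [hw, hth]; linarith)
    have n3 : ‖(w + (t / 2) • z) - (w - (t / 2) • z)‖ = t := by
      rw [show (w + (t / 2) • z) - (w - (t / 2) • z) = t • z by module, norm_smul, hz,
        Real.norm_of_nonneg ht0.le, mul_one]
    have h1 := hle (w + (t / 2) • z) (w - (t / 2) • z)
    rw [n3] at h1
    have h2 := qf_le_trace hS (w + (t / 2) • z)
    rw [hqS] at h2
    have h3 : qf Y (w + (t / 2) • z) - qf Y (w - (t / 2) • z)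
        = 2 * t * ⟪Matrix.toEuclideanLin Y w, z⟫ := by
      rw [sub_eq_add_neg w, qf_add_vec hY, qf_add_vec hY, ← neg_smul, qf_smul_vec, qf_smul_vec,
        inner_smul_right, inner_smul_right]; ring
    have q1 : ‖w + (t / 2) • z‖ ^ 2 ≤ 9 / 4 := by nlinarith [norm_nonneg (w + (t / 2) • z)]
    have q2 : ‖w - (t / 2) • z‖ ^ 2 ≤ 9 / 4 := by nlinarith [norm_nonneg (w - (t / 2) • z)]
    have r1 : S.trace * ‖w + (t / 2) • z‖ ^ 2 ≤ S.trace * (9 / 4) := by gcongr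
    have r2 : c₂ * ‖w - (t / 2) • z‖ ^ 2 ≤ c₂ * (9 / 4) := by gcongr
    have r3 : c₁ * t * (‖w + (t / 2) • z‖ + ‖w - (t / 2) • z‖) ≤ c₁ * t * 3 := by
      gcongr; linarith
    have r4 : 0 ≤ c₂ * ‖w + (t / 2) • z‖ ^ 2 := by positivity
    have r5 : 2 * t * ⟪Matrix.toEuclideanLin Y w, z⟫
        ≤ 2 * t * (2 * S.trace / t + k * t + 2 * c₁ + 3 * c₂ / t) := by
      have : 2 * t * (2 * S.trace / t + k * t + 2 * c₁ + 3 * c₂ / t)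
          = 4 * S.trace + 2 * (k * t ^ 2) + 4 * (c₁ * t) + 6 * c₂ := by field_simp; ring
      rw [this]
      have r6 : 0 ≤ k * t ^ 2 := by positivity
      have r7 : 0 ≤ c₁ * t := by positivity
      linarith
    exact le_of_mul_le_mul_left r5 (by positivity)
  have h5 : ε * matNorm Y ≤ a / 4 * S.trace + 8 / a * ε ^ 2 * k + 2 * ε * c₁ + 3 / 8 * a * c₂ := by
    refine (mul_le_mul_of_nonneg_left hY' hε.le).trans (le_of_eq ?_)
    rw [ht]; field_simp; ring
  have h6 : F x P X - F y Q Y ≤ ‖P‖ ^ α * (-a * S.trace + A * (N * (2 * c₂)) + ε * matNorm Y) := by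
    linarith
  refine h6.trans (mul_le_mul_of_nonneg_left ?_ hPα)
  have r8 : 0 ≤ a * S.trace := by positivity
  have r9 : 0 ≤ a * c₂ := by positivity
  linarith

/-- Freezing error in `x` and `p`. -/
lemma OpHyp.freeze (h : OpHyp Ω α a A C₁ θ C₂ ν F) {x y P Q : EN N} (hx : x ∈ closure Ω)
    (hy : y ∈ closure Ω) (hP : P ≠ 0) (hPQ : ‖Q - P‖ ≤ ‖P‖ / 2) {Y : Mat N} (hY : Y.IsSymm) :
    F x P Y - F y Q Y ≤ (C₁ * ‖x - y‖ ^ θ + C₂ * (‖Q - P‖ / ‖P‖) ^ ν) * ‖P‖ ^ α * matNorm Y := by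
  have e1 := (abs_le.1 (h.h3.2.2 x hx y hy P hP Y hY)).2
  have e2 := (abs_le.1 (h.h4.2.2 y hy P hP (Q - P) hPQ Y hY)).1
  rw [add_sub_cancel] at e2
  have hP0 : 0 < ‖P‖ := norm_pos_iff.2 hP
  rw [Real.rpow_sub hP0] at e2
  rw [Real.div_rpow (norm_nonneg _) hP0.le]
  have e3 : C₂ * (‖P‖ ^ α / ‖P‖ ^ ν) * ‖Q - P‖ ^ ν * matNorm Y
      = C₂ * (‖Q - P‖ ^ ν / ‖P‖ ^ ν) * ‖P‖ ^ α * matNorm Y := by ring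
  rw [e3] at e2
  linarith

/-! ### Auxiliary function of the domain and expansion of the penalisation -/

/-- A function `σ` (with gradient `s`) that measures the distance to the boundary strongly enough for
the doubled penalisation `(1 + σ x + σ y) ψ(|x - y|)` to point strictly outwards on the boundary. -/
structure DomData (Ω : Set (EN N)) (nv : EN N → EN N) (q : ℝ) (σ : EN N → ℝ) (s : EN N → EN N)
    (C : ℝ) : Prop where
  isOpen : IsOpen Ω
  cpt : IsCompact (closure Ω)
  ne : Ω.Nonempty
  hC : 1 ≤ C
  σ0 : ∀ x ∈ closure Ω, 0 ≤ σ x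
  σ1 : ∀ x ∈ closure Ω, σ x ≤ 1
  s_le : ∀ x ∈ closure Ω, ‖s x‖ ≤ C
  exp : ∀ x ∈ closure Ω, ∀ y ∈ closure Ω, |σ y - σ x - ⟪s x, y - x⟫| ≤ C * ‖y - x‖ ^ 2
  s_cont : ContinuousOn s (closure Ω)
  normal : ∀ x ∈ frontier Ω, ∃ t : ℝ, 0 < t ∧ s x = t • nv x
  out : ∀ x ∈ frontier Ω, ∀ y ∈ closure Ω, y ≠ x →
    0 < 3 * q * ⟪x - y, s x⟫ + ‖x - y‖ ^ 2 * ‖s x‖ ^ 2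

lemma taylor_ball {φ : EN N → ℝ} (hφ : ContDiff ℝ 2 φ) (R : ℝ) :
    ∃ C : ℝ, ∀ x ∈ closedBall (0 : EN N) R, ∀ y ∈ closedBall (0 : EN N) R,
      |φ y - φ x - ⟪gradient φ x, y - x⟫| ≤ C * ‖y - x‖ ^ 2 := by
  have hG := gradient_differentiable hφ
  obtain ⟨C, hC⟩ := (isCompact_closedBall (0 : EN N) R).exists_bound_of_continuousOn
    (hG.continuous_fderiv (by norm_num)).continuousOn
  refine ⟨C, fun x hx y hy => ?_⟩
  have hL : ∀ z ∈ closedBall (0 : EN N) R, ‖gradient φ z - gradient φ x‖ ≤ C * ‖z - x‖ := fun z hz =>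
    Convex.norm_image_sub_le_of_norm_fderiv_le
      (fun w _ => hG.differentiable (by norm_num) w) hC (convex_closedBall _ _) hx hz
  have hC0 : 0 ≤ C := (norm_nonneg _).trans (hC x hx)
  have := Convex.norm_image_sub_le_of_norm_hasFDerivWithin_le' (𝕜 := ℝ) (f := φ)
    (f' := fun z => InnerProductSpace.toDual ℝ (EN N) (gradient φ z))
    (φ := InnerProductSpace.toDual ℝ (EN N) (gradient φ x)) (C := C * ‖y - x‖)
    (s := closedBall (0 : EN N) R ∩ closedBall x ‖y - x‖) (x := x) (y := y)
    (fun z _ => ((hasGradientAt_of_contDiff hφ z).hasFDerivAt).hasFDerivWithinAt)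
    (fun z hz => by
      rw [← map_sub, LinearIsometryEquiv.norm_map]
      have h1 : ‖z - x‖ ≤ ‖y - x‖ := by simpa [dist_eq_norm] using hz.2
      exact (hL z hz.1).trans (by gcongr))
    ((convex_closedBall _ _).inter (convex_closedBall _ _))
    ⟨hx, by simp⟩ ⟨hy, by simp [dist_eq_norm]⟩
  rw [InnerProductSpace.toDual_apply_apply, Real.norm_eq_abs] at this
  refine this.trans (le_of_eq (by ring))

/-- The function is `σ = exp(L ρ)` with `ρ` a defining function of `Ω`; `L` is taken so large that the
term `L |Dρ|²` dominates the Taylor error of `ρ`. -/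
lemma exists_domData (hΩ : IsC2Domain Ω nv) {q : ℝ} (hq : 0 < q) :
    ∃ σ s C, DomData Ω nv q σ s C := by
  obtain ⟨ho, hconn, hb, ρ, hρ, hΩρ, hfr, hgr⟩ := hΩ
  have hcpt : IsCompact (closure Ω) := hb.isCompact_closure
  have hρ0 : ∀ x ∈ closure Ω, ρ x ≤ 0 := by
    intro x hx
    rcases mem_or_frontier x hx with h | h
    · rw [hΩρ] at h; exact le_of_lt h
    · rw [hfr] at h; exact le_of_eq h
  obtain ⟨R, hR⟩ := hcpt.isBounded.subset_closedBall (0 : EN N)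
  obtain ⟨Cρ, hCρ⟩ := taylor_ball hρ R
  have hfc : IsCompact (frontier Ω) := hcpt.of_isClosed_subset isClosed_frontier frontier_subset_closure
  obtain ⟨m, hm0, hm⟩ := hfc.exists_forall_le' (f := fun x => ‖gradient ρ x‖) (a := 0)
    ((gradient_differentiable hρ).continuous.norm.continuousOn)
    (fun x hx => norm_pos_iff.2 (hgr x hx).1)
  obtain ⟨L, hL⟩ : ∃ L : ℝ, L = 3 * q * |Cρ| / m ^ 2 + 1 := ⟨_, rfl⟩
  have hL1 : 0 < L := by rw [hL]; positivity
  have hLm : 3 * q * |Cρ| < L * m ^ 2 := by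
    have hm2 : 0 < m ^ 2 := by positivity
    rw [hL, add_mul, div_mul_cancel₀ _ hm2.ne']; linarith
  have hσ : ContDiff ℝ 2 (fun x => Real.exp (L * ρ x)) :=
    Real.contDiff_exp.comp (contDiff_const.mul hρ)
  have hs : ∀ x, gradient (fun x => Real.exp (L * ρ x)) x = (Real.exp (L * ρ x) * L) • gradient ρ x := by
    intro x
    refine HasGradientAt.gradient ?_
    have h1 := ((hasGradientAt_of_contDiff hρ x).hasFDerivAt.const_mul L).exp
    rw [hasGradientAt_iff_hasFDerivAt]
    refine h1.congr_fderiv ?_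
    rw [map_smul, smul_smul]
  have hsf : ∀ x ∈ frontier Ω, gradient (fun x => Real.exp (L * ρ x)) x = L • gradient ρ x := by
    intro x hx
    have : ρ x = 0 := by rw [hfr] at hx; exact hx
    rw [hs, this]; simp
  obtain ⟨Cσ, hCσ⟩ := taylor_ball hσ R
  obtain ⟨Cs, hCs⟩ := hcpt.exists_bound_of_continuousOn
    (gradient_differentiable hσ).continuous.continuousOn
  refine ⟨fun x => Real.exp (L * ρ x), gradient (fun x => Real.exp (L * ρ x)), |Cσ| + |Cs| + 1,
    ho, hcpt, hconn.nonempty, by have := abs_nonneg Cσ; have := abs_nonneg Cs; linarith,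
    fun x _ => (Real.exp_pos _).le, fun x hx => ?_, fun x hx => ?_, fun x hx y hy => ?_,
    (gradient_differentiable hσ).continuous.continuousOn, fun x hx => ?_, fun x hx y hy hne => ?_⟩
  · exact Real.exp_le_one_iff.2 (by have := hρ0 x hx; nlinarith)
  · have := hCs x hx
    have := le_abs_self Cs
    have := abs_nonneg Cσ
    linarith
  · refine (hCσ x (hR hx) y (hR hy)).trans ?_
    gcongr
    have := le_abs_self Cσ; have := abs_nonneg Cs; linarith
  · obtain ⟨h1, h2⟩ := hgr x hx
    have h3 : 0 < ‖gradient ρ x‖ := norm_pos_iff.2 h1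
    refine ⟨L * ‖gradient ρ x‖, by positivity, ?_⟩
    rw [hsf x hx, h2, smul_smul, mul_assoc, mul_inv_cancel₀ h3.ne', mul_one]
  · rw [hsf x hx, inner_smul_right, norm_smul, Real.norm_of_nonneg hL1.le]
    have hx0 : ρ x = 0 := by rw [hfr] at hx; exact hx
    have e1 := (abs_le.1 (hCρ x (hR (frontier_subset_closure hx)) y (hR hy))).1
    have e2 := hρ0 y hy
    have e3 : ⟪x - y, gradient ρ x⟫ = -⟪gradient ρ x, y - x⟫ := by
      rw [real_inner_comm, ← inner_neg_right, neg_sub]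
    rw [e3, norm_sub_rev x y]
    have hpos : 0 < ‖y - x‖ ^ 2 := by
      have : 0 < ‖y - x‖ := norm_pos_iff.2 (sub_ne_zero.2 hne)
      positivity
    have e4 : ⟪gradient ρ x, y - x⟫ ≤ |Cρ| * ‖y - x‖ ^ 2 := by
      have : Cρ * ‖y - x‖ ^ 2 ≤ |Cρ| * ‖y - x‖ ^ 2 := by gcongr; exact le_abs_self _
      linarith
    have e5 : m ^ 2 ≤ ‖gradient ρ x‖ ^ 2 := by have := hm x hx; gcongr
    have e6 : 3 * q * L * ⟪gradient ρ x, y - x⟫ ≤ 3 * q * L * (|Cρ| * ‖y - x‖ ^ 2) := by gcongr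
    have e7 : L ^ 2 * ‖y - x‖ ^ 2 * m ^ 2 ≤ L ^ 2 * ‖y - x‖ ^ 2 * ‖gradient ρ x‖ ^ 2 := by gcongr
    have e8 : L * ‖y - x‖ ^ 2 * (3 * q * |Cρ|) < L * ‖y - x‖ ^ 2 * (L * m ^ 2) := by gcongr
    nlinarith

/-- Second order expansion of the norm at a nonzero point, with explicit cubic errors. -/
lemma norm_expand {D d : EN N} {r : ℝ} (hr : 0 < r) (hD : ‖D‖ = r) :
    |‖D + d‖ - r| ≤ ‖d‖ ∧ |(‖D + d‖ - r) ^ 2 - ⟪r⁻¹ • D, d⟫ ^ 2| ≤ ‖d‖ ^ 3 / r ∧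
    |‖D + d‖ - r - ⟪r⁻¹ • D, d⟫ - (‖d‖ ^ 2 - ⟪r⁻¹ • D, d⟫ ^ 2) / (2 * r)| ≤ ‖d‖ ^ 3 / r ^ 2 := by
  obtain ⟨e, he⟩ : ∃ e : ℝ, e = ⟪r⁻¹ • D, d⟫ := ⟨_, rfl⟩
  obtain ⟨m, hm⟩ : ∃ m : ℝ, m = ‖D + d‖ - r := ⟨_, rfl⟩
  have h0 : |m| ≤ ‖d‖ := by
    rw [hm, ← hD]
    have := abs_norm_sub_norm_le (D + d) D
    simpa using this
  have h1 : |e| ≤ ‖d‖ := by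
    rw [he]
    refine (abs_real_inner_le_norm _ _).trans ?_
    rw [norm_smul, hD, norm_inv, Real.norm_of_nonneg hr.le, inv_mul_cancel₀ hr.ne', one_mul]
  have h2 : (m + r) ^ 2 = r ^ 2 + 2 * (r * e) + ‖d‖ ^ 2 := by
    have : m + r = ‖D + d‖ := by rw [hm]; ring
    rw [this, norm_add_sq_real, hD, he, real_inner_smul_left, ← mul_assoc r, mul_inv_cancel₀ hr.ne',
      one_mul]
  have h3 : m - e = (‖d‖ ^ 2 - m ^ 2) / (2 * r) := by
    field_simp; linarith
  have h4 : |m - e| ≤ ‖d‖ ^ 2 / (2 * r) := by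
    rw [h3, abs_div, abs_of_pos (by positivity : 0 < 2 * r)]
    gcongr
    have := sq_le_sq' (by linarith [neg_abs_le m]) ((le_abs_self m).trans h0)
    rw [abs_of_nonneg (by linarith)]
    nlinarith [sq_nonneg m]
  have h5 : |m ^ 2 - e ^ 2| ≤ ‖d‖ ^ 3 / r := by
    have : m ^ 2 - e ^ 2 = (m - e) * (m + e) := by ring
    rw [this, abs_mul]
    have h6 : |m + e| ≤ 2 * ‖d‖ := (abs_add_le _ _).trans (by linarith)
    calc |m - e| * |m + e| ≤ ‖d‖ ^ 2 / (2 * r) * (2 * ‖d‖) := by gcongr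
      _ = ‖d‖ ^ 3 / r := by field_simp
  refine ⟨hm ▸ h0, by rw [← hm, ← he]; exact h5, ?_⟩
  rw [← hm, ← he]
  have h7 : m - e - (‖d‖ ^ 2 - e ^ 2) / (2 * r) = -((m ^ 2 - e ^ 2) / (2 * r)) := by
    rw [h3]; ring
  rw [h7, abs_neg, abs_div, abs_of_pos (by positivity : 0 < 2 * r)]
  calc |m ^ 2 - e ^ 2| / (2 * r) ≤ (‖d‖ ^ 3 / r) / (2 * r) := by gcongr
    _ = ‖d‖ ^ 3 / r ^ 2 / 2 := by field_simp
    _ ≤ ‖d‖ ^ 3 / r ^ 2 := by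
      have : 0 ≤ ‖d‖ ^ 3 / r ^ 2 := by positivity
      linarith

/-- Product of the second order expansions of the weight `1 + σ x + σ y` and of `ψ(|x - y|)`. -/
lemma psi_expand_arith {w w₀ ℓ R ψn ψ₀ ψ₁ e B η c b' C τ : ℝ} (hw : w = w₀ + ℓ + R) (hw0 : 0 ≤ w)
    (hw3 : w ≤ 3) (hτ0 : 0 ≤ τ) (hτ1 : τ ≤ 1) (he : |e| ≤ τ) (hℓ : |ℓ| ≤ C * τ)
    (hR : |R| ≤ C * τ ^ 2) (hB : |B| ≤ b' * τ ^ 2) (hψ₁ : 0 ≤ ψ₁) (hη : 0 ≤ η)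
    (hc : 0 ≤ c) (hC : 0 ≤ C) (hb : 0 ≤ b')
    (hψ : ψn ≤ ψ₀ + ψ₁ * e + 1 / 2 * B + η * τ ^ 2 + c * τ ^ 3) :
    w * ψn ≤ w₀ * ψ₀ + (w₀ * ψ₁ * e + ℓ * ψ₀) + 1 / 2 * w₀ * B + ℓ * ψ₁ * e + R * ψ₀
      + 3 * η * τ ^ 2 + (C * b' + C * ψ₁ + 3 * c) * τ ^ 3 := by
  have h1 : w * ψn ≤ w * (ψ₀ + ψ₁ * e + 1 / 2 * B) + w * (η * τ ^ 2 + c * τ ^ 3) := by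
    rw [← mul_add]; gcongr; linarith
  have h2 : w * (η * τ ^ 2 + c * τ ^ 3) ≤ 3 * (η * τ ^ 2 + c * τ ^ 3) := by gcongr
  have h3 : ℓ * B ≤ C * b' * τ ^ 3 := by
    refine (le_abs_self _).trans ?_
    rw [abs_mul]
    calc |ℓ| * |B| ≤ C * τ * (b' * τ ^ 2) := by gcongr
      _ = _ := by ring
  have h4 : R * (ψ₁ * e) ≤ C * ψ₁ * τ ^ 3 := by
    refine (le_abs_self _).trans ?_
    rw [abs_mul, abs_mul, abs_of_nonneg hψ₁]
    calc |R| * (ψ₁ * |e|) ≤ C * τ ^ 2 * (ψ₁ * τ) := by gcongr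
      _ = _ := by ring
  have h5 : R * B ≤ C * b' * τ ^ 3 := by
    refine (le_abs_self _).trans ?_
    rw [abs_mul]
    calc |R| * |B| ≤ C * τ ^ 2 * (b' * τ ^ 2) := by gcongr
      _ = C * b' * τ ^ 3 * τ := by ring
      _ ≤ C * b' * τ ^ 3 * 1 := by gcongr
      _ = _ := by ring
  have h6 : w * (ψ₀ + ψ₁ * e + 1 / 2 * B) = w₀ * ψ₀ + (w₀ * ψ₁ * e + ℓ * ψ₀) + 1 / 2 * w₀ * B
      + ℓ * ψ₁ * e + R * ψ₀ + (1 / 2 * (ℓ * B) + R * (ψ₁ * e) + 1 / 2 * (R * B)) := by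
    rw [hw]; ring
  linarith

set_option maxHeartbeats 1000000 in
/-- Second-order upper expansion of the penalisation `(1 + σ x + σ y) ψ(|x - y|)`. -/
lemma DomData.psi_expand {q C : ℝ} {σ : EN N → ℝ} {s : EN N → EN N} (DD : DomData Ω nv q σ s C)
    {x₁ x₂ : EN N} (hx₁ : x₁ ∈ closure Ω) (hx₂ : x₂ ∈ closure Ω) {r : ℝ} (hr : 0 < r)
    (hxr : ‖x₁ - x₂‖ = r) {ψ : ℝ → ℝ} {ψ₁ ψ₂ : ℝ} (hψ0 : 0 ≤ ψ r) (hψ₁ : 0 ≤ ψ₁)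
    (hψ : ∀ η : ℝ, 0 < η → ∀ᶠ t in 𝓝 r,
      ψ t ≤ ψ r + ψ₁ * (t - r) + ψ₂ / 2 * (t - r) ^ 2 + η * (t - r) ^ 2) {η : ℝ} (hη : 0 < η) :
    ∃ δ : ℝ, 0 < δ ∧ ∀ x ∈ closure Ω, ∀ y ∈ closure Ω, ‖x - x₁‖ < δ → ‖y - x₂‖ < δ →
      (1 + σ x + σ y) * ψ ‖x - y‖ ≤ (1 + σ x₁ + σ x₂) * ψ r
        + (⟪((1 + σ x₁ + σ x₂) * ψ₁) • (r⁻¹ • (x₁ - x₂)) + ψ r • s x₁, x - x₁⟫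
        + ⟪-((1 + σ x₁ + σ x₂) * ψ₁) • (r⁻¹ • (x₁ - x₂)) + ψ r • s x₂, y - x₂⟫
        + 1 / 2 * ((1 + σ x₁ + σ x₂) * (ψ₂ - ψ₁ / r)
              * ⟪r⁻¹ • (x₁ - x₂), (x - x₁) - (y - x₂)⟫ ^ 2
            + (1 + σ x₁ + σ x₂) * (ψ₁ / r) * ‖(x - x₁) - (y - x₂)‖ ^ 2
            + 2 * ψ₁ * ⟪r⁻¹ • (x₁ - x₂), (x - x₁) - (y - x₂)⟫ * (⟪s x₁, x - x₁⟫ + ⟪s x₂, y - x₂⟫)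
            + 2 * C * ψ r * (‖x - x₁‖ ^ 2 + ‖y - x₂‖ ^ 2)))
        + η * (‖x - x₁‖ ^ 2 + ‖y - x₂‖ ^ 2) := by
  have hC0 : 0 ≤ C := zero_le_one.trans DD.hC
  obtain ⟨δ₀, hδ₀, hev⟩ := Metric.eventually_nhds_iff.1 (hψ (η / 12) (by linarith))
  obtain ⟨c, hc⟩ : ∃ c : ℝ, c = ψ₁ / r ^ 2 + |ψ₂| / r := ⟨_, rfl⟩
  have hc0 : 0 ≤ c := by rw [hc]; positivity
  obtain ⟨b', hb'⟩ : ∃ b' : ℝ, b' = 2 * ψ₁ / r + |ψ₂| := ⟨_, rfl⟩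
  have hb0 : 0 ≤ b' := by rw [hb']; positivity
  obtain ⟨c', hc'⟩ : ∃ c' : ℝ, c' = C * b' + C * ψ₁ + 3 * c := ⟨_, rfl⟩
  have hc'0 : 0 ≤ c' := by rw [hc']; positivity
  obtain ⟨δ, hδ⟩ : ∃ δ : ℝ, δ = min (min (δ₀ / 2) (1 / 2)) (η / (8 * (c' + 1))) := ⟨_, rfl⟩
  have hδpos : 0 < δ := by rw [hδ]; positivity
  have hd1 : δ ≤ δ₀ / 2 := by rw [hδ]; exact (min_le_left _ _).trans (min_le_left _ _)
  have hd2 : δ ≤ 1 / 2 := by rw [hδ]; exact (min_le_left _ _).trans (min_le_right _ _)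
  have hd3 : δ * (8 * (c' + 1)) ≤ η := by
    rw [← le_div_iff₀ (by positivity)]; rw [hδ]; exact min_le_right _ _
  refine ⟨δ, hδpos, fun x hx y hy hxd hyd => ?_⟩
  obtain ⟨ξ, hξ⟩ : ∃ ξ : EN N, ξ = x - x₁ := ⟨_, rfl⟩
  obtain ⟨ζ, hζ⟩ : ∃ ζ : EN N, ζ = y - x₂ := ⟨_, rfl⟩
  rw [← hξ, ← hζ]
  rw [← hξ] at hxd
  rw [← hζ] at hyd
  have hxy : x - y = (x₁ - x₂) + (ξ - ζ) := by rw [hξ, hζ]; abel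
  obtain ⟨n1, n2, n3⟩ := norm_expand (d := ξ - ζ) hr hxr
  rw [← hxy] at n1 n2 n3
  obtain ⟨τ, hτ⟩ : ∃ τ : ℝ, τ = ‖ξ‖ + ‖ζ‖ := ⟨_, rfl⟩
  have hτ0 : 0 ≤ τ := by rw [hτ]; positivity
  have hdτ : ‖ξ - ζ‖ ≤ τ := by rw [hτ]; exact norm_sub_le _ _
  have hτδ : τ < 2 * δ := by rw [hτ]; linarith
  have hτE : τ ^ 2 ≤ 2 * (‖ξ‖ ^ 2 + ‖ζ‖ ^ 2) := by rw [hτ]; have := sq_nonneg (‖ξ‖ - ‖ζ‖); linarith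
  obtain ⟨e, he⟩ : ∃ e : ℝ, e = ⟪r⁻¹ • (x₁ - x₂), ξ - ζ⟫ := ⟨_, rfl⟩
  have heτ : |e| ≤ ‖ξ - ζ‖ := by
    rw [he]
    refine (abs_real_inner_le_norm _ _).trans ?_
    rw [norm_smul, hxr, norm_inv, Real.norm_of_nonneg hr.le, inv_mul_cancel₀ hr.ne', one_mul]
  rw [← he] at n2 n3
  have hψn := hev (y := ‖x - y‖) (by rw [Real.dist_eq]; linarith)
  obtain ⟨m, hm⟩ : ∃ m : ℝ, m = ‖x - y‖ - r := ⟨_, rfl⟩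
  rw [← hm] at n1 n2 n3 hψn
  have hd3' : ‖ξ - ζ‖ ^ 3 ≤ τ ^ 3 := by gcongr
  have hd2' : ‖ξ - ζ‖ ^ 2 ≤ τ ^ 2 := by gcongr
  have hm2 : m ^ 2 ≤ τ ^ 2 := by
    rw [← sq_abs m]; gcongr; exact n1.trans hdτ
  have he2 : e ^ 2 ≤ ‖ξ - ζ‖ ^ 2 := by rw [← sq_abs e]; gcongr
  obtain ⟨B, hB⟩ : ∃ B : ℝ, B = ψ₁ / r * (‖ξ - ζ‖ ^ 2 - e ^ 2) + ψ₂ * e ^ 2 := ⟨_, rfl⟩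
  have hψ' : ψ ‖x - y‖ ≤ ψ r + ψ₁ * e + 1 / 2 * B + η / 12 * τ ^ 2 + c * τ ^ 3 := by
    have k1 : ψ₁ * m ≤ ψ₁ * (e + (‖ξ - ζ‖ ^ 2 - e ^ 2) / (2 * r) + τ ^ 3 / r ^ 2) := by
      gcongr
      have := (abs_le.1 n3).2
      have h2 : ‖ξ - ζ‖ ^ 3 / r ^ 2 ≤ τ ^ 3 / r ^ 2 := by gcongr
      linarith
    have k2 : ψ₂ * (m ^ 2 - e ^ 2) ≤ |ψ₂| * (τ ^ 3 / r) := by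
      refine (le_abs_self _).trans ?_
      rw [abs_mul]
      gcongr
      exact n2.trans (by gcongr)
    have k3 : η / 12 * m ^ 2 ≤ η / 12 * τ ^ 2 := by gcongr
    have k4 : ψ₁ * (e + (‖ξ - ζ‖ ^ 2 - e ^ 2) / (2 * r) + τ ^ 3 / r ^ 2)
        = ψ₁ * e + 1 / 2 * (ψ₁ / r * (‖ξ - ζ‖ ^ 2 - e ^ 2)) + ψ₁ / r ^ 2 * τ ^ 3 := by
      field_simp
    have k5 : 0 ≤ |ψ₂| / r * τ ^ 3 := by positivity
    have k6 : |ψ₂| * (τ ^ 3 / r) = |ψ₂| / r * τ ^ 3 := by ring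
    rw [hB, hc, add_mul]
    linarith
  have hBb : |B| ≤ b' * τ ^ 2 := by
    rw [hB, hb', add_mul]
    refine (abs_add_le _ _).trans (add_le_add ?_ ?_)
    · rw [abs_mul, abs_of_nonneg (by positivity : 0 ≤ ψ₁ / r), abs_of_nonneg (by linarith)]
      have : ψ₁ / r * (‖ξ - ζ‖ ^ 2 - e ^ 2) ≤ ψ₁ / r * τ ^ 2 := by
        gcongr; have := sq_nonneg e; linarith
      have h2 : 0 ≤ ψ₁ / r * τ ^ 2 := by positivity
      have h3 : 2 * ψ₁ / r * τ ^ 2 = 2 * (ψ₁ / r * τ ^ 2) := by ring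
      linarith
    · rw [abs_mul, abs_of_nonneg (sq_nonneg e)]
      exact mul_le_mul_of_nonneg_left (he2.trans hd2') (abs_nonneg _)
  have hsx := DD.exp x₁ hx₁ x hx
  have hsy := DD.exp x₂ hx₂ y hy
  rw [← hξ] at hsx
  rw [← hζ] at hsy
  obtain ⟨R, hR⟩ : ∃ R : ℝ, R = (σ x - σ x₁ - ⟪s x₁, ξ⟫) + (σ y - σ x₂ - ⟪s x₂, ζ⟫) := ⟨_, rfl⟩
  have hRE : |R| ≤ C * (‖ξ‖ ^ 2 + ‖ζ‖ ^ 2) := by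
    rw [hR]; refine (abs_add_le _ _).trans ?_; linarith
  have hRτ : |R| ≤ C * τ ^ 2 := by
    refine hRE.trans ?_
    gcongr
    rw [hτ]; have := mul_nonneg (norm_nonneg ξ) (norm_nonneg ζ); linarith
  obtain ⟨ℓ, hℓ⟩ : ∃ ℓ : ℝ, ℓ = ⟪s x₁, ξ⟫ + ⟪s x₂, ζ⟫ := ⟨_, rfl⟩
  have hℓτ : |ℓ| ≤ C * τ := by
    rw [hℓ, hτ, mul_add]
    refine (abs_add_le _ _).trans (add_le_add ?_ ?_)
    · exact (abs_real_inner_le_norm _ _).trans (by gcongr; exact DD.s_le _ hx₁)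
    · exact (abs_real_inner_le_norm _ _).trans (by gcongr; exact DD.s_le _ hx₂)
  obtain ⟨w₀, hw₀⟩ : ∃ w₀ : ℝ, w₀ = 1 + σ x₁ + σ x₂ := ⟨_, rfl⟩
  have fin := psi_expand_arith (w := 1 + σ x + σ y) (w₀ := w₀) (ℓ := ℓ) (R := R) (by rw [hw₀, hℓ, hR]; ring)
    (by linarith [DD.σ0 x hx, DD.σ0 y hy]) (by linarith [DD.σ1 x hx, DD.σ1 y hy]) hτ0 (by linarith)
    (heτ.trans hdτ) hℓτ hRτ hBb hψ₁ (by positivity : 0 ≤ η / 12) hc0 hC0 hb0 hψ'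
  rw [← hc'] at fin
  rw [← hw₀, ← he, ← hℓ, inner_add_left, inner_add_left, real_inner_smul_left, real_inner_smul_left _ _ (-(w₀ * ψ₁)),
    real_inner_smul_left _ _ (ψ r), real_inner_smul_left _ _ (ψ r)]
  have i1 : w₀ * ψ₁ * ⟪r⁻¹ • (x₁ - x₂), ξ⟫ + -(w₀ * ψ₁) * ⟪r⁻¹ • (x₁ - x₂), ζ⟫ = w₀ * ψ₁ * e := by
    rw [he, inner_sub_right]; ring
  have i2 : ψ r * ⟪s x₁, ξ⟫ + ψ r * ⟪s x₂, ζ⟫ = ℓ * ψ r := by rw [hℓ]; ring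
  have i3 : R * ψ r ≤ C * ψ r * (‖ξ‖ ^ 2 + ‖ζ‖ ^ 2) := by
    have := mul_le_mul_of_nonneg_right ((le_abs_self R).trans hRE) hψ0
    linarith
  have i4 : c' * τ ^ 3 ≤ η / 2 * (‖ξ‖ ^ 2 + ‖ζ‖ ^ 2) := by
    have j1 : c' * τ ≤ η / 4 := by
      have : c' * τ ≤ c' * (2 * δ) := by gcongr
      linarith
    calc c' * τ ^ 3 = c' * τ * τ ^ 2 := by ring
      _ ≤ η / 4 * (2 * (‖ξ‖ ^ 2 + ‖ζ‖ ^ 2)) := by gcongr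
      _ = _ := by ring
  have i5 : 3 * (η / 12) * τ ^ 2 ≤ η / 2 * (‖ξ‖ ^ 2 + ‖ζ‖ ^ 2) := by
    have := mul_le_mul_of_nonneg_left hτE (by positivity : 0 ≤ η / 4)
    linarith
  have i6 : 1 / 2 * w₀ * B = 1 / 2 * (w₀ * (ψ₂ - ψ₁ / r) * e ^ 2 + w₀ * (ψ₁ / r) * ‖ξ - ζ‖ ^ 2) := by
    rw [hB]; ring
  linarith

/-- The symmetric bilinear form attached to the second-order part of the expansion. -/
lemma form_exists (e s₁ s₂ : EN N) (κ₁ κ₂ κ₃ ψ₁ : ℝ) :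
    ∃ T₁ T₂ : EN N × EN N →L[ℝ] EN N,
      (∀ w w', ⟪T₁ w, w'.1⟫ + ⟪T₂ w, w'.2⟫ = ⟪w.1, T₁ w'⟫ + ⟪w.2, T₂ w'⟫) ∧
      ∀ w : EN N × EN N, ⟪T₁ w, w.1⟫ + ⟪T₂ w, w.2⟫ = κ₁ * ⟪e, w.1 - w.2⟫ ^ 2 + κ₂ * ‖w.1 - w.2‖ ^ 2
        + 2 * ψ₁ * ⟪e, w.1 - w.2⟫ * (⟪s₁, w.1⟫ + ⟪s₂, w.2⟫) + κ₃ * (‖w.1‖ ^ 2 + ‖w.2‖ ^ 2) := by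
  let fs := ContinuousLinearMap.fst ℝ (EN N) (EN N)
  let sn := ContinuousLinearMap.snd ℝ (EN N) (EN N)
  let E : EN N × EN N →L[ℝ] ℝ := (innerSL ℝ e).comp (fs - sn)
  let l : EN N × EN N →L[ℝ] ℝ := (innerSL ℝ s₁).comp fs + (innerSL ℝ s₂).comp sn
  refine ⟨κ₁ • E.smulRight e + κ₂ • (fs - sn) + ψ₁ • (l.smulRight e + E.smulRight s₁) + κ₃ • fs,
    -(κ₁ • E.smulRight e) - κ₂ • (fs - sn) + ψ₁ • (-(l.smulRight e) + E.smulRight s₂) + κ₃ • sn,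
    fun w w' => ?_, fun w => ?_⟩
  · simp only [E, l, fs, sn, _root_.add_apply, _root_.sub_apply,
      _root_.neg_apply, _root_.smul_apply, ContinuousLinearMap.smulRight_apply,
      ContinuousLinearMap.comp_apply, ContinuousLinearMap.coe_fst', ContinuousLinearMap.coe_snd',
      innerSL_apply_apply, inner_add_left, inner_add_right, inner_sub_left, inner_sub_right,
      inner_neg_left, inner_neg_right, real_inner_smul_left, real_inner_smul_right]
    rw [real_inner_comm e w.1, real_inner_comm e w.2, real_inner_comm s₁ w.1,
      real_inner_comm s₂ w.2]
    ring
  · simp only [E, l, fs, sn, _root_.add_apply, _root_.sub_apply,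
      _root_.neg_apply, _root_.smul_apply, ContinuousLinearMap.smulRight_apply,
      ContinuousLinearMap.comp_apply, ContinuousLinearMap.coe_fst', ContinuousLinearMap.coe_snd',
      innerSL_apply_apply, inner_add_left, inner_sub_left, inner_sub_right, ← real_inner_self_eq_norm_sq,
      inner_neg_left, real_inner_smul_left]
    rw [real_inner_comm w.1 w.2]
    ring

/-- Strict outward pointing is stable under perturbation. -/
lemma DomData.bdy_open {q C : ℝ} {σ : EN N → ℝ} {s : EN N → EN N} (DD : DomData Ω nv q σ s C)
    {x p : EN N} (hx : x ∈ closure Ω) (h : x ∈ frontier Ω → 0 < ⟪p, s x⟫) :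
    ∃ δ : ℝ, 0 < δ ∧ ∀ z P : EN N, ‖z - x‖ < δ → ‖P - p‖ < δ → z ∈ frontier Ω → 0 < ⟪P, nv z⟫ := by
  by_cases hf : x ∈ frontier Ω
  · have hc : ContinuousWithinAt (fun w : EN N × EN N => ⟪w.2, s w.1⟫) (closure Ω ×ˢ univ) (x, p) :=
      by
      have h1 : ContinuousWithinAt (fun w : EN N × EN N => s w.1) (closure Ω ×ˢ univ) (x, p) :=
        ContinuousWithinAt.comp (f := Prod.fst) (g := s) (t := closure Ω) (DD.s_cont x hx) continuousWithinAt_fst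
          fun w hw => hw.1
      exact ContinuousWithinAt.inner (𝕜 := ℝ) continuousWithinAt_snd h1
    have := hc.eventually (lt_mem_nhds (h hf))
    rw [eventually_iff, Metric.mem_nhdsWithin_iff] at this
    obtain ⟨δ, hδ, hsub⟩ := this
    refine ⟨δ, hδ, fun z P hz hP hzf => ?_⟩
    have hm : dist ((z, P) : EN N × EN N) (x, p) < δ := by
      rw [Prod.dist_eq, max_lt_iff, dist_eq_norm, dist_eq_norm]; exact ⟨hz, hP⟩
    have h1 : 0 < ⟪P, s z⟫ :=
      hsub (show ((z, P) : EN N × EN N) ∈ ball (x, p) δ ∩ closure Ω ×ˢ univ from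
        ⟨hm, Set.mk_mem_prod (frontier_subset_closure hzf) (mem_univ P)⟩)
    obtain ⟨t, ht, hst⟩ := DD.normal z hzf
    rw [hst, inner_smul_right] at h1
    exact (mul_pos_iff_of_pos_left ht).1 h1
  · have hxΩ : x ∈ Ω := (mem_or_frontier x hx).resolve_right hf
    obtain ⟨δ, hδ, hsub⟩ := Metric.isOpen_iff.1 DD.isOpen x hxΩ
    refine ⟨δ, hδ, fun z P hz _ hzf => absurd (hsub (by rwa [mem_ball, dist_eq_norm]))
      (frontier_not_mem DD.isOpen hzf)⟩

/-! ### The key estimate for a doubled maximum: algebra -/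

lemma rpow_bounds (β : ℝ) {t : ℝ} (h1 : 1 / 4 ≤ t) (h2 : t ≤ 4) :
    (4 : ℝ) ^ (-|β|) ≤ t ^ β ∧ t ^ β ≤ 4 ^ |β| := by
  have ht : 0 < t := by linarith
  have h4 : (1 / 4 : ℝ) = 4 ^ (-1 : ℝ) := by rw [Real.rpow_neg_one]; norm_num
  rcases le_total 0 β with hβ | hβ
  · rw [abs_of_nonneg hβ]
    refine ⟨?_, Real.rpow_le_rpow ht.le h2 hβ⟩
    calc (4 : ℝ) ^ (-β) = (1 / 4) ^ β := by rw [h4, ← Real.rpow_mul (by norm_num)]; ring_nf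
      _ ≤ t ^ β := Real.rpow_le_rpow (by norm_num) h1 hβ
  · rw [abs_of_nonpos hβ, neg_neg]
    refine ⟨Real.rpow_le_rpow_of_nonpos ht h2 hβ, ?_⟩
    calc t ^ β ≤ (1 / 4) ^ β := Real.rpow_le_rpow_of_nonpos (by norm_num) h1 hβ
      _ = 4 ^ (-β) := by rw [h4, ← Real.rpow_mul (by norm_num)]; ring_nf

lemma rpow_lip (β : ℝ) {t t' : ℝ} (h1 : 1 / 4 ≤ t) (h2 : t ≤ 4) (h1' : 1 / 4 ≤ t') (h2' : t' ≤ 4) :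
    |t ^ β - t' ^ β| ≤ |β| * 4 ^ |β - 1| * |t - t'| := by
  have := Convex.norm_image_sub_le_of_norm_hasDerivWithin_le (f := fun x : ℝ => x ^ β)
    (f' := fun x => β * x ^ (β - 1)) (s := Icc (1 / 4 : ℝ) 4) (x := t') (y := t)
    (C := |β| * 4 ^ |β - 1|)
    (fun x hx => (Real.hasDerivAt_rpow_const (Or.inl (by linarith [hx.1]))).hasDerivWithinAt)
    (fun x hx => by
      have hx0 : 0 < x := by linarith [hx.1]
      rw [norm_mul, Real.norm_eq_abs, Real.norm_of_nonneg (by positivity)]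
      gcongr
      exact (rpow_bounds (β - 1) hx.1 hx.2).2)
    (convex_Icc _ _) ⟨h1', h2'⟩ ⟨h1, h2⟩
  simpa [Real.norm_eq_abs] using this

lemma norm_rpow_scale (β : ℝ) {P : EN N} {ψ : ℝ} (hψ : 0 < ψ) : ‖P‖ ^ β = (‖P‖ / ψ) ^ β * ψ ^ β := by
  rw [← Real.mul_rpow (by positivity) hψ.le, div_mul_cancel₀ _ (ne_of_gt hψ)]

/-- Difference of the first-order terms at two nearby gradients of size `ψ`. -/
lemma bterm (β : ℝ) {P Q b₁ b₂ : EN N} {ψ B : ℝ} (hψ : 0 < ψ) (hP1 : ψ / 4 ≤ ‖P‖) (hP2 : ‖P‖ ≤ 4 * ψ)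
    (hQ1 : ψ / 4 ≤ ‖Q‖) (hQ2 : ‖Q‖ ≤ 4 * ψ) (hB : ‖b₂‖ ≤ B) :
    ⟪b₁, P⟫ * ‖P‖ ^ β - ⟪b₂, Q⟫ * ‖Q‖ ^ β ≤ (4 ^ |β| + 4 * (|β| * 4 ^ |β - 1|)) * ψ ^ β *
      (4 * ψ * ‖b₁ - b₂‖ + B * ‖P - Q‖) := by
  obtain ⟨t, ht⟩ : ∃ t : ℝ, t = ‖P‖ / ψ := ⟨_, rfl⟩
  obtain ⟨t', ht'⟩ : ∃ t' : ℝ, t' = ‖Q‖ / ψ := ⟨_, rfl⟩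
  have hψβ : 0 ≤ ψ ^ β := by positivity
  have g1 : 1 / 4 ≤ t := by rw [ht, le_div_iff₀ hψ]; linarith
  have g2 : t ≤ 4 := by rw [ht, div_le_iff₀ hψ]; linarith
  have g1' : 1 / 4 ≤ t' := by rw [ht', le_div_iff₀ hψ]; linarith
  have g2' : t' ≤ 4 := by rw [ht', div_le_iff₀ hψ]; linarith
  have eP := norm_rpow_scale β (P := P) hψ
  have eQ := norm_rpow_scale β (P := Q) hψ
  rw [← ht] at eP
  rw [← ht'] at eQ
  have h1 := (rpow_bounds β g1 g2).2
  have h2 := rpow_lip β g1 g2 g1' g2'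
  obtain ⟨K, hK⟩ : ∃ K : ℝ, K = 4 ^ |β| := ⟨_, rfl⟩
  obtain ⟨L, hL⟩ : ∃ L : ℝ, L = |β| * 4 ^ |β - 1| := ⟨_, rfl⟩
  have hK0 : 0 ≤ K := by rw [hK]; positivity
  have hL0 : 0 ≤ L := by rw [hL]; positivity
  rw [← hK] at h1
  rw [← hL] at h2
  rw [← hK, ← hL]
  have hB0 : 0 ≤ B := (norm_nonneg _).trans hB
  have htt : ψ * |t - t'| ≤ ‖P - Q‖ := by
    have : ψ * |t - t'| = |‖P‖ - ‖Q‖| := by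
      rw [ht, ht', ← sub_div, abs_div, abs_of_pos hψ, mul_div_cancel₀ _ hψ.ne']
    rw [this]; exact abs_norm_sub_norm_le _ _
  have hsplit : ⟪b₁, P⟫ * ‖P‖ ^ β - ⟪b₂, Q⟫ * ‖Q‖ ^ β = ψ ^ β * (⟪b₁ - b₂, P⟫ * t ^ β
      + ⟪b₂, P - Q⟫ * t ^ β + ⟪b₂, Q⟫ * (t ^ β - t' ^ β)) := by
    rw [eP, eQ, inner_sub_left, inner_sub_right]; ring
  rw [hsplit]
  have ht0 : 0 ≤ t ^ β := Real.rpow_nonneg (by linarith) _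
  have k1 : ⟪b₁ - b₂, P⟫ * t ^ β ≤ ‖b₁ - b₂‖ * (4 * ψ) * K := by
    refine mul_le_mul ((real_inner_le_norm _ _).trans (by gcongr)) h1 ht0 (by positivity)
  have k2 : ⟪b₂, P - Q⟫ * t ^ β ≤ B * ‖P - Q‖ * K := by
    refine mul_le_mul ((real_inner_le_norm _ _).trans (by gcongr)) h1 ht0 (by positivity)
  have k3 : ⟪b₂, Q⟫ * (t ^ β - t' ^ β) ≤ 4 * L * B * ‖P - Q‖ := by
    refine (le_abs_self _).trans ?_
    rw [abs_mul]
    calc |⟪b₂, Q⟫| * |t ^ β - t' ^ β| ≤ (B * (4 * ψ)) * (L * |t - t'|) := by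
          gcongr
          exact (abs_real_inner_le_norm _ _).trans (by gcongr)
      _ = 4 * L * B * (ψ * |t - t'|) := by ring
      _ ≤ 4 * L * B * ‖P - Q‖ := by gcongr
  have k4 : 0 ≤ 4 * L * (4 * ψ * ‖b₁ - b₂‖) := by positivity
  have : (K + 4 * L) * ψ ^ β * (4 * ψ * ‖b₁ - b₂‖ + B * ‖P - Q‖)
      = ψ ^ β * (‖b₁ - b₂‖ * (4 * ψ) * K + B * ‖P - Q‖ * K + 4 * L * B * ‖P - Q‖
        + 4 * L * (4 * ψ * ‖b₁ - b₂‖)) := by ring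
  rw [this]
  refine mul_le_mul_of_nonneg_left ?_ hψβ
  linarith

/-- The Hessian of the penalisation, bounded in the form used by `OpHyp.ishii_lions`. -/
lemma form_bound {e s₁ s₂ ξ ζ : EN N} {r ψ ψ₁ ψ₂ q w₀ C μ : ℝ} (hr : 0 < r) (hψ₁ : 0 < ψ₁)
    (hq : 1 ≤ q) (hψ₂ : ψ₂ ≤ q * ψ₁ / r) (hw3 : w₀ ≤ 3) (hw1 : 1 ≤ w₀) (he : ‖e‖ = 1)
    (hs₁ : ‖s₁‖ ≤ C) (hs₂ : ‖s₂‖ ≤ C) (hC : 0 ≤ C) :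
    w₀ * (ψ₂ - ψ₁ / r) * ⟪e, ξ - ζ⟫ ^ 2 + w₀ * (ψ₁ / r) * ‖ξ - ζ‖ ^ 2
      + 2 * ψ₁ * ⟪e, ξ - ζ⟫ * (⟪s₁, ξ⟫ + ⟪s₂, ζ⟫) + (2 * C * ψ + μ) * (‖ξ‖ ^ 2 + ‖ζ‖ ^ 2)
    ≤ 3 * q * ψ₁ / r * ‖ξ - ζ‖ ^ 2 + 2 * C * ψ₁ * ‖ξ - ζ‖ * (‖ξ‖ + ‖ζ‖)
      + (2 * C * ψ + μ) * (‖ξ‖ ^ 2 + ‖ζ‖ ^ 2) := by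
  obtain ⟨t, ht⟩ : ∃ t : ℝ, t = ⟪e, ξ - ζ⟫ := ⟨_, rfl⟩
  have ht1 : |t| ≤ ‖ξ - ζ‖ := by
    rw [ht]; refine (abs_real_inner_le_norm _ _).trans (by rw [he, one_mul])
  have ht2 : t ^ 2 ≤ ‖ξ - ζ‖ ^ 2 := by rw [← sq_abs t]; gcongr
  rw [← ht]
  have h1 : ψ₂ * t ^ 2 ≤ q * ψ₁ / r * t ^ 2 := by gcongr
  have hm : 0 < ψ₁ / r := by positivity
  have h2 : ψ₁ / r * (‖ξ - ζ‖ ^ 2 - t ^ 2) ≤ q * (ψ₁ / r) * (‖ξ - ζ‖ ^ 2 - t ^ 2) := by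
    refine mul_le_mul_of_nonneg_right ?_ (by linarith)
    nlinarith
  have h3 : w₀ * (q * (ψ₁ / r) * ‖ξ - ζ‖ ^ 2) ≤ 3 * (q * (ψ₁ / r) * ‖ξ - ζ‖ ^ 2) := by gcongr
  have h4 : w₀ * (ψ₂ * t ^ 2 + ψ₁ / r * (‖ξ - ζ‖ ^ 2 - t ^ 2)) ≤ w₀ * (q * (ψ₁ / r) * ‖ξ - ζ‖ ^ 2) := by
    gcongr
    have : q * ψ₁ / r * t ^ 2 = q * (ψ₁ / r) * t ^ 2 := by ring
    linarith
  have h5 : t * (⟪s₁, ξ⟫ + ⟪s₂, ζ⟫) ≤ ‖ξ - ζ‖ * (C * (‖ξ‖ + ‖ζ‖)) := by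
    refine (le_abs_self _).trans ?_
    rw [abs_mul]
    gcongr
    rw [mul_add]
    refine (abs_add_le _ _).trans (add_le_add ?_ ?_)
    · exact (abs_real_inner_le_norm _ _).trans (by gcongr)
    · exact (abs_real_inner_le_norm _ _).trans (by gcongr)
  have h6 : 2 * ψ₁ * (t * (⟪s₁, ξ⟫ + ⟪s₂, ζ⟫)) ≤ 2 * ψ₁ * (‖ξ - ζ‖ * (C * (‖ξ‖ + ‖ζ‖))) := by gcongr
  have e1 : 3 * q * ψ₁ / r * ‖ξ - ζ‖ ^ 2 = 3 * (q * (ψ₁ / r) * ‖ξ - ζ‖ ^ 2) := by ring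
  rw [e1]
  linarith

set_option maxHeartbeats 1000000 in
/-- The structural estimate behind both the Lipschitz bound and the comparison principle. The first
bound needs only `ψ₂ ≤ q ψ₁ / r`; the second, for concave profiles (`ψ₂ ≤ 0`), gains the negative
term `c ψ₂`. -/
lemma OpHyp.kl_core (h : OpHyp Ω α a A C₁ θ C₂ ν F) {q C B : ℝ} (hq : 1 ≤ q) (hC : 1 ≤ C) (hB0 : 0 ≤ B)
    (hB : ∀ x ∈ closure Ω, ‖b x‖ ≤ B) :
    ∃ r₀ c C' : ℝ, 0 < r₀ ∧ r₀ ≤ 1 / (16 * C) ∧ 0 < c ∧ 0 ≤ C' ∧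
    ∀ (x y P Q e s₁ s₂ : EN N) (X Y : Mat N) (r ψ ψ₁ ψ₂ w₀ μ : ℝ), x ∈ closure Ω → y ∈ closure Ω →
      X.IsSymm → Y.IsSymm → 0 < r → r ≤ r₀ → 0 < ψ₁ → ψ₂ ≤ q * ψ₁ / r → 0 ≤ ψ → ψ ≤ 2 * r * ψ₁ →
      1 ≤ w₀ → w₀ ≤ 3 → 0 ≤ μ → μ ≤ C * r * ψ₁ → ‖x - y‖ ≤ 2 * r →
      3 / 4 * ψ₁ ≤ ‖P‖ → ‖P‖ ≤ 4 * ψ₁ → 3 / 4 * ψ₁ ≤ ‖Q‖ → ‖Q‖ ≤ 4 * ψ₁ →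
      ‖Q - P‖ ≤ 6 * C * r * ψ₁ → ‖e‖ = 1 → ‖s₁‖ ≤ C → ‖s₂‖ ≤ C →
      (∀ ξ ζ : EN N, qf X ξ - qf Y ζ ≤ w₀ * (ψ₂ - ψ₁ / r) * ⟪e, ξ - ζ⟫ ^ 2
        + w₀ * (ψ₁ / r) * ‖ξ - ζ‖ ^ 2 + 2 * ψ₁ * ⟪e, ξ - ζ⟫ * (⟪s₁, ξ⟫ + ⟪s₂, ζ⟫)
        + (2 * C * ψ + μ) * (‖ξ‖ ^ 2 + ‖ζ‖ ^ 2)) →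
      (F x P X - F y Q Y + (⟪b x, P⟫ * ‖P‖ ^ α - ⟪b y, Q⟫ * ‖Q‖ ^ α)
        ≤ C' * (ψ₁ ^ α * ψ₁) * (r ^ (2 * min θ ν - 1) + ‖b x - b y‖)) ∧
      (ψ₂ ≤ 0 → F x P X - F y Q Y + (⟪b x, P⟫ * ‖P‖ ^ α - ⟪b y, Q⟫ * ‖Q‖ ^ α)
        ≤ ψ₁ ^ α * (c * ψ₂ + C' * ψ₁)) := by
  have ha := h.h2.1
  have hA : 0 < A := ha.trans_le h.h2.2.1
  have hC₁ := h.h3.1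
  have hC₂ := h.h4.1
  have hθ := h.h3.2.1
  have hν := h.h4.2.1
  obtain ⟨m, hm⟩ : ∃ m : ℝ, m = min θ ν := ⟨_, rfl⟩
  have hmθ : m ≤ θ := by rw [hm]; exact min_le_left _ _
  have hmν : m ≤ ν := by rw [hm]; exact min_le_right _ _
  have hm1 : 1 / 2 < m := by rw [hm]; exact lt_min hθ.1 hν.1
  have hm2 : m ≤ 1 := hmθ.trans hθ.2
  obtain ⟨Cε, hCε⟩ : ∃ Cε : ℝ, Cε = 2 * C₁ + 8 * C * C₂ := ⟨_, rfl⟩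
  have hCε0 : 0 < Cε := by rw [hCε]; positivity
  obtain ⟨K, hK⟩ : ∃ K : ℝ, K = 4 ^ |α| := ⟨_, rfl⟩
  have hK0 : 0 < K := by rw [hK]; positivity
  obtain ⟨Kα, hKα⟩ : ∃ Kα : ℝ, Kα = 4 ^ |α| + 4 * (|α| * 4 ^ |α - 1|) := ⟨_, rfl⟩
  have hKα0 : 0 ≤ Kα := by rw [hKα]; positivity
  obtain ⟨Z₀, hZ₀⟩ : ∃ Z₀ : ℝ, Z₀ = (2 * A * N + a) * (5 * C) + 8 / a * (3 * q * Cε ^ 2) + 4 * Cε * C :=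
    ⟨_, rfl⟩
  have hZ₀0 : 0 ≤ Z₀ := by rw [hZ₀]; positivity
  obtain ⟨D, hD⟩ : ∃ D : ℝ, D = K * Z₀ + 6 * B * Kα * C + 4 * Kα := ⟨_, rfl⟩
  have hD0 : 0 ≤ D := by rw [hD]; positivity
  obtain ⟨C', hC'⟩ : ∃ C' : ℝ, C' = K * (4 * a * C) + D * (1 + 2 * B) := ⟨_, rfl⟩
  have hDC' : D ≤ C' := by
    rw [hC']
    have h1 : 0 ≤ K * (4 * a * C) := by positivity
    have h2 : 0 ≤ D * B := by positivity
    linarith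
  refine ⟨min (1 / (16 * C)) ((a / (8 * Cε)) ^ m⁻¹), K⁻¹ * (2 * a), C', by positivity, min_le_left _ _,
    by positivity, hD0.trans hDC', ?_⟩
  intro x y P Q e s₁ s₂ X Y r ψ ψ₁ ψ₂ w₀ μ hx hy hX hY hr hrr hψ₁ hψ₂ hψ0 hψ hw1 hw3 hμ0 hμ hxy hP1 hP2
    hQ1 hQ2 hPQ he hs₁ hs₂ hform
  rw [← hm]
  have hC0 : 0 < C := by linarith
  have hrC : 16 * C * r ≤ 1 := by
    have := hrr.trans (min_le_left _ _)
    rw [le_div_iff₀ (by positivity)] at this; linarith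
  have hr1 : r ≤ 1 := by nlinarith
  have hrm : r ^ m ≤ a / (8 * Cε) := by
    have h1 := hrr.trans (min_le_right _ _)
    have h2 := Real.rpow_le_rpow hr.le h1 (by linarith : 0 ≤ m)
    rwa [← Real.rpow_mul (by positivity), inv_mul_cancel₀ (by linarith), Real.rpow_one] at h2
  have hP0 : 0 < ‖P‖ := by linarith
  have hPne : P ≠ 0 := norm_pos_iff.1 hP0
  have hrτ0 : 0 < r ^ (2 * m - 1) := by positivity
  have hrm0 : 0 < r ^ m := by positivity
  have rτ1 : r ^ (2 * m - 1) ≤ 1 := Real.rpow_le_one hr.le hr1 (by linarith)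
  have rτr : r ≤ r ^ (2 * m - 1) := by
    calc r = r ^ (1 : ℝ) := (Real.rpow_one r).symm
      _ ≤ _ := Real.rpow_le_rpow_of_exponent_ge hr hr1 (by linarith)
  have rτm : r ^ m ≤ r ^ (2 * m - 1) := Real.rpow_le_rpow_of_exponent_ge hr hr1 (by linarith)
  have r2m : (r ^ m) ^ 2 / r = r ^ (2 * m - 1) := by
    rw [Real.rpow_sub hr, Real.rpow_one, mul_comm 2 m, Real.rpow_mul hr.le]; norm_num
  -- freezing
  obtain ⟨ε, hε⟩ : ∃ ε : ℝ, ε = Cε * r ^ m := ⟨_, rfl⟩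
  have hε0 : 0 < ε := by rw [hε]; positivity
  have hεa : 8 * ε ≤ a := by
    rw [le_div_iff₀ (by positivity)] at hrm
    rw [hε]; linarith
  have hPQ2 : ‖Q - P‖ ≤ ‖P‖ / 2 := by
    have : 6 * C * r * ψ₁ ≤ 6 / 16 * ψ₁ := by
      refine mul_le_mul_of_nonneg_right ?_ hψ₁.le; linarith
    linarith
  have hfr : F x P Y - F y Q Y ≤ ε * ‖P‖ ^ α * matNorm Y := by
    refine (h.freeze hx hy hPne hPQ2 hY).trans ?_
    have e1 : ‖x - y‖ ^ θ ≤ 2 * r ^ m := by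
      calc ‖x - y‖ ^ θ ≤ (2 * r) ^ θ := Real.rpow_le_rpow (norm_nonneg _) hxy (by linarith [hθ.1])
        _ = 2 ^ θ * r ^ θ := Real.mul_rpow (by norm_num) hr.le
        _ ≤ 2 ^ (1 : ℝ) * r ^ m := mul_le_mul
            (Real.rpow_le_rpow_of_exponent_le (by norm_num) hθ.2)
            (Real.rpow_le_rpow_of_exponent_ge hr hr1 hmθ) (by positivity) (by positivity)
        _ = _ := by rw [Real.rpow_one]
    have e2 : (‖Q - P‖ / ‖P‖) ^ ν ≤ 8 * C * r ^ m := by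
      have h0 : ‖Q - P‖ / ‖P‖ ≤ 8 * C * r := by
        rw [div_le_iff₀ hP0]
        have : 8 * C * r * (3 / 4 * ψ₁) ≤ 8 * C * r * ‖P‖ := by gcongr
        linarith
      calc (‖Q - P‖ / ‖P‖) ^ ν ≤ (8 * C * r) ^ ν :=
            Real.rpow_le_rpow (by positivity) h0 (by linarith [hν.1])
        _ = (8 * C) ^ ν * r ^ ν := Real.mul_rpow (by positivity) hr.le
        _ ≤ (8 * C) ^ (1 : ℝ) * r ^ m := mul_le_mul
            (Real.rpow_le_rpow_of_exponent_le (by linarith) hν.2)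
            (Real.rpow_le_rpow_of_exponent_ge hr hr1 hmν) (by positivity) (by positivity)
        _ = _ := by rw [Real.rpow_one]
    have e3 : C₁ * ‖x - y‖ ^ θ + C₂ * (‖Q - P‖ / ‖P‖) ^ ν ≤ ε := by
      have f1 : C₁ * ‖x - y‖ ^ θ ≤ C₁ * (2 * r ^ m) := by gcongr
      have f2 : C₂ * (‖Q - P‖ / ‖P‖) ^ ν ≤ C₂ * (8 * C * r ^ m) := by gcongr
      rw [hε, hCε]; linarith
    have := matNorm_nonneg Y
    gcongr
  obtain ⟨c₂, hc₂⟩ : ∃ c₂ : ℝ, c₂ = 2 * C * ψ + μ := ⟨_, rfl⟩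
  have hc₂0 : 0 ≤ c₂ := by rw [hc₂]; positivity
  have hc₂1 : c₂ ≤ 5 * C * (r * ψ₁) := by
    have : 2 * C * ψ ≤ 2 * C * (2 * r * ψ₁) := by gcongr
    rw [hc₂]; linarith
  obtain ⟨s, hs0, hse, hsF⟩ := h.ishii_lions (y := y) (Q := Q) hx hPne hX hY (k := 3 * q * ψ₁ / r) (c₁ := 2 * C * ψ₁)
    (c₂ := c₂) (by positivity) (by positivity) hc₂0 hε0 hεa
    (fun ξ ζ => (hform ξ ζ).trans (by
      rw [hc₂]; exact form_bound hr hψ₁ hq hψ₂ hw3 hw1 he hs₁ hs₂ hC0.le)) hfr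
  -- collecting the error terms
  have hZ : (2 * A * N + a) * c₂ + 8 / a * ε ^ 2 * (3 * q * ψ₁ / r) + 2 * ε * (2 * C * ψ₁)
      ≤ Z₀ * (ψ₁ * r ^ (2 * m - 1)) := by
    have z1 : (2 * A * N + a) * c₂ ≤ (2 * A * N + a) * (5 * C * (r ^ (2 * m - 1) * ψ₁)) := by
      gcongr; refine hc₂1.trans ?_; gcongr
    have z2 : 8 / a * ε ^ 2 * (3 * q * ψ₁ / r) = 8 / a * (3 * q * Cε ^ 2) * (ψ₁ * r ^ (2 * m - 1)) := by
      rw [← r2m, hε]; ring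
    have z3 : 2 * ε * (2 * C * ψ₁) ≤ 4 * Cε * C * (ψ₁ * r ^ (2 * m - 1)) := by
      have : Cε * r ^ m ≤ Cε * r ^ (2 * m - 1) := by gcongr
      have z4 : 2 * (Cε * r ^ m) * (2 * C * ψ₁) ≤ 2 * (Cε * r ^ (2 * m - 1)) * (2 * C * ψ₁) := by gcongr
      rw [hε]; linarith
    rw [hZ₀, z2]; linarith
  have hbt := bterm α (b₁ := b x) (b₂ := b y) hψ₁ (by linarith) hP2 (by linarith) hQ2 (hB y hy)
  rw [← hKα, norm_sub_rev P Q] at hbt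
  have hψα : 0 < ψ₁ ^ α := by positivity
  have hPsc := norm_rpow_scale α (P := P) hψ₁
  obtain ⟨l1, l2⟩ := rpow_bounds α (t := ‖P‖ / ψ₁) (by rw [le_div_iff₀ hψ₁]; linarith)
    (by rw [div_le_iff₀ hψ₁]; linarith)
  rw [Real.rpow_neg (by norm_num), ← hK] at l1
  rw [← hK] at l2
  have hPu : ‖P‖ ^ α ≤ K * ψ₁ ^ α := by rw [hPsc]; gcongr
  have hPl : K⁻¹ * ψ₁ ^ α ≤ ‖P‖ ^ α := by rw [hPsc]; gcongr
  have hPα : 0 ≤ ‖P‖ ^ α := by positivity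
  have hb2 : Kα * ψ₁ ^ α * (4 * ψ₁ * ‖b x - b y‖ + B * ‖Q - P‖)
      ≤ ψ₁ ^ α * ψ₁ * (4 * Kα * ‖b x - b y‖ + 6 * B * Kα * C * r ^ (2 * m - 1)) := by
    have : B * ‖Q - P‖ ≤ B * (6 * C * r ^ (2 * m - 1) * ψ₁) := by
      gcongr; refine hPQ.trans ?_; gcongr
    calc _ ≤ Kα * ψ₁ ^ α * (4 * ψ₁ * ‖b x - b y‖ + B * (6 * C * r ^ (2 * m - 1) * ψ₁)) := by gcongr
      _ = _ := by ring
  have hZP : ‖P‖ ^ α * (Z₀ * (ψ₁ * r ^ (2 * m - 1))) ≤ ψ₁ ^ α * ψ₁ * (K * Z₀ * r ^ (2 * m - 1)) := by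
    calc _ ≤ K * ψ₁ ^ α * (Z₀ * (ψ₁ * r ^ (2 * m - 1))) := by gcongr
      _ = _ := by ring
  have hmain : F x P X - F y Q Y + (⟪b x, P⟫ * ‖P‖ ^ α - ⟪b y, Q⟫ * ‖Q‖ ^ α)
      ≤ ‖P‖ ^ α * (-(a / 2) * s) + D * (ψ₁ ^ α * ψ₁) * (r ^ (2 * m - 1) + ‖b x - b y‖) := by
    have k1 : F x P X - F y Q Y ≤ ‖P‖ ^ α * (-(a / 2) * s) + ‖P‖ ^ α * (Z₀ * (ψ₁ * r ^ (2 * m - 1))) := by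
      rw [← mul_add]; refine hsF.trans ?_; refine mul_le_mul_of_nonneg_left ?_ hPα; linarith
    have k2 : ψ₁ ^ α * ψ₁ * (K * Z₀ * r ^ (2 * m - 1))
        + ψ₁ ^ α * ψ₁ * (4 * Kα * ‖b x - b y‖ + 6 * B * Kα * C * r ^ (2 * m - 1))
        ≤ D * (ψ₁ ^ α * ψ₁) * (r ^ (2 * m - 1) + ‖b x - b y‖) := by
      have : D * (ψ₁ ^ α * ψ₁) * (r ^ (2 * m - 1) + ‖b x - b y‖)
          = ψ₁ ^ α * ψ₁ * (D * (r ^ (2 * m - 1) + ‖b x - b y‖)) := by ring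
      rw [this, ← mul_add]
      refine mul_le_mul_of_nonneg_left ?_ (by positivity)
      have p1 : 0 ≤ 4 * Kα * r ^ (2 * m - 1) := by positivity
      have p2 : 0 ≤ (K * Z₀ + 6 * B * Kα * C) * ‖b x - b y‖ := by positivity
      rw [hD]; linarith
    linarith
  constructor
  · have k1 : ‖P‖ ^ α * (-(a / 2) * s) ≤ 0 := by
      have : 0 ≤ ‖P‖ ^ α * (a / 2 * s) := by positivity
      linarith
    have k2 : D * (ψ₁ ^ α * ψ₁) * (r ^ (2 * m - 1) + ‖b x - b y‖)
        ≤ C' * (ψ₁ ^ α * ψ₁) * (r ^ (2 * m - 1) + ‖b x - b y‖) := by gcongr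
    linarith
  · intro hψ₂0
    have hs1 : -4 * ψ₂ - 8 * C * ψ₁ ≤ s := by
      have k1 := hse e he
      have k2 := hform e (-e)
      have k3 : qf Y (-e) = qf Y e := by
        have := qf_smul_vec Y (-1) e; simpa using this
      have k4 : ⟪e, e - -e⟫ = 2 := by
        rw [inner_sub_right, inner_neg_right, real_inner_self_eq_norm_sq, he]; norm_num
      have k5 : ‖e - -e‖ = 2 := by
        rw [sub_neg_eq_add, ← two_smul ℝ e, norm_smul, he]; norm_num
      rw [k3, k4, k5, norm_neg, he, ← hc₂] at k2
      have k6 : ⟪s₁, e⟫ + ⟪s₂, -e⟫ ≤ 2 * C := by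
        have i1 := real_inner_le_norm s₁ e
        have i2 := real_inner_le_norm s₂ (-e)
        rw [norm_neg, he] at i2
        rw [he] at i1
        linarith
      have k7 : 2 * ψ₁ * 2 * (⟪s₁, e⟫ + ⟪s₂, -e⟫) ≤ 2 * ψ₁ * 2 * (2 * C) := by gcongr
      have k8 : w₀ * ψ₂ ≤ 1 * ψ₂ := mul_le_mul_of_nonpos_right hw1 hψ₂0
      linarith
    have k1 : ‖P‖ ^ α * (-(a / 2) * s) ≤ ψ₁ ^ α * (K⁻¹ * (2 * a) * ψ₂ + K * (4 * a * C) * ψ₁) := by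
      have j1 : ‖P‖ ^ α * (-(a / 2) * s) ≤ ‖P‖ ^ α * (2 * a * ψ₂ + 4 * a * C * ψ₁) := by
        refine mul_le_mul_of_nonneg_left ?_ hPα
        have := mul_le_mul_of_nonneg_left hs1 (by positivity : 0 ≤ a / 2)
        linarith
      have j2 : ‖P‖ ^ α * (2 * a * ψ₂) ≤ K⁻¹ * ψ₁ ^ α * (2 * a * ψ₂) :=
        mul_le_mul_of_nonpos_right hPl (mul_nonpos_of_nonneg_of_nonpos (by positivity) hψ₂0)
      have j3 : ‖P‖ ^ α * (4 * a * C * ψ₁) ≤ K * ψ₁ ^ α * (4 * a * C * ψ₁) := by gcongr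
      linarith
    have k2 : D * (ψ₁ ^ α * ψ₁) * (r ^ (2 * m - 1) + ‖b x - b y‖) ≤ D * (ψ₁ ^ α * ψ₁) * (1 + 2 * B) := by
      gcongr
      exact (norm_sub_le _ _).trans (by linarith [hB x hx, hB y hy])
    rw [hC']
    linarith

/-! ### The key estimate for a doubled maximum -/

/-- At a boundary point the gradient of the penalisation points outwards, thanks to the factor
`1 + σ x + σ y`. -/
lemma DomData.bdy_pos {q C : ℝ} {σ : EN N → ℝ} {s : EN N → EN N} (DD : DomData Ω nv q σ s C)
    {x y : EN N} (hx : x ∈ frontier Ω) (hy : y ∈ closure Ω) {r ψ m : ℝ} (hr : 0 < r)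
    (hxr : ‖x - y‖ = r) (hψ : 0 < ψ) (hm : 0 ≤ m) (hmr : m * r ≤ 3 * q * ψ) :
    0 < ⟪m • (r⁻¹ • (x - y)) + ψ • s x, s x⟫ := by
  have hne : y ≠ x := by
    rintro rfl; simp at hxr; linarith
  have h := DD.out x hx y hy hne
  rw [hxr] at h
  rw [inner_add_left, real_inner_smul_left, real_inner_smul_left, real_inner_smul_left,
    real_inner_self_eq_norm_sq]
  have hs : 0 < ‖s x‖ ^ 2 := by
    have : s x ≠ 0 := by
      intro h0; rw [h0] at h; simp at h
    have := norm_pos_iff.2 this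
    positivity
  rcases le_or_gt 0 ⟪x - y, s x⟫ with h0 | h0
  · have : 0 ≤ m * (r⁻¹ * ⟪x - y, s x⟫) := by positivity
    have : 0 < ψ * ‖s x‖ ^ 2 := by positivity
    linarith
  · have h1 : 3 * q * ψ * ⟪x - y, s x⟫ ≤ m * r * ⟪x - y, s x⟫ := mul_le_mul_of_nonpos_right hmr h0.le
    have h2 : m * (r⁻¹ * ⟪x - y, s x⟫) + ψ * ‖s x‖ ^ 2
        = (m * r * ⟪x - y, s x⟫ + ψ * (r ^ 2 * ‖s x‖ ^ 2)) / r ^ 2 := by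
      field_simp
    rw [h2]
    apply div_pos _ (by positivity)
    have h3 := mul_pos hψ h
    linarith

lemma exists_pos_min {P₁ P₂ P₃ P₄ P₅ : ℝ} (h₁ : 0 < P₁) (h₂ : 0 < P₂) (h₃ : 0 < P₃) (h₄ : 0 < P₄)
    (h₅ : 0 < P₅) : ∃ δ : ℝ, 0 < δ ∧ δ ≤ P₁ ∧ δ ≤ P₂ ∧ δ ≤ P₃ ∧ δ ≤ P₄ ∧ δ ≤ P₅ := by
  refine ⟨min P₁ (min P₂ (min P₃ (min P₄ P₅))), by positivity, ?_, ?_, ?_, ?_, ?_⟩ <;> simp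

set_option maxHeartbeats 2000000 in
/-- The two-point estimate: at a local maximum of `u₁ x + u₂ y - (1 + σ x + σ y) ψ |x - y|` the
right-hand sides of the two inequalities are controlled by the profile `ψ`. -/
lemma OpHyp.kl (h : OpHyp Ω α a A C₁ θ C₂ ν F) (hb : ContinuousOn b (closure Ω)) {q C : ℝ}
    {σ : EN N → ℝ} {s : EN N → EN N} (hq : 1 ≤ q) (DD : DomData Ω nv q σ s C) :
    ∃ r₀ c C' : ℝ, 0 < r₀ ∧ r₀ ≤ 1 / 16 ∧ 0 < c ∧ 0 ≤ C' ∧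
    ∀ (u₁ u₂ f₁ f₂ : EN N → ℝ), UpperSemicontinuousOn u₁ (closure Ω) →
      UpperSemicontinuousOn u₂ (closure Ω) → SubV Ω nv α b F f₁ u₁ → SubV Ω nv α b (dualF F) f₂ u₂ →
      ∀ (x₁ x₂ : EN N), x₁ ∈ closure Ω → x₂ ∈ closure Ω → ∀ (r : ℝ), ‖x₁ - x₂‖ = r → 0 < r → r ≤ r₀ →
      ∀ (ψ : ℝ → ℝ) (ψ₁ ψ₂ : ℝ), 0 < ψ r → 0 < ψ₁ → r * ψ₁ ≤ q * ψ r → ψ r ≤ 2 * r * ψ₁ →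
      ψ₂ ≤ q * ψ₁ / r →
      (∀ η : ℝ, 0 < η → ∀ᶠ t in 𝓝 r,
        ψ t ≤ ψ r + ψ₁ * (t - r) + ψ₂ / 2 * (t - r) ^ 2 + η * (t - r) ^ 2) →
      (∃ δ : ℝ, 0 < δ ∧ ∀ x ∈ closure Ω, ∀ y ∈ closure Ω, ‖x - x₁‖ < δ → ‖y - x₂‖ < δ →
        u₁ x + u₂ y - (1 + σ x + σ y) * ψ ‖x - y‖ ≤ u₁ x₁ + u₂ x₂ - (1 + σ x₁ + σ x₂) * ψ r) →
      ∀ (a₁ a₂ : ℝ), (∃ δ : ℝ, 0 < δ ∧ ∀ x ∈ closure Ω, ‖x - x₁‖ < δ → |u₁ x - u₁ x₁| < δ → a₁ ≤ f₁ x) →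
      (∃ δ : ℝ, 0 < δ ∧ ∀ x ∈ closure Ω, ‖x - x₂‖ < δ → |u₂ x - u₂ x₂| < δ → a₂ ≤ f₂ x) →
      (a₁ + a₂ ≤ C' * (ψ₁ ^ α * ψ₁) * (r ^ (2 * min θ ν - 1) + ‖b x₁ - b x₂‖)) ∧
      (ψ₂ ≤ 0 → a₁ + a₂ ≤ ψ₁ ^ α * (c * ψ₂ + C' * ψ₁)) := by
  obtain ⟨B, hB⟩ : ∃ B : ℝ, ∀ x ∈ closure Ω, ‖b x‖ ≤ B := DD.cpt.exists_bound_of_continuousOn hb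
  have hB0 : 0 ≤ B := by
    obtain ⟨x, hx⟩ := DD.ne
    exact (norm_nonneg _).trans (hB x (subset_closure hx))
  obtain ⟨r₀, c, C', hr₀, hr₀C, hc, hC', hcore⟩ := h.kl_core (b := b) hq DD.hC hB0 hB
  have hC1 := DD.hC
  have hC0 : 0 < C := by linarith
  refine ⟨r₀, c, 2 * C', hr₀, hr₀C.trans ?_, hc, by positivity, ?_⟩
  · apply one_div_le_one_div_of_le (by norm_num); linarith
  intro u₁ u₂ f₁ f₂ hu₁ hu₂ hs₁ hs₂ x₁ x₂ hx₁ hx₂ r hxr hr hrr ψ ψ₁ ψ₂ hψ hψ₁ hψq hψ2 hψ₂ hexp hmax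
    a₁ a₂ ha₁ ha₂
  have hrC : 16 * C * r ≤ 1 := by
    have := hrr.trans hr₀C
    rw [le_div_iff₀ (by positivity)] at this; linarith
  obtain ⟨w₀, hw₀⟩ : ∃ w₀ : ℝ, w₀ = 1 + σ x₁ + σ x₂ := ⟨_, rfl⟩
  have hw1 : 1 ≤ w₀ := by rw [hw₀]; linarith [DD.σ0 x₁ hx₁, DD.σ0 x₂ hx₂]
  have hw3 : w₀ ≤ 3 := by rw [hw₀]; linarith [DD.σ1 x₁ hx₁, DD.σ1 x₂ hx₂]
  have hrC0 : 0 < C * r * ψ₁ := by positivity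
  obtain ⟨η, hη⟩ : ∃ η : ℝ, η = C * r * ψ₁ / 8 := ⟨_, rfl⟩
  have hη0 : 0 < η := by rw [hη]; positivity
  obtain ⟨δ₁, hδ₁, hps⟩ := DD.psi_expand hx₁ hx₂ hr hxr hψ.le hψ₁.le hexp hη0
  obtain ⟨δ₂, hδ₂, hmx⟩ := hmax
  obtain ⟨δ₃, hδ₃, ha₁⟩ := ha₁
  obtain ⟨δ₄, hδ₄, ha₂⟩ := ha₂
  obtain ⟨e, he⟩ : ∃ e : EN N, e = r⁻¹ • (x₁ - x₂) := ⟨_, rfl⟩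
  have hen : ‖e‖ = 1 := by
    rw [he, norm_smul, hxr, norm_inv, Real.norm_of_nonneg hr.le, inv_mul_cancel₀ hr.ne']
  obtain ⟨p₁, hp₁⟩ : ∃ p₁ : EN N, p₁ = (w₀ * ψ₁) • e + ψ r • s x₁ := ⟨_, rfl⟩
  obtain ⟨p₂, hp₂⟩ : ∃ p₂ : EN N, p₂ = -(w₀ * ψ₁) • e + ψ r • s x₂ := ⟨_, rfl⟩
  rw [← hw₀, ← he, ← hp₁, ← hp₂] at hps
  obtain ⟨T₁, T₂, hT, hTe⟩ := form_exists e (s x₁) (s x₂) (w₀ * (ψ₂ - ψ₁ / r)) (w₀ * (ψ₁ / r))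
    (2 * C * ψ r + 4 * η) ψ₁
  have hmr : w₀ * ψ₁ * r ≤ 3 * q * ψ r := by
    have h1 : w₀ * (r * ψ₁) ≤ 3 * (r * ψ₁) := mul_le_mul_of_nonneg_right hw3 (by positivity)
    linarith
  -- the boundary condition is violated strictly by the test gradients
  obtain ⟨δ₅, hδ₅, hbd₁⟩ := DD.bdy_open (p := p₁) hx₁ (fun hf => by
    rw [hp₁, he]; exact DD.bdy_pos hf hx₂ hr hxr hψ (by positivity) hmr)
  obtain ⟨δ₆, hδ₆, hbd₂⟩ := DD.bdy_open (p := p₂) hx₂ (fun hf => by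
    have := DD.bdy_pos hf hx₁ hr (by rw [norm_sub_rev]; exact hxr) hψ (m := w₀ * ψ₁) (by positivity) hmr
    rw [hp₂, he, neg_smul, ← smul_neg, ← smul_neg, neg_sub]; exact this)
  have hrτ : 0 < r ^ (2 * min θ ν - 1) := by positivity
  obtain ⟨δ₇, hδ₇, hb₁⟩ := Metric.continuousWithinAt_iff.1 (hb x₁ hx₁) _ (half_pos hrτ)
  obtain ⟨δ₈, hδ₈, hb₂⟩ := Metric.continuousWithinAt_iff.1 (hb x₂ hx₂) _ (half_pos hrτ)
  obtain ⟨ρ, hρ, hρ₁, hρ₂, -⟩ := exists_pos_min (half_pos hδ₁) (half_pos hδ₂) hδ₁ hδ₁ hδ₁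
  obtain ⟨δ₉, hδ₉, i1, i2, i3, i4, i5⟩ := exists_pos_min hδ₃ hδ₄ hδ₅ hδ₆ hδ₇
  obtain ⟨δ₀, hδ₀, j1, j2, j3, j4, j5⟩ := exists_pos_min hδ₈ hρ (half_pos hr) (half_pos hrC0)
    (by positivity : 0 < ψ₁ / 8)
  obtain ⟨δ, hδ, k1, k2, -⟩ := exists_pos_min hδ₀ hδ₉ hδ₀ hδ₀ hδ₀
  obtain ⟨z₁, hz₁, z₂, hz₂, P₁, P₂, X₁, X₂, hX₁, hX₂, hzx₁, hzx₂, huz₁, huz₂, hPp₁, hPp₂, hJ₁, hJ₂, hform⟩ :=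
    thm_sums (K₁ := closure Ω ∩ closedBall x₁ ρ) (K₂ := closure Ω ∩ closedBall x₂ ρ)
      (DD.cpt.inter_right isClosed_closedBall) (DD.cpt.inter_right isClosed_closedBall)
      (hu₁.mono inter_subset_left) (hu₂.mono inter_subset_left)
      ⟨hx₁, mem_closedBall_self hρ.le⟩ ⟨hx₂, mem_closedBall_self hρ.le⟩ p₁ p₂ T₁ T₂ hT hη0 (by
        intro x hx y hy
        have l1 : ‖x - x₁‖ ≤ ρ := by rw [← dist_eq_norm]; exact hx.2
        have l2 : ‖y - x₂‖ ≤ ρ := by rw [← dist_eq_norm]; exact hy.2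
        have l3 := hps x hx.1 y hy.1 (by linarith) (by linarith)
        have l4 := hmx x hx.1 y hy.1 (by linarith) (by linarith)
        rw [hTe]
        dsimp only
        rw [← hw₀] at l4
        linarith) hδ
  have hJ₁' : UJet (closure Ω) u₁ z₁ P₁ X₁ := by
    have : closedBall x₁ ρ ∈ 𝓝[closure Ω] z₁ := by
      refine mem_nhdsWithin_of_mem_nhds (closedBall_mem_nhds_of_mem ?_)
      rw [mem_ball, dist_eq_norm]; linarith
    unfold UJet at hJ₁ ⊢
    rwa [nhdsWithin_inter_of_mem' this] at hJ₁
  have hJ₂' : UJet (closure Ω) u₂ z₂ P₂ X₂ := by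
    have : closedBall x₂ ρ ∈ 𝓝[closure Ω] z₂ := by
      refine mem_nhdsWithin_of_mem_nhds (closedBall_mem_nhds_of_mem ?_)
      rw [mem_ball, dist_eq_norm]; linarith
    unfold UJet at hJ₂ ⊢
    rwa [nhdsWithin_inter_of_mem' this] at hJ₂
  -- size of the gradients
  have hψs : ∀ x ∈ closure Ω, ‖ψ r • s x‖ ≤ 2 * (C * r * ψ₁) := by
    intro x hx
    rw [norm_smul, Real.norm_of_nonneg hψ.le]
    calc ψ r * ‖s x‖ ≤ 2 * r * ψ₁ * C := mul_le_mul hψ2 (DD.s_le x hx) (norm_nonneg _) (by positivity)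
      _ = _ := by ring
  have hsm : 2 * (C * r * ψ₁) ≤ ψ₁ / 8 := by
    have : 16 * C * r * ψ₁ ≤ 1 * ψ₁ := mul_le_mul_of_nonneg_right hrC hψ₁.le
    linarith
  have hwe : ‖(w₀ * ψ₁) • e‖ = w₀ * ψ₁ := by
    rw [norm_smul, hen, Real.norm_of_nonneg (by positivity), mul_one]
  have hwl : ψ₁ ≤ w₀ * ψ₁ := by
    have := mul_le_mul_of_nonneg_right hw1 hψ₁.le; linarith
  have hwu : w₀ * ψ₁ ≤ 3 * ψ₁ := mul_le_mul_of_nonneg_right hw3 hψ₁.le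
  have hd₁ : ‖P₁ - (w₀ * ψ₁) • e‖ ≤ δ + 2 * (C * r * ψ₁) := by
    have : P₁ - (w₀ * ψ₁) • e = (P₁ - p₁) + ψ r • s x₁ := by rw [hp₁]; abel
    rw [this]; exact (norm_add_le _ _).trans (add_le_add hPp₁.le (hψs x₁ hx₁))
  have hd₂ : ‖-P₂ - (w₀ * ψ₁) • e‖ ≤ δ + 2 * (C * r * ψ₁) := by
    have : -P₂ - (w₀ * ψ₁) • e = -((P₂ - p₂) + ψ r • s x₂) := by rw [hp₂, neg_smul]; abel
    rw [this, norm_neg]; exact (norm_add_le _ _).trans (add_le_add hPp₂.le (hψs x₂ hx₂))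
  have m1 := norm_sub_norm_le ((w₀ * ψ₁) • e) P₁
  have m2 := norm_sub_norm_le P₁ ((w₀ * ψ₁) • e)
  have m3 := norm_sub_norm_le ((w₀ * ψ₁) • e) (-P₂)
  have m4 := norm_sub_norm_le (-P₂) ((w₀ * ψ₁) • e)
  rw [norm_sub_rev, hwe] at m1 m3
  rw [hwe] at m2 m4
  have hP₁0 : P₁ ≠ 0 := by
    rintro rfl; rw [norm_zero] at m1; linarith
  have hP₂0 : P₂ ≠ 0 := by
    rintro rfl; rw [neg_zero] at m3 hd₂; rw [norm_zero] at m3; linarith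
  have hQP : ‖-P₂ - P₁‖ ≤ 6 * C * r * ψ₁ := by
    have : -P₂ - P₁ = (-P₂ - (w₀ * ψ₁) • e) - (P₁ - (w₀ * ψ₁) • e) := by abel
    rw [this]
    have := norm_sub_le (-P₂ - (w₀ * ψ₁) • e) (P₁ - (w₀ * ψ₁) • e)
    linarith
  have hz12 : ‖z₁ - z₂‖ ≤ 2 * r := by
    have : z₁ - z₂ = (z₁ - x₁) + (x₁ - x₂) - (z₂ - x₂) := by abel
    rw [this]
    have n1 := norm_sub_le ((z₁ - x₁) + (x₁ - x₂)) (z₂ - x₂)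
    have n2 := norm_add_le (z₁ - x₁) (x₁ - x₂)
    linarith
  have hF₁ := hs₁.1 z₁ hz₁.1 P₁ hP₁0 X₁ hX₁ (fun hf => hbd₁ z₁ P₁ (by linarith) (by linarith) hf) hJ₁'
  have hF₂ := hs₂.1 z₂ hz₂.1 P₂ hP₂0 X₂ hX₂ (fun hf => hbd₂ z₂ P₂ (by linarith) (by linarith) hf) hJ₂'
  have hA₁ := ha₁ z₁ hz₁.1 (by linarith) (by linarith)
  have hA₂ := ha₂ z₂ hz₂.1 (by linarith) (by linarith)
  have hbz₁ := hb₁ hz₁.1 (by rw [dist_eq_norm]; linarith)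
  have hbz₂ := hb₂ hz₂.1 (by rw [dist_eq_norm]; linarith)
  rw [dist_eq_norm] at hbz₁ hbz₂
  have hbb : ‖b z₁ - b z₂‖ ≤ r ^ (2 * min θ ν - 1) + ‖b x₁ - b x₂‖ := by
    have : b z₁ - b z₂ = (b z₁ - b x₁) + (b x₁ - b x₂) - (b z₂ - b x₂) := by abel
    rw [this]
    have n1 := norm_sub_le ((b z₁ - b x₁) + (b x₁ - b x₂)) (b z₂ - b x₂)
    have n2 := norm_add_le (b z₁ - b x₁) (b x₁ - b x₂)
    linarith
  have hnX₂ : (-X₂).IsSymm := hX₂.neg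
  have hFQ : dualF F z₂ P₂ X₂ = -F z₂ (-P₂) (-X₂) := by
    rw [h.neg_p hz₂.1 hP₂0 hnX₂]; rfl
  rw [hFQ] at hF₂
  have hbQ : ⟪b z₂, -P₂⟫ * ‖-P₂‖ ^ α = -(⟪b z₂, P₂⟫ * ‖P₂‖ ^ α) := by
    rw [inner_neg_right, norm_neg]; ring
  obtain ⟨g1, g2⟩ := hcore z₁ z₂ P₁ (-P₂) e (s x₁) (s x₂) X₁ (-X₂) r (ψ r) ψ₁ ψ₂ w₀ (4 * η + δ) hz₁.1 hz₂.1
    hX₁ hnX₂ hr hrr hψ₁ hψ₂ hψ.le hψ2 hw1 hw3 (by positivity) (by rw [hη]; linarith) hz12 (by linarith)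
    (by linarith) (by linarith) (by linarith) hQP hen (DD.s_le _ hx₁) (DD.s_le _ hx₂) (by
      intro ξ ζ
      have := hform ξ ζ
      rw [hTe] at this
      dsimp only at this
      rw [qf_neg]
      linarith)
  rw [hbQ] at g1 g2
  have hψp : 0 ≤ C' * (ψ₁ ^ α * ψ₁) := by positivity
  constructor
  · have o1 : C' * (ψ₁ ^ α * ψ₁) * (r ^ (2 * min θ ν - 1) + ‖b z₁ - b z₂‖)
        ≤ C' * (ψ₁ ^ α * ψ₁) * (2 * (r ^ (2 * min θ ν - 1) + ‖b x₁ - b x₂‖)) := by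
      refine mul_le_mul_of_nonneg_left ?_ hψp
      linarith [norm_nonneg (b x₁ - b x₂)]
    linarith
  · intro hψ₂0
    have o1 := g2 hψ₂0
    have : ψ₁ ^ α * (c * ψ₂ + C' * ψ₁) ≤ ψ₁ ^ α * (c * ψ₂ + 2 * C' * ψ₁) := by
      have : 0 ≤ C' * ψ₁ := by positivity
      refine mul_le_mul_of_nonneg_left ?_ (by positivity)
      linarith
    linarith

/-! ### Lipschitz estimate -/

lemma taylor2 {ψ ψ' : ℝ → ℝ} {r ψ₂ : ℝ} (h1 : ∀ᶠ t in 𝓝 r, HasDerivAt ψ (ψ' t) t)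
    (h2 : HasDerivAt ψ' ψ₂ r) (η : ℝ) (hη : 0 < η) :
    ∀ᶠ t in 𝓝 r, ψ t ≤ ψ r + ψ' r * (t - r) + ψ₂ / 2 * (t - r) ^ 2 + η * (t - r) ^ 2 := by
  have h3 := (hasDerivAt_iff_isLittleO.1 h2).def hη
  obtain ⟨δ, hδ, hall⟩ := Metric.eventually_nhds_iff.1 (h1.and h3)
  refine Metric.eventually_nhds_iff.2 ⟨δ, hδ, fun t ht => ?_⟩
  have hd : ∀ x ∈ closedBall r |t - r|, HasDerivWithinAt
      (fun t => ψ t - ψ r - ψ' r * (t - r) - ψ₂ / 2 * (t - r) ^ 2)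
      (ψ' x - ψ' r - ψ₂ * (x - r)) (closedBall r |t - r|) x := by
    intro x hx
    have hxr : dist x r < δ := lt_of_le_of_lt hx (by rwa [← Real.dist_eq])
    have e1 := (hall hxr).1
    have e2 : HasDerivAt (fun t : ℝ => t - r) 1 x := (hasDerivAt_id x).sub_const r
    have e3 := ((e1.sub_const (ψ r)).sub (e2.const_mul (ψ' r))).sub ((e2.pow 2).const_mul (ψ₂ / 2))
    refine (e3.congr_deriv ?_).hasDerivWithinAt
    simp; ring
  have hb : ∀ x ∈ closedBall r |t - r|, ‖ψ' x - ψ' r - ψ₂ * (x - r)‖ ≤ η * |t - r| := by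
    intro x hx
    have hxr : dist x r < δ := lt_of_le_of_lt hx (by rwa [← Real.dist_eq])
    have e1 := (hall hxr).2
    rw [smul_eq_mul, mul_comm (x - r)] at e1
    refine e1.trans ?_
    rw [mem_closedBall, Real.dist_eq] at hx
    rw [Real.norm_eq_abs]
    gcongr
  have := (convex_closedBall r |t - r|).norm_image_sub_le_of_norm_hasDerivWithin_le hd hb
    (mem_closedBall_self (abs_nonneg _)) (by rw [mem_closedBall, Real.dist_eq] : t ∈ closedBall r |t - r|)
  simp only [sub_self, mul_zero, Real.norm_eq_abs, ne_eq, OfNat.ofNat_ne_zero, not_false_eq_true,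
    zero_pow, sub_zero] at this
  have h5 := (le_abs_self _).trans this
  have : η * |t - r| * |t - r| = η * (t - r) ^ 2 := by rw [← sq_abs (t - r)]; ring
  linarith

lemma DomData.σ_cont {q C : ℝ} {σ : EN N → ℝ} {s : EN N → EN N} (DD : DomData Ω nv q σ s C) :
    ContinuousOn σ (closure Ω) := by
  intro x hx
  have h1 : Tendsto (fun y : EN N => ⟪s x, y - x⟫ + C * ‖y - x‖ ^ 2) (𝓝[closure Ω] x) (𝓝 0) := by
    have : Continuous (fun y : EN N => ⟪s x, y - x⟫ + C * ‖y - x‖ ^ 2) := by fun_prop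
    have h2 := this.tendsto x
    simp only [sub_self, inner_zero_right, norm_zero] at h2
    simpa using h2.mono_left nhdsWithin_le_nhds
  have h1' : Tendsto (fun y : EN N => ⟪s x, y - x⟫ - C * ‖y - x‖ ^ 2) (𝓝[closure Ω] x) (𝓝 0) := by
    have : Continuous (fun y : EN N => ⟪s x, y - x⟫ - C * ‖y - x‖ ^ 2) := by fun_prop
    have h2 := this.tendsto x
    simp only [sub_self, inner_zero_right, norm_zero] at h2
    simpa using h2.mono_left nhdsWithin_le_nhds
  have h3 : Tendsto (fun y => σ y - σ x) (𝓝[closure Ω] x) (𝓝 0) := by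
    refine tendsto_of_tendsto_of_tendsto_of_le_of_le' h1' h1 ?_ ?_
    · filter_upwards [self_mem_nhdsWithin] with y hy
      have := (abs_le.1 (DD.exp x hx y hy)).1
      linarith
    · filter_upwards [self_mem_nhdsWithin] with y hy
      have := (abs_le.1 (DD.exp x hx y hy)).2
      linarith
  have := h3.add_const (σ x)
  simpa [ContinuousWithinAt] using this

lemma exists_max2 {K : Set (EN N)} (hK : IsCompact K) {u₁ u₂ : EN N → ℝ}
    (hu₁ : UpperSemicontinuousOn u₁ K) (hu₂ : UpperSemicontinuousOn u₂ K) {Φ : EN N × EN N → ℝ}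
    (hΦ : ContinuousOn Φ (K ×ˢ K)) {S : Set (EN N × EN N)} (hS : IsClosed S)
    (hne : (K ×ˢ K ∩ S).Nonempty) :
    ∃ x₁ ∈ K, ∃ x₂ ∈ K, (x₁, x₂) ∈ S ∧ ∀ x ∈ K, ∀ y ∈ K, (x, y) ∈ S →
      u₁ x + u₂ y - Φ (x, y) ≤ u₁ x₁ + u₂ x₂ - Φ (x₁, x₂) := by
  have h1 : UpperSemicontinuousOn (fun w : EN N × EN N => u₁ w.1) (K ×ˢ K) :=
    hu₁.comp continuous_fst.continuousOn (fun w hw => hw.1)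
  have h2 : UpperSemicontinuousOn (fun w : EN N × EN N => u₂ w.2) (K ×ˢ K) :=
    hu₂.comp continuous_snd.continuousOn (fun w hw => hw.2)
  have h3 := ((h1.add h2).add hΦ.neg.upperSemicontinuousOn).mono (inter_subset_left : K ×ˢ K ∩ S ⊆ _)
  obtain ⟨w, hw, hmax⟩ := h3.exists_isMaxOn hne ((hK.prod hK).inter_right hS)
  refine ⟨w.1, hw.1.1, w.2, hw.1.2, hw.2, fun x hx y hy hxy => ?_⟩
  have := hmax (show (x, y) ∈ K ×ˢ K ∩ S from ⟨⟨hx, hy⟩, hxy⟩)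
  simp only [mem_ofPred_eq, Pi.neg_apply] at this
  linarith

/-- Second order expansion of the profile `L (r - r ^ (3/2) / 3)`, whose second derivative is `-L / (4 √r)`. -/
lemma lip_profile (L : ℝ) {r : ℝ} (hr : 0 < r) (η : ℝ) (hη : 0 < η) :
    ∀ᶠ t in 𝓝 r, L * (t - t * √t / 3) ≤ L * (r - r * √r / 3) + L * (1 - √r / 2) * (t - r)
      + -(L / (4 * √r)) / 2 * (t - r) ^ 2 + η * (t - r) ^ 2 := by
  refine taylor2 (ψ := fun t => L * (t - t * √t / 3)) (ψ' := fun t => L * (1 - √t / 2)) ?_ ?_ η hη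
  · filter_upwards [lt_mem_nhds hr] with t ht
    have h1 := Real.hasDerivAt_sqrt ht.ne'
    have h2 := (((hasDerivAt_id t).sub (((hasDerivAt_id t).mul h1).div_const 3)).const_mul L)
    refine h2.congr_deriv ?_
    have hs := Real.mul_self_sqrt ht.le
    have hs0 := Real.sqrt_pos.2 ht
    simp only [id]
    field_simp
    have hs2 : √t ^ 2 = t := Real.sq_sqrt ht.le
    rw [hs2]
    ring_nf
    rw [hs2]
  · have h1 := Real.hasDerivAt_sqrt hr.ne'
    have h2 := (((h1.div_const 2).const_sub 1).const_mul L)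
    refine h2.congr_deriv ?_
    have hs0 := Real.sqrt_pos.2 hr
    field_simp
    ring

set_option maxHeartbeats 1000000 in
/-- The Lipschitz estimate for pairs, uniform over bounded data: a bound for `u₁ + u₂` on the diagonal
extends to `u₁ x + u₂ y` up to `L |x - y|`. The choice `u₂ = -u₁`, `m = 0` gives the Lipschitz
continuity of a solution. -/
lemma OpHyp.lip (h : OpHyp Ω α a A C₁ θ C₂ ν F) (hb : ContinuousOn b (closure Ω)) {q C : ℝ}
    {σ : EN N → ℝ} {s : EN N → EN N} (hq : 1 ≤ q) (DD : DomData Ω nv q σ s C) {C₀ M₀ : ℝ}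
    (hC₀ : 0 ≤ C₀) (hM₀ : 0 ≤ M₀) :
    ∃ L : ℝ, 0 ≤ L ∧ ∀ (u₁ u₂ f₁ f₂ : EN N → ℝ), UpperSemicontinuousOn u₁ (closure Ω) →
      UpperSemicontinuousOn u₂ (closure Ω) → SubV Ω nv α b F f₁ u₁ → SubV Ω nv α b (dualF F) f₂ u₂ →
      (∀ x ∈ closure Ω, -C₀ ≤ f₁ x) → (∀ x ∈ closure Ω, -C₀ ≤ f₂ x) →
      (∀ x ∈ closure Ω, |u₁ x| ≤ M₀) → (∀ x ∈ closure Ω, |u₂ x| ≤ M₀) →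
      ∀ m : ℝ, (∀ x ∈ closure Ω, u₁ x + u₂ x ≤ m) →
      ∀ x ∈ closure Ω, ∀ y ∈ closure Ω, u₁ x + u₂ y ≤ m + L * ‖x - y‖ := by
  obtain ⟨r₀, c, C', hr₀, hr₀1, hc, hC', hkl⟩ := h.kl hb hq DD
  have hα : 0 < 1 + α := by linarith [h.hα]
  -- on `(0, r₁]` the concave part of the profile beats the first order terms
  obtain ⟨r₁, hr₁, hr₁r, hr₁c⟩ : ∃ r₁ : ℝ, 0 < r₁ ∧ r₁ ≤ r₀ ∧ 4 * (C' + 1) * √r₁ ≤ c := by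
    refine ⟨min r₀ ((c / (4 * (C' + 1))) ^ 2), by positivity, min_le_left _ _, ?_⟩
    have : √(min r₀ ((c / (4 * (C' + 1))) ^ 2)) ≤ c / (4 * (C' + 1)) := by
      rw [Real.sqrt_le_left (by positivity)]; exact min_le_right _ _
    rw [le_div_iff₀ (by positivity)] at this
    linarith
  obtain ⟨L₀, hL₀, hL₁, hL₂⟩ : ∃ L₀ : ℝ, 0 < L₀ ∧ 6 * M₀ ≤ L₀ * r₁ ∧ 2 * C₀ < (L₀ / 2) ^ (1 + α) := by
    refine ⟨max (6 * M₀ / r₁) (2 * (2 * C₀ + 1) ^ (1 + α)⁻¹), lt_max_of_lt_right (by positivity), ?_, ?_⟩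
    · rw [← div_le_iff₀ hr₁]; exact le_max_left _ _
    · have h1 : (2 * C₀ + 1) ^ (1 + α)⁻¹ ≤ max (6 * M₀ / r₁) (2 * (2 * C₀ + 1) ^ (1 + α)⁻¹) / 2 := by
        rw [le_div_iff₀ (by norm_num), mul_comm]; exact le_max_right _ _
      have h2 := Real.rpow_le_rpow (by positivity) h1 hα.le
      rw [← Real.rpow_mul (by positivity), inv_mul_cancel₀ hα.ne', Real.rpow_one] at h2
      linarith
  refine ⟨3 * L₀, by positivity, ?_⟩
  intro u₁ u₂ f₁ f₂ hu₁ hu₂ hs₁ hs₂ hf₁ hf₂ hM₁ hM₂ m hm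
  have hmM : -(2 * M₀) ≤ m := by
    obtain ⟨x, hx⟩ := DD.ne
    have hx := subset_closure hx
    linarith [hm x hx, (abs_le.1 (hM₁ x hx)).1, (abs_le.1 (hM₂ x hx)).1]
  obtain ⟨ψ, hψ⟩ : ∃ ψ : ℝ → ℝ, ψ = fun t => L₀ * (t - t * √t / 3) := ⟨_, rfl⟩
  have hψv : ∀ t, ψ t = L₀ * (t - t * √t / 3) := fun t => by rw [hψ]
  have hψc : Continuous ψ := by rw [hψ]; fun_prop
  have hψl : ∀ t, 0 ≤ t → t ≤ 1 → L₀ * t * (2 / 3) ≤ ψ t := by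
    intro t h0 h1
    have : √t ≤ 1 := by rw [← Real.sqrt_one]; exact Real.sqrt_le_sqrt h1
    have : t * √t ≤ t * 1 := mul_le_mul_of_nonneg_left this h0
    have : 0 ≤ L₀ * (t - t * √t) := by apply mul_nonneg hL₀.le; linarith
    rw [hψv]; linarith
  have hψu : ∀ t, 0 ≤ t → ψ t ≤ L₀ * t := by
    intro t h0
    have : 0 ≤ L₀ * (t * √t) := by positivity
    rw [hψv]; linarith
  have hΦ : ContinuousOn (fun w : EN N × EN N => (1 + σ w.1 + σ w.2) * ψ ‖w.1 - w.2‖)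
      (closure Ω ×ˢ closure Ω) := by
    have e1 : ContinuousOn (fun w : EN N × EN N => σ w.1) (closure Ω ×ˢ closure Ω) :=
      DD.σ_cont.comp continuous_fst.continuousOn (fun w hw => hw.1)
    have e2 : ContinuousOn (fun w : EN N × EN N => σ w.2) (closure Ω ×ˢ closure Ω) :=
      DD.σ_cont.comp continuous_snd.continuousOn (fun w hw => hw.2)
    have e3 : Continuous (fun w : EN N × EN N => ψ ‖w.1 - w.2‖) := by fun_prop
    exact ((continuousOn_const.add e1).add e2).mul e3.continuousOn
  obtain ⟨x₁, hx₁, x₂, hx₂, hS, hmax⟩ := exists_max2 DD.cpt hu₁ hu₂ hΦ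
    (S := {w | ‖w.1 - w.2‖ ≤ r₁}) (isClosed_le (by fun_prop) (by fun_prop)) (by
      obtain ⟨x, hx⟩ := DD.ne
      exact ⟨(x, x), ⟨subset_closure hx, subset_closure hx⟩, by simpa using hr₁.le⟩)
  simp only [mem_ofPred_eq] at hS hmax
  have hle : u₁ x₁ + u₂ x₂ - (1 + σ x₁ + σ x₂) * ψ ‖x₁ - x₂‖ ≤ m := by
    by_contra! hlt
    obtain ⟨r, hr⟩ : ∃ r : ℝ, ‖x₁ - x₂‖ = r := ⟨_, rfl⟩
    rw [hr] at hlt hS hmax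
    have hr0 : 0 < r := by
      rcases (norm_nonneg (x₁ - x₂)).eq_or_lt with h0 | h0
      · have : x₁ = x₂ := by rw [← sub_eq_zero, ← norm_eq_zero, ← h0]
        rw [this] at hlt hr
        rw [sub_self, norm_zero] at hr
        have hψ0 : ψ r = 0 := by rw [← hr, hψv]; simp
        rw [hψ0] at hlt
        linarith [hm x₂ hx₂]
      · rwa [hr] at h0
    have hr1 : r ≤ 1 := by linarith
    have hψpos : 0 < ψ r := lt_of_lt_of_le (by positivity) (hψl r hr0.le hr1)
    have hw : ψ r ≤ (1 + σ x₁ + σ x₂) * ψ r := by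
      have : 0 ≤ (σ x₁ + σ x₂) * ψ r := mul_nonneg (add_nonneg (DD.σ0 _ hx₁) (DD.σ0 _ hx₂)) hψpos.le
      linarith
    have hrlt : r < r₁ := by
      refine lt_of_le_of_ne hS ?_
      rintro rfl
      have := hψl r hr0.le hr1
      linarith [(abs_le.1 (hM₁ x₁ hx₁)).2, (abs_le.1 (hM₂ x₂ hx₂)).2]
    have hsr0 : 0 < √r := Real.sqrt_pos.2 hr0
    have hsr1 : √r ≤ 1 := by rw [← Real.sqrt_one]; exact Real.sqrt_le_sqrt hr1
    have hψ₁ : L₀ / 2 ≤ L₀ * (1 - √r / 2) := by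
      have := mul_le_mul_of_nonneg_left hsr1 hL₀.le; linarith
    have hψ₁' : L₀ * (1 - √r / 2) ≤ L₀ := by
      have : 0 ≤ L₀ * √r := by positivity
      linarith
    have hψ₂ : -(L₀ / (4 * √r)) ≤ 0 := by
      have : 0 ≤ L₀ / (4 * √r) := by positivity
      linarith
    have hrL : r * (L₀ * (1 - √r / 2)) ≤ ψ r := by
      rw [hψv]
      have : 0 ≤ L₀ * (r * √r) := by positivity
      linarith
    have key := (hkl u₁ u₂ f₁ f₂ hu₁ hu₂ hs₁ hs₂ x₁ x₂ hx₁ hx₂ r hr hr0 (hS.trans hr₁r) ψ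
      (L₀ * (1 - √r / 2)) (-(L₀ / (4 * √r))) hψpos (by linarith) (by nlinarith)
      (by
        have := hψu r hr0.le
        have h2 := mul_le_mul_of_nonneg_left hψ₁ hr0.le
        linarith)
      (hψ₂.trans (div_nonneg (mul_nonneg (by linarith) (by linarith)) hr0.le))
      (by rw [hψ]; exact lip_profile L₀ hr0)
      ⟨(r₁ - r) / 2, by linarith, fun x hx y hy hxx hyy => by
        have h1 := hmax x hx y hy (by
          have : x - y = (x - x₁) + (x₁ - x₂) - (y - x₂) := by abel
          rw [this]
          have n1 := norm_sub_le ((x - x₁) + (x₁ - x₂)) (y - x₂)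
          have n2 := norm_add_le (x - x₁) (x₁ - x₂)
          linarith)
        exact h1⟩ (-C₀) (-C₀) ⟨1, one_pos, fun x hx _ _ => hf₁ x hx⟩
        ⟨1, one_pos, fun x hx _ _ => hf₂ x hx⟩).2 hψ₂
    obtain ⟨p, hp⟩ : ∃ p : ℝ, p = L₀ * (1 - √r / 2) := ⟨_, rfl⟩
    rw [← hp] at key hψ₁ hψ₁'
    have hp0 : 0 < p := by linarith
    have hsr : √r ≤ √r₁ := Real.sqrt_le_sqrt hS
    have k1 : c * -(L₀ / (4 * √r)) + C' * p ≤ -p := by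
      have l1 : 4 * (C' + 1) * √r ≤ c :=
        (mul_le_mul_of_nonneg_left hsr (by positivity)).trans hr₁c
      have l2 : (C' + 1) * L₀ ≤ c * (L₀ / (4 * √r)) := by
        rw [mul_div_assoc', le_div_iff₀ (by positivity)]
        have := mul_le_mul_of_nonneg_right l1 hL₀.le
        linarith
      have l3 : (C' + 1) * p ≤ (C' + 1) * L₀ := by gcongr
      linarith
    have k2 : p ^ α * (c * -(L₀ / (4 * √r)) + C' * p) ≤ p ^ α * (-p) :=
      mul_le_mul_of_nonneg_left k1 (by positivity)
    have k3 : p ^ α * p = p ^ (1 + α) := by rw [add_comm, Real.rpow_add_one hp0.ne']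
    have k4 : (L₀ / 2) ^ (1 + α) ≤ p ^ (1 + α) := Real.rpow_le_rpow (by positivity) hψ₁ hα.le
    linarith
  intro x hx y hy
  have hxy0 := norm_nonneg (x - y)
  rcases le_or_gt ‖x - y‖ r₁ with h0 | h0
  · have h1 := (hmax x hx y hy h0).trans hle
    have h2 : (1 + σ x + σ y) * ψ ‖x - y‖ ≤ 3 * (L₀ * ‖x - y‖) := by
      refine mul_le_mul (by linarith [DD.σ1 x hx, DD.σ1 y hy]) (hψu _ hxy0) ?_ (by norm_num)
      exact le_trans (by positivity) (hψl _ hxy0 (by linarith))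
    linarith
  · have h1 : L₀ * r₁ ≤ L₀ * ‖x - y‖ := by gcongr
    linarith [(abs_le.1 (hM₁ x hx)).2, (abs_le.1 (hM₂ y hy)).2]

/-! ### Superlinearly flat contact points -/

/-- Second order expansion of the profile `D r ^ q`. -/
lemma pow_profile (D q : ℝ) {r : ℝ} (hr : 0 < r) (η : ℝ) (hη : 0 < η) :
    ∀ᶠ t in 𝓝 r, D * t ^ q ≤ D * r ^ q + D * q * r ^ (q - 1) * (t - r)
      + (q - 1) * (D * q * r ^ (q - 1)) / r / 2 * (t - r) ^ 2 + η * (t - r) ^ 2 := by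
  refine taylor2 (ψ := fun t => D * t ^ q) (ψ' := fun t => D * q * t ^ (q - 1)) ?_ ?_ η hη
  · filter_upwards [lt_mem_nhds hr] with t ht
    have h1 := (Real.hasDerivAt_rpow_const (p := q) (Or.inl ht.ne')).const_mul D
    refine h1.congr_deriv ?_
    ring
  · have h1 := (Real.hasDerivAt_rpow_const (p := q - 1) (Or.inl hr.ne')).const_mul (D * q)
    refine h1.congr_deriv ?_
    rw [Real.rpow_sub_one hr.ne' (q - 1)]; ring

/-- A function with increments `O(|x - y| ^ q)`, `q > 1`, on a ball is constant there. -/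
lemma const_of_superlinear {u : EN N → ℝ} {z : EN N} {ε D q : ℝ} (hq : 1 < q)
    (h : ∀ x ∈ ball z ε, ∀ y ∈ ball z ε, |u x - u y| ≤ D * ‖x - y‖ ^ q) :
    ∀ x ∈ ball z ε, u x = u z := by
  have hd : ∀ x ∈ ball z ε, HasFDerivAt u (0 : EN N →L[ℝ] ℝ) x := by
    intro x hx
    rw [hasFDerivAt_iff_isLittleO]
    refine Asymptotics.IsBigO.trans_isLittleO (g := fun y => ‖y - x‖ ^ q) ?_ ?_
    · refine Asymptotics.IsBigO.of_bound D ?_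
      filter_upwards [isOpen_ball.mem_nhds hx] with y hy
      have := h y hy x hx
      simp only [_root_.zero_apply, sub_zero, Real.norm_eq_abs]
      rwa [abs_of_nonneg (by positivity : 0 ≤ ‖y - x‖ ^ q)]
    · rw [Asymptotics.isLittleO_iff]
      intro c hc
      have h1 : Tendsto (fun y : EN N => ‖y - x‖ ^ (q - 1)) (𝓝 x) (𝓝 0) := by
        have : Continuous (fun y : EN N => ‖y - x‖ ^ (q - 1)) :=
          (continuous_id.sub continuous_const).norm.rpow_const (fun _ => Or.inr (by linarith))
        have h2 := this.tendsto x
        rwa [sub_self, norm_zero, Real.zero_rpow (by linarith)] at h2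
      filter_upwards [h1.eventually (gt_mem_nhds hc)] with y hy
      rw [Real.norm_of_nonneg (by positivity)]
      rcases (norm_nonneg (y - x)).eq_or_lt with h0 | h0
      · rw [← h0, Real.zero_rpow (by linarith)]; simp
      · have : ‖y - x‖ ^ q = ‖y - x‖ ^ (q - 1) * ‖y - x‖ := by
          rw [← Real.rpow_add_one h0.ne']; ring_nf
        rw [this]
        exact mul_le_mul_of_nonneg_right hy.le h0.le
  intro x hx
  have hz : z ∈ ball z ε := mem_ball_self (lt_of_le_of_lt dist_nonneg hx)
  have := (convex_ball z ε).norm_image_sub_le_of_norm_hasFDerivWithin_le (C := 0)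
    (fun y hy => (hd y hy).hasFDerivWithinAt) (fun y _ => by simp) hz hx
  simpa [sub_eq_zero] using this

lemma exists_small {q : ℝ} (hq : 0 < q) {D δ : ℝ} (hδ : 0 < δ) :
    ∃ e₀ : ℝ, 0 < e₀ ∧ ∀ e : ℝ, 0 ≤ e → e < e₀ → D * e ^ q < δ := by
  have h1 : Continuous (fun e : ℝ => D * e ^ q) :=
    continuous_const.mul (continuous_id.rpow_const (fun _ => Or.inr hq.le))
  have h2 := h1.tendsto 0
  simp only [Real.zero_rpow hq.ne', mul_zero] at h2
  obtain ⟨e₀, he₀, h3⟩ := Metric.eventually_nhds_iff.1 (h2.eventually (gt_mem_nhds hδ))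
  refine ⟨e₀, he₀, fun e h0 h4 => h3 ?_⟩
  rwa [Real.dist_eq, sub_zero, abs_of_nonneg h0]

set_option maxHeartbeats 1000000 in
/-- Testing a subsolution with `D (1 + σ x + σ h) |x - h| ^ q` away from the vertex `h`. -/
lemma OpHyp.cone_test (hF : OpHyp Ω α a A C₁ θ C₂ ν F) (hb : ContinuousOn b (closure Ω)) {q C : ℝ}
    {σ : EN N → ℝ} {s : EN N → EN N} (hq : 2 ≤ q) (hqα : (q - 1) * (1 + α) = 2 + α)
    (DD : DomData Ω nv q σ s C) {D : ℝ} (hD : 0 < D) :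
    ∃ r₀ C' : ℝ, 0 < r₀ ∧ 0 ≤ C' ∧ ∀ (u f : EN N → ℝ), SubV Ω nv α b F f u → ∀ x₁ ∈ closure Ω,
      ∀ h ∈ closure Ω, x₁ ≠ h → ‖x₁ - h‖ ≤ r₀ →
      (∀ᶠ x in 𝓝[closure Ω] x₁, u x - D * (1 + σ x + σ h) * ‖x - h‖ ^ q
        ≤ u x₁ - D * (1 + σ x₁ + σ h) * ‖x₁ - h‖ ^ q) → f x₁ ≤ C' * ‖x₁ - h‖ ^ (1 + α) := by
  obtain ⟨B, hB⟩ : ∃ B : ℝ, ∀ x ∈ closure Ω, ‖b x‖ ≤ B := DD.cpt.exists_bound_of_continuousOn hb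
  have hB0 : 0 ≤ B := by
    obtain ⟨x, hx⟩ := DD.ne
    exact (norm_nonneg _).trans (hB x (subset_closure hx))
  have hC1 := DD.hC
  have hC0 : 0 < C := by linarith
  have hA : 0 < A := hF.h2.1.trans_le hF.h2.2.1
  have hα : 0 < 1 + α := by linarith [hF.hα]
  obtain ⟨Ct, hCt⟩ : ∃ Ct : ℝ, Ct = 3 * q + 4 * C + 1 := ⟨_, rfl⟩
  have hCt0 : 0 < Ct := by rw [hCt]; linarith
  refine ⟨1 / (16 * C), (A * N * Ct + 4 * B) * 4 ^ |α| * (D * q) ^ (1 + α), by positivity, by positivity, ?_⟩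
  intro u f hsub x₁ hx₁ h hh hne hr₀ hmax
  obtain ⟨r, hr⟩ : ∃ r : ℝ, ‖x₁ - h‖ = r := ⟨_, rfl⟩
  rw [hr] at hr₀ hmax ⊢
  have hr0 : 0 < r := by rw [← hr]; exact norm_pos_iff.2 (sub_ne_zero.2 hne)
  have hrC : 16 * C * r ≤ 1 := by
    rw [le_div_iff₀ (by positivity)] at hr₀; linarith
  have hr1 : r ≤ 1 := by nlinarith
  obtain ⟨ψ₁, hψ₁⟩ : ∃ ψ₁ : ℝ, ψ₁ = D * q * r ^ (q - 1) := ⟨_, rfl⟩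
  have hψ₁0 : 0 < ψ₁ := by rw [hψ₁]; positivity
  have hψr : q * (D * r ^ q) = r * ψ₁ := by
    rw [hψ₁, Real.rpow_sub_one hr0.ne']; field_simp
  have hψ0 : 0 < D * r ^ q := by positivity
  obtain ⟨ψ, hψ⟩ : ∃ ψ : ℝ → ℝ, ψ = fun t => D * t ^ q := ⟨_, rfl⟩
  have hψv : ∀ t, ψ t = D * t ^ q := fun t => by rw [hψ]
  have hexp := pow_profile D q hr0
  rw [← hψ₁] at hexp
  simp only [← hψv] at hexp hψr hψ0
  obtain ⟨η, hη⟩ : ∃ η : ℝ, η = ψ₁ / r / 2 := ⟨_, rfl⟩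
  have hη0 : 0 < η := by rw [hη]; positivity
  obtain ⟨δ, hδ, hps⟩ := DD.psi_expand hx₁ hh hr0 hr hψ0.le hψ₁0.le hexp hη0
  obtain ⟨w₀, hw₀⟩ : ∃ w₀ : ℝ, w₀ = 1 + σ x₁ + σ h := ⟨_, rfl⟩
  have hw1 : 1 ≤ w₀ := by rw [hw₀]; linarith [DD.σ0 x₁ hx₁, DD.σ0 h hh]
  have hw3 : w₀ ≤ 3 := by rw [hw₀]; linarith [DD.σ1 x₁ hx₁, DD.σ1 h hh]
  obtain ⟨e, he⟩ : ∃ e : EN N, e = r⁻¹ • (x₁ - h) := ⟨_, rfl⟩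
  have hen : ‖e‖ = 1 := by
    rw [he, norm_smul, hr, norm_inv, Real.norm_of_nonneg hr0.le, inv_mul_cancel₀ hr0.ne']
  obtain ⟨p, hp⟩ : ∃ p : EN N, p = (w₀ * ψ₁) • e + ψ r • s x₁ := ⟨_, rfl⟩
  rw [← hw₀, ← he, ← hp] at hps
  have hψ2 : ψ r ≤ r * ψ₁ / 2 := by
    have : 2 * ψ r ≤ q * ψ r := by gcongr
    linarith
  have hψs : ‖ψ r • s x₁‖ ≤ ψ₁ / 8 := by
    rw [norm_smul, Real.norm_of_nonneg hψ0.le]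
    have h1 : ψ r * ‖s x₁‖ ≤ r * ψ₁ / 2 * C := mul_le_mul hψ2 (DD.s_le _ hx₁) (norm_nonneg _) (by positivity)
    have h2 : 16 * C * r * ψ₁ ≤ 1 * ψ₁ := mul_le_mul_of_nonneg_right hrC hψ₁0.le
    linarith
  have hwe : ‖(w₀ * ψ₁) • e‖ = w₀ * ψ₁ := by
    rw [norm_smul, hen, Real.norm_of_nonneg (by positivity), mul_one]
  have hwl : ψ₁ ≤ w₀ * ψ₁ := by
    have := mul_le_mul_of_nonneg_right hw1 hψ₁0.le; linarith
  have hwu : w₀ * ψ₁ ≤ 3 * ψ₁ := mul_le_mul_of_nonneg_right hw3 hψ₁0.le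
  have hpu : ‖p‖ ≤ 4 * ψ₁ := by
    rw [hp]; have := norm_add_le ((w₀ * ψ₁) • e) (ψ r • s x₁); linarith
  have hpl : 3 / 4 * ψ₁ ≤ ‖p‖ := by
    have h1 : (w₀ * ψ₁) • e = p - ψ r • s x₁ := by rw [hp]; abel
    have h2 := norm_sub_le p (ψ r • s x₁)
    rw [← h1, hwe] at h2; linarith
  have hp0 : p ≠ 0 := by rw [← norm_pos_iff]; linarith
  obtain ⟨t, ht⟩ : ∃ t : ℝ, t = Ct * (ψ₁ / r) := ⟨_, rfl⟩
  have ht0 : 0 ≤ t := by rw [ht]; positivity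
  have hJ : UJet (closure Ω) u x₁ p (t • 1) := by
    filter_upwards [hmax, self_mem_nhdsWithin, mem_nhdsWithin_of_mem_nhds (ball_mem_nhds x₁ hδ)] with x h1 h2 h3
    rw [mem_ball, dist_eq_norm] at h3
    have h4 := hps x h2 h hh h3 (by simpa using hδ)
    simp only [sub_self, sub_zero, inner_zero_right, add_zero, norm_zero] at h4
    have h6 : quad p (t • 1) (x - x₁) = ⟪p, x - x₁⟫ + 1 / 2 * (t * ‖x - x₁‖ ^ 2) := by
      have hz : (t • (1 : Mat N)) = 0 + t • 1 := (zero_add _).symm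
      unfold quad; rw [hz, qf_add, qf_one, qf_zero]; ring
    rw [h6]
    have i0 := abs_real_inner_le_norm e (x - x₁)
    rw [hen, one_mul] at i0
    have hP : 0 ≤ ψ₁ / r := by positivity
    have hX : 0 ≤ ‖x - x₁‖ ^ 2 := by positivity
    have i1 : w₀ * ((q - 1) * ψ₁ / r - ψ₁ / r) * ⟪e, x - x₁⟫ ^ 2
        ≤ 3 * (q - 2) * (ψ₁ / r) * ‖x - x₁‖ ^ 2 := by
      have e1 : w₀ * ((q - 1) * ψ₁ / r - ψ₁ / r) = w₀ * (q - 2) * (ψ₁ / r) := by ring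
      rw [e1]
      have e2 : ⟪e, x - x₁⟫ ^ 2 ≤ ‖x - x₁‖ ^ 2 := by rw [← sq_abs]; gcongr
      have e3 : 0 ≤ q - 2 := by linarith
      gcongr
    have i2 : w₀ * (ψ₁ / r) * ‖x - x₁‖ ^ 2 ≤ 3 * (ψ₁ / r) * ‖x - x₁‖ ^ 2 := by gcongr
    have hψr2 : ψ₁ ≤ ψ₁ / r := by
      rw [le_div_iff₀ hr0]; exact mul_le_of_le_one_right hψ₁0.le hr1
    have i3 : 2 * ψ₁ * ⟪e, x - x₁⟫ * ⟪s x₁, x - x₁⟫ ≤ 2 * C * (ψ₁ / r) * ‖x - x₁‖ ^ 2 := by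
      have e1 : ⟪e, x - x₁⟫ * ⟪s x₁, x - x₁⟫ ≤ ‖x - x₁‖ * (C * ‖x - x₁‖) := by
        refine (le_abs_self _).trans ?_
        rw [abs_mul]
        refine mul_le_mul i0 ((abs_real_inner_le_norm _ _).trans ?_) (abs_nonneg _) (norm_nonneg _)
        exact mul_le_mul_of_nonneg_right (DD.s_le _ hx₁) (norm_nonneg _)
      calc 2 * ψ₁ * ⟪e, x - x₁⟫ * ⟪s x₁, x - x₁⟫ = 2 * ψ₁ * (⟪e, x - x₁⟫ * ⟪s x₁, x - x₁⟫) := by ring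
        _ ≤ 2 * (ψ₁ / r) * (‖x - x₁‖ * (C * ‖x - x₁‖)) := by
            refine (mul_le_mul_of_nonneg_left e1 (by positivity)).trans ?_
            refine mul_le_mul_of_nonneg_right (by linarith) (by positivity)
        _ = _ := by ring
    have i4 : 2 * C * ψ r * ‖x - x₁‖ ^ 2 ≤ 2 * C * (ψ₁ / r) * ‖x - x₁‖ ^ 2 := by
      have : ψ r ≤ ψ₁ / r := by
        have := mul_le_of_le_one_left hψ₁0.le hr1
        linarith
      gcongr
    have hu : u x ≤ u x₁ + ((1 + σ x + σ h) * ψ ‖x - h‖ - w₀ * ψ r) := by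
      rw [hψv, hψv, hw₀]; linarith
    rw [ht, hCt]
    have h0 : (0:ℝ) ^ 2 = 0 := by norm_num
    rw [h0, add_zero] at h4
    rw [hη] at h4
    have hPX := mul_nonneg hP hX
    linarith
  have hbd := (DD.bdy_open (p := p) hx₁ (fun hf => by
    rw [hp, he]
    refine DD.bdy_pos hf hh hr0 hr hψ0 (by positivity) ?_
    have h1 : w₀ * (r * ψ₁) ≤ 3 * (r * ψ₁) := mul_le_mul_of_nonneg_right hw3 (by positivity)
    linarith))
  obtain ⟨δ', hδ', hbd⟩ := hbd
  have h1 := hsub.1 x₁ hx₁ p hp0 (t • 1) (symm_smul_one t)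
    (hbd x₁ p (by simpa using hδ') (by simpa using hδ')) hJ
  have h2 : F x₁ p (t • 1) ≤ A * ‖p‖ ^ α * (N * t) := by
    refine hF.le_of_le_smul hx₁ hp0 (symm_smul_one t) ht0 ?_
    intro d
    have hz : (t • (1 : Mat N)) = 0 + t • 1 := (zero_add _).symm
    rw [hz, qf_add, qf_one, qf_zero]; linarith
  have h3 : ⟪b x₁, p⟫ * ‖p‖ ^ α ≤ B * (4 * (ψ₁ / r)) * ‖p‖ ^ α := by
    refine mul_le_mul_of_nonneg_right ((real_inner_le_norm _ _).trans ?_) (by positivity)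
    refine mul_le_mul (hB _ hx₁) (hpu.trans ?_) (norm_nonneg _) hB0
    have hψr2 : ψ₁ ≤ ψ₁ / r := by
      rw [le_div_iff₀ hr0]; exact mul_le_of_le_one_right hψ₁0.le hr1
    linarith
  have h4 : ‖p‖ ^ α ≤ 4 ^ |α| * ψ₁ ^ α := by
    have hPsc := norm_rpow_scale α (P := p) hψ₁0
    obtain ⟨-, l2⟩ := rpow_bounds α (t := ‖p‖ / ψ₁) (by rw [le_div_iff₀ hψ₁0]; linarith)
      (by rw [div_le_iff₀ hψ₁0]; linarith)
    rw [hPsc]; gcongr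
  have h5 : ψ₁ ^ α * (ψ₁ / r) = (D * q) ^ (1 + α) * r ^ (1 + α) := by
    have e1 : ψ₁ ^ α * (ψ₁ / r) = ψ₁ ^ (1 + α) / r := by
      rw [add_comm 1 α, Real.rpow_add_one hψ₁0.ne']; ring
    rw [e1, hψ₁, Real.mul_rpow (by positivity) (by positivity), ← Real.rpow_mul hr0.le, hqα, mul_div_assoc,
      ← Real.rpow_sub_one hr0.ne']
    ring_nf
  have h6 : (A * N * Ct + 4 * B) * (ψ₁ / r) * ‖p‖ ^ α
      ≤ (A * N * Ct + 4 * B) * (ψ₁ / r) * (4 ^ |α| * ψ₁ ^ α) :=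
    mul_le_mul_of_nonneg_left h4 (by positivity)
  calc f x₁ ≤ A * ‖p‖ ^ α * (N * t) + B * (4 * (ψ₁ / r)) * ‖p‖ ^ α := by linarith
    _ = (A * N * Ct + 4 * B) * (ψ₁ / r) * ‖p‖ ^ α := by rw [ht]; ring
    _ ≤ (A * N * Ct + 4 * B) * (ψ₁ / r) * (4 ^ |α| * ψ₁ ^ α) := h6
    _ = (A * N * Ct + 4 * B) * 4 ^ |α| * (ψ₁ ^ α * (ψ₁ / r)) := by ring
    _ = _ := by rw [h5]; ring

set_option maxHeartbeats 1000000 in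
/-- A subsolution that is touched from above by `u x̄ + C |x - x̄| ^ q` satisfies the equation with
zero gradient, even at boundary points. -/
lemma OpHyp.flat (hF : OpHyp Ω α a A C₁ θ C₂ ν F) (hb : ContinuousOn b (closure Ω)) {q C : ℝ}
    {σ : EN N → ℝ} {s : EN N → EN N} (hq : 2 ≤ q) (hqα : (q - 1) * (1 + α) = 2 + α)
    (DD : DomData Ω nv q σ s C) {u f : EN N → ℝ} (hu : UpperSemicontinuousOn u (closure Ω))
    (hsub : SubV Ω nv α b F f u) {x₀ : EN N} (hx₀ : x₀ ∈ closure Ω)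
    (hf : ∀ ε : ℝ, 0 < ε → ∃ δ : ℝ, 0 < δ ∧ ∀ x ∈ closure Ω, ‖x - x₀‖ < δ → |u x - u x₀| < δ →
      f x₀ - ε ≤ f x) {C₃ : ℝ}
    (hflat : ∀ᶠ x in 𝓝[closure Ω] x₀, u x ≤ u x₀ + C₃ * ‖x - x₀‖ ^ q) : f x₀ ≤ 0 := by
  by_contra! hpos
  obtain ⟨δ, hδ, hf⟩ := hf (f x₀ / 2) (by positivity)
  have hα : 0 < 1 + α := by linarith [hF.hα]
  have hq0 : 0 < q := by linarith
  obtain ⟨C₄, hC₄, hC₃⟩ : ∃ C₄ : ℝ, 0 ≤ C₄ ∧ C₃ ≤ C₄ := ⟨max C₃ 0, le_max_right _ _, le_max_left _ _⟩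
  obtain ⟨D, hD⟩ : ∃ D : ℝ, D = 2 * (C₄ * 2 ^ q) + 1 := ⟨_, rfl⟩
  have hD0 : 0 < D := by rw [hD]; positivity
  obtain ⟨r₀, C', hr₀, hC', hcone⟩ := hF.cone_test hb hq hqα DD hD0
  obtain ⟨ρ, hρ, hflat⟩ : ∃ ρ : ℝ, 0 < ρ ∧ ∀ x ∈ closure Ω, ‖x - x₀‖ ≤ ρ → u x ≤ u x₀ + C₄ * ‖x - x₀‖ ^ q := by
    obtain ⟨ε, hε, h1⟩ := Metric.mem_nhdsWithin_iff.1 hflat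
    refine ⟨ε / 2, by positivity, fun x hx hxx => ?_⟩
    have h2 := h1 ⟨by rw [mem_ball, dist_eq_norm]; linarith, hx⟩
    have h3 : C₃ * ‖x - x₀‖ ^ q ≤ C₄ * ‖x - x₀‖ ^ q := by gcongr
    exact h2.trans (by linarith)
  obtain ⟨e₁, he₁, hs₁⟩ := exists_small hq0 (D := 3 * D) hδ
  obtain ⟨e₂, he₂, hs₂⟩ := exists_small hq0 (D := C₄) hδ
  obtain ⟨e₃, he₃, hs₃⟩ := exists_small hα (D := C') (half_pos hpos)
  obtain ⟨e₄, he₄, l1, l2, l3, l4, l5⟩ := exists_pos_min he₁ he₂ he₃ hρ hδ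
  obtain ⟨e₀, he₀, l6, l7, -⟩ := exists_pos_min (by positivity : 0 < e₄ / 9) (by positivity : 0 < r₀ / 9) he₄ he₄ he₄
  -- for every vertex `h` close to `x₀` the maximum is attained at `h` itself
  have hcen : ∀ h ∈ closure Ω, ‖x₀ - h‖ < e₀ → ∀ x ∈ closure Ω, ‖x - x₀‖ ≤ ρ →
      u x ≤ u h + 3 * D * ‖x - h‖ ^ q := by
    intro h hh hxh
    obtain ⟨x₁, hx₁, hmax⟩ : ∃ x₁ ∈ closure Ω ∩ closedBall x₀ ρ, ∀ x ∈ closure Ω ∩ closedBall x₀ ρ,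
        u x - D * (1 + σ x + σ h) * ‖x - h‖ ^ q ≤ u x₁ - D * (1 + σ x₁ + σ h) * ‖x₁ - h‖ ^ q := by
      have c1 : ContinuousOn (fun x : EN N => D * (1 + σ x + σ h) * ‖x - h‖ ^ q) (closure Ω) := by
        have e3 : Continuous (fun x : EN N => ‖x - h‖ ^ q) :=
          (continuous_id.sub continuous_const).norm.rpow_const (fun _ => Or.inr hq0.le)
        exact (continuousOn_const.mul ((continuousOn_const.add DD.σ_cont).add continuousOn_const)).mul
          e3.continuousOn
      have c2 := (hu.add c1.neg.upperSemicontinuousOn).mono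
        (inter_subset_left : closure Ω ∩ closedBall x₀ ρ ⊆ _)
      obtain ⟨x₁, hx₁, hm⟩ := c2.exists_isMaxOn
        (show (closure Ω ∩ closedBall x₀ ρ).Nonempty from ⟨x₀, hx₀, mem_closedBall_self hρ.le⟩)
        (DD.cpt.inter_right isClosed_closedBall)
      refine ⟨x₁, hx₁, fun x hx => ?_⟩
      have := hm hx
      simp only [mem_ofPred_eq, Pi.neg_apply] at this
      linarith
    have hx₁ρ : ‖x₁ - x₀‖ ≤ ρ := by rw [← dist_eq_norm]; exact hx₁.2
    have hw : ∀ x ∈ closure Ω, D * ‖x - h‖ ^ q ≤ D * (1 + σ x + σ h) * ‖x - h‖ ^ q ∧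
        D * (1 + σ x + σ h) * ‖x - h‖ ^ q ≤ 3 * D * ‖x - h‖ ^ q := by
      intro x hx
      have a1 : 1 ≤ 1 + σ x + σ h := by linarith [DD.σ0 x hx, DD.σ0 h hh]
      have a2 : 1 + σ x + σ h ≤ 3 := by linarith [DD.σ1 x hx, DD.σ1 h hh]
      have a3 : 0 ≤ D * ‖x - h‖ ^ q := by positivity
      have a4 := mul_le_mul_of_nonneg_right a1 a3
      have a5 := mul_le_mul_of_nonneg_right a2 a3
      constructor <;> linarith
    have hxa := hmax x₀ ⟨hx₀, mem_closedBall_self hρ.le⟩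
    have hxb := hflat x₁ hx₁.1 hx₁ρ
    have hw₀ := (hw x₀ hx₀).2
    have hw₁ := (hw x₁ hx₁.1).1
    have hd8 : ‖x₁ - h‖ ≤ 8 * ‖x₀ - h‖ := by
      by_contra! hlt
      obtain ⟨d, hd⟩ : ∃ d : ℝ, ‖x₁ - h‖ = d := ⟨_, rfl⟩
      rw [hd] at hlt hw₁ hxa
      have hd0 : 0 < d := lt_of_le_of_lt (by positivity) hlt
      have b1 : ‖x₁ - x₀‖ ≤ 2 * d := by
        have : x₁ - x₀ = (x₁ - h) - (x₀ - h) := by abel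
        rw [this]
        have := norm_sub_le (x₁ - h) (x₀ - h)
        linarith [norm_nonneg (x₀ - h)]
      have b2 : ‖x₁ - x₀‖ ^ q ≤ 2 ^ q * d ^ q := by
        rw [← Real.mul_rpow (by norm_num) hd0.le]
        exact Real.rpow_le_rpow (norm_nonneg _) b1 hq0.le
      have b3 : ‖x₀ - h‖ ^ q ≤ 1 / 64 * d ^ q := by
        have c1 : ‖x₀ - h‖ ^ q ≤ (1 / 8 * d) ^ q :=
          Real.rpow_le_rpow (norm_nonneg _) (by linarith) hq0.le
        rw [Real.mul_rpow (by norm_num) hd0.le] at c1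
        have c2 : (1 / 8 : ℝ) ^ q ≤ (1 / 8 : ℝ) ^ (2 : ℝ) :=
          Real.rpow_le_rpow_of_exponent_ge (by norm_num) (by norm_num) hq
        have c3 : (1 / 8 : ℝ) ^ (2 : ℝ) = 1 / 64 := by norm_num
        rw [c3] at c2
        exact c1.trans (mul_le_mul_of_nonneg_right c2 (by positivity))
      have hdq : 0 < d ^ q := by positivity
      have b4 : C₄ * ‖x₁ - x₀‖ ^ q ≤ C₄ * (2 ^ q * d ^ q) := by gcongr
      have b5 : 3 * D * ‖x₀ - h‖ ^ q ≤ 3 * D * (1 / 64 * d ^ q) := by gcongr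
      have b6 : D * d ^ q = 2 * (C₄ * (2 ^ q * d ^ q)) + d ^ q := by rw [hD]; ring
      have b7 : 0 ≤ C₄ * (2 ^ q * d ^ q) := by positivity
      linarith
    have hx₁x₀ : ‖x₁ - x₀‖ ≤ 9 * ‖x₀ - h‖ := by
      have : x₁ - x₀ = (x₁ - h) - (x₀ - h) := by abel
      rw [this]
      have := norm_sub_le (x₁ - h) (x₀ - h)
      linarith
    have hx₁h : x₁ = h := by
      by_contra hne
      have h1 := hcone u f hsub x₁ hx₁.1 h hh hne (by linarith [norm_nonneg (x₀ - h)]) (by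
        have : closedBall x₀ ρ ∈ 𝓝 x₁ := closedBall_mem_nhds_of_mem (by
          rw [mem_ball, dist_eq_norm]; linarith)
        filter_upwards [self_mem_nhdsWithin, mem_nhdsWithin_of_mem_nhds this] with x hx hx'
        exact hmax x ⟨hx, hx'⟩)
      have h2 := hs₃ ‖x₁ - h‖ (norm_nonneg _) (by linarith [norm_nonneg (x₀ - h)])
      have h3 := hs₁ ‖x₀ - h‖ (norm_nonneg _) (by linarith [norm_nonneg (x₀ - h)])
      have h4 := hs₂ ‖x₁ - x₀‖ (norm_nonneg _) (by linarith [norm_nonneg (x₀ - h)])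
      have h5 : 0 ≤ D * ‖x₁ - h‖ ^ q := by positivity
      have h6 := hf x₁ hx₁.1 (by linarith) (by rw [abs_lt]; constructor <;> linarith)
      linarith
    intro x hx hxx
    have h1 := hmax x ⟨hx, by rw [mem_closedBall, dist_eq_norm]; exact hxx⟩
    rw [hx₁h, sub_self, norm_zero, Real.zero_rpow hq0.ne', mul_zero, sub_zero] at h1
    linarith [(hw x hx).2]
  -- hence `u` is constant near some interior point close to `x₀`
  obtain ⟨z, hzΩ, hz⟩ := Metric.mem_closure_iff.1 hx₀ e₀ he₀
  rw [dist_eq_norm] at hz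
  obtain ⟨ε, hε, hball⟩ := Metric.isOpen_iff.1 (DD.isOpen.inter (isOpen_ball (x := x₀) (ε := e₀))) z
    ⟨hzΩ, by rw [mem_ball, dist_eq_norm, norm_sub_rev]; exact hz⟩
  have hin : ∀ x ∈ ball z ε, x ∈ closure Ω ∧ ‖x - x₀‖ < e₀ := fun x hx =>
    ⟨subset_closure (hball hx).1, by rw [← dist_eq_norm]; exact (hball hx).2⟩
  have hcst := const_of_superlinear (u := u) (z := z) (ε := ε) (D := 3 * D) (q := q) (by linarith) (by
    intro x hx y hy
    obtain ⟨x1, x2⟩ := hin x hx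
    obtain ⟨y1, y2⟩ := hin y hy
    have i1 := hcen x x1 (by rw [norm_sub_rev]; exact x2) y y1 (by linarith)
    have i2 := hcen y y1 (by rw [norm_sub_rev]; exact y2) x x1 (by linarith)
    rw [norm_sub_rev] at i1
    rw [abs_le]; constructor <;> linarith)
  have hz0 := hsub.2 z hzΩ (mem_nhdsWithin_of_mem_nhds (by
    filter_upwards [ball_mem_nhds z hε] with x hx using hcst x hx))
  have hzc := subset_closure hzΩ
  have i1 := hcen z hzc hz x₀ hx₀ (by simpa using hρ.le)
  have i2 := hcen x₀ hx₀ (by simpa using he₀) z hzc (by rw [norm_sub_rev]; linarith)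
  have i3 := hs₁ ‖x₀ - z‖ (norm_nonneg _) (by linarith)
  rw [norm_sub_rev] at i2
  have := hf z hzc (by rw [norm_sub_rev]; linarith) (by rw [abs_lt]; constructor <;> linarith)
  linarith

/-! ### Strict comparison -/

/-- The standing data: structure conditions on `F`, continuity of `b`, and the auxiliary functions of
the domain for the exponent `q = 2 + 1 / (1 + α)`. -/
structure Prob (Ω : Set (EN N)) (nv : EN N → EN N) (α a A C₁ θ C₂ ν : ℝ)
    (F : EN N → EN N → Mat N → ℝ) (b : EN N → EN N) (q : ℝ) (σ : EN N → ℝ) (s : EN N → EN N)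
    (C : ℝ) : Prop where
  op : OpHyp Ω α a A C₁ θ C₂ ν F
  hb : ContinuousOn b (closure Ω)
  hq : 2 ≤ q
  hqα : (q - 1) * (1 + α) = 2 + α
  dom : DomData Ω nv q σ s C

variable {q C : ℝ} {σ : EN N → ℝ} {s : EN N → EN N}

lemma Prob.dual (H : Prob Ω nv α a A C₁ θ C₂ ν F b q σ s C) :
    Prob Ω nv α a A C₁ θ C₂ ν (dualF F) b q σ s C :=
  ⟨H.op.dual, H.hb, H.hq, H.hqα, H.dom⟩

/-- `f` is lower semicontinuous at `z` along points where `u` is close to `u z`; this holds for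
`f x = g x - β x |u x| ^ α u x` even when `u` is only semicontinuous. -/
def LowerReg (Ω : Set (EN N)) (f u : EN N → ℝ) : Prop :=
  ∀ z ∈ closure Ω, ∀ ε : ℝ, 0 < ε → ∃ δ : ℝ, 0 < δ ∧ ∀ x ∈ closure Ω, ‖x - z‖ < δ →
    |u x - u z| < δ → f z - ε ≤ f x

lemma Prob.flat (H : Prob Ω nv α a A C₁ θ C₂ ν F b q σ s C) {u f : EN N → ℝ}
    (hu : UpperSemicontinuousOn u (closure Ω)) (hsub : SubV Ω nv α b F f u) (hf : LowerReg Ω f u)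
    {x₀ : EN N} (hx₀ : x₀ ∈ closure Ω) {C₃ : ℝ}
    (hflat : ∀ᶠ x in 𝓝[closure Ω] x₀, u x ≤ u x₀ + C₃ * ‖x - x₀‖ ^ q) : f x₀ ≤ 0 :=
  H.op.flat H.hb H.hq H.hqα H.dom hu hsub hx₀ (hf x₀ hx₀) hflat

lemma usc_eventually {K : Set (EN N)} {u : EN N → ℝ} (hu : UpperSemicontinuousOn u K) {z : EN N} (hz : z ∈ K)
    {x : ℕ → EN N} (hx : ∀ n, x n ∈ K) (hlim : Tendsto x atTop (𝓝 z)) {ε : ℝ} (hε : 0 < ε) :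
    ∀ᶠ n in atTop, u (x n) < u z + ε := by
  have h1 : Tendsto x atTop (𝓝[K] z) :=
    tendsto_nhdsWithin_iff.2 ⟨hlim, Eventually.of_forall hx⟩
  exact h1.eventually (hu z hz (u z + ε) (by linarith))

set_option maxHeartbeats 1000000 in
/-- The comparison principle in strict form: doubling of variables with `j (1 + σ x + σ y) |x - y| ^ q`. -/
lemma Prob.strict_comparison (H : Prob Ω nv α a A C₁ θ C₂ ν F b q σ s C) {u₁ u₂ f₁ f₂ : EN N → ℝ}
    (hu₁ : UpperSemicontinuousOn u₁ (closure Ω)) (hu₂ : UpperSemicontinuousOn u₂ (closure Ω))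
    (hs₁ : SubV Ω nv α b F f₁ u₁) (hs₂ : SubV Ω nv α b (dualF F) f₂ u₂)
    (hf₁ : LowerReg Ω f₁ u₁) (hf₂ : LowerReg Ω f₂ u₂) {C₀ M₀ : ℝ}
    (hC₁ : ∀ x ∈ closure Ω, -C₀ ≤ f₁ x) (hC₂ : ∀ x ∈ closure Ω, -C₀ ≤ f₂ x)
    (hM₁ : ∀ x ∈ closure Ω, |u₁ x| ≤ M₀) (hM₂ : ∀ x ∈ closure Ω, |u₂ x| ≤ M₀)
    {m : ℝ} (hm : ∀ x ∈ closure Ω, u₁ x + u₂ x ≤ m) (hex : ∃ x ∈ closure Ω, u₁ x + u₂ x = m)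
    (hgap : ∀ x ∈ closure Ω, u₁ x + u₂ x = m → 0 < f₁ x + f₂ x) : False := by
  obtain ⟨z₀, hz₀, hz₀m⟩ := hex
  have hq0 : 0 < q := by linarith [H.hq]
  have hα : 0 < 1 + α := by linarith [H.op.hα]
  have DD := H.dom
  obtain ⟨L, hL, hlip⟩ := H.op.lip H.hb (by linarith [H.hq]) DD (C₀ := max C₀ 0) (M₀ := max M₀ 0)
    (le_max_right _ _) (le_max_right _ _)
  replace hlip := hlip u₁ u₂ f₁ f₂ hu₁ hu₂ hs₁ hs₂
    (fun x hx => by linarith [hC₁ x hx, le_max_left C₀ 0])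
    (fun x hx => by linarith [hC₂ x hx, le_max_left C₀ 0])
    (fun x hx => (hM₁ x hx).trans (le_max_left _ _)) (fun x hx => (hM₂ x hx).trans (le_max_left _ _)) m hm
  obtain ⟨r₀, c, C', hr₀, hr₀1, hc, hC', hkl⟩ := H.op.kl H.hb (by linarith [H.hq]) DD
  -- maximizers of the doubled functional
  have hmaxj : ∀ j : ℕ, ∃ w : EN N × EN N, w.1 ∈ closure Ω ∧ w.2 ∈ closure Ω ∧ ∀ x ∈ closure Ω, ∀ y ∈ closure Ω,
      u₁ x + u₂ y - (1 + σ x + σ y) * ((j + 1 : ℝ) * ‖x - y‖ ^ q)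
        ≤ u₁ w.1 + u₂ w.2 - (1 + σ w.1 + σ w.2) * ((j + 1 : ℝ) * ‖w.1 - w.2‖ ^ q) := by
    intro j
    have hΦ : ContinuousOn (fun w : EN N × EN N => (1 + σ w.1 + σ w.2) * ((j + 1 : ℝ) * ‖w.1 - w.2‖ ^ q))
        (closure Ω ×ˢ closure Ω) := by
      have e1 : ContinuousOn (fun w : EN N × EN N => σ w.1) (closure Ω ×ˢ closure Ω) :=
        DD.σ_cont.comp continuous_fst.continuousOn (fun w hw => hw.1)
      have e2 : ContinuousOn (fun w : EN N × EN N => σ w.2) (closure Ω ×ˢ closure Ω) :=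
        DD.σ_cont.comp continuous_snd.continuousOn (fun w hw => hw.2)
      have e3 : Continuous (fun w : EN N × EN N => (j + 1 : ℝ) * ‖w.1 - w.2‖ ^ q) :=
        continuous_const.mul ((continuous_fst.sub continuous_snd).norm.rpow_const (fun _ => Or.inr hq0.le))
      exact ((continuousOn_const.add e1).add e2).mul e3.continuousOn
    obtain ⟨x₁, hx₁, x₂, hx₂, -, hmax⟩ := exists_max2 DD.cpt hu₁ hu₂ hΦ (S := univ) isClosed_univ
      ⟨(z₀, z₀), ⟨hz₀, hz₀⟩, mem_univ _⟩
    exact ⟨(x₁, x₂), hx₁, hx₂, fun x hx y hy => hmax x hx y hy (mem_univ _)⟩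
  choose w hw1 hw2 hmax using hmaxj
  have hlow : ∀ j : ℕ, m ≤ u₁ (w j).1 + u₂ (w j).2
      - (1 + σ (w j).1 + σ (w j).2) * ((j + 1 : ℝ) * ‖(w j).1 - (w j).2‖ ^ q) := by
    intro j
    have := hmax j z₀ hz₀ z₀ hz₀
    rw [sub_self, norm_zero, Real.zero_rpow hq0.ne', mul_zero, mul_zero, sub_zero, hz₀m] at this
    exact this
  have hw0 : ∀ x ∈ closure Ω, ∀ y ∈ closure Ω, 1 ≤ 1 + σ x + σ y ∧ 1 + σ x + σ y ≤ 3 := fun x hx y hy => by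
    constructor <;> linarith [DD.σ0 x hx, DD.σ0 y hy, DD.σ1 x hx, DD.σ1 y hy]
  -- the maximizers never lie on the diagonal
  have hpos : ∀ j : ℕ, 0 < ‖(w j).1 - (w j).2‖ := by
    intro j
    rcases (norm_nonneg ((w j).1 - (w j).2)).eq_or_lt with h0 | h0
    swap
    · exact h0
    exfalso
    have h12 : (w j).1 = (w j).2 := by rw [← sub_eq_zero, ← norm_eq_zero, ← h0]
    have hl := hlow j
    have hmx := hmax j
    have hz := hw1 j
    rw [← h12, sub_self, norm_zero, Real.zero_rpow hq0.ne', mul_zero, mul_zero, sub_zero] at hl hmx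
    obtain ⟨z, hzz⟩ : ∃ z, (w j).1 = z := ⟨_, rfl⟩
    rw [hzz] at hl hmx hz
    have hzm : u₁ z + u₂ z = m := le_antisymm (hm z hz) hl
    have g1 : f₁ z ≤ 0 := by
      refine H.flat hu₁ hs₁ hf₁ hz (C₃ := 3 * (j + 1 : ℝ)) ?_
      filter_upwards [self_mem_nhdsWithin] with x hx
      have h1 := hmx x hx z hz
      have h2 := mul_le_mul_of_nonneg_right (hw0 x hx z hz).2 (by positivity : 0 ≤ (j + 1 : ℝ) * ‖x - z‖ ^ q)
      linarith
    have g2 : f₂ z ≤ 0 := by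
      refine H.dual.flat hu₂ hs₂ hf₂ hz (C₃ := 3 * (j + 1 : ℝ)) ?_
      filter_upwards [self_mem_nhdsWithin] with x hx
      have h1 := hmx z hz x hx
      rw [norm_sub_rev z x] at h1
      have h2 := mul_le_mul_of_nonneg_right (hw0 z hz x hx).2 (by positivity : 0 ≤ (j + 1 : ℝ) * ‖x - z‖ ^ q)
      linarith
    linarith [hgap z hz hzm]
  have hjr : ∀ j : ℕ, (j + 1 : ℝ) * ‖(w j).1 - (w j).2‖ ^ (q - 1) ≤ L := by
    intro j
    have h1 := hlow j
    have h2 := hlip _ (hw1 j) _ (hw2 j)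
    have h0 := hpos j
    have hw3 := (hw0 _ (hw1 j) _ (hw2 j)).1
    obtain ⟨r, hr⟩ : ∃ r : ℝ, ‖(w j).1 - (w j).2‖ = r := ⟨_, rfl⟩
    rw [hr] at h0 h1 h2 ⊢
    have h3 := mul_le_mul_of_nonneg_right hw3 (by positivity : 0 ≤ (j + 1 : ℝ) * r ^ q)
    have h4 : r ^ q = r ^ (q - 1) * r := by rw [← Real.rpow_add_one h0.ne']; ring_nf
    rw [h4] at h3
    rw [h4] at h1
    refine le_of_mul_le_mul_right ?_ h0
    linarith
  have hrlim : Tendsto (fun j : ℕ => ‖(w j).1 - (w j).2‖) atTop (𝓝 0) := by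
    have h1 : Tendsto (fun j : ℕ => ‖(w j).1 - (w j).2‖ ^ (q - 1)) atTop (𝓝 0) := by
      refine squeeze_zero (fun j => by positivity) (fun j => ?_) (tendsto_const_div_atTop_nhds_zero_nat L |>.comp (tendsto_add_atTop_nat 1))
      simp only [Function.comp, Nat.cast_add, Nat.cast_one]
      rw [le_div_iff₀ (by positivity)]
      linarith [hjr j]
    have h2 := h1.rpow_const (p := (q - 1)⁻¹) (Or.inr (by rw [inv_nonneg]; linarith [H.hq]))
    rw [Real.zero_rpow (by rw [ne_eq, inv_eq_zero]; linarith [H.hq])] at h2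
    refine h2.congr fun j => ?_
    rw [← Real.rpow_mul (norm_nonneg _), mul_inv_cancel₀ (by linarith [H.hq]), Real.rpow_one]
  obtain ⟨z, hz, φ, hφ, hlim⟩ := DD.cpt.tendsto_subseq (x := fun j => (w j).1) hw1
  have hlim1 : Tendsto (fun j => (w (φ j)).1) atTop (𝓝 z) := hlim
  have hrlim' : Tendsto (fun j => ‖(w (φ j)).1 - (w (φ j)).2‖) atTop (𝓝 0) := hrlim.comp hφ.tendsto_atTop
  have hlim2 : Tendsto (fun j => (w (φ j)).2) atTop (𝓝 z) := by
    have h1 := hlim1.sub (tendsto_zero_iff_norm_tendsto_zero.2 hrlim')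
    simpa using h1
  have hl2 : ∀ j, m ≤ u₁ (w j).1 + u₂ (w j).2 := fun j => by
    have h1 := hlow j
    have h2 : 0 ≤ (1 + σ (w j).1 + σ (w j).2) * ((j + 1 : ℝ) * ‖(w j).1 - (w j).2‖ ^ q) :=
      mul_nonneg (by linarith [(hw0 _ (hw1 j) _ (hw2 j)).1]) (by positivity)
    linarith
  have hzm : u₁ z + u₂ z = m := by
    refine le_antisymm (hm z hz) (le_of_forall_pos_le_add fun ε hε => ?_)
    obtain ⟨j, h1, h2⟩ := ((usc_eventually hu₁ hz (fun j => hw1 (φ j)) hlim1 (half_pos hε)).and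
      (usc_eventually hu₂ hz (fun j => hw2 (φ j)) hlim2 (half_pos hε))).exists
    linarith [hl2 (φ j)]
  have hgz := hgap z hz hzm
  obtain ⟨ε, hε⟩ : ∃ ε : ℝ, ε = (f₁ z + f₂ z) / 4 := ⟨_, rfl⟩
  have hε0 : 0 < ε := by rw [hε]; linarith
  obtain ⟨δ₁, hδ₁, hr1⟩ := hf₁ z hz ε hε0
  obtain ⟨δ₂, hδ₂, hr2⟩ := hf₂ z hz ε hε0
  obtain ⟨δ, hδ, hd1, hd2, -⟩ := exists_pos_min (half_pos hδ₁) (half_pos hδ₂) hε0 hε0 hε0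
  have hblim : Tendsto (fun j => ‖b (w (φ j)).1 - b (w (φ j)).2‖) atTop (𝓝 0) := by
    have e1 : Tendsto (fun j => b (w (φ j)).1) atTop (𝓝 (b z)) :=
      (H.hb z hz).tendsto.comp (tendsto_nhdsWithin_iff.2 ⟨hlim1, Eventually.of_forall fun j => hw1 (φ j)⟩)
    have e2 : Tendsto (fun j => b (w (φ j)).2) atTop (𝓝 (b z)) :=
      (H.hb z hz).tendsto.comp (tendsto_nhdsWithin_iff.2 ⟨hlim2, Eventually.of_forall fun j => hw2 (φ j)⟩)
    simpa using (e1.sub e2).norm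
  have hτ : 0 < 2 * min θ ν - 1 := by
    have h1 := H.op.h3.2.1.1
    have h2 := H.op.h4.2.1.1
    have : 1 / 2 < min θ ν := lt_min h1 h2
    linarith
  have hRlim : Tendsto (fun j => C' * (q * L) ^ (1 + α) * (‖(w (φ j)).1 - (w (φ j)).2‖ ^ (2 * min θ ν - 1)
      + ‖b (w (φ j)).1 - b (w (φ j)).2‖)) atTop (𝓝 0) := by
    have e1 := hrlim'.rpow_const (p := 2 * min θ ν - 1) (Or.inr hτ.le)
    rw [Real.zero_rpow hτ.ne'] at e1
    simpa using (e1.add hblim).const_mul (C' * (q * L) ^ (1 + α))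
  have hfin := ((usc_eventually hu₁ hz (fun j => hw1 (φ j)) hlim1 hδ).and
      (usc_eventually hu₂ hz (fun j => hw2 (φ j)) hlim2 hδ)).and
      (((Metric.tendsto_nhds.1 hlim1 δ hδ).and (Metric.tendsto_nhds.1 hlim2 δ hδ)).and
      ((hrlim'.eventually (gt_mem_nhds hr₀)).and (hRlim.eventually (gt_mem_nhds hε0))))
  obtain ⟨j, ⟨k1, k2⟩, ⟨k3, k4⟩, k5, k6⟩ := hfin.exists
  have k7 := hl2 (φ j)
  have k8 := hpos (φ j)
  have k9 := hjr (φ j)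
  have k10 := hmax (φ j)
  have k11 := hw1 (φ j)
  have k12 := hw2 (φ j)
  obtain ⟨x₁, hx₁⟩ : ∃ x, (w (φ j)).1 = x := ⟨_, rfl⟩
  obtain ⟨x₂, hx₂⟩ : ∃ x, (w (φ j)).2 = x := ⟨_, rfl⟩
  obtain ⟨r, hr⟩ : ∃ r, ‖x₁ - x₂‖ = r := ⟨_, rfl⟩
  obtain ⟨D, hD⟩ : ∃ D : ℝ, D = ((φ j : ℕ) + 1 : ℝ) := ⟨_, rfl⟩
  have hD0 : 0 < D := by rw [hD]; positivity
  rw [hx₁, hx₂, hr] at k5 k6 k8 k9 k10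
  rw [hx₁, hx₂] at k7
  rw [hx₁] at k1 k3 k11
  rw [hx₂] at k2 k4 k12
  rw [← hD] at k9 k10
  rw [dist_eq_norm] at k3 k4
  obtain ⟨ψ₁, hψ₁⟩ : ∃ ψ₁ : ℝ, ψ₁ = D * q * r ^ (q - 1) := ⟨_, rfl⟩
  have hψ₁0 : 0 < ψ₁ := by rw [hψ₁]; positivity
  have hψr : r * ψ₁ = q * (D * r ^ q) := by
    rw [hψ₁, Real.rpow_sub_one k8.ne']; field_simp
  have hψ0 : 0 < D * r ^ q := by positivity
  have hexp := pow_profile D q k8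
  rw [← hψ₁] at hexp
  have key := (hkl u₁ u₂ f₁ f₂ hu₁ hu₂ hs₁ hs₂ x₁ x₂ k11 k12 r hr k8 k5.le (fun t => D * t ^ q) ψ₁
    ((q - 1) * ψ₁ / r) hψ0 hψ₁0 hψr.le (by
      have : q * (D * r ^ q) ≥ 2 * (D * r ^ q) := mul_le_mul_of_nonneg_right H.hq hψ0.le
      linarith) (by gcongr; linarith) hexp
    ⟨1, one_pos, fun x hx y hy _ _ => k10 x hx y hy⟩ (f₁ z - ε) (f₂ z - ε)
    ⟨δ, hδ, fun x hx e1 e2 => hr1 x hx (by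
        have : x - z = (x - x₁) + (x₁ - z) := by abel
        rw [this]; exact (norm_add_le _ _).trans_lt (by linarith)) (by
        rw [abs_lt] at e2 ⊢; constructor <;> linarith [e2.1, e2.2])⟩
    ⟨δ, hδ, fun x hx e1 e2 => hr2 x hx (by
        have : x - z = (x - x₂) + (x₂ - z) := by abel
        rw [this]; exact (norm_add_le _ _).trans_lt (by linarith)) (by
        rw [abs_lt] at e2 ⊢; constructor <;> linarith [e2.1, e2.2])⟩).1
  have hψL : ψ₁ ^ α * ψ₁ ≤ (q * L) ^ (1 + α) := by
    rw [← Real.rpow_add_one hψ₁0.ne', add_comm α 1]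
    refine Real.rpow_le_rpow hψ₁0.le ?_ hα.le
    rw [hψ₁]
    have := mul_le_mul_of_nonneg_left k9 hq0.le
    linarith
  have hlast : C' * (ψ₁ ^ α * ψ₁) * (r ^ (2 * min θ ν - 1) + ‖b x₁ - b x₂‖)
      ≤ C' * (q * L) ^ (1 + α) * (r ^ (2 * min θ ν - 1) + ‖b x₁ - b x₂‖) :=
    mul_le_mul_of_nonneg_right (mul_le_mul_of_nonneg_left hψL hC') (by positivity)
  linarith

/-! ### The homogeneous zero order term and the comparison principle -/

/-- The homogeneous nonlinearity `|r| ^ α r`. -/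
def hp (α r : ℝ) : ℝ := |r| ^ α * r

lemma hp_of_nonneg (hα : -1 < α) {r : ℝ} (hr : 0 ≤ r) : hp α r = r ^ (1 + α) := by
  rcases hr.eq_or_lt with h | h
  · rw [← h, hp, mul_zero, Real.zero_rpow (by linarith)]
  · rw [hp, abs_of_pos h, ← Real.rpow_add_one h.ne', add_comm]

lemma hp_neg (r : ℝ) : hp α (-r) = -hp α r := by simp [hp]

lemma hp_mul {t : ℝ} (ht : 0 < t) (r : ℝ) : hp α (t * r) = t ^ (1 + α) * hp α r := by
  rw [hp, hp, abs_mul, abs_of_pos ht, Real.mul_rpow ht.le (abs_nonneg _), add_comm, Real.rpow_add_one ht.ne']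
  ring

lemma hp_continuous (hα : -1 < α) : Continuous (hp α) := by
  have h1 : Continuous (fun r : ℝ => r ^ (1 + α)) :=
    continuous_id.rpow_const (fun _ => Or.inr (by linarith))
  have h2 : hp α = fun r => (max r 0) ^ (1 + α) - (max (-r) 0) ^ (1 + α) := by
    funext r
    have h0 : (0 : ℝ) ^ (1 + α) = 0 := Real.zero_rpow (by linarith)
    rcases le_total 0 r with h | h
    · rw [max_eq_left h, max_eq_right (by linarith), h0, sub_zero, hp_of_nonneg hα h]
    · rw [max_eq_right h, max_eq_left (by linarith), h0, zero_sub, ← hp_of_nonneg hα (by linarith), hp_neg,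
        neg_neg]
  rw [h2]
  exact (h1.comp (continuous_id.max continuous_const)).sub (h1.comp (continuous_neg.max continuous_const))

lemma hp_zero : hp α 0 = 0 := by simp [hp]

lemma hp_nonneg {r : ℝ} (hr : 0 ≤ r) : 0 ≤ hp α r := mul_nonneg (by positivity) hr

lemma hp_mono (hα : -1 < α) {r t : ℝ} (hr : 0 ≤ r) (hrt : r ≤ t) : hp α r ≤ hp α t := by
  rw [hp_of_nonneg hα hr, hp_of_nonneg hα (hr.trans hrt)]
  exact Real.rpow_le_rpow hr hrt (by linarith)

lemma lowerReg_of_cont {Φ : EN N → ℝ → ℝ} (hΦ : ContinuousOn (Function.uncurry Φ) (closure Ω ×ˢ univ))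
    (u : EN N → ℝ) : LowerReg Ω (fun z => Φ z (u z)) u := by
  intro z hz ε hε
  have h1 := hΦ (z, u z) ⟨hz, mem_univ _⟩
  obtain ⟨δ, hδ, h2⟩ := Metric.continuousWithinAt_iff.1 h1 ε hε
  refine ⟨δ, hδ, fun x hx h3 h4 => ?_⟩
  have h5 := h2 (x := (x, u x)) ⟨hx, mem_univ _⟩ (by
    rw [Prod.dist_eq, max_lt_iff, dist_eq_norm, Real.dist_eq]; exact ⟨h3, h4⟩)
  rw [Real.dist_eq, abs_lt] at h5
  simp only [Function.uncurry] at h5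
  linarith [h5.1]

lemma bdd_of_cont (hK : IsCompact (closure Ω)) {Φ : EN N → ℝ → ℝ}
    (hΦ : ContinuousOn (Function.uncurry Φ) (closure Ω ×ˢ univ)) (M : ℝ) :
    ∃ C₀ : ℝ, 0 ≤ C₀ ∧ ∀ x ∈ closure Ω, ∀ r : ℝ, |r| ≤ M → |Φ x r| ≤ C₀ := by
  obtain ⟨C₀, h⟩ := (hK.prod (isCompact_Icc (a := -M) (b := M))).exists_bound_of_continuousOn
    (hΦ.mono (prod_mono_right (subset_univ _)))
  exact ⟨max C₀ 0, le_max_right _ _, fun x hx r hr => (h (x, r) ⟨hx, abs_le.1 hr⟩).trans (le_max_left _ _)⟩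

/-- The right-hand side of the subsolution inequality, with the zero-order term moved over. -/
def subRhs (α : ℝ) (β g : EN N → ℝ) (x : EN N) (r : ℝ) : ℝ := g x - β x * hp α r

lemma subRhs_cont (hα : -1 < α) {β g : EN N → ℝ} (hβ : ContinuousOn β (closure Ω))
    (hg : ContinuousOn g (closure Ω)) :
    ContinuousOn (Function.uncurry (subRhs α β g)) (closure Ω ×ˢ univ) := by
  have e1 : ContinuousOn (fun w : EN N × ℝ => β w.1) (closure Ω ×ˢ univ) :=
    hβ.comp continuous_fst.continuousOn (fun w hw => hw.1)
  have e2 : ContinuousOn (fun w : EN N × ℝ => g w.1) (closure Ω ×ˢ univ) :=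
    hg.comp continuous_fst.continuousOn (fun w hw => hw.1)
  have e3 : ContinuousOn (fun w : EN N × ℝ => hp α w.2) (closure Ω ×ˢ univ) :=
    ((hp_continuous hα).comp continuous_snd).continuousOn
  exact e2.sub (e1.mul e3)

/-- `u` is a subsolution of `F + b·Du|Du|^α + β |u|^α u = g` with the Neumann condition. -/
def SubN (Ω : Set (EN N)) (nv : EN N → EN N) (α : ℝ) (b : EN N → EN N)
    (F : EN N → EN N → Mat N → ℝ) (β g u : EN N → ℝ) : Prop :=
  SubV Ω nv α b F (fun x => subRhs α β g x (u x)) u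

/-- `v` is a supersolution of `F + b·Dv|Dv|^α + β |v|^α v = g` with the Neumann condition. -/
def SuperN (Ω : Set (EN N)) (nv : EN N → EN N) (α : ℝ) (b : EN N → EN N)
    (F : EN N → EN N → Mat N → ℝ) (β g v : EN N → ℝ) : Prop :=
  SubN Ω nv α b (dualF F) β (fun x => -g x) (fun x => -v x)

lemma SubV.mono {f f' u : EN N → ℝ} (h : SubV Ω nv α b F f u) (hf : ∀ x ∈ closure Ω, f' x ≤ f x) :
    SubV Ω nv α b F f' u :=
  ⟨fun z hz p hp X hX hn hj => (hf z hz).trans (h.1 z hz p hp X hX hn hj),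
    fun z hz hc => (hf z (subset_closure hz)).trans (h.2 z hz hc)⟩

lemma quad_smul (t : ℝ) (p : EN N) (X : Mat N) (d : EN N) : quad (t • p) (t • X) d = t * quad p X d := by
  simp [quad, qf, inner_smul_left]; ring

/-- The equation is homogeneous of degree `1 + α`. -/
lemma OpHyp.scale (h : OpHyp Ω α a A C₁ θ C₂ ν F) {f u : EN N → ℝ} (hu : SubV Ω nv α b F f u) {t : ℝ}
    (ht : 0 < t) : SubV Ω nv α b F (fun x => t ^ (1 + α) * f x) (fun x => t * u x) := by
  constructor
  · intro z hz p hp X hX hn hj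
    have ht' : 0 < t⁻¹ := by positivity
    have hp' : t⁻¹ • p ≠ 0 := smul_ne_zero ht'.ne' hp
    have h1 := hu.1 z hz (t⁻¹ • p) hp' (t⁻¹ • X) (hX.smul _) (fun hf => by
      rw [inner_smul_left]; exact mul_pos (by simpa using ht) (hn hf)) (by
      filter_upwards [hj] with x hx
      rw [quad_smul]
      have h2 : t⁻¹ * (t * u x) ≤ t⁻¹ * (t * u z + quad p X (x - z)) := by gcongr
      rw [mul_add, inv_mul_cancel_left₀ ht.ne', inv_mul_cancel_left₀ ht.ne'] at h2
      exact h2)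
    rw [h.h1 z hz t⁻¹ ht'.ne' t⁻¹ ht'.le p hp X hX, inner_smul_right, norm_smul, Real.norm_eq_abs,
      Real.mul_rpow (abs_nonneg _) (norm_nonneg _), abs_of_pos ht'] at h1
    have h3 : t⁻¹ ^ α * t⁻¹ * F z p X + t⁻¹ * ⟪b z, p⟫ * (t⁻¹ ^ α * ‖p‖ ^ α)
        = (t ^ (1 + α))⁻¹ * (F z p X + ⟪b z, p⟫ * ‖p‖ ^ α) := by
      rw [← Real.inv_rpow ht.le, add_comm 1 α, Real.rpow_add_one ht'.ne']; ring
    rw [h3] at h1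
    have h4 : 0 < t ^ (1 + α) := by positivity
    rw [inv_mul_eq_div, le_div_iff₀ h4] at h1
    simpa [mul_comm] using h1
  · intro z hz hc
    have h1 := hu.2 z hz (by
      filter_upwards [hc] with x hx
      exact mul_left_cancel₀ ht.ne' hx)
    have h4 : 0 < t ^ (1 + α) := by positivity
    nlinarith

lemma OpHyp.scale_sub (h : OpHyp Ω α a A C₁ θ C₂ ν F) {β g u : EN N → ℝ} (hu : SubN Ω nv α b F β g u) {t : ℝ}
    (ht : 0 < t) : SubN Ω nv α b F β (fun x => t ^ (1 + α) * g x) (fun x => t * u x) := by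
  refine (h.scale hu ht).mono fun x _ => ?_
  simp only [subRhs, hp_mul ht]
  apply le_of_eq; ring

lemma OpHyp.scale_super (h : OpHyp Ω α a A C₁ θ C₂ ν F) {β g u : EN N → ℝ} (hu : SuperN Ω nv α b F β g u) {t : ℝ}
    (ht : 0 < t) : SuperN Ω nv α b F β (fun x => t ^ (1 + α) * g x) (fun x => t * u x) := by
  have := h.dual.scale_sub hu ht
  simpa only [SuperN, mul_neg] using this

set_option maxHeartbeats 1000000 in
/-- Comparison of a subsolution with a positive supersolution whose datum is negative. -/
lemma Prob.comparison (H : Prob Ω nv α a A C₁ θ C₂ ν F b q σ s C) {β g₁ g₂ u v : EN N → ℝ}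
    (hβ : ContinuousOn β (closure Ω)) (hg₁ : ContinuousOn g₁ (closure Ω)) (hg₂ : ContinuousOn g₂ (closure Ω))
    (hg : ∀ x ∈ closure Ω, g₂ x ≤ g₁ x) (hneg : ∀ x ∈ closure Ω, g₂ x < 0)
    (hu : UpperSemicontinuousOn u (closure Ω)) (hv : LowerSemicontinuousOn v (closure Ω))
    (hus : SubN Ω nv α b F β g₁ u) (hvs : SuperN Ω nv α b F β g₂ v) {M : ℝ}
    (huM : ∀ x ∈ closure Ω, |u x| ≤ M) (hvM : ∀ x ∈ closure Ω, v x ≤ M) (hv0 : ∀ x ∈ closure Ω, 0 < v x) :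
    ∀ x ∈ closure Ω, u x ≤ v x := by
  have hα := H.op.hα
  have hK := H.dom.cpt
  have hne : (closure Ω).Nonempty := H.dom.ne.closure
  obtain ⟨T, hT⟩ : ∃ T : Set ℝ, T = {t | 1 ≤ t ∧ ∀ x ∈ closure Ω, u x ≤ t * v x} := ⟨_, rfl⟩
  have hTm : ∀ t, t ∈ T ↔ 1 ≤ t ∧ ∀ x ∈ closure Ω, u x ≤ t * v x := fun t => by rw [hT]; rfl
  obtain ⟨x₀, hx₀⟩ := hne
  have hM0 : 0 < M := (hv0 x₀ hx₀).trans_le (hvM x₀ hx₀)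
  have hTne : T.Nonempty := by
    obtain ⟨y, hy, hmin⟩ := hv.exists_isMinOn ⟨x₀, hx₀⟩ hK
    have h0 := hv0 y hy
    refine ⟨max 1 (M / v y), (hTm _).2 ⟨le_max_left _ _, fun x hx => ?_⟩⟩
    calc u x ≤ M := (le_abs_self _).trans (huM x hx)
      _ = M / v y * v y := by field_simp
      _ ≤ max 1 (M / v y) * v x := mul_le_mul (le_max_right _ _) (hmin hx) h0.le (by positivity)
  have hTb : BddBelow T := ⟨1, fun t ht => ((hTm t).1 ht).1⟩
  -- if `γ > 1`, then `γ v` touches `u` from above and homogeneity yields the strict gap `γ ^ (1 + α) g₂ < g₁`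
  obtain ⟨γ, hγ⟩ : ∃ γ : ℝ, γ = sInf T := ⟨_, rfl⟩
  have hγ1 : 1 ≤ γ := by rw [hγ]; exact le_csInf hTne fun t ht => ((hTm t).1 ht).1
  have hγT : ∀ x ∈ closure Ω, u x ≤ γ * v x := by
    intro x hx
    have h0 := hv0 x hx
    rw [← div_le_iff₀ h0, hγ]
    refine le_csInf hTne fun t ht => ?_
    rw [div_le_iff₀ h0]; exact ((hTm t).1 ht).2 x hx
  rcases hγ1.eq_or_lt with h1 | h1
  · intro x hx
    have := hγT x hx
    rwa [← h1, one_mul] at this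
  exfalso
  have hγ0 : 0 < γ := by linarith
  have hu₂ : UpperSemicontinuousOn (fun x => -(γ * v x)) (closure Ω) := by
    intro x hx y hy
    have h2 : -y / γ < v x := by rw [div_lt_iff₀ hγ0]; linarith
    filter_upwards [hv x hx _ h2] with z hz
    rw [gt_iff_lt, div_lt_iff₀ hγ0] at hz; linarith
  have hs₂ := H.op.scale_super hvs hγ0
  have hex : ∃ x ∈ closure Ω, u x + -(γ * v x) = 0 := by
    obtain ⟨x, hx, hmax⟩ := (hu.add hu₂).exists_isMaxOn ⟨x₀, hx₀⟩ hK
    refine ⟨x, hx, le_antisymm (by linarith [hγT x hx]) ?_⟩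
    by_contra! hlt
    obtain ⟨η, hη⟩ : ∃ η : ℝ, η = -(u x + -(γ * v x)) := ⟨_, rfl⟩
    have hη0 : 0 < η := by linarith
    have h3 : max 1 (γ - η / M) ∈ T := by
      rw [hTm]
      refine ⟨le_max_left _ _, fun y hy => ?_⟩
      have h4 := hmax hy
      simp only [mem_ofPred_eq] at h4
      have h5 : η / M * v y ≤ η := by
        rw [div_mul_eq_mul_div, div_le_iff₀ hM0]
        exact mul_le_mul_of_nonneg_left (hvM y hy) hη0.le
      have h6 : (γ - η / M) * v y ≤ max 1 (γ - η / M) * v y :=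
        mul_le_mul_of_nonneg_right (le_max_right _ _) (hv0 y hy).le
      linarith
    have h4 := csInf_le hTb h3
    rw [← hγ] at h4
    have h5 : 0 < η / M := by positivity
    rcases le_max_iff.1 h4 with h6 | h6 <;> linarith
  have hc1 := subRhs_cont hα hβ hg₁
  have hc2 := subRhs_cont hα hβ (hg₂.const_smul (γ ^ (1 + α))).neg
  obtain ⟨B₁, hB₁0, hB₁⟩ := bdd_of_cont hK hc1 (max M (γ * M))
  obtain ⟨B₂, hB₂0, hB₂⟩ := bdd_of_cont hK hc2 (max M (γ * M))
  have hb1 : ∀ x ∈ closure Ω, |u x| ≤ max M (γ * M) := fun x hx => (huM x hx).trans (le_max_left _ _)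
  have hb2 : ∀ x ∈ closure Ω, |(-(γ * v x))| ≤ max M (γ * M) := fun x hx => by
    have := hv0 x hx
    rw [abs_neg, abs_of_pos (by positivity)]
    exact (mul_le_mul_of_nonneg_left (hvM x hx) hγ0.le).trans (le_max_right _ _)
  refine H.strict_comparison hu hu₂ hus hs₂ (lowerReg_of_cont hc1 u) (lowerReg_of_cont hc2 _)
    (C₀ := max B₁ B₂) (M₀ := max M (γ * M)) (fun x hx => ?_) (fun x hx => ?_) hb1 hb2 (m := 0)
    (fun x hx => by linarith [hγT x hx]) hex (fun x hx hxc => ?_)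
  · linarith [(abs_le.1 (hB₁ x hx _ (hb1 x hx))).1, le_max_left B₁ B₂]
  · have := (abs_le.1 (hB₂ x hx _ (hb2 x hx))).1
    have h2 := le_max_right B₁ B₂
    exact le_trans (by linarith) this
  · have h2 : u x = γ * v x := by linarith
    simp only [subRhs, hp_neg, h2]
    have h3 : 1 < γ ^ (1 + α) := Real.one_lt_rpow h1 (by linarith)
    nlinarith [hg x hx, hneg x hx]

/-! ### Stability -/

/-- The second and first order part of the operator is continuous in `(x, p)` away from `p = 0`. -/
lemma OpHyp.cont (h : OpHyp Ω α a A C₁ θ C₂ ν F) (hb : ContinuousOn b (closure Ω)) {z p : EN N}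
    (hz : z ∈ closure Ω) (hp : p ≠ 0) {X : Mat N} (hX : X.IsSymm) {ε : ℝ} (hε : 0 < ε) :
    ∃ δ : ℝ, 0 < δ ∧ ∀ x ∈ closure Ω, ∀ P : EN N, ‖x - z‖ < δ → ‖P - p‖ < δ →
      P ≠ 0 ∧ |(F x P X + ⟪b x, P⟫ * ‖P‖ ^ α) - (F z p X + ⟪b z, p⟫ * ‖p‖ ^ α)| < ε := by
  have hp0 : 0 < ‖p‖ := norm_pos_iff.2 hp
  obtain ⟨l, hl⟩ : ∃ l, l = 𝓝[closure Ω ×ˢ (univ : Set (EN N))] (z, p) := ⟨_, rfl⟩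
  have tx : Tendsto (fun w : EN N × EN N => w.1) l (𝓝 z) := by
    rw [hl]; exact (continuous_fst.tendsto (z, p)).mono_left nhdsWithin_le_nhds
  have tp : Tendsto (fun w : EN N × EN N => w.2) l (𝓝 p) := by
    rw [hl]; exact (continuous_snd.tendsto (z, p)).mono_left nhdsWithin_le_nhds
  have hmem : ∀ᶠ w in l, w.1 ∈ closure Ω := by
    rw [hl]; filter_upwards [self_mem_nhdsWithin] with w hw using hw.1
  have tb : Tendsto (fun w : EN N × EN N => b w.1) l (𝓝 (b z)) :=
    (hb z hz).tendsto.comp (tendsto_nhdsWithin_iff.2 ⟨tx, hmem⟩)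
  have tn : Tendsto (fun w : EN N × EN N => ‖w.2‖ ^ α) l (𝓝 (‖p‖ ^ α)) :=
    tp.norm.rpow_const (Or.inl hp0.ne')
  have hθ : 0 < θ := by linarith [h.h3.2.1.1]
  have hν : 0 < ν := by linarith [h.h4.2.1.1]
  have tbt : Tendsto (fun w : EN N × EN N => ⟪b w.1, w.2⟫ * ‖w.2‖ ^ α) l (𝓝 (⟪b z, p⟫ * ‖p‖ ^ α)) :=
    (tb.inner tp).mul tn
  have hsm : ∀ᶠ w in l, ‖w.2 - p‖ ≤ ‖p‖ / 2 := by
    have := Metric.tendsto_nhds.1 tp (‖p‖ / 2) (by positivity)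
    filter_upwards [this] with w hw
    rw [dist_eq_norm] at hw; exact hw.le
  have hne : ∀ᶠ w in l, w.2 ≠ 0 := tp.eventually_ne hp
  have tF : Tendsto (fun w : EN N × EN N => F w.1 w.2 X) l (𝓝 (F z p X)) := by
    have tr : Tendsto (fun w : EN N × EN N => C₁ * ‖w.1 - z‖ ^ θ * ‖w.2‖ ^ α * matNorm X
        + C₂ * ‖p‖ ^ (α - ν) * ‖w.2 - p‖ ^ ν * matNorm X) l (𝓝 0) := by
      have e1 := (tx.sub_const z).norm.rpow_const (p := θ) (Or.inr hθ.le)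
      have e2 := (tp.sub_const p).norm.rpow_const (p := ν) (Or.inr hν.le)
      rw [sub_self, norm_zero, Real.zero_rpow hθ.ne'] at e1
      rw [sub_self, norm_zero, Real.zero_rpow hν.ne'] at e2
      have := (((e1.const_mul C₁).mul tn).mul_const (matNorm X)).add
        ((e2.const_mul (C₂ * ‖p‖ ^ (α - ν))).mul_const (matNorm X))
      simpa using this
    rw [tendsto_iff_norm_sub_tendsto_zero]
    refine squeeze_zero' (Eventually.of_forall fun _ => norm_nonneg _) ?_ tr
    filter_upwards [hmem, hsm, hne] with w h1 h2 h3
    have e1 := h.h3.2.2 w.1 h1 z hz w.2 h3 X hX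
    have e2 := h.h4.2.2 z hz p hp (w.2 - p) h2 X hX
    rw [add_sub_cancel] at e2
    have e3 := abs_add_le (F w.1 w.2 X - F z w.2 X) (F z w.2 X - F z p X)
    rw [sub_add_sub_cancel] at e3
    rw [Real.norm_eq_abs]; linarith
  have hall := (Metric.tendsto_nhds.1 (tF.add tbt) ε hε).and hne
  rw [hl] at hall
  obtain ⟨δ, hδ, h1⟩ := Metric.mem_nhdsWithin_iff.1 hall
  refine ⟨δ, hδ, fun x hx P e1 e2 => ?_⟩
  have := h1 (a := (x, P)) ⟨by
    rw [mem_ball, Prod.dist_eq, max_lt_iff, dist_eq_norm, dist_eq_norm]; exact ⟨e1, e2⟩, hx, mem_univ _⟩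
  exact ⟨this.2, this.1⟩

/-- Stability of strict maxima under one-sided perturbation. -/
lemma touch {K : Set (EN N)} (hK : IsCompact K) {u φ : EN N → ℝ} {z : EN N} (hz : z ∈ K)
    (hφ : ContinuousOn φ K) (hφz : φ z = 0) {ρ : ℝ} (hρ : 0 < ρ)
    (hle : ∀ x ∈ K, ‖x - z‖ ≤ ρ → u x ≤ u z + φ x)
    (hlt : ∀ e : ℝ, 0 < e → ∃ κ : ℝ, 0 < κ ∧ ∀ x ∈ K, e ≤ ‖x - z‖ → ‖x - z‖ ≤ ρ → u x + κ ≤ u z + φ x)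
    {ε : ℝ} (hε : 0 < ε) :
    ∃ δ : ℝ, 0 < δ ∧ δ ≤ ε ∧ ∀ w : EN N → ℝ, UpperSemicontinuousOn w K → (∀ x ∈ K, w x ≤ u x + δ) →
      (∃ y ∈ K, ‖y - z‖ < δ ∧ u z - δ ≤ w y) →
      ∃ x₁ ∈ K, ‖x₁ - z‖ < ε ∧ ‖x₁ - z‖ < ρ ∧ |w x₁ - u z| < ε ∧ ∀ x ∈ K, ‖x - z‖ ≤ ρ → w x - φ x ≤ w x₁ - φ x₁ := by
  have hcont : ∀ τ : ℝ, 0 < τ → ∃ δ : ℝ, 0 < δ ∧ ∀ x ∈ K, ‖x - z‖ < δ → |φ x| < τ := by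
    intro τ hτ
    obtain ⟨δ, hδ, h⟩ := Metric.continuousWithinAt_iff.1 (hφ z hz) τ hτ
    refine ⟨δ, hδ, fun x hx hxz => ?_⟩
    have := h hx (by rwa [dist_eq_norm])
    rwa [Real.dist_eq, hφz, sub_zero] at this
  obtain ⟨d₁, hd₁, hφ₁⟩ := hcont (ε / 4) (by positivity)
  obtain ⟨e, he, he1, he2, he3, -⟩ := exists_pos_min hd₁ hρ hε hε hε
  obtain ⟨κ, hκ, hlt⟩ := hlt e he
  obtain ⟨d₂, hd₂, hφ₂⟩ := hcont (κ / 4) (by positivity)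
  obtain ⟨δ, hδ, l1, l2, l3, l4, l5⟩ := exists_pos_min hd₁ hd₂ hρ (by positivity : 0 < κ / 4)
    (by positivity : 0 < ε / 4)
  refine ⟨δ, hδ, by linarith, fun w hw hwu ⟨y, hy, hyz, hyw⟩ => ?_⟩
  have hyρ : y ∈ closedBall z ρ := by rw [mem_closedBall, dist_eq_norm]; linarith
  obtain ⟨x₁, hx₁, hm⟩ := ((hw.add hφ.neg.upperSemicontinuousOn).mono
    (inter_subset_left : K ∩ closedBall z ρ ⊆ _)).exists_isMaxOn
    (show (K ∩ closedBall z ρ).Nonempty from ⟨y, hy, hyρ⟩) (hK.inter_right isClosed_closedBall)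
  have hmax : ∀ x ∈ K, ‖x - z‖ ≤ ρ → w x - φ x ≤ w x₁ - φ x₁ := fun x hx hxz => by
    have := hm (show x ∈ K ∩ closedBall z ρ from ⟨hx, by rw [mem_closedBall, dist_eq_norm]; exact hxz⟩)
    simp only [mem_ofPred_eq, Pi.neg_apply] at this
    linarith
  have hx₁ρ : ‖x₁ - z‖ ≤ ρ := by rw [← dist_eq_norm]; exact hx₁.2
  have k1 := hmax y hy (by linarith)
  have k2 := hφ₂ y hy (by linarith)
  have k2' := hφ₁ y hy (by linarith)
  have k3 := hwu x₁ hx₁.1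
  rw [abs_lt] at k2 k2'
  have hclose : ‖x₁ - z‖ < e := by
    by_contra! hge
    have := hlt x₁ hx₁.1 hge hx₁ρ
    linarith [k2.2]
  have k4 := hφ₁ x₁ hx₁.1 (by linarith)
  rw [abs_lt] at k4
  have k5 := hle x₁ hx₁.1 hx₁ρ
  refine ⟨x₁, hx₁.1, by linarith, by linarith, ?_, hmax⟩
  rw [abs_lt]
  constructor <;> linarith [k4.1, k4.2, k2'.1, k2'.2]

lemma quad_shift (p : EN N) {X : Mat N} (hX : X.IsSymm) (x y z : EN N) :
    quad p X (x - z) = quad p X (y - z) + quad (p + Matrix.toEuclideanLin X (y - z)) X (x - y) := by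
  have : x - z = (y - z) + (x - y) := by abel
  rw [this]
  simp only [quad, qf_add_vec hX, inner_add_left, inner_add_right]
  ring

lemma DomData.s_pos (DD : DomData Ω nv q σ s C) {z p : EN N}
    (h : z ∈ frontier Ω → 0 < ⟪p, nv z⟫) : z ∈ frontier Ω → 0 < ⟪p, s z⟫ := fun hz => by
  obtain ⟨t, ht, hs⟩ := DD.normal z hz
  rw [hs, inner_smul_right]
  exact mul_pos ht (h hz)

lemma norm_lin_le (X : Mat N) (d : EN N) : ‖Matrix.toEuclideanLin X d‖ ≤ matNorm X * ‖d‖ :=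
  (LinearMap.toContinuousLinearMap (Matrix.toEuclideanLin X)).le_opNorm d

set_option maxHeartbeats 1000000 in
/-- Stability of subsolutions under half-relaxed limits, suprema and uniform limits. -/
lemma Prob.stability (H : Prob Ω nv α a A C₁ θ C₂ ν F b q σ s C) {β g u : EN N → ℝ}
    (hβ : ContinuousOn β (closure Ω)) (hg : ContinuousOn g (closure Ω))
    (hw : ∀ z ∈ closure Ω, ∀ δ : ℝ, 0 < δ → ∃ w : EN N → ℝ, UpperSemicontinuousOn w (closure Ω) ∧
      SubV Ω nv α b F (fun x => subRhs α β g x (w x) - δ) w ∧ (∀ x ∈ closure Ω, w x ≤ u x + δ) ∧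
      ∃ y ∈ closure Ω, ‖y - z‖ < δ ∧ u z - δ ≤ w y) : SubN Ω nv α b F β g u := by
  have hα := H.op.hα
  have hq0 : 0 < q := by linarith [H.hq]
  have DD := H.dom
  have hK := DD.cpt
  have hc := subRhs_cont hα hβ hg
  have hloc : ∀ z ∈ closure Ω, ∀ τ : ℝ, 0 < τ → ∃ δ : ℝ, 0 < δ ∧ ∀ x ∈ closure Ω, ∀ r : ℝ, ‖x - z‖ < δ →
      |r - u z| < δ → subRhs α β g z (u z) - τ ≤ subRhs α β g x r := by
    intro z hz τ hτ
    obtain ⟨δ, hδ, h2⟩ := Metric.continuousWithinAt_iff.1 (hc (z, u z) ⟨hz, mem_univ _⟩) τ hτ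
    refine ⟨δ, hδ, fun x hx r h3 h4 => ?_⟩
    have h5 := h2 (x := (x, r)) ⟨hx, mem_univ _⟩ (by
      rw [Prod.dist_eq, max_lt_iff, dist_eq_norm, Real.dist_eq]; exact ⟨h3, h4⟩)
    rw [Real.dist_eq, abs_lt] at h5
    simp only [Function.uncurry] at h5
    linarith [h5.1]
  constructor
  · intro z hz p hp X hX hn hj
    obtain ⟨ρ, hρ, hj⟩ : ∃ ρ : ℝ, 0 < ρ ∧ ∀ x ∈ closure Ω, ‖x - z‖ ≤ ρ → u x ≤ u z + quad p X (x - z) := by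
      obtain ⟨e, he, h1⟩ := Metric.mem_nhdsWithin_iff.1 hj
      exact ⟨e / 2, by positivity, fun x hx hxx => h1 ⟨by rw [mem_ball, dist_eq_norm]; linarith, hx⟩⟩
    refine le_of_forall_eta (C := A * ‖p‖ ^ α * N) fun η hη => ?_
    obtain ⟨Y, hYdef⟩ : ∃ Y : Mat N, Y = X + η • (1 : Mat N) := ⟨_, rfl⟩
    have hY : Y.IsSymm := by rw [hYdef]; exact hX.add (symm_smul_one η)
    have hFY : F z p Y ≤ F z p X + A * ‖p‖ ^ α * (N * η) :=
      H.op.mono hz hp hY hX hη.le fun d => by rw [hYdef, qf_add, qf_one]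
    have hquad : ∀ x, quad p Y (x - z) = quad p X (x - z) + η / 2 * ‖x - z‖ ^ 2 := fun x => by
      rw [hYdef, quad_add_smul]
    suffices hs : ∀ τ : ℝ, 0 < τ → subRhs α β g z (u z) ≤ F z p Y + ⟪b z, p⟫ * ‖p‖ ^ α + 3 * τ by
      have := le_of_forall_eta (C := 3) (fun τ hτ => hs τ hτ)
      have e : A * ‖p‖ ^ α * (N * η) = A * ‖p‖ ^ α * N * η := by ring
      linarith
    intro τ hτ
    obtain ⟨d₁, hd₁, hcF⟩ := H.op.cont H.hb hz hp hY hτ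
    obtain ⟨d₂, hd₂, hbd⟩ := DD.bdy_open hz (DD.s_pos hn)
    obtain ⟨d₃, hd₃, hr⟩ := hloc z hz τ hτ
    have hT : 0 ≤ matNorm Y := matNorm_nonneg Y
    obtain ⟨d₄, hd₄, l1, l2, l3, l4, -⟩ := exists_pos_min hd₁ hd₂ hd₃ hτ hτ
    obtain ⟨ε, hε, m1, m2, -⟩ := exists_pos_min hd₄ (by positivity : 0 < d₄ / (matNorm Y + 1)) hd₄ hd₄ hd₄
    obtain ⟨δ, hδ, hδε, hwx⟩ := touch hK hz (u := u) (φ := fun x => quad p Y (x - z))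
      (quad_contDiff p Y z).continuous.continuousOn (quad_self p Y z) hρ
      (fun x hx hxz => by
        have := hj x hx hxz
        have h2 : 0 ≤ η / 2 * ‖x - z‖ ^ 2 := by positivity
        rw [hquad]; linarith)
      (fun e he => ⟨η / 2 * e ^ 2, by positivity, fun x hx hxe hxz => by
        have := hj x hx hxz
        have h2 : η / 2 * e ^ 2 ≤ η / 2 * ‖x - z‖ ^ 2 := by gcongr
        rw [hquad]; linarith⟩) hε
    obtain ⟨w, hwu, hws, hwle, hwy⟩ := hw z hz δ hδ
    obtain ⟨x₁, hx₁, n1, n1', n2, n3⟩ := hwx w hwu hwle hwy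
    have hPn : ‖Matrix.toEuclideanLin Y (x₁ - z)‖ < d₄ := by
      refine (norm_lin_le Y _).trans_lt ?_
      rw [le_div_iff₀ (by positivity)] at m2
      have : matNorm Y * ‖x₁ - z‖ ≤ matNorm Y * ε := mul_le_mul_of_nonneg_left n1.le hT
      linarith
    obtain ⟨hP0, hPc⟩ := hcF x₁ hx₁ (p + Matrix.toEuclideanLin Y (x₁ - z)) (by linarith)
      (by rw [add_sub_cancel_left]; linarith)
    have hsub := hws.1 x₁ hx₁ _ hP0 Y hY (hbd x₁ _ (by linarith) (by rw [add_sub_cancel_left]; linarith)) (by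
      have : ball z ρ ∈ 𝓝 x₁ := isOpen_ball.mem_nhds (by rw [mem_ball, dist_eq_norm]; exact n1')
      filter_upwards [self_mem_nhdsWithin, mem_nhdsWithin_of_mem_nhds this] with x hx hx'
      rw [mem_ball, dist_eq_norm] at hx'
      have := n3 x hx hx'.le
      have h2 := quad_shift p hY x x₁ z
      linarith)
    have h3 := hr x₁ hx₁ (w x₁) (by linarith) (by linarith)
    have h4 := (abs_lt.1 hPc).2
    linarith
  · intro z hz' hconst
    have hz := subset_closure hz'
    refine le_of_forall_eta (C := 3) fun τ hτ => ?_
    obtain ⟨ρ, hρ, hconst⟩ : ∃ ρ : ℝ, 0 < ρ ∧ ∀ x ∈ closure Ω, ‖x - z‖ ≤ ρ → u x = u z := by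
      obtain ⟨e, he, h1⟩ := Metric.mem_nhdsWithin_iff.1 hconst
      exact ⟨e / 2, by positivity, fun x hx hxx => h1 ⟨by rw [mem_ball, dist_eq_norm]; linarith, hx⟩⟩
    obtain ⟨r₀, C', hr₀, hC', hcone⟩ := H.op.cone_test H.hb H.hq H.hqα DD (D := 1) one_pos
    obtain ⟨d₃, hd₃, hr⟩ := hloc z hz τ hτ
    obtain ⟨d₁, hd₁, hsm⟩ := exists_small (q := 1 + α) (by linarith) (D := C') hτ
    obtain ⟨ε, hε, l1, l2, l3, l4, -⟩ := exists_pos_min hd₁ hd₃ hr₀ hτ hτ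
    have hw0 : ∀ x ∈ closure Ω, 1 ≤ 1 + σ x + σ z ∧ 1 + σ x + σ z ≤ 3 := fun x hx => by
      constructor <;> linarith [DD.σ0 x hx, DD.σ0 z hz, DD.σ1 x hx, DD.σ1 z hz]
    have hφc : ContinuousOn (fun x : EN N => 1 * (1 + σ x + σ z) * ‖x - z‖ ^ q) (closure Ω) := by
      have e3 : Continuous (fun x : EN N => ‖x - z‖ ^ q) :=
        (continuous_id.sub continuous_const).norm.rpow_const (fun _ => Or.inr hq0.le)
      exact (continuousOn_const.mul ((continuousOn_const.add DD.σ_cont).add continuousOn_const)).mul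
        e3.continuousOn
    obtain ⟨δ, hδ, hδε, hwx⟩ := touch hK hz (u := u) (φ := fun x => 1 * (1 + σ x + σ z) * ‖x - z‖ ^ q)
      hφc (by rw [sub_self, norm_zero, Real.zero_rpow hq0.ne', mul_zero]) hρ
      (fun x hx hxz => by
        have h1 := (hw0 x hx).1
        have h2 : 0 ≤ 1 * (1 + σ x + σ z) * ‖x - z‖ ^ q := mul_nonneg (by linarith) (by positivity)
        rw [hconst x hx hxz]; linarith)
      (fun e he => ⟨e ^ q, by positivity, fun x hx hxe hxz => by
        have h1 := mul_le_mul_of_nonneg_right (hw0 x hx).1 (by positivity : 0 ≤ ‖x - z‖ ^ q)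
        have h2 : e ^ q ≤ ‖x - z‖ ^ q := Real.rpow_le_rpow he.le hxe hq0.le
        rw [hconst x hx hxz]; linarith⟩) hε
    obtain ⟨w, hwu, hws, hwle, hwy⟩ := hw z hz δ hδ
    obtain ⟨x₁, hx₁, n1, n1', n2, n3⟩ := hwx w hwu hwle hwy
    have h3 := hr x₁ hx₁ (w x₁) (by linarith) (by linarith)
    by_cases hxz : x₁ = z
    · have hcδ := hc.sub (continuousOn_const (c := δ))
      have := H.flat hwu hws (lowerReg_of_cont (Φ := fun x r => subRhs α β g x r - δ) hcδ w) hx₁ (C₃ := 3) (by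
        have : ball z ρ ∈ 𝓝 x₁ := isOpen_ball.mem_nhds (by rw [mem_ball, dist_eq_norm]; exact n1')
        filter_upwards [self_mem_nhdsWithin, mem_nhdsWithin_of_mem_nhds this] with x hx hx'
        rw [mem_ball, dist_eq_norm] at hx'
        have h4 := n3 x hx hx'.le
        have h5 := mul_le_mul_of_nonneg_right (hw0 x hx).2 (by positivity : 0 ≤ ‖x - z‖ ^ q)
        simp only [hxz, sub_self, norm_zero, Real.zero_rpow hq0.ne', mul_zero] at h4 ⊢
        linarith)
      linarith
    · have h4 := hcone w _ hws x₁ hx₁ z hz hxz (by linarith) (by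
        have : ball z ρ ∈ 𝓝 x₁ := isOpen_ball.mem_nhds (by rw [mem_ball, dist_eq_norm]; exact n1')
        filter_upwards [self_mem_nhdsWithin, mem_nhdsWithin_of_mem_nhds this] with x hx hx'
        rw [mem_ball, dist_eq_norm] at hx'
        exact n3 x hx hx'.le)
      have h5 := hsm ‖x₁ - z‖ (norm_nonneg _) (by linarith)
      linarith

/-! ### Boundary geometry and the bump construction -/

/-- A `C²` domain satisfies the interior sphere condition. -/
lemma interior_ball (hΩ : IsC2Domain Ω nv) {x : EN N} (hx : x ∈ frontier Ω) :
    ‖nv x‖ = 1 ∧ ∃ R : ℝ, 0 < R ∧ ball (x - R • nv x) R ⊆ Ω := by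
  obtain ⟨ho, hconn, hb, ρ, hρ, hΩρ, hfr, hgr⟩ := hΩ
  obtain ⟨hg0, hn⟩ := hgr x hx
  have hg0' : 0 < ‖gradient ρ x‖ := norm_pos_iff.2 hg0
  have hn1 : ‖nv x‖ = 1 := by rw [hn, norm_smul, norm_inv, norm_norm, inv_mul_cancel₀ hg0'.ne']
  have hgn : gradient ρ x = ‖gradient ρ x‖ • nv x := by
    rw [hn, smul_smul, mul_inv_cancel₀ hg0'.ne', one_smul]
  refine ⟨hn1, ?_⟩
  obtain ⟨C, hC⟩ := taylor_ball hρ (‖x‖ + 2)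
  obtain ⟨D, hD⟩ : ∃ D : ℝ, D = max C 1 := ⟨_, rfl⟩
  have hD1 : 1 ≤ D := hD ▸ le_max_right _ _
  have hCD : C ≤ D := hD ▸ le_max_left _ _
  obtain ⟨R, hR⟩ : ∃ R : ℝ, R = min 1 (‖gradient ρ x‖ / (2 * D)) := ⟨_, rfl⟩
  have hR0 : 0 < R := by rw [hR]; positivity
  have hR1 : R ≤ 1 := hR ▸ min_le_left _ _
  have hRD : 2 * D * R ≤ ‖gradient ρ x‖ := by
    have : R ≤ ‖gradient ρ x‖ / (2 * D) := hR ▸ min_le_right _ _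
    rw [le_div_iff₀ (by positivity)] at this; linarith
  refine ⟨R, hR0, fun w hw => ?_⟩
  rw [mem_ball, dist_eq_norm] at hw
  obtain ⟨d, hd⟩ : ∃ d : EN N, d = w - x := ⟨_, rfl⟩
  have hw1 : w - (x - R • nv x) = d + R • nv x := by rw [hd]; abel
  rw [hw1] at hw
  have h1 : ‖d + R • nv x‖ ^ 2 = ‖d‖ ^ 2 + 2 * R * ⟪nv x, d⟫ + R ^ 2 := by
    rw [norm_add_sq_real, inner_smul_right, norm_smul, hn1, real_inner_comm, Real.norm_eq_abs, mul_one, sq_abs]; ring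
  have h2 : ‖d + R • nv x‖ ^ 2 < R ^ 2 := by
    apply pow_lt_pow_left₀ hw (norm_nonneg _) two_ne_zero
  have hdle : ‖d‖ ≤ 2 := by
    have : ‖d‖ ≤ ‖d + R • nv x‖ + ‖R • nv x‖ := by
      have := norm_sub_le (d + R • nv x) (R • nv x); simpa using this
    rw [norm_smul, hn1, Real.norm_eq_abs, abs_of_pos hR0] at this
    linarith
  have h3 := hC x (by simp) w (by
    rw [mem_closedBall_zero_iff]
    have : ‖w‖ ≤ ‖x‖ + ‖d‖ := by
      have h := norm_add_le x d
      have e : x + d = w := by rw [hd]; abel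
      rwa [e] at h
    linarith)
  have hx0 : ρ x = 0 := by rw [hfr] at hx; exact hx
  rw [hx0, hgn, inner_smul_left, ← hd] at h3
  simp only [conj_trivial, sub_zero] at h3
  have h4 := (abs_le.1 h3).2
  rw [hΩρ]
  show ρ w < 0
  have h5 : ‖d‖ ^ 2 + 2 * R * ⟪nv x, d⟫ < 0 := by linarith
  have h6 : C * ‖d‖ ^ 2 ≤ D * ‖d‖ ^ 2 := by gcongr
  have h7 : 0 ≤ (‖gradient ρ x‖ - 2 * D * R) * ‖d‖ ^ 2 := mul_nonneg (by linarith) (by positivity)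
  have h8 : 2 * R * ρ w ≤ 2 * R * (‖gradient ρ x‖ * ⟪nv x, d⟫ + D * ‖d‖ ^ 2) := by
    apply mul_le_mul_of_nonneg_left _ (by positivity); linarith
  have h9 : ‖gradient ρ x‖ * (‖d‖ ^ 2 + 2 * R * ⟪nv x, d⟫) < 0 := mul_neg_of_pos_of_neg hg0' h5
  have h10 : 2 * R * ρ w < 0 := by linarith
  by_contra hcon
  push Not at hcon
  have : 0 ≤ 2 * R * ρ w := by positivity
  linarith

lemma inward (hΩ : IsC2Domain Ω nv) {x : EN N} (hx : x ∈ frontier Ω) :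
    ∀ᶠ t in 𝓝[>] (0 : ℝ), x + t • (-nv x) ∈ closure Ω := by
  obtain ⟨hn, R, hR, hb⟩ := interior_ball hΩ hx
  filter_upwards [Ioo_mem_nhdsGT hR] with t ht
  apply subset_closure
  apply hb
  rw [mem_ball, dist_eq_norm]
  have : x + t • (-nv x) - (x - R • nv x) = (R - t) • nv x := by module
  rw [this, norm_smul, hn, Real.norm_eq_abs, abs_of_pos (by linarith [ht.2])]
  linarith [ht.1]

lemma nonneg_of_small {e c : ℝ} (h : ∀ᶠ t in 𝓝[>] (0 : ℝ), 0 ≤ t * e + t ^ 2 * c) : 0 ≤ e := by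
  have h1 : ∀ᶠ t in 𝓝[>] (0 : ℝ), 0 ≤ e + t * c := by
    filter_upwards [h, self_mem_nhdsWithin] with t ht ht0
    have ht0' : 0 < t := ht0
    have : t * e + t ^ 2 * c = t * (e + t * c) := by ring
    rw [this] at ht
    exact nonneg_of_mul_nonneg_right ht ht0'
  have h2 : Tendsto (fun t : ℝ => e + t * c) (𝓝[>] 0) (𝓝 (e + 0 * c)) :=
    ((continuous_const.add (continuous_id.mul continuous_const)).tendsto 0).mono_left nhdsWithin_le_nhds
  have := ge_of_tendsto h2 h1
  simpa using this

/-- Restriction of ordered quadratic polynomials to a ray entering `Ω̄`. -/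
lemma quad_dir {p P : EN N} {X Y : Mat N} {x d : EN N}
    (h : ∀ᶠ y in 𝓝[closure Ω] x, quad P Y (y - x) ≤ quad p X (y - x))
    (hd : ∀ᶠ t in 𝓝[>] (0 : ℝ), x + t • d ∈ closure Ω) :
    ∀ᶠ t in 𝓝[>] (0 : ℝ), 0 ≤ t * (⟪p, d⟫ - ⟪P, d⟫) + t ^ 2 * (1 / 2 * (qf X d - qf Y d)) := by
  have h1 : Tendsto (fun t : ℝ => x + t • d) (𝓝[>] 0) (𝓝[closure Ω] x) := by
    refine tendsto_nhdsWithin_iff.2 ⟨?_, hd⟩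
    have : Tendsto (fun t : ℝ => x + t • d) (𝓝 0) (𝓝 (x + (0 : ℝ) • d)) :=
      (continuous_const.add (continuous_id.smul continuous_const)).tendsto 0
    rw [zero_smul, add_zero] at this
    exact this.mono_left nhdsWithin_le_nhds
  filter_upwards [h1.eventually h] with t ht
  rw [add_sub_cancel_left] at ht
  simp only [quad, inner_smul_right, qf_smul_vec] at ht
  linarith

/-- Two quadratic polynomials ordered near an interior point have the same gradient and ordered Hessians. -/
lemma jet_interior (hΩ : IsOpen Ω) {p P : EN N} {X Y : Mat N} {x : EN N} (hx : x ∈ Ω)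
    (h : ∀ᶠ y in 𝓝[closure Ω] x, quad P Y (y - x) ≤ quad p X (y - x)) :
    P = p ∧ ∀ d, qf Y d ≤ qf X d := by
  have hd : ∀ d : EN N, ∀ᶠ t in 𝓝[>] (0 : ℝ), x + t • d ∈ closure Ω := fun d => by
    have : Tendsto (fun t : ℝ => x + t • d) (𝓝 0) (𝓝 (x + (0 : ℝ) • d)) :=
      (continuous_const.add (continuous_id.smul continuous_const)).tendsto 0
    rw [zero_smul, add_zero] at this
    filter_upwards [(this.mono_left nhdsWithin_le_nhds).eventually (hΩ.mem_nhds hx)] with t ht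
    exact subset_closure ht
  have h1 : ∀ d, 0 ≤ ⟪p, d⟫ - ⟪P, d⟫ := fun d => nonneg_of_small (quad_dir h (hd d))
  have hpP : P = p := by
    have := h1 (-(p - P))
    rw [← inner_sub_left, inner_neg_right, real_inner_self_eq_norm_sq] at this
    have h2 : ‖p - P‖ = 0 := by
      have := norm_nonneg (p - P)
      nlinarith
    rw [norm_eq_zero, sub_eq_zero] at h2
    exact h2.symm
  refine ⟨hpP, fun d => ?_⟩
  obtain ⟨t, ht, ht0⟩ := ((quad_dir h (hd d)).and self_mem_nhdsWithin).exists
  rw [hpP, sub_self, mul_zero, zero_add] at ht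
  have ht0' : (0 : ℝ) < t := ht0
  have := nonneg_of_mul_nonneg_right ht (by positivity)
  linarith

/-- At a boundary point, an ordering of quadratic polynomials on `Ω̄` is reversed for the exterior normal
derivatives. -/
lemma jet_boundary (hΩ : IsC2Domain Ω nv) {p P : EN N} {X Y : Mat N} {x : EN N} (hx : x ∈ frontier Ω)
    (h : ∀ᶠ y in 𝓝[closure Ω] x, quad P Y (y - x) ≤ quad p X (y - x)) : ⟪p, nv x⟫ ≤ ⟪P, nv x⟫ := by
  have := nonneg_of_small (quad_dir h (inward hΩ hx))
  rw [inner_neg_right, inner_neg_right] at this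
  linarith

/-- Constants are subsolutions when `f ≤ 0`: a superjet of a constant has zero gradient at interior points
and a nonpositive normal derivative at the boundary, so it is never tested. -/
lemma subV_const (hΩ : IsC2Domain Ω nv) {f : EN N → ℝ} (hf : ∀ x ∈ closure Ω, f x ≤ 0) (k : ℝ) :
    SubV Ω nv α b F f (fun _ => k) := by
  refine ⟨fun z hz p hp X hX hn hj => ?_, fun z hz _ => hf z (subset_closure hz)⟩
  exfalso
  have h : ∀ᶠ y in 𝓝[closure Ω] z, quad 0 0 (y - z) ≤ quad p X (y - z) := by
    filter_upwards [hj] with y hy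
    simp only [quad, inner_zero_left, qf_zero, mul_zero, add_zero] at hy ⊢
    linarith
  rcases mem_or_frontier z hz with hz | hz
  · exact hp (jet_interior hΩ.1 hz h).1.symm
  · have := jet_boundary hΩ hz h
    rw [inner_zero_left] at this
    linarith [hn hz]

/-- The bump construction of Perron's method: a maximal subsolution `u` cannot be raised to
`l + ψ + κ` near `z`, where `l` is the lower limit of `u` at `z` and `ψ + l + κ` is a local
subsolution lying below `u` away from `z`. -/
lemma Prob.bump (H : Prob Ω nv α a A C₁ θ C₂ ν F b q σ s C) {β g u : EN N → ℝ}
    (hβ : ContinuousOn β (closure Ω)) (hg : ContinuousOn g (closure Ω))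
    (hu : UpperSemicontinuousOn u (closure Ω)) (hus : SubN Ω nv α b F β g u)
    (hub : ∃ M : ℝ, ∀ x ∈ closure Ω, u x ≤ M)
    (hmax : ∀ w : EN N → ℝ, UpperSemicontinuousOn w (closure Ω) → SubN Ω nv α b F β g w →
      (∀ x ∈ closure Ω, u x ≤ w x) → (∃ M : ℝ, ∀ x ∈ closure Ω, w x ≤ M) → ∀ x ∈ closure Ω, w x ≤ u x)
    {z : EN N} (hz : z ∈ closure Ω) {l : ℝ}
    (hl : ∀ δ : ℝ, 0 < δ → ∃ y ∈ closure Ω, ‖y - z‖ < δ ∧ u y < l + δ)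
    {ψ : EN N → ℝ} (hψ : ContinuousOn ψ (closure Ω)) (hψz : ψ z = 0) {ρ κ : ℝ} (hρ : 0 < ρ) (hκ : 0 < κ)
    (hgap : ∀ x ∈ closure Ω, ρ / 2 ≤ ‖x - z‖ → ‖x - z‖ ≤ ρ → l + ψ x + κ ≤ u x)
    (hjet : ∀ x ∈ closure Ω, ‖x - z‖ < ρ → ∀ p : EN N, p ≠ 0 → ∀ X : Mat N, X.IsSymm →
      (x ∈ frontier Ω → 0 < ⟪p, nv x⟫) → UJet (closure Ω) ψ x p X →
      subRhs α β g x (l + ψ x + κ) ≤ F x p X + ⟪b x, p⟫ * ‖p‖ ^ α)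
    (hconst : ∀ x ∈ Ω, ‖x - z‖ < ρ → (∀ᶠ y in 𝓝[closure Ω] x, ψ y ≤ ψ x) →
      subRhs α β g x (l + ψ x + κ) ≤ 0) : False := by
  classical
  obtain ⟨w, hwdef⟩ : ∃ w : EN N → ℝ, w = fun x => if ‖x - z‖ < ρ then max (u x) (l + ψ x + κ) else u x :=
    ⟨_, rfl⟩
  have hw1 : ∀ x, ‖x - z‖ < ρ → w x = max (u x) (l + ψ x + κ) := fun x hx => by rw [hwdef]; exact if_pos hx
  have hw2 : ∀ x ∈ closure Ω, ρ / 2 ≤ ‖x - z‖ → w x = u x := fun x hx hx' => by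
    by_cases h : ‖x - z‖ < ρ
    · rw [hw1 x h]; exact max_eq_left (hgap x hx hx' h.le)
    · rw [hwdef]; exact if_neg h
  have huw : ∀ x ∈ closure Ω, u x ≤ w x := fun x hx => by
    by_cases h : ‖x - z‖ < ρ
    · rw [hw1 x h]; exact le_max_left _ _
    · rw [hw2 x hx (by linarith)]
  have hnear : ∀ x, ‖x - z‖ < ρ → ∀ᶠ y in 𝓝[closure Ω] x, ‖y - z‖ < ρ := fun x hx => by
    have : Continuous (fun y : EN N => ‖y - z‖) := by fun_prop
    exact mem_nhdsWithin_of_mem_nhds ((this.tendsto x).eventually (Iio_mem_nhds hx))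
  have hcase : ∀ x ∈ closure Ω, w x = u x ∨ (‖x - z‖ < ρ ∧ w x = l + ψ x + κ) := fun x hx => by
    by_cases h : ‖x - z‖ < ρ
    · rw [hw1 x h]
      rcases max_cases (u x) (l + ψ x + κ) with h' | h'
      · exact Or.inl h'.1
      · exact Or.inr ⟨h, h'.1⟩
    · exact Or.inl (hw2 x hx (by linarith))
  have hwu : UpperSemicontinuousOn w (closure Ω) := by
    intro x hx r hr
    by_cases h : ‖x - z‖ < ρ
    · rw [hw1 x h, max_lt_iff] at hr
      have h2 : ∀ᶠ y in 𝓝[closure Ω] x, l + ψ y + κ < r := by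
        have h3 : ContinuousWithinAt (fun y => l + ψ y + κ) (closure Ω) x :=
          (continuousWithinAt_const.add (hψ x hx)).add continuousWithinAt_const
        exact h3.eventually (Iio_mem_nhds hr.2)
      filter_upwards [hnear x h, hu x hx r hr.1, h2] with y hy1 hy2 hy3
      rw [hw1 y hy1]; exact max_lt hy2 hy3
    · rw [hw2 x hx (by linarith)] at hr
      have hev : ∀ᶠ y in 𝓝[closure Ω] x, ρ / 2 < ‖y - z‖ := by
        have : Continuous (fun y : EN N => ‖y - z‖) := by fun_prop
        exact mem_nhdsWithin_of_mem_nhds ((this.tendsto x).eventually (Ioi_mem_nhds (by linarith)))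
      filter_upwards [hev, hu x hx r hr, self_mem_nhdsWithin] with y hy1 hy2 hy3
      rw [hw2 y hy3 hy1.le]; exact hy2
  have hwb : ∃ M : ℝ, ∀ x ∈ closure Ω, w x ≤ M := by
    obtain ⟨M, hM⟩ := hub
    obtain ⟨M', hM'⟩ := H.dom.cpt.exists_bound_of_continuousOn hψ
    refine ⟨max M (l + M' + κ), fun x hx => ?_⟩
    rcases hcase x hx with h | h
    · rw [h]; exact (hM x hx).trans (le_max_left _ _)
    · rw [h.2]; refine le_trans ?_ (le_max_right _ _)
      have := (le_abs_self _).trans (hM' x hx); linarith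
  have hws : SubN Ω nv α b F β g w := by
    constructor
    · intro x hx p hp X hX hn hj
      rcases hcase x hx with h | ⟨hxρ, h⟩
      · have := hus.1 x hx p hp X hX hn (by
          filter_upwards [hj, self_mem_nhdsWithin] with y hy hyK
          rw [← h]; exact (huw y hyK).trans hy)
        simp only at this ⊢
        rw [h]; exact this
      · simp only
        rw [h]
        refine hjet x hx hxρ p hp X hX hn ?_
        filter_upwards [hj, hnear x hxρ] with y hy hyρ
        rw [h, hw1 y hyρ] at hy
        have := le_max_right (u y) (l + ψ y + κ)
        linarith
    · intro x hx hc
      have hxK := subset_closure hx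
      rcases hcase x hxK with h | ⟨hxρ, h⟩
      · have := H.flat hu hus (lowerReg_of_cont (subRhs_cont H.op.hα hβ hg) u) hxK (C₃ := 0) (by
          filter_upwards [hc, self_mem_nhdsWithin] with y hy hyK
          rw [zero_mul, add_zero, ← h, ← hy]; exact huw y hyK)
        simp only at this ⊢
        rw [h]; exact this
      · simp only
        rw [h]
        refine hconst x hx hxρ ?_
        filter_upwards [hc, hnear x hxρ] with y hy hyρ
        rw [h, hw1 y hyρ] at hy
        have := le_max_right (u y) (l + ψ y + κ)
        linarith
  have hle := hmax w hwu hws huw hwb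
  have hev : ∀ᶠ y in 𝓝[closure Ω] z, -(κ / 2) < ψ y :=
    (hψ z hz).eventually (Ioi_mem_nhds (by rw [hψz]; linarith))
  obtain ⟨e, he, hev⟩ := Metric.mem_nhdsWithin_iff.1 hev
  obtain ⟨y, hy, hyz, hyu⟩ := hl (min (min e ρ) (κ / 2)) (by positivity)
  have m1 := min_le_left (min e ρ) (κ / 2)
  have m2 := min_le_right (min e ρ) (κ / 2)
  have m3 := min_le_left e ρ
  have m4 := min_le_right e ρ
  have h1 : -(κ / 2) < ψ y := hev ⟨by rw [mem_ball, dist_eq_norm]; linarith, hy⟩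
  have h2 := hle y hy
  rw [hw1 y (by linarith)] at h2
  have := le_max_right (u y) (l + ψ y + κ)
  linarith

/-! ### Semicontinuous envelopes -/

/-- The upper semicontinuous envelope. -/
lemma exists_usc_env {K : Set (EN N)} {u : EN N → ℝ} {M : ℝ}
    (hM : ∀ x ∈ K, u x ≤ M) :
    ∃ U : EN N → ℝ, UpperSemicontinuousOn U K ∧ (∀ x ∈ K, u x ≤ U x) ∧ (∀ x ∈ K, U x ≤ M) ∧
      ∀ x ∈ K, ∀ δ : ℝ, 0 < δ → ∃ y ∈ K, ‖y - x‖ < δ ∧ U x - δ < u y := by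
  have hMS : ∀ x, M ∈ {r : ℝ | ∀ᶠ y in 𝓝[K] x, u y ≤ r} := fun x => by
    filter_upwards [self_mem_nhdsWithin] with y hy using hM y hy
  have hlb : ∀ x ∈ K, ∀ r ∈ {r : ℝ | ∀ᶠ y in 𝓝[K] x, u y ≤ r}, u x ≤ r := fun x hx r hr => by
    have hr' : ∀ᶠ y in 𝓝[K] x, u y ≤ r := hr
    exact hr'.self_of_nhdsWithin hx
  have hbb : ∀ x ∈ K, BddBelow {r : ℝ | ∀ᶠ y in 𝓝[K] x, u y ≤ r} := fun x hx => ⟨u x, fun r hr => hlb x hx r hr⟩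
  refine ⟨fun x => sInf {r : ℝ | ∀ᶠ y in 𝓝[K] x, u y ≤ r}, ?_, ?_, ?_, ?_⟩
  · intro x hx r hr
    obtain ⟨r', hr', hlt⟩ := exists_lt_of_csInf_lt ⟨M, hMS x⟩ hr
    have h1 : ∀ᶠ y in 𝓝[K] x, ∀ᶠ y' in 𝓝[K] y, u y' ≤ r' := eventually_eventually_nhdsWithin.2 hr'
    filter_upwards [h1, self_mem_nhdsWithin] with y hy hyK
    exact (csInf_le (hbb y hyK) hy).trans_lt hlt
  · exact fun x hx => le_csInf ⟨M, hMS x⟩ (hlb x hx)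
  · exact fun x hx => csInf_le (hbb x hx) (hMS x)
  · intro x hx δ hδ
    by_contra hcon
    push Not at hcon
    have : sInf {r : ℝ | ∀ᶠ y in 𝓝[K] x, u y ≤ r} - δ ∈ {r : ℝ | ∀ᶠ y in 𝓝[K] x, u y ≤ r} := by
      have hb : ball x δ ∈ 𝓝 x := ball_mem_nhds x hδ
      filter_upwards [self_mem_nhdsWithin, mem_nhdsWithin_of_mem_nhds hb] with y hy hy'
      exact hcon y hy (by rw [mem_ball, dist_eq_norm] at hy'; exact hy')
    have := csInf_le (hbb x hx) this
    linarith

/-- A quadratic polynomial touching `|y - z| ^ q` from above at a point other than `z`. -/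
lemma pow_quad (hq : 2 ≤ q) {x z : EN N} (hxz : x ≠ z) :
    ∀ᶠ y in 𝓝 x, ‖y - z‖ ^ q ≤ ‖x - z‖ ^ q + ⟪(q * ‖x - z‖ ^ (q - 2)) • (x - z), y - x⟫
      + 3 * q ^ 2 * ‖x - z‖ ^ (q - 2) * ‖y - x‖ ^ 2 := by
  obtain ⟨r, hr⟩ : ∃ r : ℝ, r = ‖x - z‖ := ⟨_, rfl⟩
  have hr0 : 0 < r := by rw [hr]; exact norm_pos_iff.2 (sub_ne_zero.2 hxz)
  obtain ⟨c, hc⟩ : ∃ c : ℝ, c = r ^ (q - 2) := ⟨_, rfl⟩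
  have hc0 : 0 < c := by rw [hc]; positivity
  have hpow : ∀ t : ℝ, 0 ≤ t → ∀ e : ℝ, (t ^ 2) ^ (e / 2) = t ^ e := fun t ht e => by
    rw [← Real.rpow_natCast, ← Real.rpow_mul ht]; congr 1; push_cast; ring
  have h1 := pow_profile 1 (q / 2) (r := r ^ 2) (by positivity) (q ^ 2 / 8 * c / r ^ 2) (by positivity)
  have hcont : Continuous (fun y : EN N => ‖y - z‖ ^ 2) := by fun_prop
  have h2 : ∀ᶠ y in 𝓝 x, ‖y - x‖ < r := by
    filter_upwards [ball_mem_nhds x hr0] with y hy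
    rwa [mem_ball, dist_eq_norm] at hy
  have h3 : Tendsto (fun y : EN N => ‖y - z‖ ^ 2) (𝓝 x) (𝓝 (r ^ 2)) := by rw [hr]; exact hcont.tendsto x
  filter_upwards [h3.eventually h1, h2] with y hy hyr
  rw [hpow _ (norm_nonneg _), hpow _ hr0.le, show q / 2 - 1 = (q - 2) / 2 by ring, hpow _ hr0.le, ← hc] at hy
  rw [← hr, ← hc, inner_smul_left]
  obtain ⟨d, hd⟩ : ∃ d : EN N, d = y - x := ⟨_, rfl⟩
  rw [← hd] at hyr ⊢
  have e1 : ‖y - z‖ ^ 2 - r ^ 2 = 2 * ⟪x - z, d⟫ + ‖d‖ ^ 2 := by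
    have : y - z = (x - z) + d := by rw [hd]; abel
    rw [this, norm_add_sq_real, hr]; ring
  rw [e1] at hy
  have e2 : |⟪x - z, d⟫| ≤ r * ‖d‖ := by rw [hr]; exact abs_real_inner_le_norm _ _
  have e3 : (2 * ⟪x - z, d⟫ + ‖d‖ ^ 2) ^ 2 ≤ 9 * r ^ 2 * ‖d‖ ^ 2 := by
    have e4 : |2 * ⟪x - z, d⟫ + ‖d‖ ^ 2| ≤ 3 * r * ‖d‖ := by
      have a1 : ‖d‖ ^ 2 ≤ r * ‖d‖ := by rw [sq]; gcongr
      rw [abs_le] at e2 ⊢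
      constructor <;> nlinarith [sq_nonneg ‖d‖, norm_nonneg d]
    calc _ = |2 * ⟪x - z, d⟫ + ‖d‖ ^ 2| ^ 2 := (sq_abs _).symm
      _ ≤ (3 * r * ‖d‖) ^ 2 := by gcongr
      _ = _ := by ring
  simp only [conj_trivial]
  have e5 : ((q - 2) / 2) * (1 * (q / 2) * c) / r ^ 2 / 2 * (2 * ⟪x - z, d⟫ + ‖d‖ ^ 2) ^ 2
      ≤ ((q - 2) / 2) * (1 * (q / 2) * c) / r ^ 2 / 2 * (9 * r ^ 2 * ‖d‖ ^ 2) := by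
    apply mul_le_mul_of_nonneg_left e3
    have : 0 ≤ (q - 2) / 2 := by linarith
    positivity
  have e6 : q ^ 2 / 8 * c / r ^ 2 * (2 * ⟪x - z, d⟫ + ‖d‖ ^ 2) ^ 2 ≤ q ^ 2 / 8 * c / r ^ 2 * (9 * r ^ 2 * ‖d‖ ^ 2) :=
    mul_le_mul_of_nonneg_left e3 (by positivity)
  have e7 : ((q - 2) / 2) * (1 * (q / 2) * c) / r ^ 2 / 2 * (9 * r ^ 2 * ‖d‖ ^ 2)
      = 9 * ((q - 2) / 2) * (q / 4) * (c * ‖d‖ ^ 2) := by field_simp; ring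
  have e8 : q ^ 2 / 8 * c / r ^ 2 * (9 * r ^ 2 * ‖d‖ ^ 2) = 9 * q ^ 2 / 8 * (c * ‖d‖ ^ 2) := by field_simp
  have e9 : 0 ≤ c * ‖d‖ ^ 2 := by positivity
  have e10 : (q / 2 + 9 * ((q - 2) / 2) * (q / 4) + 9 * q ^ 2 / 8) * (c * ‖d‖ ^ 2) ≤ 3 * q ^ 2 * (c * ‖d‖ ^ 2) := by
    apply mul_le_mul_of_nonneg_right _ e9
    nlinarith
  linarith [hy, e5, e6, e7, e8, e10]

/-- The lower envelope `v` of a maximal subsolution `u` is a supersolution. -/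
lemma Prob.super_env (H : Prob Ω nv α a A C₁ θ C₂ ν F b q σ s C) (hΩ : IsC2Domain Ω nv) {β g u v : EN N → ℝ}
    (hβ : ContinuousOn β (closure Ω)) (hg : ContinuousOn g (closure Ω))
    (hu : UpperSemicontinuousOn u (closure Ω)) (hus : SubN Ω nv α b F β g u)
    (hub : ∃ M : ℝ, ∀ x ∈ closure Ω, u x ≤ M)
    (hmax : ∀ w : EN N → ℝ, UpperSemicontinuousOn w (closure Ω) → SubN Ω nv α b F β g w →
      (∀ x ∈ closure Ω, u x ≤ w x) → (∃ M : ℝ, ∀ x ∈ closure Ω, w x ≤ M) → ∀ x ∈ closure Ω, w x ≤ u x)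
    (hvu : ∀ x ∈ closure Ω, v x ≤ u x)
    (hl : ∀ z ∈ closure Ω, ∀ δ : ℝ, 0 < δ → ∃ y ∈ closure Ω, ‖y - z‖ < δ ∧ u y < v z + δ) :
    SuperN Ω nv α b F β g v := by
  have hα := H.op.hα
  have DD := H.dom
  have hA : 0 < A := H.op.h2.1.trans_le H.op.h2.2.1
  have hloc : ∀ z ∈ closure Ω, ∀ τ : ℝ, 0 < τ → ∃ δ : ℝ, 0 < δ ∧ ∀ x ∈ closure Ω, ∀ r : ℝ, ‖x - z‖ < δ →
      |r - v z| < δ → subRhs α β g x r ≤ subRhs α β g z (v z) + τ := by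
    intro z hz τ hτ
    obtain ⟨δ, hδ, h2⟩ := Metric.continuousWithinAt_iff.1 (subRhs_cont hα hβ hg (z, v z) ⟨hz, mem_univ _⟩) τ hτ
    refine ⟨δ, hδ, fun x hx r h3 h4 => ?_⟩
    have h5 := h2 (x := (x, r)) ⟨hx, mem_univ _⟩ (by
      rw [Prod.dist_eq, max_lt_iff, dist_eq_norm, Real.dist_eq]; exact ⟨h3, h4⟩)
    rw [Real.dist_eq, abs_lt] at h5
    simp only [Function.uncurry] at h5
    linarith [h5.2]
  have hsub : ∀ z, subRhs α β (fun x => -g x) z (-v z) = -subRhs α β g z (v z) := fun z => by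
    simp only [subRhs, hp_neg]; ring
  constructor
  · intro z hz p hp0 X hX hn hj
    simp only [hsub]
    by_contra hlt
    push Not at hlt
    obtain ⟨P, hPdef⟩ : ∃ P : EN N, P = -p := ⟨_, rfl⟩
    have hP0 : P ≠ 0 := by rw [hPdef]; exact neg_ne_zero.2 hp0
    have hpP : p = -P := by rw [hPdef, neg_neg]
    obtain ⟨G, hG⟩ : ∃ G : ℝ, G = F z P (-X) + ⟪b z, P⟫ * ‖P‖ ^ α - subRhs α β g z (v z) := ⟨_, rfl⟩
    have hG0 : 0 < G := by
      rw [hpP, dualF, H.op.neg_p hz hP0 hX.neg, inner_neg_right, norm_neg] at hlt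
      linarith
    obtain ⟨η, hη⟩ : ∃ η : ℝ, η = G / (4 * (A * ‖P‖ ^ α * N + 1)) := ⟨_, rfl⟩
    have hc0 : 0 ≤ A * ‖P‖ ^ α * N := by positivity
    have hη0 : 0 < η := by rw [hη]; positivity
    have hηG : A * ‖P‖ ^ α * (N * η) ≤ G / 4 := by
      have : η * (4 * (A * ‖P‖ ^ α * N + 1)) = G := by rw [hη]; field_simp
      nlinarith
    obtain ⟨Y, hYdef⟩ : ∃ Y : Mat N, Y = -X + (-η) • (1 : Mat N) := ⟨_, rfl⟩
    have hY : Y.IsSymm := by rw [hYdef]; exact hX.neg.add (symm_smul_one _)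
    have hFY : F z P (-X) ≤ F z P Y + A * ‖P‖ ^ α * (N * η) :=
      H.op.mono hz hP0 hX.neg hY hη0.le fun d => by rw [hYdef, qf_add, qf_one]; linarith
    have hquad : ∀ x, quad P Y (x - z) = quad P (-X) (x - z) - η / 2 * ‖x - z‖ ^ 2 := fun x => by
      rw [hYdef, quad_add_smul]; ring
    have hvq : ∀ᶠ x in 𝓝[closure Ω] z, v z + quad P (-X) (x - z) ≤ v x := by
      filter_upwards [hj] with x hx
      rw [hPdef, quad_neg]; linarith
    obtain ⟨ρ₀, hρ₀, hvq⟩ := Metric.mem_nhdsWithin_iff.1 hvq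
    obtain ⟨δ₁, hδ₁, hcont⟩ := H.op.cont H.hb hz hP0 hY (ε := G / 4) (by positivity)
    obtain ⟨δ₂, hδ₂, hsubc⟩ := hloc z hz (G / 4) (by positivity)
    obtain ⟨δ₃, hδ₃, hbd⟩ := DD.bdy_open hz (DD.s_pos hn)
    have hψc : Continuous (fun x : EN N => quad P Y (x - z)) := by
      simp only [quad, qf]
      have : Continuous (Matrix.toEuclideanLin Y) := LinearMap.continuous_of_finiteDimensional _
      fun_prop
    obtain ⟨δ₄, hδ₄, hψs⟩ := Metric.continuousAt_iff.1 (hψc.continuousAt (x := z)) (δ₂ / 2) (by positivity)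
    have hLc : Continuous (fun x : EN N => Matrix.toEuclideanLin Y (x - z)) := by
      have : Continuous (Matrix.toEuclideanLin Y) := LinearMap.continuous_of_finiteDimensional _
      fun_prop
    obtain ⟨δ₅, hδ₅, hLs⟩ := Metric.continuousAt_iff.1 (hLc.continuousAt (x := z)) (min δ₁ δ₃) (by positivity)
    rw [sub_self] at hψs
    rw [sub_self, map_zero] at hLs
    have hq0 : quad P Y 0 = 0 := by simp [quad, qf]
    obtain ⟨ρ, hρdef⟩ : ∃ ρ : ℝ, ρ = min (min (min δ₁ δ₂) δ₃) (min (min δ₄ δ₅) ρ₀) / 2 := ⟨_, rfl⟩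
    have hρ : 0 < ρ := by rw [hρdef]; positivity
    have hρ1 : ρ < min (min (min δ₁ δ₂) δ₃) (min (min δ₄ δ₅) ρ₀) := by rw [hρdef] at hρ ⊢; linarith
    simp only [lt_min_iff] at hρ1
    obtain ⟨⟨⟨r1, r2⟩, r3⟩, ⟨r4, r5⟩, r6⟩ := hρ1
    obtain ⟨κ, hκdef⟩ : ∃ κ : ℝ, κ = min (η / 2 * (ρ / 2) ^ 2) (δ₂ / 4) := ⟨_, rfl⟩
    have hκ : 0 < κ := by rw [hκdef]; positivity
    have hκ1 : κ ≤ η / 2 * (ρ / 2) ^ 2 := hκdef ▸ min_le_left _ _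
    have hκ2 : κ ≤ δ₂ / 4 := hκdef ▸ min_le_right _ _
    have hP₁ : ∀ x ∈ closure Ω, ‖x - z‖ < ρ → P + Matrix.toEuclideanLin Y (x - z) ≠ 0 ∧
        |(F x (P + Matrix.toEuclideanLin Y (x - z)) Y + ⟪b x, P + Matrix.toEuclideanLin Y (x - z)⟫
          * ‖P + Matrix.toEuclideanLin Y (x - z)‖ ^ α) - (F z P Y + ⟪b z, P⟫ * ‖P‖ ^ α)| < G / 4 ∧
        (x ∈ frontier Ω → ⟪P + Matrix.toEuclideanLin Y (x - z), nv x⟫ < 0) := by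
      intro x hx hxz
      have h1 := hLs (x := x) (by rw [dist_eq_norm]; linarith)
      rw [dist_eq_norm, sub_zero, lt_min_iff] at h1
      have h2 := hcont x hx (P + Matrix.toEuclideanLin Y (x - z)) (by linarith) (by
        rw [add_sub_cancel_left]; exact h1.1)
      refine ⟨h2.1, h2.2, fun hxf => ?_⟩
      have h3 := hbd x (-(P + Matrix.toEuclideanLin Y (x - z))) (by linarith) (by
        rw [hpP, show -(P + Matrix.toEuclideanLin Y (x - z)) - -P = -Matrix.toEuclideanLin Y (x - z) by abel, norm_neg]
        exact h1.2) hxf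
      rw [inner_neg_left] at h3
      linarith
    refine H.bump hβ hg hu hus hub hmax hz (hl z hz) (ψ := fun x => quad P Y (x - z)) hψc.continuousOn
      (quad_self _ _ _) hρ hκ ?_ ?_ ?_
    · intro x hx hx1 hx2
      have h1 : v z + quad P (-X) (x - z) ≤ v x := hvq ⟨by rw [mem_ball, dist_eq_norm]; linarith, hx⟩
      have h2 : η / 2 * (ρ / 2) ^ 2 ≤ η / 2 * ‖x - z‖ ^ 2 := by gcongr
      have h3 := hvu x hx
      simp only [hquad]
      linarith
    · intro x hx hxz p' hp' X' hX' hn' hj'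
      obtain ⟨n1, n2, n3⟩ := hP₁ x hx hxz
      have hq' : ∀ᶠ y in 𝓝[closure Ω] x, quad (P + Matrix.toEuclideanLin Y (x - z)) Y (y - x) ≤ quad p' X' (y - x) := by
        filter_upwards [hj'] with y hy
        have := quad_shift P hY y x z
        linarith
      have h1 := hψs (x := x) (by rw [dist_eq_norm]; linarith)
      rw [hq0, Real.dist_eq, sub_zero, abs_lt] at h1
      have h2 := hsubc x hx (v z + quad P Y (x - z) + κ) (by linarith) (by rw [abs_lt]; constructor <;> linarith)
      rcases mem_or_frontier x hx with hxΩ | hxf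
      · obtain ⟨hPp, hYX⟩ := jet_interior hΩ.1 hxΩ hq'
        have h3 := H.op.mono hx hp' hY hX' (μ := 0) le_rfl (fun d => by linarith [hYX d])
        rw [hPp, abs_lt] at n2
        simp only [mul_zero, add_zero] at h3
        linarith [n2.1]
      · exact absurd (jet_boundary hΩ hxf hq') (by linarith [n3 hxf, hn' hxf])
    · intro x hx hxz hc
      exfalso
      obtain ⟨n1, n2, n3⟩ := hP₁ x (subset_closure hx) hxz
      refine n1 (jet_interior (p := 0) (X := 0) (Y := Y) hΩ.1 hx ?_).1
      filter_upwards [hc] with y hy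
      have := quad_shift P hY y x z
      have h0 : quad (0 : EN N) (0 : Mat N) (y - x) = 0 := by simp [quad, qf]
      linarith
  · intro z hz hc
    simp only [hsub]
    by_contra hlt
    push Not at hlt
    have hzK := subset_closure hz
    obtain ⟨G, hG⟩ : ∃ G : ℝ, G = -subRhs α β g z (v z) := ⟨_, rfl⟩
    have hG0 : 0 < G := by linarith
    have hq2 := H.hq
    have hq0 : 0 < q := by linarith
    obtain ⟨B, hB⟩ := DD.cpt.exists_bound_of_continuousOn H.hb
    have hB0 : 0 ≤ B := (norm_nonneg _).trans (hB z hzK)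
    obtain ⟨C', hC'⟩ : ∃ C' : ℝ, C' = A * q ^ α * (N * (6 * q ^ 2)) + B * q ^ (1 + α) := ⟨_, rfl⟩
    obtain ⟨e₁, he₁, hsm⟩ := exists_small (q := 1 + α) (D := C') (by linarith) (show 0 < G / 2 by positivity)
    obtain ⟨δ₂, hδ₂, hsubc⟩ := hloc z hzK (G / 2) (by positivity)
    obtain ⟨e₂, he₂, hsm2⟩ := exists_small (q := q) (D := 1) hq0 (show 0 < δ₂ / 2 by positivity)
    have hnear : ∀ᶠ x in 𝓝[closure Ω] z, v x = v z := by
      filter_upwards [hc] with x hx; linarith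
    obtain ⟨ρ₀, hρ₀, hvc⟩ := Metric.mem_nhdsWithin_iff.1 hnear
    obtain ⟨ρ₁, hρ₁, hball⟩ := Metric.isOpen_iff.1 DD.isOpen z hz
    obtain ⟨ρ, hρdef⟩ : ∃ ρ : ℝ, ρ = min (min (min e₁ δ₂) e₂) (min (min ρ₀ ρ₁) 1) / 2 := ⟨_, rfl⟩
    have hρ : 0 < ρ := by rw [hρdef]; positivity
    have hρm : ρ < min (min (min e₁ δ₂) e₂) (min (min ρ₀ ρ₁) 1) := by rw [hρdef] at hρ ⊢; linarith
    simp only [lt_min_iff] at hρm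
    obtain ⟨⟨⟨r1, r2⟩, r3⟩, ⟨r4, r5⟩, r6⟩ := hρm
    have hψc : Continuous (fun x : EN N => -‖x - z‖ ^ q) :=
      ((by fun_prop : Continuous fun x : EN N => ‖x - z‖).rpow_const (fun _ => Or.inr hq0.le)).neg
    have hκ : 0 < (ρ / 2) ^ q := by positivity
    have hκ2 := hsm2 (ρ / 2) (by positivity) (by linarith)
    have hval : ∀ x ∈ closure Ω, ‖x - z‖ < ρ → subRhs α β g x (v z + -‖x - z‖ ^ q + (ρ / 2) ^ q) ≤ -(G / 2) := by
      intro x hx hxz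
      have h1 := hsm2 ‖x - z‖ (norm_nonneg _) (by linarith)
      have h3 : 0 ≤ ‖x - z‖ ^ q := by positivity
      have h2 := hsubc x hx (v z + -‖x - z‖ ^ q + (ρ / 2) ^ q) (by linarith) (by
        rw [abs_lt]; constructor <;> linarith)
      linarith
    refine H.bump hβ hg hu hus hub hmax hzK (hl z hzK) (ψ := fun x => -‖x - z‖ ^ q) hψc.continuousOn
      (by simp [Real.zero_rpow hq0.ne']) hρ hκ ?_ ?_ ?_
    · intro x hx hx1 hx2
      have h1 : v x = v z := hvc ⟨by rw [mem_ball, dist_eq_norm]; linarith, hx⟩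
      have h2 := hvu x hx
      have h3 : (ρ / 2) ^ q ≤ ‖x - z‖ ^ q := Real.rpow_le_rpow (by positivity) hx1 hq0.le
      linarith
    · intro x hx hxz p' hp' X' hX' hn' hj'
      have hxΩ : x ∈ Ω := hball (by rw [mem_ball, dist_eq_norm]; linarith)
      refine (hval x hx hxz).trans ?_
      by_cases hxe : x = z
      · exfalso
        subst hxe
        refine hp' (jet_interior (P := 0) (p := p') (X := X') (Y := (-2 : ℝ) • (1 : Mat N)) hΩ.1 hxΩ ?_).1.symm
        have hb1 : ball x 1 ∈ 𝓝 x := ball_mem_nhds x one_pos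
        filter_upwards [hj', mem_nhdsWithin_of_mem_nhds hb1] with y hy hyb
        rw [mem_ball, dist_eq_norm] at hyb
        have h1 : ‖y - x‖ ^ q ≤ ‖y - x‖ ^ (2 : ℝ) := by
          rcases (norm_nonneg (y - x)).eq_or_lt with h0 | h0
          · rw [← h0, Real.zero_rpow hq0.ne', Real.zero_rpow two_ne_zero]
          · exact Real.rpow_le_rpow_of_exponent_ge h0 hyb.le hq2
        rw [Real.rpow_two] at h1
        simp only [sub_self, norm_zero, Real.zero_rpow hq0.ne', neg_zero, zero_add] at hy
        have h2 : quad 0 ((-2 : ℝ) • (1 : Mat N)) (y - x) = -‖y - x‖ ^ 2 := by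
          rw [quad, inner_zero_left, qf_one]; ring
        linarith
      · have hpq := pow_quad hq2 hxe
        obtain ⟨r, hr⟩ : ∃ r : ℝ, r = ‖x - z‖ := ⟨_, rfl⟩
        have hr0 : 0 < r := by rw [hr]; exact norm_pos_iff.2 (sub_ne_zero.2 hxe)
        obtain ⟨c, hcdef⟩ : ∃ c : ℝ, c = r ^ (q - 2) := ⟨_, rfl⟩
        have hc0 : 0 < c := by rw [hcdef]; positivity
        rw [← hr, ← hcdef] at hpq
        have hjq : ∀ᶠ y in 𝓝[closure Ω] x, quad (-((q * c) • (x - z))) (-(6 * q ^ 2 * c) • (1 : Mat N)) (y - x)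
            ≤ quad p' X' (y - x) := by
          filter_upwards [hj', mem_nhdsWithin_of_mem_nhds hpq] with y hy hy2
          rw [← hr] at hy
          rw [quad, inner_neg_left, qf_one]
          linarith
        obtain ⟨hPp, hYX⟩ := jet_interior hΩ.1 hxΩ hjq
        have h1 := H.op.mono hx hp' (symm_smul_one (-(6 * q ^ 2 * c))) hX' (μ := 0) le_rfl
          (fun d => by linarith [hYX d])
        have h2 := H.op.mono hx hp' (X := 0) (by simp [Matrix.IsSymm]) (symm_smul_one (-(6 * q ^ 2 * c)))
          (μ := 6 * q ^ 2 * c) (by positivity) (fun d => by rw [qf_zero, qf_one]; linarith)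
        rw [H.op.zero hx hp'] at h2
        have hpn : ‖p'‖ = q * r ^ (q - 1) := by
          rw [← hPp, norm_neg, norm_smul, Real.norm_eq_abs, abs_of_pos (by positivity), ← hr, mul_assoc, hcdef,
            ← Real.rpow_add_one hr0.ne']
          congr 2; ring
        have hp0 : 0 < ‖p'‖ := norm_pos_iff.2 hp'
        have hpα : ‖p'‖ ^ α * c = q ^ α * r ^ (1 + α) := by
          rw [hpn, Real.mul_rpow hq0.le (by positivity), ← Real.rpow_mul hr0.le, hcdef, mul_assoc, ← Real.rpow_add hr0]
          congr 2; linarith [H.hqα]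
        have hpα1 : ‖p'‖ ^ (1 + α) ≤ q ^ (1 + α) * r ^ (1 + α) := by
          rw [hpn, Real.mul_rpow hq0.le (by positivity), ← Real.rpow_mul hr0.le, H.hqα]
          apply mul_le_mul_of_nonneg_left _ (by positivity)
          exact Real.rpow_le_rpow_of_exponent_ge hr0 (by linarith) (by linarith)
        have h3 : -(B * ‖p'‖ ^ (1 + α)) ≤ ⟪b x, p'⟫ * ‖p'‖ ^ α := by
          have h4 : |⟪b x, p'⟫| ≤ B * ‖p'‖ := (abs_real_inner_le_norm _ _).trans (by gcongr; exact hB x hx)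
          rw [add_comm 1 α, Real.rpow_add_one hp0.ne']
          have h5 := (abs_le.1 h4).1
          have h6 : 0 ≤ ‖p'‖ ^ α := by positivity
          nlinarith
        have h7 : B * ‖p'‖ ^ (1 + α) ≤ B * (q ^ (1 + α) * r ^ (1 + α)) := by gcongr
        have h8 : A * ‖p'‖ ^ α * (N * (6 * q ^ 2 * c)) = A * q ^ α * (N * (6 * q ^ 2)) * r ^ (1 + α) := by
          have : A * ‖p'‖ ^ α * (N * (6 * q ^ 2 * c)) = A * (N * (6 * q ^ 2)) * (‖p'‖ ^ α * c) := by ring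
          rw [this, hpα]; ring
        have h9 := hsm r hr0.le (by linarith)
        rw [hC', add_mul] at h9
        rw [h8] at h2
        simp only [mul_zero, add_zero] at h1
        linarith
    · intro x hx hxz _
      exact (hval x (subset_closure hx) hxz).trans (by linarith)

/-! ### Perron’s method -/

lemma SubN.congr {β g u u' : EN N → ℝ} (h : SubN Ω nv α b F β g u) (he : ∀ x ∈ closure Ω, u x = u' x) :
    SubN Ω nv α b F β g u' := by
  refine ⟨fun z hz p hp X hX hn hj => ?_, fun z hz hc => ?_⟩
  · have := h.1 z hz p hp X hX hn (by
      unfold UJet at hj ⊢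
      filter_upwards [hj, self_mem_nhdsWithin] with x hx hxK
      rw [he x hxK, he z hz]; exact hx)
    simpa only [he z hz] using this
  · have hzK := subset_closure hz
    have := h.2 z hz (by
      filter_upwards [hc, self_mem_nhdsWithin] with x hx hxK
      rw [he x hxK, he z hzK]; exact hx)
    simpa only [he z hzK] using this

/-- Perron's method: below a positive supersolution with negative datum there is a positive solution. -/
lemma Prob.perron (H : Prob Ω nv α a A C₁ θ C₂ ν F b q σ s C) (hΩ : IsC2Domain Ω nv) {β g V : EN N → ℝ}
    (hβ : ContinuousOn β (closure Ω)) (hg : ContinuousOn g (closure Ω)) (hneg : ∀ x ∈ closure Ω, g x < 0)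
    (hV : LowerSemicontinuousOn V (closure Ω)) (hV0 : ∀ x ∈ closure Ω, 0 < V x) {M : ℝ}
    (hVM : ∀ x ∈ closure Ω, V x ≤ M) (hVs : SuperN Ω nv α b F β g V) :
    ∃ u : EN N → ℝ, ContinuousOn u (closure Ω) ∧ (∀ x ∈ closure Ω, 0 < u x) ∧
      (∀ x ∈ closure Ω, u x ≤ V x) ∧ SubN Ω nv α b F β g u ∧ SuperN Ω nv α b F β g u := by
  have hα := H.op.hα
  have hK := H.dom.cpt
  have hne : (closure Ω).Nonempty := H.dom.ne.closure
  -- a small constant is a subsolution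
  obtain ⟨ε₀, hε₀, hconst⟩ : ∃ ε₀ : ℝ, 0 < ε₀ ∧ SubN Ω nv α b F β g (fun _ => ε₀) := by
    obtain ⟨x₀, hx₀, hmx⟩ := hK.exists_isMaxOn hne hg
    obtain ⟨B, hB⟩ := hK.exists_bound_of_continuousOn hβ
    obtain ⟨e₀, he₀, hsm⟩ := exists_small (q := 1 + α) (by linarith) (D := B) (δ := -g x₀)
      (by linarith [hneg x₀ hx₀])
    refine ⟨e₀ / 2, by linarith, subV_const hΩ (fun x hx => ?_) _⟩
    have h1 := hsm (e₀ / 2) (by linarith) (by linarith)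
    have h2 : g x ≤ g x₀ := hmx hx
    have h3 := (abs_le.1 (Real.norm_eq_abs _ ▸ hB x hx)).1
    rw [subRhs, hp_of_nonneg hα (by linarith)]
    have h4 : 0 ≤ (e₀ / 2) ^ (1 + α) := by positivity
    nlinarith
  obtain ⟨P, hP⟩ : ∃ P : (EN N → ℝ) → Prop, ∀ w, P w ↔ (UpperSemicontinuousOn w (closure Ω) ∧
      SubN Ω nv α b F β g w ∧ (∀ x ∈ closure Ω, ε₀ ≤ w x) ∧ ∃ M' : ℝ, ∀ x ∈ closure Ω, w x ≤ M') :=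
    ⟨_, fun _ => Iff.rfl⟩
  have hPV : ∀ w, P w → ∀ x ∈ closure Ω, w x ≤ V x := by
    intro w hw
    obtain ⟨h1, h2, h3, M', h4⟩ := (hP w).1 hw
    refine H.comparison (M := max M' M) hβ hg hg (fun _ _ => le_rfl) hneg h1 hV h2 hVs (fun x hx => ?_)
      (fun x hx => (hVM x hx).trans (le_max_right _ _)) hV0
    rw [abs_of_nonneg (hε₀.le.trans (h3 x hx))]
    exact (h4 x hx).trans (le_max_left _ _)
  have hPε : P (fun _ => ε₀) := (hP _).2 ⟨fun x _ => upperSemicontinuousWithinAt_const, hconst, fun _ _ => le_rfl, ε₀, fun _ _ => le_rfl⟩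
  obtain ⟨u₀, hu₀⟩ : ∃ u₀ : EN N → ℝ, ∀ x, u₀ x = sSup {r : ℝ | ∃ w, P w ∧ w x = r} := ⟨_, fun _ => rfl⟩
  have hbd : ∀ x ∈ closure Ω, BddAbove {r : ℝ | ∃ w, P w ∧ w x = r} := fun x hx =>
    ⟨V x, by rintro r ⟨w, hw, rfl⟩; exact hPV w hw x hx⟩
  have hnes : ∀ x, (Set.Nonempty {r : ℝ | ∃ w, P w ∧ w x = r}) := fun x => ⟨ε₀, fun _ => ε₀, hPε, rfl⟩
  have hle : ∀ w, P w → ∀ x ∈ closure Ω, w x ≤ u₀ x := fun w hw x hx => by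
    rw [hu₀]; exact le_csSup (hbd x hx) ⟨w, hw, rfl⟩
  have hu₀V : ∀ x ∈ closure Ω, u₀ x ≤ V x := fun x hx => by
    rw [hu₀]; exact csSup_le (hnes x) (by rintro r ⟨w, hw, rfl⟩; exact hPV w hw x hx)
  -- `U` is the upper semicontinuous envelope of the supremum `u₀` of the family
  obtain ⟨U, hU, hU1, hU2, hU3⟩ := exists_usc_env (K := closure Ω) (u := u₀) (M := M)
    (fun x hx => (hu₀V x hx).trans (hVM x hx))
  have hUs : SubN Ω nv α b F β g U := by
    refine H.stability hβ hg (fun z hz δ hδ => ?_)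
    obtain ⟨y, hy, h1, h2⟩ := hU3 z hz (δ / 2) (by linarith)
    rw [hu₀] at h2
    have h2' : U z - δ < sSup {r : ℝ | ∃ w, P w ∧ w y = r} := by linarith
    obtain ⟨r, ⟨w, hw, rfl⟩, h3⟩ := exists_lt_of_lt_csSup (hnes y) h2'
    have hw' := (hP w).1 hw
    refine ⟨w, hw'.1, SubV.mono hw'.2.1 (fun x _ => by linarith), fun x hx => ?_, y, hy, by linarith, h3.le⟩
    linarith [hle w hw x hx, hU1 x hx]
  have hUε : ∀ x ∈ closure Ω, ε₀ ≤ U x := fun x hx => (hle _ hPε x hx).trans (hU1 x hx)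
  have hPU : P U := (hP U).2 ⟨hU, hUs, hUε, M, hU2⟩
  -- the lower envelope `-W` of `U` is a supersolution, so comparison gives `U ≤ -W` and `U` is continuous
  obtain ⟨W, hW, hW1, hW2, hW3⟩ := exists_usc_env (K := closure Ω) (u := fun x => -U x) (M := -ε₀)
    (fun x hx => by linarith [hUε x hx])
  have hvs : SuperN Ω nv α b F β g (fun x => -W x) := by
    refine H.super_env hΩ hβ hg hU hUs ⟨M, hU2⟩ (fun w h1 h2 h3 h4 x hx => ?_)
      (fun x hx => by linarith [hW1 x hx]) (fun z hz δ hδ => ?_)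
    · exact (hle w ((hP w).2 ⟨h1, h2, fun x hx => (hUε x hx).trans (h3 x hx), h4⟩) x hx).trans (hU1 x hx)
    · obtain ⟨y, hy, h1, h2⟩ := hW3 z hz δ hδ
      exact ⟨y, hy, h1, by linarith⟩
  have hvl : LowerSemicontinuousOn (fun x => -W x) (closure Ω) := by
    intro x hx r hr
    filter_upwards [hW x hx (-r) (by linarith)] with y hy
    linarith
  have hUv : ∀ x ∈ closure Ω, U x ≤ -W x := by
    refine H.comparison (M := M) hβ hg hg (fun _ _ => le_rfl) hneg hU hvl hUs hvs (fun x hx => ?_)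
      (fun x hx => ?_) (fun x hx => by linarith [hW2 x hx])
    · rw [abs_of_nonneg (hε₀.le.trans (hUε x hx))]; exact hU2 x hx
    · linarith [hW1 x hx, hU2 x hx]
  have heq : ∀ x ∈ closure Ω, W x = -U x := fun x hx => by linarith [hW1 x hx, hUv x hx]
  refine ⟨U, ?_, fun x hx => hε₀.trans_le (hUε x hx), hPV U hPU, hUs, ?_⟩
  · refine continuousOn_iff_lower_upperSemicontinuousOn.2 ⟨fun x hx r hr => ?_, hU⟩
    filter_upwards [hvl x hx r (by
      have : U x > r := hr
      show -W x > r
      rw [heq x hx]; linarith), self_mem_nhdsWithin] with y hy hyK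
    rw [heq y hyK] at hy; linarith
  · exact SubN.congr hvs (fun x hx => by show - -W x = _; rw [heq x hx, neg_neg])

/-- Below `λ̄` there is a positive supersolution for every datum. -/
lemma exists_super (H : Prob Ω nv α a A C₁ θ C₂ ν F b q σ s C) (hΩ : IsC2Domain Ω nv) {c g : EN N → ℝ} {lam : ℝ}
    (hc : ContinuousOn c (closure Ω)) (hlam : lam < sSup (lamBarSet Ω nv F b c α))
    (hg : ContinuousOn g (closure Ω)) :
    ∃ V : EN N → ℝ, LowerSemicontinuousOn V (closure Ω) ∧ (∀ x ∈ closure Ω, 0 < V x) ∧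
      (∃ M : ℝ, ∀ x ∈ closure Ω, V x ≤ M) ∧ SuperN Ω nv α b F (fun x => c x + lam) g V := by
  have hα := H.op.hα
  have hK := H.dom.cpt
  have hne : (closure Ω).Nonempty := H.dom.ne.closure
  -- positive constants are supersolutions for very negative parameters
  have hSne : (lamBarSet Ω nv F b c α).Nonempty := by
    obtain ⟨B, hB⟩ := hK.exists_bound_of_continuousOn hc
    refine ⟨-B, fun _ => 1, fun x _ => lowerSemicontinuousWithinAt_const, fun _ _ => one_pos, ⟨1, fun _ _ => le_rfl⟩,
      isSuperSol_of_subV H.op hΩ.1 (subV_const hΩ (fun x hx => ?_) _)⟩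
    have := (abs_le.1 (Real.norm_eq_abs _ ▸ hB x hx)).2
    simp only [abs_one, Real.one_rpow]
    linarith
  obtain ⟨l, ⟨v, hvl, hv0, ⟨M, hvM⟩, hvs⟩, hl⟩ : ∃ l ∈ lamBarSet Ω nv F b c α, lam < l := by
    -- `sSup` of an unbounded set is the junk value `0`, so that case is separate
    by_cases hb : BddAbove (lamBarSet Ω nv F b c α)
    · exact exists_lt_of_lt_csSup hSne hlam
    · exact not_bddAbove_iff.1 hb lam
  obtain ⟨x₀, hx₀, hmn⟩ := hvl.exists_isMinOn hne hK
  -- lower bound for the excess `(l - lam) v ^ (1 + α)` at the parameter `lam`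
  obtain ⟨κ, hκ⟩ : ∃ κ : ℝ, κ = (l - lam) * hp α (v x₀) := ⟨_, rfl⟩
  have hκ0 : 0 < κ := by
    rw [hκ, hp_of_nonneg hα (hv0 x₀ hx₀).le]
    have := hv0 x₀ hx₀
    have : 0 < l - lam := by linarith
    positivity
  have h1 : SuperN Ω nv α b F (fun x => c x + lam) (fun _ => -κ) v := by
    refine SubV.mono (subV_of_isSuperSol H.op hvs) (fun x hx => ?_)
    have h2 := hp_mono hα (hv0 x₀ hx₀).le (hmn hx)
    have h3 : (l - lam) * hp α (v x₀) ≤ (l - lam) * hp α (v x) :=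
      mul_le_mul_of_nonneg_left h2 (by linarith)
    simp only [subRhs, hp_neg]
    have h4 : (c x + l) * |v x| ^ α * v x = (c x + l) * hp α (v x) := by rw [hp, mul_assoc]
    rw [h4]
    linarith
  obtain ⟨B, hB⟩ := hK.exists_bound_of_continuousOn hg
  have hB0 : 0 ≤ B := (norm_nonneg _).trans (hB x₀ hx₀)
  -- the multiple `t v` has datum `-(B + 1) ≤ g`
  obtain ⟨t, ht⟩ : ∃ t : ℝ, t = ((B + 1) / κ) ^ (1 / (1 + α)) := ⟨_, rfl⟩
  have ht0 : 0 < t := by rw [ht]; positivity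
  have htp : t ^ (1 + α) = (B + 1) / κ := by
    rw [ht, ← Real.rpow_mul (by positivity), one_div, inv_mul_cancel₀ (by linarith), Real.rpow_one]
  have h5 := H.op.scale_super h1 ht0
  refine ⟨fun x => t * v x, ?_, fun x hx => mul_pos ht0 (hv0 x hx), ⟨t * M, fun x hx => mul_le_mul_of_nonneg_left (hvM x hx) ht0.le⟩, SubV.mono h5 (fun x hx => ?_)⟩
  · intro x hx r hr
    have hr' : r < t * v x := hr
    filter_upwards [hvl x hx (r / t) ((div_lt_iff₀ ht0).2 (by linarith))] with y hy
    have := (div_lt_iff₀ ht0).1 hy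
    linarith
  · have := (abs_le.1 (Real.norm_eq_abs _ ▸ hB x hx)).1
    simp only [subRhs]
    rw [htp]
    have : (B + 1) / κ * -κ = -(B + 1) := by field_simp
    linarith

/-! ### Barriers and the Hopf lemma -/

/-- The rank one matrix `d ⊗ d`. -/
def rankOne (d : EN N) : Mat N := Matrix.vecMulVec (fun i => d i) (fun i => d i)

lemma rankOne_symm (d : EN N) : (rankOne d).IsSymm := by
  rw [Matrix.IsSymm, rankOne, Matrix.transpose_vecMulVec]

lemma rankOne_psd (d : EN N) : (rankOne d).PosSemidef := by
  simpa [rankOne] using Matrix.posSemidef_vecMulVec_self_star (R := ℝ) (fun i => d i)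

lemma rankOne_trace (d : EN N) : (rankOne d).trace = ‖d‖ ^ 2 := by
  rw [rankOne, Matrix.trace_vecMulVec, EuclideanSpace.norm_sq_eq]
  simp [dotProduct, sq]

lemma qf_rankOne (d h : EN N) (t : ℝ) : qf (t • rankOne d) h = t * ⟪d, h⟫ ^ 2 := by
  have h1 : ⟪d, h⟫ = ∑ i, d i * h i := by
    rw [PiLp.inner_apply]; simp [mul_comm]
  have h2 : Matrix.toEuclideanLin (rankOne d) h = ⟪d, h⟫ • d := by
    ext i
    rw [h1]
    simp [rankOne, Matrix.toEuclideanLin, Matrix.vecMulVec_mulVec, dotProduct, mul_comm]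
  rw [qf, map_smul, LinearMap.smul_apply, h2, inner_smul_left, inner_smul_left]
  simp only [conj_trivial]
  ring

/-- The strict inequality satisfied, for `K` large, by the jet of the negative of the Hopf barrier
`s + K s²`, `s = R² - |x - y|²`, at distance between `R / 2` and `R` from the centre. -/
lemma OpHyp.barrier (h : OpHyp Ω α a A C₁ θ C₂ ν F) {B B' R K κ : ℝ} (hB' : 0 ≤ B')
    {x d : EN N} (hx : x ∈ closure Ω) (hb : ‖b x‖ ≤ B) (hR : 0 < R) (hd : R / 2 ≤ ‖d‖) (hdR : ‖d‖ ≤ R)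
    (hκ1 : 1 ≤ κ) (hκ2 : κ ≤ 2) (hK0 : 0 ≤ K) (hK : 6 * A * N + 4 * R * (B + B') < K * a * R ^ 2) :
    F x ((2 * κ) • d) ((6 : ℝ) • (1 : Mat N) - (4 * K) • rankOne d)
      + ⟪b x, (2 * κ) • d⟫ * ‖(2 * κ) • d‖ ^ α < -(B' * ‖(2 * κ) • d‖ ^ (1 + α)) := by
  obtain ⟨p, hp⟩ : ∃ p : EN N, p = (2 * κ) • d := ⟨_, rfl⟩
  rw [← hp]
  have hpn : ‖p‖ = 2 * κ * ‖d‖ := by rw [hp, norm_smul, Real.norm_of_nonneg (by linarith)]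
  have hd0 : 0 < ‖d‖ := by linarith
  have hp0 : 0 < ‖p‖ := by rw [hpn]; positivity
  have hpne : p ≠ 0 := norm_pos_iff.1 hp0
  have hpR : ‖p‖ ≤ 4 * R := by rw [hpn]; nlinarith
  have h1 := (h.h2.2.2 x hx p hpne ((6 : ℝ) • (1 : Mat N) - (4 * K) • rankOne d) ((4 * K) • rankOne d)
    ((symm_smul_one 6).sub ((rankOne_symm d).smul _)) ((rankOne_psd d).smul (by linarith : (0:ℝ) ≤ 4 * K))).1
  rw [sub_add_cancel, Matrix.trace_smul, rankOne_trace, smul_eq_mul] at h1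
  have h2 := h.le_of_le_smul hx hpne (symm_smul_one 6) (t := 6) (by norm_num) (fun d => by rw [qf_one])
  have h3 : ⟪b x, p⟫ ≤ B * (4 * R) := by
    refine (real_inner_le_norm _ _).trans ?_
    gcongr
    exact (norm_nonneg _).trans hb
  obtain ⟨m, hm⟩ : ∃ m : ℝ, m = ‖p‖ ^ α := ⟨_, rfl⟩
  have hm0 : 0 < m := by rw [hm]; positivity
  have h4 : ‖p‖ ^ (1 + α) = ‖p‖ * m := by rw [hm, Real.rpow_add hp0, Real.rpow_one]
  rw [h4]
  rw [← hm] at h1 h2 ⊢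
  have h5 : ⟪b x, p⟫ * m ≤ B * (4 * R) * m := by gcongr
  have h6 : B' * (‖p‖ * m) ≤ B' * (4 * R * m) := by gcongr
  have ha := h.h2.1
  have h7 : a * m * (4 * K * (R / 2) ^ 2) ≤ a * m * (4 * K * ‖d‖ ^ 2) := by gcongr
  have h8 : m * (6 * A * N + 4 * R * (B + B')) < m * (K * a * R ^ 2) := by gcongr
  nlinarith

set_option maxHeartbeats 1000000 in
/-- Hopf's lemma: a nonnegative supersolution that is positive in a ball cannot vanish at a point `z` of its
bounding sphere; if `z ∈ ∂Ω`, the radius at `z` has to point outwards. -/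
lemma Prob.hopf (H : Prob Ω nv α a A C₁ θ C₂ ν F b q σ s C) {β g u : EN N → ℝ}
    (hβ : ContinuousOn β (closure Ω)) (hg : ∀ x ∈ closure Ω, g x ≤ 0) (hu : ContinuousOn u (closure Ω))
    (hu0 : ∀ x ∈ closure Ω, 0 ≤ u x) (hus : SuperN Ω nv α b F β g u) {y z : EN N} {R : ℝ} (hR : 0 < R)
    (hball : ball y R ⊆ Ω) (hpos : ∀ x ∈ ball y R, 0 < u x) (hz : z ∈ closure Ω) (hzR : ‖z - y‖ = R)
    (huz : u z = 0) (hzn : z ∈ frontier Ω → 0 < ⟪z - y, nv z⟫) : False := by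
  have hα := H.op.hα
  have hcb : closedBall y R ⊆ closure Ω := by
    rw [← closure_ball y hR.ne']; exact closure_mono hball
  obtain ⟨B, hB⟩ := H.dom.cpt.exists_bound_of_continuousOn H.hb
  obtain ⟨B', hB'⟩ := H.dom.cpt.exists_bound_of_continuousOn hβ
  have hB'0 : 0 ≤ B' := (norm_nonneg _).trans (hB' z hz)
  have hB0 : 0 ≤ B := (norm_nonneg _).trans (hB z hz)
  have ha := H.op.h2.1
  have hA : 0 < A := ha.trans_le H.op.h2.2.1
  obtain ⟨K, hKdef⟩ : ∃ K : ℝ, K = (6 * A * N + 4 * R * (B + B') + 1) / (a * R ^ 2) := ⟨_, rfl⟩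
  have hK0 : 0 < K := by rw [hKdef]; positivity
  have hK : 6 * A * N + 4 * R * (B + B') < K * a * R ^ 2 := by
    have : K * a * R ^ 2 = 6 * A * N + 4 * R * (B + B') + 1 := by rw [hKdef]; field_simp
    linarith
  obtain ⟨s₀, hs₀, hs1, hs2, hs3⟩ : ∃ s₀ : ℝ, 0 < s₀ ∧ 2 * K * s₀ ≤ 1 ∧ s₀ ≤ 3 / 4 * R ^ 2 ∧ s₀ ≤ R / 2 := by
    refine ⟨min (1 / (2 * K)) (min (3 / 4 * R ^ 2) (R / 2)), by positivity, ?_, ?_, ?_⟩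
    · have := min_le_left (1 / (2 * K)) (min (3 / 4 * R ^ 2) (R / 2))
      calc 2 * K * min (1 / (2 * K)) (min (3 / 4 * R ^ 2) (R / 2)) ≤ 2 * K * (1 / (2 * K)) := by gcongr
        _ = 1 := by field_simp
    · exact (min_le_right _ _).trans (min_le_left _ _)
    · exact (min_le_right _ _).trans (min_le_right _ _)
  obtain ⟨r₁, hr₁0, hr₁⟩ : ∃ r₁ : ℝ, 0 ≤ r₁ ∧ r₁ ^ 2 = R ^ 2 - s₀ :=
    ⟨√(R ^ 2 - s₀), Real.sqrt_nonneg _, Real.sq_sqrt (by nlinarith)⟩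
  have hr₁R : r₁ < R := by nlinarith
  have hr₁2 : R / 2 ≤ r₁ := by nlinarith
  have hcb1 : closedBall y r₁ ⊆ ball y R := closedBall_subset_ball hr₁R
  obtain ⟨x₀, hx₀, hmn⟩ := (isCompact_closedBall y r₁).exists_isMinOn ⟨y, mem_closedBall_self hr₁0⟩
    (hu.mono (hcb1.trans (hball.trans subset_closure)))
  have hμ := hpos x₀ (hcb1 hx₀)
  obtain ⟨T, hT⟩ : ∃ T : ℝ, T = 2 * s₀ / u x₀ := ⟨_, rfl⟩
  have hT0 : 0 < T := by rw [hT]; positivity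
  have hTu : ∀ x ∈ closedBall y r₁, 2 * s₀ ≤ T * u x := fun x hx => by
    have h1 : u x₀ ≤ u x := hmn hx
    calc 2 * s₀ = T * u x₀ := by rw [hT]; field_simp
      _ ≤ T * u x := by gcongr
  have hs' := H.op.scale_super hus hT0
  obtain ⟨φ, hφ⟩ : ∃ φ : EN N → ℝ, ∀ x, φ x = (R ^ 2 - ‖x - y‖ ^ 2) + K * (R ^ 2 - ‖x - y‖ ^ 2) ^ 2 := ⟨_, fun _ => rfl⟩
  -- the scaled solution cannot be touched from below by the barrier
  have key : ∀ x ∈ closure Ω, r₁ ≤ ‖x - y‖ → ‖x - y‖ ≤ R → T * u x ≤ φ x →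
      (x ∈ frontier Ω → 0 < ⟪x - y, nv x⟫) →
      (∀ᶠ x' in 𝓝[closure Ω] x, φ x' - φ x ≤ T * u x' - T * u x) → False := by
    intro x hx h1 h2 h3 h4 h5
    obtain ⟨d, hd⟩ : ∃ d : EN N, d = x - y := ⟨_, rfl⟩
    rw [← hd] at h1 h2 h4
    obtain ⟨S, hS⟩ : ∃ S : ℝ, S = R ^ 2 - ‖d‖ ^ 2 := ⟨_, rfl⟩
    have hS0 : 0 ≤ S := by rw [hS]; nlinarith [norm_nonneg d]
    have hSs : S ≤ s₀ := by rw [hS]; nlinarith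
    obtain ⟨κ, hκ⟩ : ∃ κ : ℝ, κ = 1 + 2 * K * S := ⟨_, rfl⟩
    have hKS : 2 * K * S ≤ 1 := (by gcongr : 2 * K * S ≤ 2 * K * s₀).trans hs1
    have hκ1 : 1 ≤ κ := by rw [hκ]; have : 0 ≤ 2 * K * S := by positivity
                           linarith
    have hκ2 : κ ≤ 2 := by rw [hκ]; linarith
    have hd0 : 0 < ‖d‖ := by linarith
    have hbar := H.op.dual.barrier (b := b) hB'0 hx (hB x hx) hR (by linarith) h2 hκ1 hκ2 hK0.le hK
    have hpne : (2 * κ) • d ≠ 0 := smul_ne_zero (by linarith) (norm_pos_iff.1 hd0)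
    have hpn : ‖(2 * κ) • d‖ = 2 * κ * ‖d‖ := by rw [norm_smul, Real.norm_of_nonneg (by linarith)]
    have hφx : φ x = S + K * S ^ 2 := by rw [hφ, ← hd, hS]
    have hφp : φ x ≤ ‖(2 * κ) • d‖ := by
      rw [hφx, hpn]
      have i1 : K * S ^ 2 ≤ S := by
        calc K * S ^ 2 = (K * S) * S := by ring
          _ ≤ 1 * S := by gcongr; linarith
          _ = S := one_mul S
      have i2 : 1 * ‖d‖ ≤ κ * ‖d‖ := by gcongr
      linarith
    have hjet := hs'.1 x hx ((2 * κ) • d) hpne ((6 : ℝ) • (1 : Mat N) - (4 * K) • rankOne d)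
      ((symm_smul_one 6).sub ((rankOne_symm d).smul _))
      (fun hxf => by rw [inner_smul_left]; simp only [conj_trivial]; exact mul_pos (by linarith) (h4 hxf)) (by
        have hn : ∀ᶠ x' in 𝓝[closure Ω] x, ‖x' - x‖ ^ 2 < 1 / K := by
          have hc : Continuous (fun x' : EN N => ‖x' - x‖ ^ 2) := by fun_prop
          have h0 : ‖x - x‖ ^ 2 < 1 / K := by rw [sub_self, norm_zero, zero_pow two_ne_zero]; positivity
          have := (hc.tendsto x).eventually (gt_mem_nhds h0)
          exact mem_nhdsWithin_of_mem_nhds this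
        unfold UJet
        filter_upwards [h5, hn] with x' h6 h7
        obtain ⟨e, he⟩ : ∃ e : EN N, e = x' - x := ⟨_, rfl⟩
        have e1 : R ^ 2 - ‖x' - y‖ ^ 2 = S - (2 * ⟪d, e⟫ + ‖e‖ ^ 2) := by
          have : x' - y = d + e := by rw [hd, he]; abel
          rw [this, norm_add_sq_real, hS]; ring
        rw [← he] at h7 ⊢
        rw [quad, qf_sub, qf_one, qf_rankOne, inner_smul_left]
        simp only [conj_trivial]
        rw [hφx, hφ, e1] at h6
        have e2 : K * (‖e‖ ^ 2) ^ 2 ≤ ‖e‖ ^ 2 := by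
          have : K * ‖e‖ ^ 2 ≤ 1 := by
            calc K * ‖e‖ ^ 2 ≤ K * (1 / K) := by gcongr
              _ = 1 := by field_simp
          nlinarith [sq_nonneg ‖e‖]
        have e3 : 2 * K * ⟪d, e⟫ ^ 2 - K * (‖e‖ ^ 2) ^ 2 ≤ K * (2 * ⟪d, e⟫ + ‖e‖ ^ 2) ^ 2 := by
          have : 2 * ⟪d, e⟫ ^ 2 - (‖e‖ ^ 2) ^ 2 ≤ (2 * ⟪d, e⟫ + ‖e‖ ^ 2) ^ 2 := by
            linarith [sq_nonneg (⟪d, e⟫ + ‖e‖ ^ 2)]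
          have := mul_le_mul_of_nonneg_left this hK0.le
          linarith
        have e4 : κ * ‖e‖ ^ 2 ≤ 2 * ‖e‖ ^ 2 := by gcongr
        rw [hκ] at e4 ⊢
        linarith)
    have hux : 0 ≤ T * u x := mul_nonneg hT0.le (hu0 x hx)
    simp only [subRhs, hp_neg] at hjet
    have h8 : hp α (T * u x) ≤ ‖(2 * κ) • d‖ ^ (1 + α) := by
      rw [hp_of_nonneg hα hux]
      exact Real.rpow_le_rpow hux (h3.trans hφp) (by linarith)
    have h9 := (abs_le.1 (Real.norm_eq_abs _ ▸ hB' x hx)).1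
    have h10 : 0 ≤ hp α (T * u x) := hp_nonneg hux
    have h11 : T ^ (1 + α) * g x ≤ 0 := mul_nonpos_of_nonneg_of_nonpos (by positivity) (hg x hx)
    have h12 : -B' * hp α (T * u x) ≤ β x * hp α (T * u x) := by gcongr
    have h13 : B' * hp α (T * u x) ≤ B' * ‖(2 * κ) • d‖ ^ (1 + α) := by gcongr
    linarith
  have hφc : Continuous φ := by
    have : φ = fun x => (R ^ 2 - ‖x - y‖ ^ 2) + K * (R ^ 2 - ‖x - y‖ ^ 2) ^ 2 := funext hφ
    rw [this]; fun_prop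
  have hnc : Continuous (fun x : EN N => ‖x - y‖) := by fun_prop
  have hann : ∀ x, r₁ ≤ ‖x - y‖ → ‖x - y‖ ≤ R → φ x ≤ T * u x := by
    obtain ⟨D, hD⟩ : ∃ D : Set (EN N), D = closedBall y R ∩ {x | r₁ ≤ ‖x - y‖} := ⟨_, rfl⟩
    have hDm : ∀ x, x ∈ D ↔ ‖x - y‖ ≤ R ∧ r₁ ≤ ‖x - y‖ := fun x => by
      rw [hD, mem_inter_iff, mem_closedBall, dist_eq_norm]; rfl
    have hDc : IsCompact D := by
      rw [hD]; exact (isCompact_closedBall y R).inter_right (isClosed_le continuous_const hnc)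
    have hDK : D ⊆ closure Ω := by rw [hD]; exact inter_subset_left.trans hcb
    obtain ⟨x₁, hx₁, hm1⟩ := hDc.exists_isMinOn ⟨z, (hDm z).2 ⟨hzR.le, by linarith⟩⟩
      (f := fun x => T * u x - φ x) ((continuousOn_const.mul (hu.mono hDK)).sub hφc.continuousOn)
    have hx₁' := (hDm x₁).1 hx₁
    suffices h0 : 0 ≤ T * u x₁ - φ x₁ by
      intro x hx1 hx2
      have : T * u x₁ - φ x₁ ≤ T * u x - φ x := hm1 ((hDm x).2 ⟨hx2, hx1⟩)
      linarith
    by_contra hcon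
    push Not at hcon
    have hux₁ : 0 ≤ T * u x₁ := mul_nonneg hT0.le (hu0 x₁ (hDK hx₁))
    have hlt : ‖x₁ - y‖ < R := by
      refine lt_of_le_of_ne hx₁'.1 fun he => ?_
      have : φ x₁ = 0 := by rw [hφ, he]; ring
      linarith
    have hgt : r₁ < ‖x₁ - y‖ := by
      refine lt_of_le_of_ne hx₁'.2 fun he => ?_
      have h1 : φ x₁ = s₀ + K * s₀ ^ 2 := by rw [hφ, ← he, hr₁]; ring
      have h2 := hTu x₁ (by rw [mem_closedBall, dist_eq_norm, ← he])
      have h3 : K * s₀ ^ 2 ≤ s₀ := by nlinarith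
      linarith
    have hx₁Ω : x₁ ∈ Ω := hball (by rw [mem_ball, dist_eq_norm]; exact hlt)
    refine key x₁ (hDK hx₁) hgt.le hlt.le (by linarith) (fun hf => absurd hx₁Ω (frontier_not_mem H.dom.isOpen hf)) ?_
    have hn1 := (hnc.tendsto x₁).eventually (lt_mem_nhds hgt)
    have hn2 := (hnc.tendsto x₁).eventually (gt_mem_nhds hlt)
    filter_upwards [mem_nhdsWithin_of_mem_nhds hn1, mem_nhdsWithin_of_mem_nhds hn2] with x h1 h2
    have : T * u x₁ - φ x₁ ≤ T * u x - φ x := hm1 ((hDm x).2 ⟨le_of_lt h2, le_of_lt h1⟩)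
    linarith
  have hφz : φ z = 0 := by rw [hφ, hzR]; ring
  refine key z hz (by linarith) hzR.le (by rw [huz, hφz, mul_zero]) hzn ?_
  have hn1 := (hnc.tendsto z).eventually (lt_mem_nhds (a := r₁) (by rw [hzR]; exact hr₁R))
  have hc2 : Continuous (fun x : EN N => R ^ 2 - ‖x - y‖ ^ 2) := by fun_prop
  have hn2 := (hc2.tendsto z).eventually (lt_mem_nhds (a := -(1 / K)) (by rw [hzR, sub_self, neg_lt_zero]; positivity))
  filter_upwards [mem_nhdsWithin_of_mem_nhds hn1, mem_nhdsWithin_of_mem_nhds hn2, self_mem_nhdsWithin] with x h1 h2 h3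
  have h1' : r₁ < ‖x - y‖ := h1
  have h2' : -(1 / K) < R ^ 2 - ‖x - y‖ ^ 2 := h2
  rw [hφz, huz, mul_zero, sub_zero, sub_zero]
  rcases le_or_gt ‖x - y‖ R with h4 | h4
  · exact hann x h1'.le h4
  · refine le_trans ?_ (mul_nonneg hT0.le (hu0 x h3))
    obtain ⟨S, hS⟩ : ∃ S : ℝ, S = R ^ 2 - ‖x - y‖ ^ 2 := ⟨_, rfl⟩
    rw [hφ, ← hS]
    rw [← hS] at h2'
    have h5 : S ≤ 0 := by rw [hS]; nlinarith
    have h6 : -1 < K * S := by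
      calc -1 = K * -(1 / K) := by field_simp
        _ < K * S := by gcongr
    nlinarith

/-! ### Strong minimum principle and existence of nonnegative solutions -/

/-- The strong minimum principle, up to the boundary. -/
lemma Prob.strong_min (H : Prob Ω nv α a A C₁ θ C₂ ν F b q σ s C) (hΩ : IsC2Domain Ω nv) {β g u : EN N → ℝ}
    (hβ : ContinuousOn β (closure Ω)) (hg : ∀ x ∈ closure Ω, g x ≤ 0) (hu : ContinuousOn u (closure Ω))
    (hu0 : ∀ x ∈ closure Ω, 0 ≤ u x) (hus : SuperN Ω nv α b F β g u) {x₁ : EN N} (hx₁ : x₁ ∈ Ω)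
    (hux₁ : 0 < u x₁) : ∀ x ∈ closure Ω, 0 < u x := by
  have hsub : Ω ⊆ closure Ω := subset_closure
  have hO : IsOpen (Ω ∩ u ⁻¹' Ioi 0) := (hu.mono hsub).isOpen_inter_preimage hΩ.1 isOpen_Ioi
  have hin : ∀ x ∈ Ω, 0 < u x := by
    suffices h : Ω ⊆ Ω ∩ u ⁻¹' Ioi 0 from fun x hx => (h hx).2
    refine hΩ.2.1.isPreconnected.subset_of_closure_inter_subset hO ⟨x₁, hx₁, hx₁, hux₁⟩ ?_
    rintro w ⟨hw, hwΩ⟩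
    refine ⟨hwΩ, ?_⟩
    by_contra hcon
    have huw : u w = 0 := le_antisymm (not_lt.1 hcon) (hu0 w (hsub hwΩ))
    obtain ⟨ε, hε, hball⟩ := Metric.isOpen_iff.1 hΩ.1 w hwΩ
    have hcb : closedBall w (ε / 2) ⊆ Ω := (closedBall_subset_ball (by linarith)).trans hball
    obtain ⟨y, ⟨hyΩ, hy⟩, hyw⟩ := Metric.mem_closure_iff.1 hw (ε / 4) (by linarith)
    obtain ⟨Z, hZ⟩ : ∃ Z : Set (EN N), Z = closedBall w (ε / 2) ∩ u ⁻¹' {0} := ⟨_, rfl⟩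
    have hZm : ∀ x, x ∈ Z ↔ dist x w ≤ ε / 2 ∧ u x = 0 := fun x => by rw [hZ]; rfl
    have hZc : IsCompact Z := by
      rw [hZ]
      exact (isCompact_closedBall w (ε / 2)).of_isClosed_subset
        ((hu.mono (hcb.trans hsub)).preimage_isClosed_of_isClosed isClosed_closedBall isClosed_singleton)
        inter_subset_left
    -- around `y`, the ball reaching the nearest zero `z` lies in `Ω` and contains no zero of `u`
    obtain ⟨z, hz, hzm⟩ := hZc.exists_isMinOn ⟨w, (hZm w).2 ⟨by rw [dist_self]; linarith, huw⟩⟩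
      (f := fun x => dist x y) (by fun_prop)
    have hz' := (hZm z).1 hz
    have hzΩ : z ∈ Ω := hcb hz'.1
    have hzw : dist z y ≤ dist w y := hzm ((hZm w).2 ⟨by rw [dist_self]; linarith, huw⟩)
    have hR : 0 < dist z y := by
      rw [dist_pos]; rintro rfl
      have : 0 < u z := hy
      linarith
    have hin : ∀ x ∈ ball y (dist z y), dist x w ≤ ε / 2 := fun x hx => by
      have h1 := mem_ball.1 hx
      have h2 := dist_triangle x y w
      rw [dist_comm y w] at h2
      linarith
    refine H.hopf hβ hg hu hu0 hus hR (fun x hx => hcb (hin x hx)) (fun x hx => ?_) (hsub hzΩ) (dist_eq_norm z y).symm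
      hz'.2 (fun hf => absurd hzΩ (frontier_not_mem hΩ.1 hf))
    refine lt_of_le_of_ne (hu0 x (hsub (hcb (hin x hx)))) fun he => ?_
    have h3 : dist z y ≤ dist x y := hzm ((hZm x).2 ⟨hin x hx, he.symm⟩)
    exact absurd (mem_ball.1 hx) (not_lt.2 h3)
  intro z hz
  rcases mem_or_frontier z hz with h | h
  · exact hin z h
  refine lt_of_le_of_ne (hu0 z hz) fun he => ?_
  obtain ⟨hn, R, hR, hb⟩ := interior_ball hΩ h
  refine H.hopf hβ hg hu hu0 hus hR hb (fun x hx => hin x (hb hx)) hz ?_ he.symm (fun _ => ?_)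
  · rw [sub_sub_cancel, norm_smul, hn, mul_one, Real.norm_of_nonneg hR.le]
  · rw [sub_sub_cancel, inner_smul_left, real_inner_self_eq_norm_sq, hn]; simpa using hR

/-- Existence of a nonnegative solution by approximation of the datum from below. -/
lemma Prob.exists_nonneg (H : Prob Ω nv α a A C₁ θ C₂ ν F b q σ s C) (hΩ : IsC2Domain Ω nv) {c g : EN N → ℝ} {lam : ℝ}
    (hc : ContinuousOn c (closure Ω)) (hlam : lam < sSup (lamBarSet Ω nv F b c α))
    (hg : ContinuousOn g (closure Ω)) (hgle : ∀ x ∈ closure Ω, g x ≤ 0) :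
    ∃ u : EN N → ℝ, ContinuousOn u (closure Ω) ∧ (∀ x ∈ closure Ω, 0 ≤ u x) ∧
      SubN Ω nv α b F (fun x => c x + lam) g u ∧ SuperN Ω nv α b F (fun x => c x + lam) g u := by
  have hα := H.op.hα
  obtain ⟨β, hβd⟩ : ∃ β : EN N → ℝ, β = fun x => c x + lam := ⟨_, rfl⟩
  have hβ : ContinuousOn β (closure Ω) := by rw [hβd]; exact hc.add continuousOn_const
  obtain ⟨G, hG⟩ : ∃ G : ℕ → EN N → ℝ, ∀ n x, G n x = g x - 1 / ((n : ℝ) + 1) := ⟨_, fun _ _ => rfl⟩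
  have hGc : ∀ n, ContinuousOn (G n) (closure Ω) := fun n => by
    have : G n = fun x => g x - 1 / ((n : ℝ) + 1) := funext (hG n)
    rw [this]; exact hg.sub continuousOn_const
  have hpos : ∀ n : ℕ, 0 < 1 / ((n : ℝ) + 1) := fun n => by positivity
  have hle1 : ∀ n : ℕ, 1 / ((n : ℝ) + 1) ≤ 1 := fun n => by
    rw [div_le_one (by positivity)]; have : (0 : ℝ) ≤ n := Nat.cast_nonneg n
    linarith
  have hGneg : ∀ n, ∀ x ∈ closure Ω, G n x < 0 := fun n x hx => by
    rw [hG]; linarith [hgle x hx, hpos n]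
  obtain ⟨V, hV, hV0, ⟨M, hVM⟩, hVs⟩ := exists_super H hΩ hc hlam (hGc 0)
  rw [← hβd] at hVs ⊢
  have hVn : ∀ n, SuperN Ω nv α b F β (G n) V := fun n => by
    refine SubV.mono hVs (fun x hx => ?_)
    simp only [subRhs, hG]
    have := hle1 n
    norm_num
    norm_num at this
    linarith
  choose u huc hu0 huV hus hvs using fun n => H.perron hΩ hβ (hGc n) (hGneg n) hV hV0 hVM (hVn n)
  have hanti : ∀ x ∈ closure Ω, Antitone (fun n => u n x) := by
    intro x hx m n hmn
    refine H.comparison (M := M) hβ (hGc n) (hGc m) (fun x hx => ?_) (hGneg m) (huc n).upperSemicontinuousOn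
      (huc m).lowerSemicontinuousOn (hus n) (hvs m) (fun x hx => ?_) (fun x hx => (huV m x hx).trans (hVM x hx)) (hu0 m) x hx
    · rw [hG, hG]
      have : 1 / ((n : ℝ) + 1) ≤ 1 / ((m : ℝ) + 1) := by gcongr
      linarith
    · rw [abs_of_pos (hu0 n x hx)]; exact (huV n x hx).trans (hVM x hx)
  have hbb : ∀ x ∈ closure Ω, BddBelow (range fun n => u n x) := fun x hx =>
    ⟨0, by rintro _ ⟨n, rfl⟩; exact (hu0 n x hx).le⟩
  obtain ⟨v, hv⟩ : ∃ v : EN N → ℝ, ∀ x, v x = ⨅ n, u n x := ⟨_, fun _ => rfl⟩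
  have hlim : ∀ x ∈ closure Ω, Tendsto (fun n => u n x) atTop (𝓝 (v x)) := fun x hx => by
    rw [hv]; exact tendsto_atTop_ciInf (hanti x hx) (hbb x hx)
  have hvle : ∀ n, ∀ x ∈ closure Ω, v x ≤ u n x := fun n x hx => by rw [hv]; exact ciInf_le (hbb x hx) n
  have hv0 : ∀ x ∈ closure Ω, 0 ≤ v x := fun x hx => by rw [hv]; exact le_ciInf (fun n => (hu0 n x hx).le)
  -- a Lipschitz bound uniform in `n`
  have hM0 : 0 ≤ M := by
    obtain ⟨x, hx⟩ := H.dom.ne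
    exact (hV0 x (subset_closure hx)).le.trans (hVM x (subset_closure hx))
  have hun : ∀ n, ∀ x ∈ closure Ω, |u n x| ≤ M := fun n x hx => by
    rw [abs_of_pos (hu0 n x hx)]; exact (huV n x hx).trans (hVM x hx)
  obtain ⟨C₀, hC₀, hbd⟩ := bdd_of_cont H.dom.cpt (subRhs_cont hα hβ hg) M
  obtain ⟨L, hL, hlip⟩ := H.op.lip H.hb (by linarith [H.hq]) H.dom (C₀ := C₀ + 1) (M₀ := M) (by linarith) hM0
  have hlipn : ∀ n, ∀ x ∈ closure Ω, ∀ y ∈ closure Ω, u n x + -u n y ≤ 0 + L * ‖x - y‖ := by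
    intro n
    refine hlip (u n) (fun x => -u n x) _ _ (huc n).upperSemicontinuousOn (huc n).neg.upperSemicontinuousOn
      (hus n) (hvs n) (fun x hx => ?_) (fun x hx => ?_) (hun n) (fun x hx => by rw [abs_neg]; exact hun n x hx) 0
      (fun x hx => by simp)
    · have h1 := (abs_le.1 (hbd x hx (u n x) (hun n x hx))).1
      have h2 := hle1 n
      simp only [subRhs, hG] at h1 ⊢
      linarith
    · have h1 := (abs_le.1 (hbd x hx (u n x) (hun n x hx))).2
      have h2 := hpos n
      simp only [subRhs, hG, hp_neg] at h1 ⊢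
      linarith
  have hlipv : ∀ x ∈ closure Ω, ∀ y ∈ closure Ω, v x - v y ≤ L * ‖x - y‖ := fun x hx y hy =>
    le_of_tendsto ((hlim x hx).sub (hlim y hy)) (Eventually.of_forall fun n => by linarith [hlipn n x hx y hy])
  have hvc : ContinuousOn v (closure Ω) := by
    have : LipschitzOnWith L.toNNReal v (closure Ω) := by
      refine LipschitzOnWith.of_dist_le_mul fun x hx y hy => ?_
      rw [Real.coe_toNNReal L hL, Real.dist_eq, dist_eq_norm, abs_le]
      have h1 := hlipv x hx y hy
      have h2 := hlipv y hy x hx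
      rw [norm_sub_rev] at h2
      constructor <;> linarith
    exact this.continuousOn
  have huni := Antitone.tendstoUniformlyOn_of_forall_tendsto H.dom.cpt huc hanti hvc hlim
  have htend : Tendsto (fun n : ℕ => 1 / ((n : ℝ) + 1)) atTop (𝓝 0) := tendsto_one_div_add_atTop_nhds_zero_nat
  refine ⟨v, hvc, hv0, ?_, ?_⟩
  · refine H.stability hβ hg (fun z hz δ hδ => ?_)
    obtain ⟨n, hn1, hn2⟩ := ((Metric.tendstoUniformlyOn_iff.1 huni δ hδ).and (htend.eventually (gt_mem_nhds hδ))).exists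
    refine ⟨u n, (huc n).upperSemicontinuousOn, SubV.mono (hus n) (fun x hx => ?_), fun x hx => ?_, z, hz, by simpa using hδ, ?_⟩
    · simp only [subRhs, hG]; linarith
    · have := hn1 x hx
      rw [dist_comm, Real.dist_eq, abs_lt] at this
      linarith
    · linarith [hvle n z hz]
  · refine H.dual.stability hβ hg.neg (fun z hz δ hδ => ?_)
    obtain ⟨n, hn1, hn2⟩ := ((Metric.tendstoUniformlyOn_iff.1 huni δ hδ).and (htend.eventually (gt_mem_nhds hδ))).exists
    refine ⟨fun x => -u n x, (huc n).neg.upperSemicontinuousOn, SubV.mono (hvs n) (fun x hx => ?_), fun x hx => ?_, z, hz, by simpa using hδ, ?_⟩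
    · simp only [subRhs, hG]; linarith [hpos n]
    · linarith [hvle n x hx]
    · have := hn1 z hz
      rw [dist_comm, Real.dist_eq, abs_lt] at this
      linarith

/-- A nonnegative supersolution with nontrivial datum `g ≤ 0` is positive somewhere in `Ω`: if it vanished
on `Ω`, the clause on locally constant functions would give `g ≥ 0`. -/
lemma exists_pos_pt (hΩ : IsC2Domain Ω nv) {β g u : EN N → ℝ} (hg : ContinuousOn g (closure Ω))
    (hgle : ∀ x ∈ closure Ω, g x ≤ 0) (hgne : ∃ x ∈ closure Ω, g x ≠ 0)
    (hu0 : ∀ x ∈ closure Ω, 0 ≤ u x) (hus : SuperN Ω nv α b F β g u) : ∃ x ∈ Ω, 0 < u x := by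
  by_contra hcon
  push Not at hcon
  have hz0 : ∀ z ∈ Ω, u z = 0 := fun z hz => le_antisymm (hcon z hz) (hu0 z (subset_closure hz))
  have hgz : ∀ z ∈ Ω, g z = 0 := by
    intro z hz
    refine le_antisymm (hgle z (subset_closure hz)) ?_
    have h := hus.2 z hz (by
      filter_upwards [mem_nhdsWithin_of_mem_nhds (hΩ.1.mem_nhds hz)] with x hx
      rw [hz0 x hx, hz0 z hz])
    simp only [subRhs, hz0 z hz, neg_zero, hp_zero, mul_zero, sub_zero] at h
    linarith
  have hE : EqOn g (fun _ => 0) (closure Ω) :=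
    EqOn.of_subset_closure (s := Ω) (fun z hz => hgz z hz) hg continuousOn_const subset_closure Subset.rfl
  obtain ⟨x, hx, hne⟩ := hgne
  exact hne (hE hx)

/-! ### Translation to the stated notion of solution -/

lemma subN_of_isSubSol {c : EN N → ℝ} {lam : ℝ} {g u : EN N → ℝ}
    (h : IsSubSol Ω F b α (fun x r => (c x + lam) * |r| ^ α * r) g (BNeu nv) u) :
    SubN Ω nv α b F (fun x => c x + lam) g u :=
  SubV.mono (subV_of_isSubSol h) (fun x _ => by simp only [subRhs, hp, mul_assoc]; exact le_rfl)

lemma superN_of_isSuperSol (hF : OpHyp Ω α a A C₁ θ C₂ ν F) {c : EN N → ℝ} {lam : ℝ}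
    {g u : EN N → ℝ}
    (h : IsSuperSol Ω F b α (fun x r => (c x + lam) * |r| ^ α * r) g (BNeu nv) u) :
    SuperN Ω nv α b F (fun x => c x + lam) g u :=
  SubV.mono (subV_of_isSuperSol hF h) (fun x _ => by
    simp only [subRhs, hp_neg]; simp only [hp, mul_assoc]; linarith)

lemma isSubSol_of_subN (hF : OpHyp Ω α a A C₁ θ C₂ ν F) (hΩ : IsOpen Ω) {c : EN N → ℝ} {lam : ℝ}
    {g u : EN N → ℝ} (h : SubN Ω nv α b F (fun x => c x + lam) g u) :
    IsSubSol Ω F b α (fun x r => (c x + lam) * |r| ^ α * r) g (BNeu nv) u :=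
  isSubSol_of_subV hF hΩ (SubV.mono h (fun x _ => by
    simp only [subRhs, hp, mul_assoc]; exact le_rfl))

lemma isSuperSol_of_superN (hF : OpHyp Ω α a A C₁ θ C₂ ν F) (hΩ : IsOpen Ω) {c : EN N → ℝ}
    {lam : ℝ} {g u : EN N → ℝ} (h : SuperN Ω nv α b F (fun x => c x + lam) g u) :
    IsSuperSol Ω F b α (fun x r => (c x + lam) * |r| ^ α * r) g (BNeu nv) u :=
  isSuperSol_of_subV hF hΩ (SubV.mono h (fun x _ => by
    simp only [subRhs, hp_neg]; simp only [hp, mul_assoc]; linarith))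

end

/-- Theorem `esistl<ls`: existence of a positive viscosity solution for
`λ < λ̄` and `g ≤ 0`, `g ≢ 0`; uniqueness of the positive solution when `g < 0`. -/
theorem stmt16 {N : ℕ} (Ω : Set (EN N)) (nv : EN N → EN N) (hΩ : IsC2Domain Ω nv)
    (α a A C₁ θ C₂ ν : ℝ) (hα : -1 < α)
    (F : EN N → EN N → Mat N → ℝ)
    (hF1 : CondF1 Ω α F) (hF2 : CondF2 Ω α a A F)
    (hF3 : CondF3 Ω α C₁ θ F) (hF4 : CondF4 Ω α C₂ ν F)
    (b : EN N → EN N) (c : EN N → ℝ)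
    (hbc : ContinuousOn b (closure Ω)) (hcc : ContinuousOn c (closure Ω))
    (lam : ℝ) (hlam : lam < sSup (lamBarSet Ω nv F b c α))
    (g : EN N → ℝ) (hgc : ContinuousOn g (closure Ω))
    (hgle : ∀ x ∈ closure Ω, g x ≤ 0) (hgne : ∃ x ∈ closure Ω, g x ≠ 0) :
    (∃ u : EN N → ℝ, ContinuousOn u (closure Ω) ∧ (∀ x ∈ closure Ω, 0 < u x) ∧
      IsSubSol Ω F b α (fun x r => (c x + lam) * |r| ^ α * r) g (BNeu nv) u ∧
      IsSuperSol Ω F b α (fun x r => (c x + lam) * |r| ^ α * r) g (BNeu nv) u) ∧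
    ((∀ x ∈ closure Ω, g x < 0) →
      ∀ u₁ u₂ : EN N → ℝ,
        (ContinuousOn u₁ (closure Ω) ∧ (∀ x ∈ closure Ω, 0 < u₁ x) ∧
          IsSubSol Ω F b α (fun x r => (c x + lam) * |r| ^ α * r) g (BNeu nv) u₁ ∧
          IsSuperSol Ω F b α (fun x r => (c x + lam) * |r| ^ α * r) g (BNeu nv) u₁) →
        (ContinuousOn u₂ (closure Ω) ∧ (∀ x ∈ closure Ω, 0 < u₂ x) ∧
          IsSubSol Ω F b α (fun x r => (c x + lam) * |r| ^ α * r) g (BNeu nv) u₂ ∧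
          IsSuperSol Ω F b α (fun x r => (c x + lam) * |r| ^ α * r) g (BNeu nv) u₂) →
        Set.EqOn u₁ u₂ (closure Ω)) := by
  have hop : OpHyp Ω α a A C₁ θ C₂ ν F := ⟨hα, hF1, hF2, hF3, hF4⟩
  have hα1 : 0 < 1 + α := by linarith
  have hq0 : 0 < 1 / (1 + α) := by positivity
  -- with this exponent the gradient of `|x| ^ q`, raised to the power `1 + α`, has order `|x| ^ (2 + α)`
  obtain ⟨q, hq⟩ : ∃ q : ℝ, q = 2 + 1 / (1 + α) := ⟨_, rfl⟩
  obtain ⟨σ, s, C, hdom⟩ := exists_domData hΩ (q := q) (by linarith)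
  have H : Prob Ω nv α a A C₁ θ C₂ ν F b q σ s C :=
    ⟨hop, hbc, by linarith, by rw [hq]; field_simp; ring, hdom⟩
  have hβ : ContinuousOn (fun x => c x + lam) (closure Ω) := hcc.add continuousOn_const
  refine ⟨?_, ?_⟩
  · obtain ⟨u, huc, hu0, hsub, hsup⟩ := H.exists_nonneg hΩ hcc hlam hgc hgle
    obtain ⟨x₁, hx₁, hux₁⟩ := exists_pos_pt hΩ hgc hgle hgne hu0 hsup
    refine ⟨u, huc, ?_, isSubSol_of_subN hop hΩ.1 hsub, isSuperSol_of_superN hop hΩ.1 hsup⟩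
    exact H.strong_min hΩ hβ hgle huc hu0 hsup hx₁ hux₁
  · intro hneg u₁ u₂ hu₁ hu₂
    obtain ⟨hc₁, hp₁, hs₁, hS₁⟩ := hu₁
    obtain ⟨hc₂, hp₂, hs₂, hS₂⟩ := hu₂
    have key : ∀ u v : EN N → ℝ, ContinuousOn u (closure Ω) → ContinuousOn v (closure Ω) →
        (∀ x ∈ closure Ω, 0 < v x) → SubN Ω nv α b F (fun x => c x + lam) g u →
        SuperN Ω nv α b F (fun x => c x + lam) g v → ∀ x ∈ closure Ω, u x ≤ v x := by
      intro u v hu hv hv0 hsub hsup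
      obtain ⟨M₁, hM₁⟩ := H.dom.cpt.exists_bound_of_continuousOn hu
      obtain ⟨M₂, hM₂⟩ := H.dom.cpt.exists_bound_of_continuousOn hv
      exact H.comparison (M := max M₁ M₂) hβ hgc hgc (fun _ _ => le_rfl) hneg
        hu.upperSemicontinuousOn hv.lowerSemicontinuousOn hsub hsup
        (fun x hx => (hM₁ x hx).trans (le_max_left _ _))
        (fun x hx => (le_abs_self _).trans ((hM₂ x hx).trans (le_max_right _ _))) hv0
    intro x hx
    exact le_antisymm
      (key u₁ u₂ hc₁ hc₂ hp₂ (subN_of_isSubSol hs₁) (superN_of_isSuperSol hop hS₂) x hx)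
      (key u₂ u₁ hc₂ hc₁ hp₁ (subN_of_isSubSol hs₂) (superN_of_isSuperSol hop hS₁) x hx)
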